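/- There exist h₀, ε₀ ∈ (0,∞) such that for all h > h₀ and all a ≤ ε₀: ⟨σ_x;σ_y⟩_{a,h} ≤ C₀(h) a^{1/4} e^{−m₁(h)|x−y|} whenever x, y ∈ aℤ² with |x−y| > 3, where C₀(h), m₁(h) ∈ (0,∞) depend only on h. -/

import Mathlib

/-! The bound holds with `h₀ = ε₀ = 1` and constants independent of `h`: once `h ≥ 1`, the field on each
site is at least `a ^ (15 / 8)`, and truncated correlations decrease with the field.

*Correlation inequalities.* Single-site sums of products of suitable combinations of replicated spins
are nonnegative, hence so are all sums over the closed semiring they generate (`cone_sum_nonneg`).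
With two replicas this gives the Griffiths inequalities, in particular `Ex_mul_ge`; with four replicas
it gives the GHS inequality `Uf_anti` and subadditivity of the magnetization in the field
(`mg_subadd`); with a configuration and its mirror image it gives the reflection inequality
`tw_reflect`.

*Disagreement expansion.* Take two independent copies of the model and let `K` be the connected
component of `x` in the set where they disagree. Then (`Uf_expand`) the truncated function `Uf x y`
is a sum over `K` containing `x` and `y` of nonnegative coefficients, independent of the field, times
`(Z without K / Z) ^ 2 = exp (-2 Psi K)`, where `Psi K` is the free energy cost of removing `K`. So
(`Uf_le_of_ZK`) if switching on the field raises `Psi K` by at least `s` for every connected `K`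
joining `x` to `y`, then `Uf` with the field is at most `exp (-2 s)` times `Uf` without it.

*Critical exponents from the exact solution.* On a strip of the lattice turned by 45 degrees, with one
plus wall, the transfer operator is diagonalized by free fermions. Its dominant vector is annihilated
by half of the normal modes on each side, so Wick's formula writes spin correlations in a row as
determinants (`ground_det`). In the wide strip limit these are Cauchy determinants, equal to explicit
products: the magnetization at depth `k` in a plus half plane is at most `C k ^ (-1/8)`
(`mH_bound`), and the diagonal correlation at distance `m` is at least `c m ^ (-1/4)` (`dT_bound`).
Monotonicity in couplings and fields transports these to arbitrary domains. The two-point function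
is at most the product of two half-plane magnetizations, which gives `C d ^ (-1/4)` (`tw_upper`);
the magnetization in a diamond with plus boundary and a small field is bounded through its four sides
and a sum of two-point functions (`mg_dia`); the reflection inequality extends the diagonal lower
bound to all directions (`tw_lower`).

*One ring.* Let `r = m d` with `m` a large constant. On a square ring around `x` of radius between the
scales of `r` and `|x - y|`, some `d × d` block is not dominated by a single connected piece of
the complement of `K`: otherwise neighbouring blocks would have overlapping pieces, forming a
loop around `x` that avoids `K` (`ring_block`). Such a block has two large parts `X`, `Y` lying in
different pieces. In the full model the truncated correlation between `X` and `Y` is at least of order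
`d ^ (-1/4)`, whereas without `K` the correlation is at most of order `r ^ (-1/4)`, since each side
sees the other only through boundaries at distance `r` (`Uf_lower`, `tw_sep`). A field `r ^ (-15/8)`
on the block therefore raises `Psi K` by `r ^ (-15/4) * r ^ (-1/4) * d ^ 4` up to constants, which is a
positive constant (`ring_gain`).

*Conclusion.* Summing over disjoint rings, `Uf` decays exponentially in the number of rings
(`Uf_rings`). Taking `r` of order `1 / a`, so that `r ^ (-15/8) ≤ a ^ (15/8)`, the number of rings is
of order `|x - y|`, and the remaining factor is the critical two-point function at lattice
distance at least of order `1 / a`, of order `a ^ (1/4)` (`Uf_scale`). The infinite-volume limit is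
taken in `tpf_le`.
-/

open scoped Classical
open Filter MeasureTheory

noncomputable section

/-- Lattice vertices: `v : Vtx` represents the point `a • v ∈ aℤ²`. -/
abbrev Vtx : Type := ℤ × ℤ

/-- Edges of the extended graph with a ghost vertex `g`:
`Sum.inl (v, b)` is the internal edge from `v` to `v + estep b`;
`Sum.inr v` is the external edge `{v, g}`. -/
abbrev Edge : Type := (Vtx × Bool) ⊕ Vtx

/-- Unit lattice steps: right (`true`) and up (`false`). -/
def estep (b : Bool) : Vtx := if b then (1, 0) else (0, 1)

/-- The critical inverse temperature `β_c = (1/2) log (1 + √2)`. -/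
def betaC : ℝ := Real.log (1 + Real.sqrt 2) / 2

/-- Nearest neighbours in `ℤ²`. -/
def nn (v w : Vtx) : Prop :=
  w = v + (1, 0) ∨ w = v + (-1, 0) ∨ w = v + (0, 1) ∨ w = v + (0, -1)

/-- Physical position of a lattice point of `aℤ²`. -/
def posOf (a : ℝ) (v : Vtx) : ℝ × ℝ := (a * v.1, a * v.2)

/-- Euclidean distance in the plane. -/
def edistR (p q : ℝ × ℝ) : ℝ := Real.sqrt ((p.1 - q.1) ^ 2 + (p.2 - q.2) ^ 2)

/-- Euclidean distance between points of `aℤ²`. -/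
def edistV (a : ℝ) (v w : Vtx) : ℝ := edistR (posOf a v) (posOf a w)

/-- Euclidean distance between two subsets of the plane. -/
def setDistR (S T : Set (ℝ × ℝ)) : ℝ :=
  sInf {d | ∃ p ∈ S, ∃ q ∈ T, d = edistR p q}

/-- The physical embedding of a finite set of lattice points of `aℤ²`. -/
def physSet (a : ℝ) (C : Finset Vtx) : Set (ℝ × ℝ) := posOf a '' ↑C

/-- The square `c + [-r,r]²`. -/
def ballSet (c : ℝ × ℝ) (r : ℝ) : Set (ℝ × ℝ) :=
  {p | |p.1 - c.1| ≤ r ∧ |p.2 - c.2| ≤ r}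

/-- The lattice box `([-n,n] ∩ ℤ)²`. -/
def boxZ (n : ℕ) : Finset Vtx := Finset.Icc (-(n : ℤ)) n ×ˢ Finset.Icc (-(n : ℤ)) n

/-- The `a`-approximation `D^a = aℤ² ∩ D` of a set `D ⊆ [-R,R]²`. -/
def aApprox (a R : ℝ) (D : Set (ℝ × ℝ)) : Finset Vtx :=
  (boxZ ⌈R / a⌉₊).filter (fun v => posOf a v ∈ D)

/-- Inner vertex boundary of a finite set of lattice vertices. -/
def innerBdry (Λ : Finset Vtx) : Finset Vtx :=
  Λ.filter (fun v => ∃ w, nn v w ∧ w ∉ Λ)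

/-! ### Connectivity and clusters -/

/-- One open-edge step in a configuration `ω` of the extended graph
(`none` is the ghost vertex `g`). -/
def adjOpen (ω : Edge → Bool) (u v : Option Vtx) : Prop :=
  (∃ p : Vtx × Bool, ω (Sum.inl p) = true ∧
    ((u = some p.1 ∧ v = some (p.1 + estep p.2)) ∨
     (v = some p.1 ∧ u = some (p.1 + estep p.2)))) ∨
  (∃ z : Vtx, ω (Sum.inr z) = true ∧
    ((u = some z ∧ v = none) ∨ (v = some z ∧ u = none)))

/-- `u ↔ v`: connection by a path of open edges. -/
def Conn (ω : Edge → Bool) : Option Vtx → Option Vtx → Prop :=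
  Relation.ReflTransGen (adjOpen ω)

/-- One open-edge step within the vertex set `S` (external edges allowed from `S`). -/
def adjOpenIn (S : Set Vtx) (ω : Edge → Bool) (u v : Option Vtx) : Prop :=
  (∃ p : Vtx × Bool, p.1 ∈ S ∧ p.1 + estep p.2 ∈ S ∧ ω (Sum.inl p) = true ∧
    ((u = some p.1 ∧ v = some (p.1 + estep p.2)) ∨
     (v = some p.1 ∧ u = some (p.1 + estep p.2)))) ∨
  (∃ z : Vtx, z ∈ S ∧ ω (Sum.inr z) = true ∧
    ((u = some z ∧ v = none) ∨ (v = some z ∧ u = none)))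

/-- Connection by a path of open edges within the vertex set `S`. -/
def ConnIn (S : Set Vtx) (ω : Edge → Bool) : Option Vtx → Option Vtx → Prop :=
  Relation.ReflTransGen (adjOpenIn S ω)

/-- One open internal-edge step within the vertex set `S`. -/
def adjInt (S : Set Vtx) (ω : Edge → Bool) (v w : Vtx) : Prop :=
  v ∈ S ∧ w ∈ S ∧ ∃ p : Vtx × Bool, ω (Sum.inl p) = true ∧
    ((v = p.1 ∧ w = p.1 + estep p.2) ∨ (w = p.1 ∧ v = p.1 + estep p.2))

/-- Connection by a path of open internal edges within the vertex set `S`. -/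
def ConnInt (S : Set Vtx) (ω : Edge → Bool) : Vtx → Vtx → Prop :=
  Relation.ReflTransGen (adjInt S ω)

/-- Lexicographic order on lattice vertices. -/
def vlt (v w : Vtx) : Prop := v.1 < w.1 ∨ (v.1 = w.1 ∧ v.2 < w.2)

/-- The number of open clusters of `ω` that intersect `Λ` and do not contain the
ghost vertex, counted via lexicographically minimal representatives. -/
def numClusters (Λ : Finset Vtx) (ω : Edge → Bool) : ℕ :=
  (Λ.filter (fun v => ¬ Conn ω (some v) none ∧
    ∀ w ∈ Λ, Conn ω (some v) (some w) → ¬ vlt w v)).card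

/-- The open cluster (within the vertex set `S`, via internal edges) of `v`. -/
def clusterOf (S : Finset Vtx) (ω : Edge → Bool) (v : Vtx) : Finset Vtx :=
  S.filter (fun w => ConnInt (↑S) ω v w)

/-- The set of open clusters in the vertex set `S` (via internal edges within `S`). -/
def clustersIn (S : Finset Vtx) (ω : Edge → Bool) : Finset (Finset Vtx) :=
  S.image (clusterOf S ω)

/-! ### FK random-cluster measures -/

/-- 𝓑(Λ): internal edges with both endpoints in `Λ`. -/
def intEdges (Λ : Finset Vtx) : Finset Edge :=
  ((Λ ×ˢ ({true, false} : Finset Bool)).filter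
    (fun p => p.1 + estep p.2 ∈ Λ)).image Sum.inl

/-- Internal edges with at least one endpoint in `Λ`. -/
def intEdgesBar (Λ : Finset Vtx) : Finset Edge :=
  ((((Λ ∪ Λ.image (fun v => v - (1, 0))) ∪ Λ.image (fun v => v - (0, 1))) ×ˢ
      ({true, false} : Finset Bool)).filter
    (fun p => p.1 ∈ Λ ∨ p.1 + estep p.2 ∈ Λ)).image Sum.inl

/-- 𝓔(Λ): external (ghost) edges with lattice endpoint in `Λ`. -/
def extEdges (Λ : Finset Vtx) : Finset Edge := Λ.image Sum.inr

/-- Opening probability of an edge, for an external magnetic field profile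
`a^{15/8}·hprof`. -/
def pEdge (a : ℝ) (hprof : Vtx → ℝ) : Edge → ℝ
  | Sum.inl _ => 1 - Real.exp (-2 * betaC)
  | Sum.inr v => 1 - Real.exp (-2 * a ^ ((15 : ℝ) / 8) * hprof v)

/-- Extension of a configuration on `E` by the boundary condition `ρ` off `E`. -/
def extendConf (E : Finset Edge) (ω : {e // e ∈ E} → Bool) (ρ : Edge → Bool) :
    Edge → Bool :=
  fun e => if he : e ∈ E then ω ⟨e, he⟩ else ρ e

/-- All edges closed (free boundary condition). -/
def freeBC : Edge → Bool := fun _ => false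

/-- All edges open (wired boundary condition). -/
def wiredBC : Edge → Bool := fun _ => true

/-- FK (q=2) weight of a configuration `ω` on the edge set `E`, for the region `Λ`,
lattice spacing `a`, field profile `hprof` and boundary condition `ρ`. -/
def fkWeight (Λ : Finset Vtx) (E : Finset Edge) (a : ℝ) (hprof : Vtx → ℝ)
    (ρ : Edge → Bool) (ω : {e // e ∈ E} → Bool) : ℝ :=
  2 ^ numClusters Λ (extendConf E ω ρ) *
    ∏ e : {e // e ∈ E},
      (if ω e then pEdge a hprof e.val else 1 - pEdge a hprof e.val)

/-- FK partition function. -/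
def fkZ (Λ : Finset Vtx) (E : Finset Edge) (a : ℝ) (hprof : Vtx → ℝ)
    (ρ : Edge → Bool) : ℝ :=
  ∑ ω : {e // e ∈ E} → Bool, fkWeight Λ E a hprof ρ ω

/-- FK probability of an event `A` (a set of configurations of the extended graph). -/
def fkProb (Λ : Finset Vtx) (E : Finset Edge) (a : ℝ) (hprof : Vtx → ℝ)
    (ρ : Edge → Bool) (A : (Edge → Bool) → Prop) : ℝ :=
  (∑ ω : {e // e ∈ E} → Bool,
      if A (extendConf E ω ρ) then fkWeight Λ E a hprof ρ ω else 0) /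
    fkZ Λ E a hprof ρ

/-- FK expectation of an observable. -/
def fkExp (Λ : Finset Vtx) (E : Finset Edge) (a : ℝ) (hprof : Vtx → ℝ)
    (ρ : Edge → Bool) (F : (Edge → Bool) → ℝ) : ℝ :=
  (∑ ω : {e // e ∈ E} → Bool,
      F (extendConf E ω ρ) * fkWeight Λ E a hprof ρ ω) / fkZ Λ E a hprof ρ

/-- FK conditional probability `P(A | B)`. -/
def fkCondProb (Λ : Finset Vtx) (E : Finset Edge) (a : ℝ) (hprof : Vtx → ℝ)
    (ρ : Edge → Bool) (A B : (Edge → Bool) → Prop) : ℝ :=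
  fkProb Λ E a hprof ρ (fun ω => A ω ∧ B ω) / fkProb Λ E a hprof ρ B

/-- The infinite-volume FK measure (with ghost) on `aℤ²` with field profile
`a^{15/8}·hprof`: weak limit of free-boundary finite-volume measures. -/
def fkProbInf (a : ℝ) (hprof : Vtx → ℝ) (A : (Edge → Bool) → Prop) : ℝ :=
  limUnder atTop (fun n : ℕ =>
    fkProb (boxZ n) (intEdges (boxZ n) ∪ extEdges (boxZ n)) a hprof freeBC A)

/-- The event that the configuration restricted to the internal edges of `Λ`
equals `ωb`. -/
def internalEq (Λ : Finset Vtx) (ωb : {e // e ∈ intEdges Λ} → Bool)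
    (ω : Edge → Bool) : Prop :=
  ∀ e (he : e ∈ intEdges Λ), ω e = ωb ⟨e, he⟩

/-- The full configuration determined by an internal configuration (all other
edges closed). -/
def internalFull (Λ : Finset Vtx) (ωb : {e // e ∈ intEdges Λ} → Bool) :
    Edge → Bool :=
  extendConf (intEdges Λ) ωb freeBC

/-! ### The Ising model -/

/-- The spin function `±1` of a configuration `σ` on `Λ` (0 outside `Λ`). -/
def spin (Λ : Finset Vtx) (σ : {v // v ∈ Λ} → Bool) (v : Vtx) : ℝ :=
  if hv : v ∈ Λ then (if σ ⟨v, hv⟩ then 1 else -1) else 0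

/-- Boltzmann weight for the Ising model at `β_c` on `Λ` with free boundary
conditions and external field `a^{15/8}·h`. -/
def isingWeight (a h : ℝ) (Λ : Finset Vtx) (σ : {v // v ∈ Λ} → Bool) : ℝ :=
  Real.exp (betaC * ∑ v ∈ Λ, ∑ b : Bool,
      (if v + estep b ∈ Λ then spin Λ σ v * spin Λ σ (v + estep b) else 0) +
    a ^ ((15 : ℝ) / 8) * h * ∑ v ∈ Λ, spin Λ σ v)

/-- Finite-volume Ising expectation (free boundary conditions, field `a^{15/8}h`). -/
def isingExpF (a h : ℝ) (Λ : Finset Vtx) (f : (Vtx → ℝ) → ℝ) : ℝ :=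
  (∑ σ : {v // v ∈ Λ} → Bool, f (spin Λ σ) * isingWeight a h Λ σ) /
    ∑ σ : {v // v ∈ Λ} → Bool, isingWeight a h Λ σ

/-- Infinite-volume Ising expectation `⟨·⟩_{a,h}` at `β_c` with field `a^{15/8}h`:
the limit of finite-volume expectations. -/
def isingExp (a h : ℝ) (f : (Vtx → ℝ) → ℝ) : ℝ :=
  limUnder atTop (fun n : ℕ => isingExpF a h (boxZ n) f)

/-- The truncated two-point function `⟨σ_x;σ_y⟩_{a,h}`. -/
def tpf (a h : ℝ) (x y : Vtx) : ℝ :=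
  isingExp a h (fun s => s x * s y) -
    isingExp a h (fun s => s x) * isingExp a h (fun s => s y)

/-- The lattice mass (inverse correlation length) `M̃(H)` on `ℤ²`. -/
def latticeMass (H : ℝ) : ℝ :=
  sSup {m : ℝ | 0 < m ∧ ∃ C : ℝ, ∀ x y : Vtx,
    tpf 1 H x y ≤ C * Real.exp (-m * edistV 1 x y)}

/-! ### The Edwards–Sokal coupling -/

/-- Boolean spins on `Λ` extended by `true` (the ghost spin) off `Λ`. -/
def spinB (Λ : Finset Vtx) (σ : {v // v ∈ Λ} → Bool) (v : Vtx) : Bool :=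
  if hv : v ∈ Λ then σ ⟨v, hv⟩ else true

/-- Compatibility of spins with an FK configuration: spins are constant on open
clusters and `+1` (`true`) on the cluster of the ghost. -/
def esConsistent (Λ : Finset Vtx) (ω : Edge → Bool) (σs : Vtx → Bool) : Prop :=
  (∀ v ∈ Λ, ∀ w ∈ Λ, Conn ω (some v) (some w) → σs v = σs w) ∧
  (∀ v ∈ Λ, Conn ω (some v) none → σs v = true)

/-- Weight of a pair (FK configuration, spin configuration) in the Edwards–Sokal
coupling. -/
def esWeight (Λ : Finset Vtx) (E : Finset Edge) (a : ℝ) (hprof : Vtx → ℝ)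
    (ρ : Edge → Bool) (ω : {e // e ∈ E} → Bool) (σ : {v // v ∈ Λ} → Bool) : ℝ :=
  fkWeight Λ E a hprof ρ ω *
    (if esConsistent Λ (extendConf E ω ρ) (spinB Λ σ) then
      (1 / 2) ^ numClusters Λ (extendConf E ω ρ) else 0)

/-- Probability of an event under the Edwards–Sokal coupling. -/
def esProb (Λ : Finset Vtx) (E : Finset Edge) (a : ℝ) (hprof : Vtx → ℝ)
    (ρ : Edge → Bool) (A : (Edge → Bool) → (Vtx → Bool) → Prop) : ℝ :=
  (∑ ω : {e // e ∈ E} → Bool, ∑ σ : {v // v ∈ Λ} → Bool,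
      if A (extendConf E ω ρ) (spinB Λ σ) then esWeight Λ E a hprof ρ ω σ else 0) /
    ∑ ω : {e // e ∈ E} → Bool, ∑ σ : {v // v ∈ Λ} → Bool, esWeight Λ E a hprof ρ ω σ

/-- Conditional probability under the Edwards–Sokal coupling. -/
def esCondProb (Λ : Finset Vtx) (E : Finset Edge) (a : ℝ) (hprof : Vtx → ℝ)
    (ρ : Edge → Bool) (A B : (Edge → Bool) → (Vtx → Bool) → Prop) : ℝ :=
  esProb Λ E a hprof ρ (fun ω σs => A ω σs ∧ B ω σs) / esProb Λ E a hprof ρ B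

/-! ### Circuits -/

/-- A lattice circuit: an injective cyclic nearest-neighbour path. -/
def IsCircuit (m : ℕ) (γ : ZMod m → Vtx) : Prop :=
  0 < m ∧ Function.Injective γ ∧ ∀ i, nn (γ i) (γ (i + 1))

/-- The trace of a circuit in the plane (union of the segments between
consecutive vertices, in physical coordinates). -/
def circuitImage (a : ℝ) (m : ℕ) (γ : ZMod m → Vtx) : Set (ℝ × ℝ) :=
  ⋃ i : ZMod m, segment ℝ (posOf a (γ i)) (posOf a (γ (i + 1)))

/-- The inside of a loop: points off the loop whose connected component of the
complement is bounded. -/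
def insideLoop (Γ : Set (ℝ × ℝ)) : Set (ℝ × ℝ) :=
  {p | p ∉ Γ ∧ Bornology.IsBounded (connectedComponentIn Γᶜ p)}

/-- `Γ` surrounds `S`. -/
def Surrounds (Γ S : Set (ℝ × ℝ)) : Prop := S ⊆ insideLoop Γ

/-! ### Statement-specific geometry and events -/

def lam31 : Set (ℝ × ℝ) := Set.Icc (0:ℝ) 3 ×ˢ Set.Icc (0:ℝ) 1
def seg0 : Set (ℝ × ℝ) := ({0} : Set ℝ) ×ˢ Set.Icc (0:ℝ) 1
def seg3 : Set (ℝ × ℝ) := ({3} : Set ℝ) ×ˢ Set.Icc (0:ℝ) 1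
def lam33 : Set (ℝ × ℝ) := Set.Icc (0:ℝ) 3 ×ˢ Set.Icc (0:ℝ) 3
def sq12 : Set (ℝ × ℝ) := Set.Icc (1:ℝ) 2 ×ˢ Set.Icc (1:ℝ) 2
def ann13 : Set (ℝ × ℝ) := lam33 \ sq12

/-- The event `E^a(K)` of Lemma `lemnec1`. -/
def evE (a : ℝ) (K : ℕ) (ω : Edge → Bool) : Prop :=
  ∃ k : ℕ, 1 ≤ k ∧ k ≤ K ∧ ∃ C : ℕ → Finset Vtx,
    (∀ i < k, C i ∈ clustersIn (aApprox a 3 lam31) ω ∧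
      a ^ (-(15:ℝ)/8) / K ≤ ((C i).card : ℝ)) ∧
    setDistR (physSet a (C 0)) seg0 ≤ a ∧
    (∀ i, i + 1 < k → setDistR (physSet a (C i)) (physSet a (C (i+1))) = a) ∧
    setDistR (physSet a (C (k-1))) seg3 ≤ a

/-- The necklace event `𝒩^a(K)`. -/
def evN (a : ℝ) (K : ℕ) (ω : Edge → Bool) : Prop :=
  ∃ k : ℕ, 1 ≤ k ∧ k ≤ K ∧ ∃ C : ℕ → Finset Vtx,
    (∀ i < k, C i ∈ clustersIn (aApprox a 3 ann13) ω ∧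
      a ^ (-(15:ℝ)/8) / K ≤ ((C i).card : ℝ)) ∧
    (∀ i, i + 1 < k → setDistR (physSet a (C i)) (physSet a (C (i+1))) = a) ∧
    setDistR (physSet a (C (k-1))) (physSet a (C 0)) = a ∧
    ∃ m : ℕ, ∃ γ : ZMod m → Vtx, IsCircuit m γ ∧
      (∀ i, ∃ j < k, γ i ∈ C j) ∧
      Surrounds (circuitImage a m γ) sq12

/-- The event that the annulus `A_{1,3}^a` is good. -/
def evGood (a : ℝ) (ω : Edge → Bool) : Prop :=
  ∃ k : ℕ, 1 ≤ k ∧ ∃ C : ℕ → Finset Vtx,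
    (∀ i < k, C i ∈ clustersIn (aApprox a 3 ann13) ω ∧
      ∃ v ∈ C i, Conn ω (some v) none) ∧
    (∀ i, i + 1 < k → setDistR (physSet a (C i)) (physSet a (C (i+1))) = a) ∧
    setDistR (physSet a (C (k-1))) (physSet a (C 0)) = a ∧
    ∃ m : ℕ, ∃ γ : ZMod m → Vtx, IsCircuit m γ ∧
      (∀ i, ∃ j < k, γ i ∈ C j) ∧
      Surrounds (circuitImage a m γ) sq12

/-- The annulus `([-R,R]²) ∖ ((-r,r)²)`. -/
def annSet (r R : ℝ) : Set (ℝ × ℝ) :=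
  (Set.Icc (-R) R ×ˢ Set.Icc (-R) R) \ (Set.Ioo (-r) r ×ˢ Set.Ioo (-r) r)

def ann1L (a L : ℝ) : Finset Vtx := aApprox a (2*L) (annSet 1 L)
def annL2L (a L : ℝ) : Finset Vtx := aApprox a (2*L) (annSet L (2*L))

/-- The part `∂₁A^a(1,L)` of the boundary of `A^a(1,L)` inside `(-1,1)²`. -/
def bdry1 (a L : ℝ) (z : Vtx) : Prop :=
  z ∉ ann1L a L ∧ (∃ w ∈ ann1L a L, nn z w) ∧
    posOf a z ∈ Set.Ioo (-1:ℝ) 1 ×ˢ Set.Ioo (-1:ℝ) 1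

/-- The part `∂₂A^a(1,L)` of the boundary of `A^a(1,L)` outside `[-L,L]²`. -/
def bdry2 (a L : ℝ) (z : Vtx) : Prop :=
  z ∉ ann1L a L ∧ (∃ w ∈ ann1L a L, nn z w) ∧
    posOf a z ∉ Set.Icc (-L) L ×ˢ Set.Icc (-L) L

/-- The event `F(a,L)`: an open crossing of `A^a(1,L)` whose cluster is not
connected to the ghost within the annulus. -/
def evF (a L : ℝ) (ω : Edge → Bool) : Prop :=
  ∃ u ∈ ann1L a L, ∃ v ∈ ann1L a L,
    (∃ z, bdry1 a L z ∧ nn u z) ∧ (∃ z, bdry2 a L z ∧ nn v z) ∧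
    ConnInt (↑(ann1L a L)) ω u v ∧
    ¬ ConnIn (↑(ann1L a L)) ω (some u) none

/-- The event `G(a,L)`: a circuit in `A^a(L,2L)` surrounding `[-L,L]²` whose
vertices are all connected to the ghost within the annulus. -/
def evG (a L : ℝ) (ω : Edge → Bool) : Prop :=
  ∃ m : ℕ, ∃ γ : ZMod m → Vtx, IsCircuit m γ ∧
    (∀ i, γ i ∈ annL2L a L ∧ ConnIn (↑(annL2L a L)) ω (some (γ i)) none) ∧
    Surrounds (circuitImage a m γ) (Set.Icc (-L) L ×ˢ Set.Icc (-L) L)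

/-- The field profile equal to `h` except on `B(x,1) ∪ B(y,1)` where it is `0`. -/
def hvecXY (a h : ℝ) (x y : Vtx) : Vtx → ℝ :=
  fun v => if posOf a v ∈ ballSet (posOf a x) 1 ∪ ballSet (posOf a y) 1 then 0 else h

/-- The event `A⁰ = {x ↔ y, x ↮ g}`. -/
def evA0 (x y : Vtx) (ω : Edge → Bool) : Prop :=
  Conn ω (some x) (some y) ∧ ¬ Conn ω (some x) none

/-- The event `A¹_z = {z ↔ g}`. -/
def evA1 (z : Vtx) (ω : Edge → Bool) : Prop := Conn ω (some z) none

/-- The event `A^c_z`: an open path from `z` within `B(z,r)` to a vertex whose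
ghost edge is open. -/
def evAc (a r : ℝ) (z : Vtx) (ω : Edge → Bool) : Prop :=
  ∃ w : Vtx, ConnInt {v : Vtx | posOf a v ∈ ballSet (posOf a z) r} ω z w ∧
    ω (Sum.inr w) = true

/-- `evA a r z true = A^c_z` (close) and `evA a r z false = A^f_z` (far). -/
def evA (a r : ℝ) (z : Vtx) (u : Bool) (ω : Edge → Bool) : Prop :=
  if u then evAc a r z ω else evA1 z ω ∧ ¬ evAc a r z ω

/-- A circuit whose vertices lie (physically) in `Ann`. -/
def circuitInAnn (a : ℝ) (Ann : Set (ℝ × ℝ)) (m : ℕ) (γ : ZMod m → Vtx) : Prop :=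
  IsCircuit m γ ∧ ∀ i, posOf a (γ i) ∈ Ann

/-- `Ã_𝐂`: every vertex of the circuit is connected to the ghost within `Ann`. -/
def evTildeA (a : ℝ) (Ann : Set (ℝ × ℝ)) (m : ℕ) (γ : ZMod m → Vtx)
    (ω : Edge → Bool) : Prop :=
  ∀ i, ConnIn {v : Vtx | posOf a v ∈ Ann} ω (some (γ i)) none

/-- `A_𝐂`: `𝐂` is the outermost circuit in `Ann` with property `Ã`. -/
def evOutermost (a : ℝ) (Ann : Set (ℝ × ℝ)) (m : ℕ) (γ : ZMod m → Vtx)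
    (ω : Edge → Bool) : Prop :=
  evTildeA a Ann m γ ω ∧
    ∀ m' : ℕ, ∀ γ' : ZMod m' → Vtx, circuitInAnn a Ann m' γ' →
      evTildeA a Ann m' γ' ω →
      ∀ i', posOf a (γ' i') ∈ circuitImage a m γ ∪ insideLoop (circuitImage a m γ)

/-- The edge `e` lies (physically) in the region `S` (for ghost edges: its
lattice endpoint does). -/
def edgeInSet (a : ℝ) (S : Set (ℝ × ℝ)) : Edge → Prop
  | Sum.inl p => posOf a p.1 ∈ S ∧ posOf a (p.1 + estep p.2) ∈ S
  | Sum.inr v => posOf a v ∈ S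

/-- An increasing event. -/
def IncreasingEv (A : (Edge → Bool) → Prop) : Prop :=
  ∀ ω ω' : Edge → Bool, (∀ e, ω e = true → ω' e = true) → A ω → A ω'

/-- The event `A` depends only on the edges lying in `S`. -/
def DependsOnlyOn (a : ℝ) (S : Set (ℝ × ℝ)) (A : (Edge → Bool) → Prop) : Prop :=
  ∀ ω ω' : Edge → Bool, (∀ e, edgeInSet a S e → ω e = ω' e) → (A ω ↔ A ω')

def ballB (a : ℝ) (x y : Vtx) : Finset Vtx :=
  aApprox a (edistR (0, 0) (posOf a x) + edistV a x y)
    (ballSet (posOf a x) (2 * edistV a x y / 3))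

def annXY (a : ℝ) (x y : Vtx) : Set (ℝ × ℝ) :=
  {p | p ∈ ballSet (posOf a x) (2 * edistV a x y / 3) ∧
       p ∉ ballSet (posOf a x) (edistV a x y / 3)}

def lam3NN (N : ℕ) : Set (ℝ × ℝ) := Set.Icc (0:ℝ) (3*N) ×ˢ Set.Icc (0:ℝ) N
def seg0N (N : ℕ) : Set (ℝ × ℝ) := ({0} : Set ℝ) ×ˢ Set.Icc (0:ℝ) N
def seg3N (N : ℕ) : Set (ℝ × ℝ) := ({(3*N : ℝ)} : Set ℝ) ×ˢ Set.Icc (0:ℝ) N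
def lam3N3N (N : ℕ) : Set (ℝ × ℝ) := Set.Icc (0:ℝ) (3*N) ×ˢ Set.Icc (0:ℝ) (3*N)
def sqN2N (N : ℕ) : Set (ℝ × ℝ) := Set.Icc (N:ℝ) (2*N) ×ˢ Set.Icc (N:ℝ) (2*N)
def annN3N (N : ℕ) : Set (ℝ × ℝ) := lam3N3N N \ sqN2N N

/-- The event `E^a(K,N)`. -/
def evEN (a : ℝ) (K N : ℕ) (ω : Edge → Bool) : Prop :=
  ∃ k : ℕ, 1 ≤ k ∧ k ≤ K ∧ ∃ C : ℕ → Finset Vtx,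
    (∀ i < k, C i ∈ clustersIn (aApprox a (3*N) (lam3NN N)) ω ∧
      (N : ℝ) ^ ((15:ℝ)/8) * a ^ (-(15:ℝ)/8) / K ≤ ((C i).card : ℝ)) ∧
    setDistR (physSet a (C 0)) (seg0N N) ≤ a ∧
    (∀ i, i + 1 < k → setDistR (physSet a (C i)) (physSet a (C (i+1))) = a) ∧
    setDistR (physSet a (C (k-1))) (seg3N N) ≤ a

/-- The event that the annulus `A_{N,3N}^a` is good. -/
def evGoodN (a : ℝ) (N : ℕ) (ω : Edge → Bool) : Prop :=
  ∃ k : ℕ, 1 ≤ k ∧ ∃ C : ℕ → Finset Vtx,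
    (∀ i < k, C i ∈ clustersIn (aApprox a (3*N) (annN3N N)) ω ∧
      ∃ v ∈ C i, Conn ω (some v) none) ∧
    (∀ i, i + 1 < k → setDistR (physSet a (C i)) (physSet a (C (i+1))) = a) ∧
    setDistR (physSet a (C (k-1))) (physSet a (C 0)) = a ∧
    ∃ m : ℕ, ∃ γ : ZMod m → Vtx, IsCircuit m γ ∧
      (∀ i, ∃ j < k, γ i ∈ C j) ∧ Surrounds (circuitImage a m γ) (sqN2N N)

set_option linter.unusedSectionVars false
set_option linter.style.longLine false

namespace Isg

/-! ### Cones of functions with nonnegative sums -/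

section Cone
variable {ι : Type} [Fintype ι] {S : ι → Type} [∀ i, Fintype (S i)]

/-- Nonnegative constants, and single-site functions taken from the monoids `M i`. -/
def coneGen (M : ∀ i, Submonoid (S i → ℝ)) : Set ((∀ i, S i) → ℝ) :=
  {f | (∃ c : ℝ, 0 ≤ c ∧ f = fun _ => c) ∨ ∃ i, ∃ g ∈ M i, f = fun ω => g (ω i)}

/-- The closed subsemiring of functions on `∏ i, S i` generated by `coneGen M`. -/
def Cone (M : ∀ i, Submonoid (S i → ℝ)) : Subsemiring ((∀ i, S i) → ℝ) :=
  (Subsemiring.closure (coneGen M)).topologicalClosure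

variable {M : ∀ i, Submonoid (S i → ℝ)}

lemma cone_const {c : ℝ} (hc : 0 ≤ c) : (fun _ => c) ∈ Cone M :=
  Subsemiring.le_topologicalClosure _ (Subsemiring.subset_closure (Or.inl ⟨c, hc, rfl⟩))

lemma cone_site (i : ι) {g : S i → ℝ} (hg : g ∈ M i) : (fun ω => g (ω i)) ∈ Cone M :=
  Subsemiring.le_topologicalClosure _ (Subsemiring.subset_closure (Or.inr ⟨i, g, hg, rfl⟩))

lemma cone_le {T : Subsemiring ((∀ i, S i) → ℝ)} (hT : IsClosed (T : Set ((∀ i, S i) → ℝ)))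
    (hc : ∀ c : ℝ, 0 ≤ c → (fun _ => c) ∈ T)
    (hs : ∀ i, ∀ g ∈ M i, (fun ω => g (ω i)) ∈ T) : Cone M ≤ T := by
  apply Subsemiring.topologicalClosure_minimal _ _ hT
  rw [Subsemiring.closure_le]
  rintro f (⟨c, h, rfl⟩ | ⟨i, g, hg, rfl⟩)
  · exact hc c h
  · exact hs i g hg

lemma cone_add {f g : (∀ i, S i) → ℝ} (hf : f ∈ Cone M) (hg : g ∈ Cone M) :
    (fun ω => f ω + g ω) ∈ Cone M := add_mem hf hg

lemma cone_mul {f g : (∀ i, S i) → ℝ} (hf : f ∈ Cone M) (hg : g ∈ Cone M) :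
    (fun ω => f ω * g ω) ∈ Cone M := mul_mem hf hg

lemma cone_smul {c : ℝ} (hc : 0 ≤ c) {f : (∀ i, S i) → ℝ} (hf : f ∈ Cone M) :
    (fun ω => c * f ω) ∈ Cone M := cone_mul (cone_const hc) hf

lemma cone_sum {κ : Type*} (s : Finset κ) {f : κ → (∀ i, S i) → ℝ}
    (hf : ∀ k ∈ s, f k ∈ Cone M) : (fun ω => ∑ k ∈ s, f k ω) ∈ Cone M := by
  have := sum_mem (S := Cone M) hf
  convert this using 1
  ext ω; simp

lemma cone_prod {κ : Type*} (s : Finset κ) {f : κ → (∀ i, S i) → ℝ}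
    (hf : ∀ k ∈ s, f k ∈ Cone M) : (fun ω => ∏ k ∈ s, f k ω) ∈ Cone M := by
  have := prod_mem (S := Cone M) hf
  convert this using 1
  ext ω; simp

lemma cone_exp {f : (∀ i, S i) → ℝ} (hf : f ∈ Cone M) :
    (fun ω => Real.exp (f ω)) ∈ Cone M := by
  have hcl : IsClosed (Cone M : Set ((∀ i, S i) → ℝ)) := Subsemiring.isClosed_topologicalClosure _
  have ht : Tendsto (fun n : ℕ => fun ω => ∑ k ∈ Finset.range n, (1 / (k.factorial : ℝ)) * f ω ^ k)
      atTop (nhds (fun ω => Real.exp (f ω))) := by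
    rw [tendsto_pi_nhds]
    intro ω
    have := (NormedSpace.expSeries_div_hasSum_exp (f ω)).tendsto_sum_nat
    rw [← Real.exp_eq_exp_ℝ] at this
    refine this.congr fun n => Finset.sum_congr rfl fun k _ => ?_
    ring
  refine hcl.mem_of_tendsto ht (Eventually.of_forall fun n => ?_)
  apply cone_sum
  intro k _
  apply cone_smul (by positivity)
  exact pow_mem hf k

/-- If all single-site sums over the monoids are nonnegative, so are all sums over the cone. -/
theorem cone_sum_nonneg (hM : ∀ i, ∀ p ∈ M i, 0 ≤ ∑ s, p s) {f : (∀ i, S i) → ℝ}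
    (hf : f ∈ Cone M) : 0 ≤ ∑ ω, f ω := by
  have hcl : IsClosed {f : (∀ i, S i) → ℝ | 0 ≤ ∑ ω, f ω} := by
    apply isClosed_le continuous_const
    fun_prop
  have hmono : ∀ f ∈ Submonoid.closure (coneGen M), ∃ c : ℝ, 0 ≤ c ∧ ∃ p : ∀ i, S i → ℝ,
      (∀ i, p i ∈ M i) ∧ f = fun ω => c * ∏ i, p i (ω i) := by
    intro f hf
    induction hf using Submonoid.closure_induction with
    | mem f h =>
      rcases h with ⟨c, hc, rfl⟩ | ⟨i, g, hg, rfl⟩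
      · exact ⟨c, hc, fun _ => 1, fun i => one_mem _, by simp⟩
      · refine ⟨1, zero_le_one, Pi.mulSingle i g, fun j => ?_, ?_⟩
        · by_cases hj : j = i
          · subst hj; simpa using hg
          · rw [Pi.mulSingle_eq_of_ne hj]; exact one_mem _
        · ext ω
          rw [Finset.prod_eq_single i]
          · simp
          · intro j _ hj; rw [Pi.mulSingle_eq_of_ne hj]; rfl
          · simp
    | one => exact ⟨1, zero_le_one, fun _ => 1, fun i => one_mem _, by ext; simp⟩
    | mul f g _ _ h1 h2 =>
      obtain ⟨c, hc, p, hp, rfl⟩ := h1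
      obtain ⟨d, hd, q, hq, rfl⟩ := h2
      refine ⟨c * d, mul_nonneg hc hd, fun i => p i * q i, fun i => mul_mem (hp i) (hq i), ?_⟩
      ext ω
      simp only [Pi.mul_apply, Finset.prod_mul_distrib]
      ring
  have key : ∀ f ∈ Subsemiring.closure (coneGen M), 0 ≤ ∑ ω, f ω := by
    intro f hf
    rw [Subsemiring.mem_closure_iff] at hf
    induction hf using AddSubmonoid.closure_induction with
    | mem f h =>
      obtain ⟨c, hc, p, hp, rfl⟩ := hmono f h
      rw [← Finset.mul_sum]
      apply mul_nonneg hc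
      have := Finset.prod_univ_sum (fun i => (Finset.univ : Finset (S i))) p
      rw [Fintype.piFinset_univ] at this
      rw [← this]
      exact Finset.prod_nonneg fun i _ => hM i _ (hp i)
    | zero => simp
    | add f g _ _ h1 h2 =>
      simp only [Pi.add_apply, Finset.sum_add_distrib]; linarith
  exact closure_minimal key hcl hf

end Cone

/-! ### The Ising model on a finite set -/

/-- The numerical value of a spin. -/
def sg (b : Bool) : ℝ := if b then 1 else -1

@[simp] lemma sg_true : sg true = 1 := rfl
@[simp] lemma sg_false : sg false = -1 := rfl
@[simp] lemma sg_mul_self (b : Bool) : sg b * sg b = 1 := by cases b <;> simp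
@[simp] lemma sg_sq (b : Bool) : sg b ^ 2 = 1 := by cases b <;> simp
@[simp] lemma sg_not (b : Bool) : sg (!b) = - sg b := by cases b <;> simp
lemma abs_sg (b : Bool) : |sg b| = 1 := by cases b <;> simp
lemma sg_le (b : Bool) : sg b ≤ 1 := by cases b <;> norm_num [sg]
lemma le_sg (b : Bool) : -1 ≤ sg b := by cases b <;> norm_num [sg]

variable {V : Type} [Fintype V]

/-- Minus the energy: couplings `J` are summed over ordered pairs. -/
def en (J : V → V → ℝ) (h : V → ℝ) (σ : V → Bool) : ℝ :=
  ∑ u, ∑ v, J u v * (sg (σ u) * sg (σ v)) + ∑ v, h v * sg (σ v)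

/-- Boltzmann weight. -/
def wt (J : V → V → ℝ) (h : V → ℝ) (σ : V → Bool) : ℝ := Real.exp (en J h σ)

/-- Partition function. -/
def Zf (J : V → V → ℝ) (h : V → ℝ) : ℝ := ∑ σ, wt J h σ

/-- Expectation in the Ising model. -/
def Ex (J : V → V → ℝ) (h : V → ℝ) (f : (V → Bool) → ℝ) : ℝ := (∑ σ, f σ * wt J h σ) / Zf J h

/-- Magnetization. -/
def mg (J : V → V → ℝ) (h : V → ℝ) (u : V) : ℝ := Ex J h fun σ => sg (σ u)

/-- Two-point function. -/
def tw (J : V → V → ℝ) (h : V → ℝ) (u v : V) : ℝ := Ex J h fun σ => sg (σ u) * sg (σ v)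

/-- Truncated two-point function. -/
def Uf (J : V → V → ℝ) (h : V → ℝ) (u v : V) : ℝ := tw J h u v - mg J h u * mg J h v

lemma wt_pos (J : V → V → ℝ) (h : V → ℝ) (σ) : 0 < wt J h σ := Real.exp_pos _

lemma Zf_pos (J : V → V → ℝ) (h : V → ℝ) : 0 < Zf J h :=
  Finset.sum_pos (fun σ _ => wt_pos J h σ) Finset.univ_nonempty

/-- The cone generated by the spins. -/
def CS (V : Type) [Fintype V] : Subsemiring ((V → Bool) → ℝ) :=
  Cone (S := fun _ : V => Bool) fun _ => Submonoid.closure {sg}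

lemma CS_sg (v : V) : (fun σ : V → Bool => sg (σ v)) ∈ CS V :=
  cone_site (S := fun _ : V => Bool) v (Submonoid.subset_closure rfl)

lemma CS_sg2 (u v : V) : (fun σ : V → Bool => sg (σ u) * sg (σ v)) ∈ CS V :=
  cone_mul (S := fun _ : V => Bool) (CS_sg u) (CS_sg v)

lemma CS_en {J : V → V → ℝ} {h : V → ℝ} (hJ : ∀ u v, 0 ≤ J u v) (hh : ∀ v, 0 ≤ h v) :
    en J h ∈ CS V := by
  apply cone_add (S := fun _ : V => Bool)
  · refine cone_sum _ fun u _ => cone_sum _ fun v _ => cone_smul (hJ u v) (CS_sg2 u v)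
  · exact cone_sum _ fun v _ => cone_smul (hh v) (CS_sg v)

lemma CS_wt {J : V → V → ℝ} {h : V → ℝ} (hJ : ∀ u v, 0 ≤ J u v) (hh : ∀ v, 0 ≤ h v) :
    wt J h ∈ CS V := cone_exp (S := fun _ : V => Bool) (CS_en hJ hh)

theorem CS_sum_nonneg {f : (V → Bool) → ℝ} (hf : f ∈ CS V) : 0 ≤ ∑ σ, f σ := by
  refine cone_sum_nonneg (S := fun _ : V => Bool) (fun _ p hp => ?_) hf
  obtain ⟨n, rfl⟩ := Submonoid.mem_closure_singleton.1 hp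
  rcases Nat.even_or_odd n with hn | hn <;> simp [hn.neg_pow]

/-- First Griffiths inequality, for all functions in the spin cone. -/
theorem Ex_nonneg {J : V → V → ℝ} {h : V → ℝ} (hJ : ∀ u v, 0 ≤ J u v) (hh : ∀ v, 0 ≤ h v)
    {f : (V → Bool) → ℝ} (hf : f ∈ CS V) : 0 ≤ Ex J h f :=
  div_nonneg (CS_sum_nonneg (cone_mul (S := fun _ : V => Bool) hf (CS_wt hJ hh))) (Zf_pos J h).le

/-- `q = s + s'` on a doubled spin. -/
def gq (p : Bool × Bool) : ℝ := sg p.1 + sg p.2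
/-- `t = s - s'` on a doubled spin. -/
def gt (p : Bool × Bool) : ℝ := sg p.1 - sg p.2

/-- The cone of the duplicated system, generated by sums and differences of spins. -/
def CD (V : Type) [Fintype V] : Subsemiring ((V → Bool × Bool) → ℝ) :=
  Cone (S := fun _ : V => Bool × Bool) fun _ => Submonoid.closure {gq, gt}

lemma sum_qt_nonneg (p : Bool × Bool → ℝ) (hp : p ∈ Submonoid.closure {gq, gt}) :
    0 ≤ ∑ s, p s := by
  obtain ⟨a, b, rfl⟩ := (Submonoid.mem_closure_pair _ _ _).1 hp
  simp only [Fintype.sum_prod_type, Fintype.sum_bool, Pi.mul_apply, Pi.pow_apply, gq, gt, sg_true,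
    sg_false]
  norm_num
  rcases a with - | a <;> rcases b with - | b
  · norm_num
  · rcases Nat.even_or_odd (b + 1) with hb | hb <;> simp [hb.neg_pow]
  · rcases Nat.even_or_odd (a + 1) with ha | ha <;> simp [ha.neg_pow]
  · simp

lemma CD_q (v : V) : (fun ω : V → Bool × Bool => sg (ω v).1 + sg (ω v).2) ∈ CD V :=
  cone_site (S := fun _ : V => Bool × Bool) v
    (g := gq) (Submonoid.subset_closure (by simp))

lemma CD_t (v : V) : (fun ω : V → Bool × Bool => sg (ω v).1 - sg (ω v).2) ∈ CD V :=
  cone_site (S := fun _ : V => Bool × Bool) v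
    (g := gt) (Submonoid.subset_closure (by simp))

/-- Sums and differences of the two copies of a function in the spin cone. -/
lemma CD_double {f : (V → Bool) → ℝ} (hf : f ∈ CS V) :
    (fun ω : V → Bool × Bool => f (fun v => (ω v).1) + f (fun v => (ω v).2)) ∈ CD V ∧
    (fun ω : V → Bool × Bool => f (fun v => (ω v).1) - f (fun v => (ω v).2)) ∈ CD V := by
  have hcl : IsClosed (CD V : Set ((V → Bool × Bool) → ℝ)) :=
    Subsemiring.isClosed_topologicalClosure _
  let P : ((V → Bool) → ℝ) → (V → Bool × Bool) → ℝ :=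
    fun f ω => f (fun v => (ω v).1) + f (fun v => (ω v).2)
  let Q : ((V → Bool) → ℝ) → (V → Bool × Bool) → ℝ :=
    fun f ω => f (fun v => (ω v).1) - f (fun v => (ω v).2)
  have hP : Continuous P := by unfold P; fun_prop
  have hQ : Continuous Q := by unfold Q; fun_prop
  have half : (0 : ℝ) ≤ 1 / 2 := by norm_num
  let T : Subsemiring ((V → Bool) → ℝ) :=
    { carrier := {f | P f ∈ CD V ∧ Q f ∈ CD V}
      mul_mem' := by
        rintro a b ⟨h1, h2⟩ ⟨h3, h4⟩
        constructor
        · have e : P (a * b) = fun ω => 1 / 2 * (P a ω * P b ω + Q a ω * Q b ω) := by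
            ext ω; simp only [P, Q, Pi.mul_apply]; ring
          show P (a * b) ∈ CD V
          rw [e]
          exact cone_smul (S := fun _ : V => Bool × Bool) half
            (cone_add (S := fun _ : V => Bool × Bool) (mul_mem h1 h3) (mul_mem h2 h4))
        · have e : Q (a * b) = fun ω => 1 / 2 * (P a ω * Q b ω + Q a ω * P b ω) := by
            ext ω; simp only [P, Q, Pi.mul_apply]; ring
          show Q (a * b) ∈ CD V
          rw [e]
          exact cone_smul (S := fun _ : V => Bool × Bool) half
            (cone_add (S := fun _ : V => Bool × Bool) (mul_mem h1 h4) (mul_mem h2 h3))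
      one_mem' := by
        constructor
        · exact cone_const (S := fun _ : V => Bool × Bool) (c := 1 + 1) (by norm_num)
        · exact cone_const (S := fun _ : V => Bool × Bool) (c := 1 - 1) (by norm_num)
      add_mem' := by
        rintro a b ⟨h1, h2⟩ ⟨h3, h4⟩
        constructor
        · convert add_mem h1 h3 using 1
          ext ω; simp only [P, Pi.add_apply]; ring
        · convert add_mem h2 h4 using 1
          ext ω; simp only [Q, Pi.add_apply]; ring
      zero_mem' := by
        constructor
        · exact cone_const (S := fun _ : V => Bool × Bool) (c := 0 + 0) (by norm_num)
        · exact cone_const (S := fun _ : V => Bool × Bool) (c := 0 - 0) (by norm_num) }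
  have hT : CS V ≤ T := by
    apply cone_le (S := fun _ : V => Bool) (T := T)
    · exact (hcl.preimage hP).inter (hcl.preimage hQ)
    · intro c hc
      constructor
      · exact cone_const (S := fun _ : V => Bool × Bool) (c := c + c) (by positivity)
      · exact cone_const (S := fun _ : V => Bool × Bool) (c := c - c) (by simp)
    · intro v g hg
      induction hg using Submonoid.closure_induction with
      | mem g h => rw [Set.mem_singleton_iff] at h; subst h; exact ⟨CD_q v, CD_t v⟩
      | one => exact T.one_mem
      | mul g g' _ _ h1 h2 => exact T.mul_mem h1 h2
  exact hT hf

/-- Splitting a doubled configuration. -/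
lemma sum_double (F : (V → Bool) → (V → Bool) → ℝ) :
    ∑ ω : V → Bool × Bool, F (fun v => (ω v).1) (fun v => (ω v).2) = ∑ σ, ∑ τ, F σ τ := by
  rw [← Fintype.sum_prod_type' (f := fun σ τ => F σ τ)]
  exact Fintype.sum_equiv (Equiv.arrowProdEquivProdArrow V (fun _ => Bool) (fun _ => Bool)) _ _
    fun _ => rfl

/-- Second Griffiths inequality, for all functions in the spin cone. -/
theorem Ex_mul_ge {J : V → V → ℝ} {h : V → ℝ} (hJ : ∀ u v, 0 ≤ J u v) (hh : ∀ v, 0 ≤ h v)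
    {f g : (V → Bool) → ℝ} (hf : f ∈ CS V) (hg : g ∈ CS V) :
    Ex J h f * Ex J h g ≤ Ex J h fun σ => f σ * g σ := by
  have h1 := cone_exp (S := fun _ : V => Bool × Bool) (CD_double (CS_en hJ hh)).1
  have h2 := cone_mul (S := fun _ : V => Bool × Bool)
    (cone_mul (S := fun _ : V => Bool × Bool) (CD_double hf).2 (CD_double hg).2) h1
  have h3 := cone_sum_nonneg (S := fun _ : V => Bool × Bool) (fun _ p hp => sum_qt_nonneg p hp) h2
  rw [sum_double (fun σ τ => (f σ - f τ) * (g σ - g τ) * Real.exp (en J h σ + en J h τ))] at h3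
  have h4 : ∑ σ, ∑ τ, (f σ - f τ) * (g σ - g τ) * Real.exp (en J h σ + en J h τ) =
      2 * ((∑ σ, f σ * g σ * wt J h σ) * Zf J h -
        (∑ σ, f σ * wt J h σ) * (∑ σ, g σ * wt J h σ)) := by
    have e1 : ∀ σ τ, (f σ - f τ) * (g σ - g τ) * Real.exp (en J h σ + en J h τ) =
        (f σ * g σ * wt J h σ) * wt J h τ + wt J h σ * (f τ * g τ * wt J h τ)
        - (f σ * wt J h σ) * (g τ * wt J h τ) - (g σ * wt J h σ) * (f τ * wt J h τ) := by
      intro σ τ; rw [Real.exp_add]; unfold wt; ring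
    simp only [e1, Finset.sum_add_distrib, Finset.sum_sub_distrib, ← Finset.mul_sum,
      ← Finset.sum_mul, Zf]
    ring
  rw [h4] at h3
  unfold Ex
  rw [div_mul_div_comm, div_le_div_iff₀ (mul_pos (Zf_pos J h) (Zf_pos J h)) (Zf_pos J h)]
  have := mul_le_mul_of_nonneg_right (by linarith : (∑ σ, f σ * wt J h σ) * (∑ σ, g σ * wt J h σ) ≤
    (∑ σ, f σ * g σ * wt J h σ) * Zf J h) (Zf_pos J h).le
  linarith

/-! ### Four replicas: concavity inequalities of GHS type -/

/-- The spin values of four replicas. -/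
abbrev B4 : Type := Bool × Bool × Bool × Bool

/-- First of the four orthogonal combinations of the spins of four replicas (Ellis–Monroe variables). -/
def gA (p : B4) : ℝ := sg p.1 + sg p.2.1 + sg p.2.2.1 + sg p.2.2.2

/-- Second orthogonal combination of four replica spins: first two minus last two. -/
def gB (p : B4) : ℝ := sg p.1 + sg p.2.1 - sg p.2.2.1 - sg p.2.2.2

/-- Third orthogonal combination of four replica spins. -/
def gC (p : B4) : ℝ := sg p.1 - sg p.2.1 + sg p.2.2.1 - sg p.2.2.2

/-- Fourth orthogonal combination; its sign makes `gA * gB * gC * gD` nonnegative. -/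
def gD (p : B4) : ℝ := -sg p.1 + sg p.2.1 + sg p.2.2.1 - sg p.2.2.2

/-- The single-site sums `∑ A^a B^b C^c D^d` are nonnegative: they vanish unless the exponents
have a common parity, because the four combinations can be permuted and flipped by permuting the
replicas, and `A B C D ≥ 0`. -/
lemma sum_four_nonneg (p : B4 → ℝ) (hp : p ∈ Submonoid.closure ({gA, gB, gC, gD} : Set (B4 → ℝ))) :
    0 ≤ ∑ s, p s := by
  have h : ∃ a b c d : ℕ, p = fun s => gA s ^ a * gB s ^ b * gC s ^ c * gD s ^ d := by
    induction hp using Submonoid.closure_induction with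
    | mem f h =>
      rcases h with rfl | rfl | rfl | rfl
      · exact ⟨1, 0, 0, 0, by simp⟩
      · exact ⟨0, 1, 0, 0, by simp⟩
      · exact ⟨0, 0, 1, 0, by simp⟩
      · exact ⟨0, 0, 0, 1, by simp⟩
    | one => exact ⟨0, 0, 0, 0, by ext; simp⟩
    | mul f g _ _ h1 h2 =>
      obtain ⟨a, b, c, d, rfl⟩ := h1
      obtain ⟨a', b', c', d', rfl⟩ := h2
      exact ⟨a + a', b + b', c + c', d + d', by ext s; simp only [Pi.mul_apply, pow_add]; ring⟩
  obtain ⟨a, b, c, d, rfl⟩ := h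
  simp only [Fintype.sum_prod_type, Fintype.sum_bool, gA, gB, gC, gD, sg_true, sg_false]
  norm_num
  have key : ∀ n : ℕ, (0:ℝ) ≤ 0 ^ n := fun n => by positivity
  rcases Nat.even_or_odd a with ha | ha <;> rcases Nat.even_or_odd b with hb | hb <;>
    rcases Nat.even_or_odd c with hc | hc <;> rcases Nat.even_or_odd d with hd | hd <;>
    simp only [ha.neg_pow, hb.neg_pow, hc.neg_pow, hd.neg_pow] <;>
    first
    | positivity
    | (ring_nf; try positivity)

variable {V : Type} [Fintype V]

/-- The cone of the four-fold replicated system. -/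
def CQ (V : Type) [Fintype V] : Subsemiring ((V → B4) → ℝ) :=
  Cone (S := fun _ : V => B4) fun _ => Submonoid.closure {gA, gB, gC, gD}

lemma CQ_A (v : V) : (fun ω : V → B4 => gA (ω v)) ∈ CQ V :=
  cone_site (S := fun _ : V => B4) v (Submonoid.subset_closure (by simp))
lemma CQ_B (v : V) : (fun ω : V → B4 => gB (ω v)) ∈ CQ V :=
  cone_site (S := fun _ : V => B4) v (Submonoid.subset_closure (by simp))
lemma CQ_C (v : V) : (fun ω : V → B4 => gC (ω v)) ∈ CQ V :=
  cone_site (S := fun _ : V => B4) v (Submonoid.subset_closure (by simp))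
lemma CQ_D (v : V) : (fun ω : V → B4 => gD (ω v)) ∈ CQ V :=
  cone_site (S := fun _ : V => B4) v (Submonoid.subset_closure (by simp))

/-- Splitting a configuration of four replicas. -/
lemma sum_quad (F : (V → Bool) → (V → Bool) → (V → Bool) → (V → Bool) → ℝ) :
    ∑ ω : V → B4, F (fun v => (ω v).1) (fun v => (ω v).2.1) (fun v => (ω v).2.2.1)
      (fun v => (ω v).2.2.2) = ∑ a, ∑ b, ∑ c, ∑ d, F a b c d := by
  have h : ∑ x : (V → Bool) × (V → Bool) × (V → Bool) × (V → Bool),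
      F x.1 x.2.1 x.2.2.1 x.2.2.2 = ∑ a, ∑ b, ∑ c, ∑ d, F a b c d := by
    simp only [Fintype.sum_prod_type]
  rw [← h]
  let e : (V → B4) ≃ (V → Bool) × (V → Bool) × (V → Bool) × (V → Bool) :=
    { toFun := fun ω => (fun v => (ω v).1, fun v => (ω v).2.1, fun v => (ω v).2.2.1,
        fun v => (ω v).2.2.2)
      invFun := fun x v => (x.1 v, x.2.1 v, x.2.2.1 v, x.2.2.2 v)
      left_inv := fun _ => rfl
      right_inv := fun _ => rfl }
  exact Fintype.sum_equiv e _ _ fun _ => rfl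

/-- Positivity for four replicas in four different fields. -/
theorem quad_nonneg {J : V → V → ℝ} {h₁ h₂ h₃ h₄ : V → ℝ} (hJ : ∀ u v, 0 ≤ J u v)
    (hA : ∀ v, 0 ≤ h₁ v + h₂ v + h₃ v + h₄ v) (hB : ∀ v, 0 ≤ h₁ v + h₂ v - h₃ v - h₄ v)
    (hC : ∀ v, 0 ≤ h₁ v - h₂ v + h₃ v - h₄ v) (hD : ∀ v, 0 ≤ -h₁ v + h₂ v + h₃ v - h₄ v)
    (F : (V → Bool) → (V → Bool) → (V → Bool) → (V → Bool) → ℝ)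
    (hF : (fun ω : V → B4 => F (fun v => (ω v).1) (fun v => (ω v).2.1) (fun v => (ω v).2.2.1)
      (fun v => (ω v).2.2.2)) ∈ CQ V) :
    0 ≤ ∑ a, ∑ b, ∑ c, ∑ d, F a b c d * (wt J h₁ a * wt J h₂ b * wt J h₃ c * wt J h₄ d) := by
  rw [← sum_quad fun a b c d => F a b c d * (wt J h₁ a * wt J h₂ b * wt J h₃ c * wt J h₄ d)]
  refine cone_sum_nonneg (S := fun _ : V => B4) (fun _ p hp => sum_four_nonneg p hp) ?_
  refine cone_mul (S := fun _ : V => B4) hF ?_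
  have e : (fun ω : V → B4 => (wt J h₁ (fun v => (ω v).1) * wt J h₂ (fun v => (ω v).2.1) *
      wt J h₃ (fun v => (ω v).2.2.1) * wt J h₄ (fun v => (ω v).2.2.2))) = fun ω =>
      Real.exp (∑ u, ∑ v, J u v / 4 * (gA (ω u) * gA (ω v) + gB (ω u) * gB (ω v) +
        gC (ω u) * gC (ω v) + gD (ω u) * gD (ω v)) +
        ∑ v, ((h₁ v + h₂ v + h₃ v + h₄ v) / 4 * gA (ω v) +
          (h₁ v + h₂ v - h₃ v - h₄ v) / 4 * gB (ω v) +
          (h₁ v - h₂ v + h₃ v - h₄ v) / 4 * gC (ω v) +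
          (-h₁ v + h₂ v + h₃ v - h₄ v) / 4 * gD (ω v))) := by
    ext ω
    simp only [wt, en, ← Real.exp_add]
    congr 1
    rw [show ∀ a b c d a' b' c' d' : ℝ, a + a' + (b + b') + (c + c') + (d + d') =
      (a + b + c + d) + (a' + b' + c' + d') from fun _ _ _ _ _ _ _ _ => by ring]
    simp only [← Finset.sum_add_distrib]
    refine Finset.sum_congr rfl fun u _ => ?_
    refine congrArg₂ (· + ·) (Finset.sum_congr rfl fun v _ => ?_) ?_
    all_goals simp only [gA, gB, gC, gD]; ring
  rw [e]
  apply cone_exp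
  apply cone_add
  · refine cone_sum _ fun u _ => cone_sum _ fun v _ => cone_smul (by have := hJ u v; positivity) ?_
    exact cone_add (cone_add (cone_add (cone_mul (CQ_A u) (CQ_A v)) (cone_mul (CQ_B u) (CQ_B v)))
      (cone_mul (CQ_C u) (CQ_C v))) (cone_mul (CQ_D u) (CQ_D v))
  · refine cone_sum _ fun v _ => cone_add (cone_add (cone_add ?_ ?_) ?_) ?_
    · exact cone_smul (by have := hA v; positivity) (CQ_A v)
    · exact cone_smul (by have := hB v; positivity) (CQ_B v)
    · exact cone_smul (by have := hC v; positivity) (CQ_C v)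
    · exact cone_smul (by have := hD v; positivity) (CQ_D v)

lemma Ex_eq_iff {J : V → V → ℝ} {h : V → ℝ} (f : (V → Bool) → ℝ) :
    ∑ σ, f σ * wt J h σ = Ex J h f * Zf J h := by
  unfold Ex; rw [div_mul_cancel₀ _ (Zf_pos J h).ne']

/-- GHS inequality: truncated two-point functions decrease with the field. -/
theorem Uf_anti {J : V → V → ℝ} {h h' : V → ℝ} (hJ : ∀ u v, 0 ≤ J u v) (hh : ∀ v, 0 ≤ h v)
    (hle : ∀ v, h v ≤ h' v) (x y : V) : Uf J h' x y ≤ Uf J h x y := by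
  have key := quad_nonneg (h₁ := h') (h₂ := h') (h₃ := h) (h₄ := h) hJ
    (fun v => by linarith [hh v, hle v]) (fun v => by linarith [hh v, hle v])
    (fun v => by linarith [hh v, hle v]) (fun v => by linarith [hh v, hle v])
    (fun a b c d => (sg (a x) - sg (b x) + sg (c x) - sg (d x)) *
      (-sg (a y) + sg (b y) + sg (c y) - sg (d y)))
    (cone_mul (S := fun _ : V => B4) (CQ_C x) (CQ_D y))
  set Z := Zf J h
  set Z' := Zf J h'
  have e : ∑ a, ∑ b, ∑ c, ∑ d, ((sg (a x) - sg (b x) + sg (c x) - sg (d x)) *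
      (-sg (a y) + sg (b y) + sg (c y) - sg (d y))) *
      (wt J h' a * wt J h' b * wt J h c * wt J h d) =
      2 * (Uf J h x y - Uf J h' x y) * (Z ^ 2 * Z' ^ 2) := by
    have s1 : ∀ k : V → ℝ, ∑ σ : V → Bool, (sg (σ x) * sg (σ y)) * wt J k σ = tw J k x y * Zf J k :=
      fun k => Ex_eq_iff _
    have s2 : ∀ k : V → ℝ, ∀ u, ∑ σ : V → Bool, sg (σ u) * wt J k σ = mg J k u * Zf J k :=
      fun k u => Ex_eq_iff _
    have s3 : ∀ k : V → ℝ, ∑ σ : V → Bool, wt J k σ = Zf J k := fun k => rfl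
    have p : ∀ a b c d : V → Bool, ((sg (a x) - sg (b x) + sg (c x) - sg (d x)) *
      (-sg (a y) + sg (b y) + sg (c y) - sg (d y))) *
      (wt J h' a * wt J h' b * wt J h c * wt J h d) =
      -((sg (a x) * sg (a y) * wt J h' a) * (wt J h' b * (wt J h c * wt J h d)))
      - (wt J h' a * ((sg (b x) * sg (b y) * wt J h' b) * (wt J h c * wt J h d)))
      + (wt J h' a * (wt J h' b * ((sg (c x) * sg (c y) * wt J h c) * wt J h d)))
      + (wt J h' a * (wt J h' b * (wt J h c * (sg (d x) * sg (d y) * wt J h d))))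
      + (sg (a x) * wt J h' a) * ((sg (b y) * wt J h' b) * (wt J h c * wt J h d))
      + (sg (a y) * wt J h' a) * ((sg (b x) * wt J h' b) * (wt J h c * wt J h d))
      - (wt J h' a * (wt J h' b * ((sg (c x) * wt J h c) * (sg (d y) * wt J h d))))
      - (wt J h' a * (wt J h' b * ((sg (c y) * wt J h c) * (sg (d x) * wt J h d))))
      + (sg (a x) * wt J h' a) * (wt J h' b * ((sg (c y) * wt J h c) * wt J h d))
      - (sg (a x) * wt J h' a) * (wt J h' b * (wt J h c * (sg (d y) * wt J h d)))
      - wt J h' a * ((sg (b x) * wt J h' b) * ((sg (c y) * wt J h c) * wt J h d))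
      + wt J h' a * ((sg (b x) * wt J h' b) * (wt J h c * (sg (d y) * wt J h d)))
      - (sg (a y) * wt J h' a) * (wt J h' b * ((sg (c x) * wt J h c) * wt J h d))
      + (sg (a y) * wt J h' a) * (wt J h' b * (wt J h c * (sg (d x) * wt J h d)))
      + wt J h' a * ((sg (b y) * wt J h' b) * ((sg (c x) * wt J h c) * wt J h d))
      - wt J h' a * ((sg (b y) * wt J h' b) * (wt J h c * (sg (d x) * wt J h d))) := by
      intro a b c d; ring
    simp only [p, Finset.sum_add_distrib, Finset.sum_sub_distrib, Finset.sum_neg_distrib,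
      ← Finset.mul_sum, ← Finset.sum_mul, s1, s2, s3]
    unfold Uf
    ring
  rw [e] at key
  have hZ : 0 < Z ^ 2 * Z' ^ 2 := by have := Zf_pos J h; have := Zf_pos J h'; positivity
  have := nonneg_of_mul_nonneg_left key hZ
  linarith

/-- Subadditivity of the magnetization in the field. -/
theorem mg_subadd {J : V → V → ℝ} {h h' : V → ℝ} (hJ : ∀ u v, 0 ≤ J u v) (hh : ∀ v, 0 ≤ h v)
    (hh' : ∀ v, 0 ≤ h' v) (x : V) :
    mg J (fun v => h v + h' v) x + mg J (fun _ => 0) x ≤ mg J h x + mg J h' x := by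
  set g : V → ℝ := fun v => h v + h' v with hg
  set o : V → ℝ := fun _ => 0 with ho
  have key := quad_nonneg (h₁ := h) (h₂ := h') (h₃ := g) (h₄ := o) hJ
    (fun v => by simp only [hg, ho]; linarith [hh v, hh' v])
    (fun v => by simp only [hg, ho]; linarith [hh v, hh' v])
    (fun v => by simp only [hg, ho]; linarith [hh v, hh' v])
    (fun v => by simp only [hg, ho]; linarith [hh v, hh' v])
    (fun a b c d => (sg (a x) + sg (b x) - sg (c x) - sg (d x))) (CQ_B x)
  have e : ∑ a, ∑ b, ∑ c, ∑ d, (sg (a x) + sg (b x) - sg (c x) - sg (d x)) *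
      (wt J h a * wt J h' b * wt J g c * wt J o d) =
      (mg J h x + mg J h' x - mg J g x - mg J o x) * (Zf J h * Zf J h' * Zf J g * Zf J o) := by
    have s2 : ∀ k : V → ℝ, ∀ u, ∑ σ : V → Bool, sg (σ u) * wt J k σ = mg J k u * Zf J k :=
      fun k u => Ex_eq_iff _
    have s3 : ∀ k : V → ℝ, ∑ σ : V → Bool, wt J k σ = Zf J k := fun k => rfl
    have p : ∀ a b c d : V → Bool, (sg (a x) + sg (b x) - sg (c x) - sg (d x)) *
      (wt J h a * wt J h' b * wt J g c * wt J o d) =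
      (sg (a x) * wt J h a) * (wt J h' b * (wt J g c * wt J o d)) +
      wt J h a * ((sg (b x) * wt J h' b) * (wt J g c * wt J o d)) -
      wt J h a * (wt J h' b * ((sg (c x) * wt J g c) * wt J o d)) -
      wt J h a * (wt J h' b * (wt J g c * (sg (d x) * wt J o d))) := by
      intro a b c d; ring
    simp only [p, Finset.sum_add_distrib, Finset.sum_sub_distrib,
      ← Finset.mul_sum, ← Finset.sum_mul, s2, s3]
    ring
  rw [e] at key
  have hZ : 0 < Zf J h * Zf J h' * Zf J g * Zf J o := by
    have := Zf_pos J h; have := Zf_pos J h'; have := Zf_pos J g; have := Zf_pos J o; positivity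
  have := nonneg_of_mul_nonneg_left key hZ
  linarith

/-! ### Monotonicity, embeddings, pinning -/

variable {V : Type} [Fintype V]

/-- Expectations agree when the weights are proportional. -/
lemma Ex_eq_of_wt {J J' : V → V → ℝ} {h h' : V → ℝ} {c : ℝ} (hc : c ≠ 0)
    (H : ∀ σ, wt J' h' σ = c * wt J h σ) (f : (V → Bool) → ℝ) : Ex J' h' f = Ex J h f := by
  unfold Ex Zf
  simp only [H, ← Finset.mul_sum, mul_left_comm _ c]
  rw [mul_div_mul_left _ _ hc]

/-- Expectations of functions in the spin cone increase with couplings and fields. -/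
theorem Ex_mono {J J' : V → V → ℝ} {h h' : V → ℝ} (hJ : ∀ u v, 0 ≤ J u v) (hh : ∀ v, 0 ≤ h v)
    (hJJ : ∀ u v, J u v ≤ J' u v) (hhh : ∀ v, h v ≤ h' v) {f : (V → Bool) → ℝ} (hf : f ∈ CS V) :
    Ex J h f ≤ Ex J' h' f := by
  set g : (V → Bool) → ℝ := wt (fun u v => J' u v - J u v) (fun v => h' v - h v) with hg
  have hgC : g ∈ CS V := CS_wt (fun u v => sub_nonneg.2 (hJJ u v)) (fun v => sub_nonneg.2 (hhh v))
  have e : ∀ σ, wt J' h' σ = g σ * wt J h σ := by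
    intro σ
    simp only [hg, wt, ← Real.exp_add, en]
    congr 1
    rw [add_add_add_comm]
    simp only [← Finset.sum_add_distrib]
    refine Finset.sum_congr rfl fun u _ => ?_
    refine congrArg₂ (· + ·) (Finset.sum_congr rfl fun v _ => ?_) ?_ <;> ring
  have h1 := Ex_mul_ge hJ hh hf hgC
  have hZ' : Zf J' h' = Ex J h g * Zf J h := by
    rw [← Ex_eq_iff]; exact Finset.sum_congr rfl fun σ _ => e σ
  have hN : ∑ σ, f σ * wt J' h' σ = (Ex J h fun σ => f σ * g σ) * Zf J h := by
    rw [← Ex_eq_iff]; exact Finset.sum_congr rfl fun σ _ => by rw [e]; ring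
  have hp := Zf_pos J' h'
  rw [show Ex J' h' f = (∑ σ, f σ * wt J' h' σ) / Zf J' h' from rfl, le_div_iff₀ hp, hN, hZ',
    ← mul_assoc]
  exact mul_le_mul_of_nonneg_right h1 (Zf_pos J h).le

/-- Summing a function of the restricted configuration. -/
lemma sum_comp_inj {V' : Type} [Fintype V'] {ι : V → V'} (hι : Function.Injective ι) :
    ∃ c : ℝ, 0 < c ∧ ∀ g : (V → Bool) → ℝ, ∑ σ' : V' → Bool, g (fun v => σ' (ι v)) =
      c * ∑ σ, g σ := by
  let e1 := Equiv.piEquivPiSubtypeProd (fun a => a ∈ Set.range ι) (fun _ : V' => Bool)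
  let e2 : ({a // a ∈ Set.range ι} → Bool) ≃ (V → Bool) :=
    ((Equiv.ofInjective ι hι).arrowCongr (Equiv.refl Bool)).symm
  refine ⟨Fintype.card ({a // ¬ a ∈ Set.range ι} → Bool), by exact_mod_cast Fintype.card_pos, ?_⟩
  intro g
  have h1 : ∑ σ' : V' → Bool, g (fun v => σ' (ι v)) =
      ∑ p : ({a // a ∈ Set.range ι} → Bool) × ({a // ¬ a ∈ Set.range ι} → Bool), g (e2 p.1) :=
    Fintype.sum_equiv e1 _ _ fun σ' => rfl
  rw [h1, Fintype.sum_prod_type]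
  simp only [Finset.sum_const, nsmul_eq_mul, ← Finset.mul_sum, Finset.card_univ]
  congr 1
  exact Fintype.sum_equiv e2 _ _ fun _ => rfl

/-- Expectations increase when the system is embedded in a larger one. -/
theorem Ex_embed {V' : Type} [Fintype V'] {ι : V → V'} (hι : Function.Injective ι)
    {J : V → V → ℝ} {h : V → ℝ} {J' : V' → V' → ℝ} {h' : V' → ℝ}
    (hJ : ∀ u v, 0 ≤ J u v) (hh : ∀ v, 0 ≤ h v)
    (hJ' : ∀ u v, 0 ≤ J' u v) (hh' : ∀ v, 0 ≤ h' v)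
    (hJJ : ∀ u v, J u v ≤ J' (ι u) (ι v)) (hhh : ∀ v, h v ≤ h' (ι v)) {f : (V → Bool) → ℝ}
    (hf : (fun σ' : V' → Bool => f fun v => σ' (ι v)) ∈ CS V') :
    Ex J h f ≤ Ex J' h' fun σ' => f fun v => σ' (ι v) := by
  set J₂ : V' → V' → ℝ := fun a b => ∑ u, ∑ v, if ι u = a ∧ ι v = b then J u v else 0 with hJ₂
  set h₂ : V' → ℝ := fun a => ∑ u, if ι u = a then h u else 0 with hh₂
  have J₂ι : ∀ u v, J₂ (ι u) (ι v) = J u v := by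
    intro u v
    simp only [hJ₂, hι.eq_iff, ite_and]
    simp
  have h₂ι : ∀ u, h₂ (ι u) = h u := by
    intro u; simp only [hh₂, hι.eq_iff]; simp
  have J₂0 : ∀ a b, 0 ≤ J₂ a b := fun a b => Finset.sum_nonneg fun u _ => Finset.sum_nonneg
    fun v _ => by split_ifs; exacts [hJ u v, le_rfl]
  have h₂0 : ∀ a, 0 ≤ h₂ a := fun a => Finset.sum_nonneg fun u _ => by
    split_ifs; exacts [hh u, le_rfl]
  have J₂le : ∀ a b, J₂ a b ≤ J' a b := by
    intro a b
    by_cases ha : ∃ u v, ι u = a ∧ ι v = b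
    · obtain ⟨u, v, rfl, rfl⟩ := ha; rw [J₂ι]; exact hJJ u v
    · have : J₂ a b = 0 := Finset.sum_eq_zero fun u _ => Finset.sum_eq_zero fun v _ =>
        if_neg fun h => ha ⟨u, v, h⟩
      rw [this]; exact hJ' a b
  have h₂le : ∀ a, h₂ a ≤ h' a := by
    intro a
    by_cases ha : ∃ u, ι u = a
    · obtain ⟨u, rfl⟩ := ha; rw [h₂ι]; exact hhh u
    · have : h₂ a = 0 := Finset.sum_eq_zero fun u _ => if_neg fun h => ha ⟨u, h⟩
      rw [this]; exact hh' a
  refine le_trans (le_of_eq ?_) (Ex_mono J₂0 h₂0 J₂le h₂le hf)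
  have key : ∀ σ' : V' → Bool, wt J₂ h₂ σ' = wt J h (fun v => σ' (ι v)) := by
    intro σ'
    unfold wt en
    congr 2
    · have supp : ∀ a b, (∀ u v, ¬ (ι u = a ∧ ι v = b)) → J₂ a b = 0 := fun a b hab =>
        Finset.sum_eq_zero fun u _ => Finset.sum_eq_zero fun v _ => if_neg (hab u v)
      rw [← Fintype.sum_of_injective ι hι (fun u => ∑ v, J u v * (sg (σ' (ι u)) * sg (σ' (ι v))))]
      · intro a ha
        exact Finset.sum_eq_zero fun b _ => by
          rw [supp a b fun u v h => ha ⟨u, h.1⟩, zero_mul]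
      · intro u
        rw [← Fintype.sum_of_injective ι hι (fun v => J u v * (sg (σ' (ι u)) * sg (σ' (ι v))))]
        · intro b hb
          rw [supp (ι u) b fun u v h => hb ⟨v, h.2⟩, zero_mul]
        · intro v; rw [J₂ι]
    · rw [← Fintype.sum_of_injective ι hι (fun v => h v * sg (σ' (ι v)))]
      · intro b hb
        have : h₂ b = 0 := Finset.sum_eq_zero fun u _ => if_neg fun h => hb ⟨u, h⟩
        rw [this, zero_mul]
      · intro v; rw [h₂ι]
  obtain ⟨c, hc, hsum⟩ := sum_comp_inj hι
  unfold Ex Zf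
  simp only [key]
  rw [hsum fun σ => f σ * wt J h σ, hsum fun σ => wt J h σ, mul_div_mul_left _ _ hc.ne']

theorem mg_embed {V' : Type} [Fintype V'] {ι : V → V'} (hι : Function.Injective ι)
    {J : V → V → ℝ} {h : V → ℝ} {J' : V' → V' → ℝ} {h' : V' → ℝ}
    (hJ : ∀ u v, 0 ≤ J u v) (hh : ∀ v, 0 ≤ h v)
    (hJ' : ∀ u v, 0 ≤ J' u v) (hh' : ∀ v, 0 ≤ h' v)
    (hJJ : ∀ u v, J u v ≤ J' (ι u) (ι v)) (hhh : ∀ v, h v ≤ h' (ι v)) (u : V) :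
    mg J h u ≤ mg J' h' (ι u) := Ex_embed hι hJ hh hJ' hh' hJJ hhh (CS_sg (ι u))

theorem tw_embed {V' : Type} [Fintype V'] {ι : V → V'} (hι : Function.Injective ι)
    {J : V → V → ℝ} {h : V → ℝ} {J' : V' → V' → ℝ} {h' : V' → ℝ}
    (hJ : ∀ u v, 0 ≤ J u v) (hh : ∀ v, 0 ≤ h v)
    (hJ' : ∀ u v, 0 ≤ J' u v) (hh' : ∀ v, 0 ≤ h' v)
    (hJJ : ∀ u v, J u v ≤ J' (ι u) (ι v)) (hhh : ∀ v, h v ≤ h' (ι v)) (u v : V) :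
    tw J h u v ≤ tw J' h' (ι u) (ι v) := Ex_embed hι hJ hh hJ' hh' hJJ hhh (CS_sg2 (ι u) (ι v))

lemma Ex_le {J : V → V → ℝ} {h : V → ℝ} {f : (V → Bool) → ℝ} {c : ℝ} (hf : ∀ σ, f σ ≤ c) :
    Ex J h f ≤ c := by
  unfold Ex
  rw [div_le_iff₀ (Zf_pos J h), Zf, Finset.mul_sum]
  exact Finset.sum_le_sum fun σ _ => mul_le_mul_of_nonneg_right (hf σ) (wt_pos J h σ).le

lemma mg_le_one (J : V → V → ℝ) (h : V → ℝ) (u : V) : mg J h u ≤ 1 := Ex_le fun σ => sg_le _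

lemma tw_le_one (J : V → V → ℝ) (h : V → ℝ) (u v : V) : tw J h u v ≤ 1 := Ex_le fun σ => by
  cases σ u <;> cases σ v <;> norm_num [sg]

lemma mg_nonneg {J : V → V → ℝ} {h : V → ℝ} (hJ : ∀ u v, 0 ≤ J u v) (hh : ∀ v, 0 ≤ h v) (u : V) :
    0 ≤ mg J h u := Ex_nonneg hJ hh (CS_sg u)

lemma tw_nonneg {J : V → V → ℝ} {h : V → ℝ} (hJ : ∀ u v, 0 ≤ J u v) (hh : ∀ v, 0 ≤ h v)
    (u v : V) : 0 ≤ tw J h u v := Ex_nonneg hJ hh (CS_sg2 u v)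

lemma tw_comm (J : V → V → ℝ) (h : V → ℝ) (u v : V) : tw J h u v = tw J h v u := by
  unfold tw; simp only [mul_comm]

lemma Uf_comm (J : V → V → ℝ) (h : V → ℝ) (u v : V) : Uf J h u v = Uf J h v u := by
  unfold Uf; rw [tw_comm, mul_comm]

/-- `f` depends only on the spins in `W`. -/
def Dep (W : Set V) (f : (V → Bool) → ℝ) : Prop :=
  ∀ σ τ : V → Bool, (∀ v ∈ W, σ v = τ v) → f σ = f τ

/-- Functions of disjoint sets of spins are independent under the uniform measure. -/
lemma sum_mul_dep {W : Set V} {F G : (V → Bool) → ℝ} (hF : Dep W F) (hG : Dep Wᶜ G) :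
    (∑ σ, F σ) * ∑ σ, G σ = Fintype.card (V → Bool) * ∑ σ, F σ * G σ := by
  rw [Finset.sum_mul_sum]
  let m : (V → Bool) → (V → Bool) → V → Bool := fun σ τ v => if v ∈ W then σ v else τ v
  let e : (V → Bool) × (V → Bool) ≃ (V → Bool) × (V → Bool) :=
    { toFun := fun p => (m p.1 p.2, m p.2 p.1)
      invFun := fun p => (m p.1 p.2, m p.2 p.1)
      left_inv := fun p => by
        apply Prod.ext <;> funext v <;> by_cases hv : v ∈ W <;> simp [m, hv]
      right_inv := fun p => by
        apply Prod.ext <;> funext v <;> by_cases hv : v ∈ W <;> simp [m, hv] }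
  have h1 : ∑ p : (V → Bool) × (V → Bool), F p.1 * G p.2 = ∑ p : (V → Bool) × (V → Bool),
      F p.1 * G p.1 := by
    refine Fintype.sum_equiv e _ _ fun p => ?_
    congr 1
    · exact hF _ _ fun v hv => by simp [e, m, hv]
    · exact hG _ _ fun v hv => by
        have : v ∉ W := hv
        simp [e, m, this]
  rw [Fintype.sum_prod_type, Fintype.sum_prod_type] at h1
  rw [h1]
  simp only [Finset.sum_const, nsmul_eq_mul, ← Finset.mul_sum, Finset.card_univ]

lemma Dep.mul {W : Set V} {f g : (V → Bool) → ℝ} (hf : Dep W f) (hg : Dep W g) :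
    Dep W fun σ => f σ * g σ := fun σ τ h => by
  show f σ * g σ = f τ * g τ
  rw [hf σ τ h, hg σ τ h]

lemma Dep.sg {W : Set V} {v : V} (hv : v ∈ W) : Dep W fun σ => sg (σ v) := fun σ τ h => by
  show Isg.sg (σ v) = Isg.sg (τ v)
  rw [h v hv]

/-- Couplings restricted to a set. -/
def rJ (W : Set V) (J : V → V → ℝ) (u v : V) : ℝ := if u ∈ W ∧ v ∈ W then J u v else 0
/-- Fields restricted to a set. -/
def rh (W : Set V) (h : V → ℝ) (v : V) : ℝ := if v ∈ W then h v else 0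

lemma rJ_nonneg {W : Set V} {J : V → V → ℝ} (hJ : ∀ u v, 0 ≤ J u v) (u v : V) :
    0 ≤ rJ W J u v := by unfold rJ; split_ifs; exacts [hJ u v, le_rfl]
lemma rJ_le {W : Set V} {J : V → V → ℝ} (hJ : ∀ u v, 0 ≤ J u v) (u v : V) :
    rJ W J u v ≤ J u v := by unfold rJ; split_ifs; exacts [le_rfl, hJ u v]
lemma rh_nonneg {W : Set V} {h : V → ℝ} (hh : ∀ v, 0 ≤ h v) (v : V) : 0 ≤ rh W h v := by
  unfold rh; split_ifs; exacts [hh v, le_rfl]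
lemma rh_le {W : Set V} {h : V → ℝ} (hh : ∀ v, 0 ≤ h v) (v : V) : rh W h v ≤ h v := by
  unfold rh; split_ifs; exacts [le_rfl, hh v]

lemma Dep_wt (W : Set V) (J : V → V → ℝ) (h : V → ℝ) : Dep W (wt (rJ W J) (rh W h)) := by
  intro σ τ H
  unfold wt en
  congr 2
  · refine Finset.sum_congr rfl fun u _ => Finset.sum_congr rfl fun v _ => ?_
    unfold rJ
    split_ifs with hc
    · rw [H u hc.1, H v hc.2]
    · simp
  · refine Finset.sum_congr rfl fun v _ => ?_
    unfold rh
    split_ifs with hc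
    · rw [H v hc]
    · simp

/-- The field on `v` created by pinning to `+` all spins outside `W`. -/
def kap (W : Set V) (J : V → V → ℝ) (v : V) : ℝ := ∑ s, if s ∈ W then 0 else J v s + J s v

lemma kap_nonneg {W : Set V} {J : V → V → ℝ} (hJ : ∀ u v, 0 ≤ J u v) (v : V) : 0 ≤ kap W J v :=
  Finset.sum_nonneg fun s _ => by split_ifs; exacts [le_rfl, add_nonneg (hJ v s) (hJ s v)]

/-- Pinning spins to `+` increases expectations of functions in the spin cone. -/
theorem Ex_pin {J : V → V → ℝ} {h : V → ℝ} (hJ : ∀ u v, 0 ≤ J u v) (hh : ∀ v, 0 ≤ h v)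
    (W : Set V) {f : (V → Bool) → ℝ} (hf : f ∈ CS V) (hd : Dep W f) :
    Ex J h f ≤ Ex (rJ W J) (rh W fun v => h v + kap W J v) f := by
  set J' := rJ W J
  set h' := rh W fun v => h v + kap W J v with hh'
  set g : (V → Bool) → ℝ := fun σ => ∏ s, if s ∈ W then 1 else 1 + sg (σ s) with hg
  have hgC : g ∈ CS V := by
    refine cone_prod (S := fun _ : V => Bool) Finset.univ (f := fun s (σ : V → Bool) =>
      if s ∈ W then 1 else 1 + sg (σ s)) fun s _ => ?_
    by_cases hs : s ∈ W
    · simp only [hs, if_true]; exact cone_const zero_le_one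
    · simp only [hs, if_false]
      exact cone_add (S := fun _ : V => Bool) (cone_const zero_le_one) (CS_sg s)
  have hg0 : ∀ σ, 0 ≤ g σ := fun σ => Finset.prod_nonneg fun s _ => by
    split_ifs
    · exact zero_le_one
    · linarith [le_sg (σ s)]
  have hgpos : 0 < g fun _ => true := Finset.prod_pos fun s _ => by
    split_ifs <;> norm_num
  have hgd : Dep Wᶜ g := by
    intro σ τ H
    refine Finset.prod_congr rfl fun s _ => ?_
    split_ifs with hs
    · rfl
    · rw [H s hs]
  set c : ℝ := ∑ u, ∑ v, (if u ∈ W then 0 else if v ∈ W then 0 else J u v) +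
    ∑ v, if v ∈ W then 0 else h v with hc
  have hen : ∀ σ : V → Bool, (∀ s, s ∉ W → σ s = true) → en J h σ = en J' h' σ + c := by
    intro σ H
    have e1 : ∀ u v, J u v * (sg (σ u) * sg (σ v)) = J' u v * (sg (σ u) * sg (σ v)) +
        (if u ∈ W then (if v ∈ W then 0 else J u v) * sg (σ u) else 0) +
        (if v ∈ W then (if u ∈ W then 0 else J u v) * sg (σ v) else 0) +
        (if u ∈ W then 0 else if v ∈ W then 0 else J u v) := by
      intro u v
      by_cases hu : u ∈ W <;> by_cases hv : v ∈ W <;> simp [J', rJ, hu, hv, H]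
    have e2 : ∀ v, h' v * sg (σ v) = (if v ∈ W then h v * sg (σ v) else 0) +
        ((if v ∈ W then (∑ s, (if s ∈ W then 0 else J v s)) * sg (σ v) else 0) +
        (if v ∈ W then (∑ s, (if s ∈ W then 0 else J s v)) * sg (σ v) else 0)) := by
      intro v
      by_cases hv : v ∈ W
      · simp only [hh', rh, hv, if_true, kap]
        rw [← add_mul, ← add_mul, ← Finset.sum_add_distrib]
        congr 2
        refine Finset.sum_congr rfl fun s _ => ?_
        split_ifs <;> simp
      · simp [hh', rh, hv]
    have e3 : ∀ v, h v * sg (σ v) = (if v ∈ W then h v * sg (σ v) else 0) +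
        (if v ∈ W then 0 else h v) := by
      intro v
      by_cases hv : v ∈ W <;> simp [hv, H]
    have e4 : ∑ u, ∑ v, (if u ∈ W then (if v ∈ W then 0 else J u v) * sg (σ u) else 0) =
        ∑ v, (if v ∈ W then (∑ s, (if s ∈ W then 0 else J v s)) * sg (σ v) else 0) := by
      refine Finset.sum_congr rfl fun u _ => ?_
      split_ifs
      · rw [Finset.sum_mul]
      · simp
    have e5 : ∑ u, ∑ v, (if v ∈ W then (if u ∈ W then 0 else J u v) * sg (σ v) else 0) =
        ∑ v, (if v ∈ W then (∑ s, (if s ∈ W then 0 else J s v)) * sg (σ v) else 0) := by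
      rw [Finset.sum_comm]
      refine Finset.sum_congr rfl fun u _ => ?_
      split_ifs
      · rw [Finset.sum_mul]
      · simp
    have a1 : ∑ u, ∑ v, J u v * (sg (σ u) * sg (σ v)) = _ :=
      Finset.sum_congr rfl fun u _ => Finset.sum_congr rfl fun v _ => e1 u v
    have a2 : ∑ v, h' v * sg (σ v) = _ := Finset.sum_congr rfl fun v _ => e2 v
    have a3 : ∑ v, h v * sg (σ v) = _ := Finset.sum_congr rfl fun v _ => e3 v
    simp only [Finset.sum_add_distrib] at a1 a2 a3
    unfold en
    rw [a1, a2, a3, e4, e5, hc]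
    ring
  have hgw : ∀ σ, g σ * wt J h σ = Real.exp c * (wt J' h' σ * g σ) := by
    intro σ
    by_cases H : ∀ s, s ∉ W → σ s = true
    · unfold wt; rw [hen σ H, Real.exp_add]; ring
    · push Not at H
      obtain ⟨s, hs, hσ⟩ := H
      have : g σ = 0 := Finset.prod_eq_zero (Finset.mem_univ s) (by
        have : σ s = false := by simpa using hσ
        simp [hs, this])
      rw [this]; ring
  have hdw := Dep_wt W J (fun v => h v + kap W J v)
  have s1 := sum_mul_dep (hd.mul hdw) hgd
  have s2 := sum_mul_dep hdw hgd
  have N : (0:ℝ) < Fintype.card (V → Bool) := by exact_mod_cast Fintype.card_pos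
  have hG : 0 < ∑ σ, g σ := Finset.sum_pos' (fun σ _ => hg0 σ) ⟨_, Finset.mem_univ _, hgpos⟩
  have f1 : ∑ σ, (f σ * g σ) * wt J h σ = Real.exp c * ∑ σ, f σ * wt J' h' σ * g σ := by
    rw [Finset.mul_sum]
    refine Finset.sum_congr rfl fun σ _ => ?_
    rw [mul_assoc, hgw]; ring
  have f2 : ∑ σ, g σ * wt J h σ = Real.exp c * ∑ σ, wt J' h' σ * g σ := by
    rw [Finset.mul_sum]
    exact Finset.sum_congr rfl fun σ _ => hgw σ
  have key := Ex_mul_ge hJ hh hf hgC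
  have hZ := Zf_pos J h
  have hZ' := Zf_pos J' h'
  have t1 : (Ex J h fun σ => f σ * g σ) = Ex J' h' f * Ex J h g := by
    unfold Ex
    rw [f1, f2]
    change _ = (∑ σ, f σ * wt J' h' σ) / (∑ σ, wt J' h' σ) * _
    have hZ'' : 0 < ∑ σ, wt J' h' σ := hZ'
    field_simp
    have r1 : (∑ σ, f σ * wt J' h' σ * g σ) =
        (∑ σ, f σ * wt J' h' σ) * (∑ σ, g σ) / Fintype.card (V → Bool) := by
      rw [s1]; field_simp; rfl
    have r2 : (∑ σ, wt J' h' σ * g σ) =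
        (∑ σ, wt J' h' σ) * (∑ σ, g σ) / Fintype.card (V → Bool) := by
      rw [s2]; field_simp; rfl
    rw [r1, r2]; ring
  have hEg : 0 < Ex J h g := by
    unfold Ex
    apply div_pos _ hZ
    exact Finset.sum_pos' (fun σ _ => mul_nonneg (hg0 σ) (wt_pos J h σ).le)
      ⟨_, Finset.mem_univ _, mul_pos hgpos (wt_pos J h _)⟩
  rw [t1] at key
  exact le_of_mul_le_mul_right key hEg

/-! ### Magnetic fields at single sites -/

section
variable {V : Type} [Fintype V]

/-- A field of strength `c` at the single site `w`. -/
def bump (w : V) (c : ℝ) (v : V) : ℝ := if v = w then c else 0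

lemma bump_nonneg {w : V} {c : ℝ} (hc : 0 ≤ c) (v : V) : 0 ≤ bump w c v := by
  unfold bump; split_ifs <;> linarith

lemma exp_sg (c : ℝ) (b : Bool) : Real.exp (c * sg b) = Real.cosh c + Real.sinh c * sg b := by
  cases b
  · simp [Real.cosh_eq, Real.sinh_eq]; ring
  · simp [Real.cosh_add_sinh]

lemma wt_bump (J : V → V → ℝ) (h : V → ℝ) (w : V) (c : ℝ) (σ : V → Bool) :
    wt J (fun v => h v + bump w c v) σ = (Real.cosh c + Real.sinh c * sg (σ w)) * wt J h σ := by
  rw [← exp_sg]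
  unfold wt
  rw [← Real.exp_add]
  congr 1
  unfold en
  simp only [add_mul, Finset.sum_add_distrib, bump, ite_mul, zero_mul, Finset.sum_ite_eq',
    Finset.mem_univ, if_true]
  ring

lemma sum_bump (J : V → V → ℝ) (h : V → ℝ) (w : V) (c : ℝ) (f : (V → Bool) → ℝ) :
    ∑ σ, f σ * wt J (fun v => h v + bump w c v) σ =
      (Real.cosh c * Ex J h f + Real.sinh c * Ex J h fun σ => f σ * sg (σ w)) * Zf J h := by
  rw [add_mul, mul_assoc, mul_assoc, ← Ex_eq_iff, ← Ex_eq_iff, Finset.mul_sum, Finset.mul_sum,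
    ← Finset.sum_add_distrib]
  exact Finset.sum_congr rfl fun σ _ => by rw [wt_bump]; ring

lemma Ex_one (J : V → V → ℝ) (h : V → ℝ) : (Ex J h fun _ => 1) = 1 := by
  unfold Ex; simp only [one_mul]; exact div_self (Zf_pos J h).ne'

lemma Zf_bump (J : V → V → ℝ) (h : V → ℝ) (w : V) (c : ℝ) :
    Zf J (fun v => h v + bump w c v) = (Real.cosh c + Real.sinh c * mg J h w) * Zf J h := by
  have := sum_bump J h w c fun _ => 1
  simp only [one_mul, Ex_one, mul_one] at this
  exact this

lemma mg_bump (J : V → V → ℝ) (h : V → ℝ) (w : V) (c : ℝ) (x : V) :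
    mg J (fun v => h v + bump w c v) x * (Real.cosh c + Real.sinh c * mg J h w) =
      Real.cosh c * mg J h x + Real.sinh c * tw J h x w := by
  have h1 := sum_bump J h w c fun σ => sg (σ x)
  rw [Ex_eq_iff, Zf_bump, ← mul_assoc] at h1
  exact mul_right_cancel₀ (Zf_pos J h).ne' h1

lemma mg_zero (J : V → V → ℝ) (x : V) : mg J (fun _ => 0) x = 0 := by
  have : ∑ σ : V → Bool, sg (σ x) * wt J (fun _ => 0) σ =
      ∑ σ : V → Bool, -(sg (σ x) * wt J (fun _ => 0) σ) := by
    refine Fintype.sum_equiv (Equiv.arrowCongr (Equiv.refl V) Equiv.boolNot) _ _ fun σ => ?_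
    have : ∀ v, (Equiv.arrowCongr (Equiv.refl V) Equiv.boolNot) σ v = !σ v := fun v => rfl
    simp only [this, sg_not, wt, en, mul_neg, neg_mul, neg_neg, zero_mul, neg_zero]
  rw [Finset.sum_neg_distrib] at this
  unfold mg Ex
  rw [show ∑ σ : V → Bool, sg (σ x) * wt J (fun _ => 0) σ = 0 by linarith, zero_div]

lemma sinh_le_mul_cosh {c : ℝ} (hc : 0 ≤ c) : Real.sinh c ≤ 2 * c * Real.cosh c := by
  have h1 := Real.one_sub_le_exp_neg (2 * c)
  have h2 : Real.exp (-(2 * c)) * Real.exp c = Real.exp (-c) := by rw [← Real.exp_add]; ring_nf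
  rw [Real.sinh_eq, Real.cosh_eq, ← h2]
  nlinarith [Real.exp_pos c, Real.exp_pos (-(2 * c)), mul_pos (Real.exp_pos c) (Real.exp_pos (-(2 * c))),
    mul_le_mul_of_nonneg_right h1 (Real.exp_pos c).le,
    mul_nonneg hc (mul_pos (Real.exp_pos c) (Real.exp_pos (-(2 * c)))).le]

/-- Truncated correlations in a field are at most the correlations without field (GHS). -/
lemma Uf_le_tw {J : V → V → ℝ} {h : V → ℝ} (hJ : ∀ u v, 0 ≤ J u v) (hh : ∀ v, 0 ≤ h v) (x y : V) :
    Uf J h x y ≤ tw J (fun _ => 0) x y := by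
  have := Uf_anti hJ (h := fun _ => 0) (fun _ => le_rfl) hh x y
  refine this.trans (le_of_eq ?_)
  unfold Uf; rw [mg_zero]; ring

/-- Linear upper bound for the magnetization. -/
theorem mg_le_sum {J : V → V → ℝ} {h : V → ℝ} (hJ : ∀ u v, 0 ≤ J u v) (hh : ∀ v, 0 ≤ h v) (x : V) :
    mg J h x ≤ ∑ w, 2 * h w * tw J (fun _ => 0) x w := by
  have key : ∀ s : Finset V, mg J (fun v => if v ∈ s then h v else 0) x ≤
      ∑ w ∈ s, 2 * h w * tw J (fun _ => 0) x w := by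
    intro s
    induction s using Finset.induction_on with
    | empty => simp [mg_zero]
    | insert w s hw ih =>
      have e1 : (fun v => if v ∈ insert w s then h v else 0) =
          fun v => bump w (h w) v + if v ∈ s then h v else 0 := by
        funext v
        by_cases hv : v = w
        · subst hv; simp [bump, hw]
        · simp [bump, hv]
      have h1 := mg_subadd hJ (h := bump w (h w)) (h' := fun v => if v ∈ s then h v else 0)
        (bump_nonneg (hh w)) (fun v => by split_ifs <;> simp [hh]) x
      rw [mg_zero, add_zero] at h1
      have h2 := mg_bump J (fun _ => 0) w (h w) x
      simp only [zero_add, mg_zero, mul_zero, add_zero] at h2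
      have h3 : mg J (bump w (h w)) x ≤ 2 * h w * tw J (fun _ => 0) x w := by
        have hc := Real.cosh_pos (h w)
        have ht := tw_nonneg hJ (h := fun _ => 0) (fun _ => le_rfl) x w
        have := mul_le_mul_of_nonneg_right (sinh_le_mul_cosh (hh w)) ht
        rw [← h2] at this
        refine le_of_mul_le_mul_right (this.trans (le_of_eq ?_)) hc
        ring
      rw [e1, Finset.sum_insert hw]
      linarith
  simpa using key Finset.univ

end

/-! ### Expansion of truncated correlations over connected disagreement sets -/

section
variable {V : Type} [Fintype V]

/-- Interaction energy inside the vertex set `S`. -/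
def sJ (J : V → V → ℝ) (S : Finset V) (σ : V → Bool) : ℝ :=
  ∑ u ∈ S, ∑ v ∈ S, J u v * (sg (σ u) * sg (σ v))

/-- Weight of a pair of configurations `σ, σ'` that disagree exactly on `D`. -/
def wD (J : V → V → ℝ) (h : V → ℝ) (D : Finset V) (σ : V → Bool) : ℝ :=
  Real.exp (2 * sJ J D σ) * Real.exp (2 * sJ J Dᶜ σ + 2 * ∑ v ∈ Dᶜ, h v * sg (σ v))

/-- Flip the spins in `D`. -/
def flipD (D : Finset V) (σ : V → Bool) (v : V) : Bool := if v ∈ D then !σ v else σ v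

lemma sg_flipD (D : Finset V) (σ : V → Bool) (v : V) :
    sg (flipD D σ v) = if v ∈ D then -sg (σ v) else sg (σ v) := by
  unfold flipD; split_ifs <;> simp

lemma flipD_flipD (D : Finset V) (σ : V → Bool) : flipD D (flipD D σ) = σ := by
  funext v; by_cases hv : v ∈ D <;> simp [flipD, hv]

lemma sum_flipD (D : Finset V) (F : (V → Bool) → ℝ) : ∑ σ, F (flipD D σ) = ∑ σ, F σ :=
  Fintype.sum_bijective _ (Function.Involutive.bijective (flipD_flipD D)) _ _ fun _ => rfl

lemma sum_pair (F : (V → Bool) → (V → Bool) → ℝ) :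
    ∑ σ, ∑ σ', F σ σ' = ∑ D : Finset V, ∑ σ, F σ (flipD D σ) := by
  rw [Finset.sum_comm (s := Finset.univ (α := Finset V))]
  refine Finset.sum_congr rfl fun σ _ => ?_
  symm
  refine Fintype.sum_bijective (fun D => flipD D σ) ⟨fun D D' hD => ?_, fun τ => ?_⟩ _ _ fun _ => rfl
  · ext v
    have := congrFun hD v
    by_cases h1 : v ∈ D <;> by_cases h2 : v ∈ D' <;> simp_all [flipD]
  · refine ⟨Finset.univ.filter fun v => σ v ≠ τ v, ?_⟩
    funext v
    by_cases hv : σ v = τ v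
    · simp [flipD, hv]
    · simp only [flipD, Finset.mem_filter, Finset.mem_univ, true_and, ne_eq, hv, not_false_iff, if_true]
      cases h : σ v <;> cases h' : τ v <;> simp_all

lemma sum_mem_eq (S : Finset V) (f : V → ℝ) : ∑ v ∈ S, f v = ∑ v, if v ∈ S then f v else 0 := by
  rw [Finset.sum_ite_mem, Finset.univ_inter]

lemma sJ_eq (J : V → V → ℝ) (S : Finset V) (σ : V → Bool) : sJ J S σ =
    ∑ u, ∑ v, if u ∈ S ∧ v ∈ S then J u v * (sg (σ u) * sg (σ v)) else 0 := by
  unfold sJ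
  rw [sum_mem_eq]
  refine Finset.sum_congr rfl fun u _ => ?_
  by_cases hu : u ∈ S
  · simp only [hu, true_and, if_true]; rw [sum_mem_eq]
  · simp [hu]

lemma wt_pair (J : V → V → ℝ) (h : V → ℝ) (D : Finset V) (σ : V → Bool) :
    wt J h σ * wt J h (flipD D σ) = wD J h D σ := by
  unfold wt wD
  rw [← Real.exp_add, ← Real.exp_add]
  congr 1
  rw [sJ_eq, sJ_eq, sum_mem_eq Dᶜ]
  unfold en
  simp only [sg_flipD, Finset.mem_compl]
  rw [add_add_add_comm, ← add_assoc (2 * _) (2 * _) (2 * _)]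
  refine congrArg₂ (· + ·) ?_ ?_
  · simp only [Finset.mul_sum, ← Finset.sum_add_distrib]
    refine Finset.sum_congr rfl fun u _ => Finset.sum_congr rfl fun v _ => ?_
    by_cases hu : u ∈ D <;> by_cases hv : v ∈ D <;> simp [hu, hv] <;> ring
  · simp only [Finset.mul_sum, ← Finset.sum_add_distrib]
    refine Finset.sum_congr rfl fun u _ => ?_
    by_cases hu : u ∈ D <;> simp [hu]; ring

/-- The square of the partition function, as a sum over the disagreement set `D` of two copies. -/
lemma Zf_sq (J : V → V → ℝ) (h : V → ℝ) : Zf J h ^ 2 = ∑ D, ∑ σ, wD J h D σ := by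
  rw [sq]; unfold Zf
  rw [Finset.sum_mul_sum, sum_pair fun σ σ' => wt J h σ * wt J h σ']
  simp only [wt_pair]

/-- In `⟨(σ_x - σ'_x) (σ_y - σ'_y)⟩` for two independent copies only the disagreement sets containing both `x`
and `y` contribute. -/
lemma Uf_mul_sq (J : V → V → ℝ) (h : V → ℝ) (x y : V) : Uf J h x y * Zf J h ^ 2 =
    2 * ∑ D : Finset V, if x ∈ D ∧ y ∈ D then ∑ σ, sg (σ x) * sg (σ y) * wD J h D σ else 0 := by
  have e1 : Uf J h x y * Zf J h ^ 2 = (∑ σ, sg (σ x) * sg (σ y) * wt J h σ) * (∑ σ, wt J h σ) -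
      (∑ σ, sg (σ x) * wt J h σ) * (∑ σ, sg (σ y) * wt J h σ) := by
    rw [Ex_eq_iff (fun σ => sg (σ x) * sg (σ y)), Ex_eq_iff (fun σ => sg (σ x)),
      Ex_eq_iff (fun σ => sg (σ y))]
    unfold Uf tw mg Zf; ring
  have e2 : 2 * (Uf J h x y * Zf J h ^ 2) =
      ∑ σ, ∑ σ', (sg (σ x) - sg (σ' x)) * (sg (σ y) - sg (σ' y)) * (wt J h σ * wt J h σ') := by
    have t1 := Finset.sum_mul_sum Finset.univ Finset.univ (fun σ : V → Bool => sg (σ x) * sg (σ y) * wt J h σ) (wt J h)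
    have t2 := Finset.sum_mul_sum Finset.univ Finset.univ (wt J h) (fun σ : V → Bool => sg (σ x) * sg (σ y) * wt J h σ)
    have t3 := Finset.sum_mul_sum Finset.univ Finset.univ (fun σ : V → Bool => sg (σ x) * wt J h σ) (fun σ : V → Bool => sg (σ y) * wt J h σ)
    have t4 := Finset.sum_mul_sum Finset.univ Finset.univ (fun σ : V → Bool => sg (σ y) * wt J h σ) (fun σ : V → Bool => sg (σ x) * wt J h σ)
    have : 2 * (Uf J h x y * Zf J h ^ 2) = (∑ σ, sg (σ x) * sg (σ y) * wt J h σ) * (∑ σ, wt J h σ) +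
      (∑ σ, wt J h σ) * (∑ σ, sg (σ x) * sg (σ y) * wt J h σ) - 
      (∑ σ, sg (σ x) * wt J h σ) * (∑ σ, sg (σ y) * wt J h σ) - 
      (∑ σ, sg (σ y) * wt J h σ) * (∑ σ, sg (σ x) * wt J h σ) := by rw [e1]; ring
    rw [this, t1, t2, t3, t4]
    simp only [← Finset.sum_add_distrib, ← Finset.sum_sub_distrib]
    refine Finset.sum_congr rfl fun σ _ => Finset.sum_congr rfl fun σ' _ => by ring
  have e3 : 2 * (Uf J h x y * Zf J h ^ 2) = 2 * (2 * ∑ D : Finset V, if x ∈ D ∧ y ∈ D then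
      ∑ σ, sg (σ x) * sg (σ y) * wD J h D σ else 0) := by
    rw [e2, sum_pair fun σ σ' => (sg (σ x) - sg (σ' x)) * (sg (σ y) - sg (σ' y)) *
      (wt J h σ * wt J h σ'), Finset.mul_sum, Finset.mul_sum]
    refine Finset.sum_congr rfl fun D _ => ?_
    simp only [wt_pair, sg_flipD]
    by_cases hx : x ∈ D <;> by_cases hy : y ∈ D <;> simp only [hx, hy, and_self, if_true, if_false, and_false, false_and] <;> simp
    rw [Finset.mul_sum, Finset.mul_sum]
    exact Finset.sum_congr rfl fun σ _ => by ring
  linarith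

end

lemma rtg_mono {α : Type*} {r p : α → α → Prop} (h : ∀ a b, r a b → p a b) {x y : α}
    (hxy : Relation.ReflTransGen r x y) : Relation.ReflTransGen p x y :=
  Relation.ReflTransGen.mono (fun a b => h a b) x y hxy

section
variable {V : Type} [Fintype V]

/-- Edge factor `e^{2 J σ_u σ_v} - 1` of the ordered pair `p`. -/
def gE (J : V → V → ℝ) (p : V × V) (σ : V → Bool) : ℝ :=
  Real.exp (2 * J p.1 p.2 * (sg (σ p.1) * sg (σ p.2))) - 1

/-- Vertices joined to `x` by pairs in `F`. -/
def comp (F : Finset (V × V)) (x : V) : Finset V :=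
  Finset.univ.filter fun v => Relation.ReflTransGen (fun u v => (u, v) ∈ F ∨ (v, u) ∈ F) x v

/-- Total weight of the pair sets that connect exactly the vertices of `K` to `x`. -/
def cK (J : V → V → ℝ) (x : V) (K : Finset V) (σ : V → Bool) : ℝ :=
  ∑ F ∈ (K ×ˢ K).powerset.filter (fun F => comp F x = K), ∏ p ∈ F, gE J p σ

lemma gE_mem {J : V → V → ℝ} (hJ : ∀ u v, 0 ≤ J u v) (p : V × V) : gE J p ∈ CS V := by
  have e : gE J p = fun σ => (Real.cosh (2 * J p.1 p.2) - 1) +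
      Real.sinh (2 * J p.1 p.2) * (sg (σ p.1) * sg (σ p.2)) := by
    funext σ
    unfold gE
    cases σ p.1 <;> cases σ p.2 <;> simp [Real.cosh_eq, Real.sinh_eq] <;> ring
  rw [e]
  exact cone_add (S := fun _ : V => Bool)
    (cone_const (S := fun _ : V => Bool) (by linarith [Real.one_le_cosh (2 * J p.1 p.2)]))
    (cone_smul (S := fun _ : V => Bool) (Real.sinh_nonneg_iff.2 (by linarith [hJ p.1 p.2])) (CS_sg2 _ _))

/-- The component weights lie in the spin cone; this makes the coefficients `AK` nonnegative. -/
lemma cK_mem {J : V → V → ℝ} (hJ : ∀ u v, 0 ≤ J u v) (x : V) (K : Finset V) : cK J x K ∈ CS V := by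
  unfold cK
  exact cone_sum (S := fun _ : V => Bool) _ fun F _ => cone_prod (S := fun _ : V => Bool) _ fun p _ => gE_mem hJ p

/-- High-temperature type expansion of the interaction inside `D` into sets of pairs. -/
lemma exp_sJ (J : V → V → ℝ) (D : Finset V) (σ : V → Bool) :
    Real.exp (2 * sJ J D σ) = ∑ F ∈ (D ×ˢ D).powerset, ∏ p ∈ F, gE J p σ := by
  rw [← Finset.prod_one_add]
  simp only [gE, add_sub_cancel]
  rw [← Real.exp_sum, sJ, Finset.mul_sum, Finset.sum_product]
  congr 1
  refine Finset.sum_congr rfl fun u _ => ?_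
  rw [Finset.mul_sum]
  exact Finset.sum_congr rfl fun v _ => by ring

lemma self_mem_comp (F : Finset (V × V)) (x : V) : x ∈ comp F x := by
  simp [comp, Relation.ReflTransGen.refl]

lemma comp_sub {F : Finset (V × V)} {D : Finset V} {x : V} (hF : F ⊆ D ×ˢ D) (hx : x ∈ D) :
    comp F x ⊆ D := by
  intro v hv
  have hv := (Finset.mem_filter.1 hv).2
  induction hv with
  | refl => exact hx
  | tail _ h _ =>
    rcases h with h | h
    · exact (Finset.mem_product.1 (hF h)).2
    · exact (Finset.mem_product.1 (hF h)).1

lemma comp_step {F : Finset (V × V)} {x : V} {p : V × V} (hp : p ∈ F) :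
    p.1 ∈ comp F x ↔ p.2 ∈ comp F x := by
  unfold comp
  simp only [Finset.mem_filter, Finset.mem_univ, true_and]
  exact ⟨fun h => h.tail (Or.inl hp), fun h => h.tail (Or.inr hp)⟩

lemma comp_union {F G : Finset (V × V)} {K : Finset V} {x : V} (hF : comp F x = K)
    (hG : ∀ p ∈ G, p.1 ∉ K ∧ p.2 ∉ K) : comp (F ∪ G) x = K := by
  apply le_antisymm
  · intro v hv
    replace hv := (Finset.mem_filter.1 hv).2
    induction hv with
    | refl => rw [← hF]; exact self_mem_comp F x
    | tail _ h ih =>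
      rcases h with h | h <;> rcases Finset.mem_union.1 h with h | h
      · rw [← hF] at ih ⊢; exact (comp_step h).1 ih
      · exact absurd ih (hG _ h).1
      · rw [← hF] at ih ⊢; exact (comp_step h).2 ih
      · exact absurd ih (hG _ h).2
  · intro v hv
    rw [← hF] at hv
    have hv := (Finset.mem_filter.1 hv).2
    refine Finset.mem_filter.2 ⟨Finset.mem_univ _, rtg_mono (fun a b h => ?_) hv⟩
    simp only [Finset.mem_union]
    tauto

/-- Decomposition of the interaction in `D` according to the component of `x`. -/
lemma exp_sJ_split (J : V → V → ℝ) {D : Finset V} {x : V} (hx : x ∈ D) (σ : V → Bool) :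
    Real.exp (2 * sJ J D σ) =
      ∑ K ∈ D.powerset, cK J x K σ * Real.exp (2 * sJ J (D \ K) σ) := by
  rw [exp_sJ, ← Finset.sum_fiberwise_of_maps_to (t := D.powerset) (g := fun F => comp F x)
    (fun F hF => Finset.mem_powerset.2 (comp_sub (Finset.mem_powerset.1 hF) hx))]
  refine Finset.sum_congr rfl fun K hK => ?_
  have hK := Finset.mem_powerset.1 hK
  rw [exp_sJ, cK, Finset.sum_mul_sum, ← Finset.sum_product']
  have dis : ∀ q : Finset (V × V) × Finset (V × V),
      q ∈ ((K ×ˢ K).powerset.filter (fun F => comp F x = K)) ×ˢ ((D \ K) ×ˢ (D \ K)).powerset →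
      Disjoint q.1 q.2 := by
    intro q hq
    simp only [Finset.mem_product, Finset.mem_filter, Finset.mem_powerset] at hq
    rw [Finset.disjoint_left]
    intro p h1 h2
    exact (Finset.mem_sdiff.1 (Finset.mem_product.1 (hq.2 h2)).1).2
      (Finset.mem_product.1 (hq.1.1 h1)).1
  symm
  refine Finset.sum_nbij' (fun q => q.1 ∪ q.2)
    (fun F => (F.filter fun p => p.1 ∈ K, F.filter fun p => p.1 ∉ K)) ?_ ?_ ?_ ?_ ?_
  · intro q hq
    simp only [Finset.mem_product, Finset.mem_filter, Finset.mem_powerset] at hq ⊢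
    refine ⟨Finset.union_subset (hq.1.1.trans (Finset.product_subset_product hK hK))
      (hq.2.trans (Finset.product_subset_product Finset.sdiff_subset Finset.sdiff_subset)),
      comp_union hq.1.2 fun p hp => ?_⟩
    have := Finset.mem_product.1 (hq.2 hp)
    exact ⟨(Finset.mem_sdiff.1 this.1).2, (Finset.mem_sdiff.1 this.2).2⟩
  · intro F hF
    simp only [Finset.mem_filter, Finset.mem_powerset] at hF
    obtain ⟨hF, hc⟩ := hF
    have st : ∀ p ∈ F, (p.1 ∈ K ↔ p.2 ∈ K) := fun p hp => by rw [← hc]; exact comp_step hp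
    simp only [Finset.mem_product, Finset.mem_filter, Finset.mem_powerset]
    refine ⟨⟨fun p hp => ?_, ?_⟩, fun p hp => ?_⟩
    · have := Finset.mem_filter.1 hp
      exact Finset.mem_product.2 ⟨this.2, (st p this.1).1 this.2⟩
    · apply le_antisymm
      · refine comp_sub (fun p hp => ?_) (hc ▸ self_mem_comp F x)
        have := Finset.mem_filter.1 hp
        exact Finset.mem_product.2 ⟨this.2, (st p this.1).1 this.2⟩
      · intro v hv
        have hv' := hv
        rw [← hc] at hv'
        replace hv' := (Finset.mem_filter.1 hv').2
        clear hv
        induction hv' with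
        | refl => exact self_mem_comp _ x
        | @tail b c hb h ih =>
          have hbK : b ∈ K := by rw [← hc]; exact Finset.mem_filter.2 ⟨Finset.mem_univ _, hb⟩
          rcases h with h | h
          · exact (comp_step (p := (b, c)) (Finset.mem_filter.2 ⟨h, hbK⟩)).1 ih
          · exact (comp_step (p := (c, b)) (Finset.mem_filter.2 ⟨h, (st _ h).2 hbK⟩)).2 ih
    · have h1 := Finset.mem_filter.1 hp
      have h2 := Finset.mem_product.1 (hF h1.1)
      exact Finset.mem_product.2 ⟨Finset.mem_sdiff.2 ⟨h2.1, h1.2⟩,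
        Finset.mem_sdiff.2 ⟨h2.2, fun h => h1.2 ((st p h1.1).2 h)⟩⟩
  · intro q hq
    simp only [Finset.mem_product, Finset.mem_filter, Finset.mem_powerset] at hq
    have k1 : ∀ p ∈ q.1, p.1 ∈ K := fun p hp => (Finset.mem_product.1 (hq.1.1 hp)).1
    have k2 : ∀ p ∈ q.2, p.1 ∉ K := fun p hp =>
      (Finset.mem_sdiff.1 (Finset.mem_product.1 (hq.2 hp)).1).2
    apply Prod.ext
    · ext p; simp only [Finset.mem_filter, Finset.mem_union]
      have := k1 p; have := k2 p; tauto
    · ext p; simp only [Finset.mem_filter, Finset.mem_union]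
      have := k1 p; have := k2 p; tauto
  · intro F _
    exact Finset.filter_union_filter_not_eq _ F
  · intro q hq
    rw [Finset.prod_union (dis q hq)]

lemma cK_ne_zero {J : V → V → ℝ} {x : V} {K : Finset V} {σ : V → Bool} (h : cK J x K σ ≠ 0) :
    x ∈ K ∧ ∀ v ∈ K, Relation.ReflTransGen
      (fun u v => u ∈ K ∧ v ∈ K ∧ (J u v ≠ 0 ∨ J v u ≠ 0)) x v := by
  obtain ⟨F, hF, hne⟩ := Finset.exists_ne_zero_of_sum_ne_zero h
  simp only [Finset.mem_filter, Finset.mem_powerset] at hF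
  refine ⟨hF.2 ▸ self_mem_comp F x, fun v hv => ?_⟩
  rw [← hF.2] at hv
  refine rtg_mono (fun a b hab => ?_) (Finset.mem_filter.1 hv).2
  have ne : ∀ p ∈ F, J p.1 p.2 ≠ 0 := fun p hp h0 => by
    refine Finset.prod_ne_zero_iff.1 hne p hp ?_
    simp [gE, h0]
  rcases hab with hab | hab
  · have := Finset.mem_product.1 (hF.1 hab)
    exact ⟨this.1, this.2, Or.inl (ne _ hab)⟩
  · have := Finset.mem_product.1 (hF.1 hab)
    exact ⟨this.2, this.1, Or.inr (ne _ hab)⟩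

end

section
variable {V : Type} [Fintype V]

/-- The complement of `K`, as a set. -/
def off (K : Finset V) : Set V := {v | v ∉ K}

/-- Partition function of the model with the spins of `K` removed (decoupled). -/
def ZK (J : V → V → ℝ) (h : V → ℝ) (K : Finset V) : ℝ := Zf (rJ (off K) J) (rh (off K) h)

lemma ZK_pos (J : V → V → ℝ) (h : V → ℝ) (K : Finset V) : 0 < ZK J h K := Zf_pos _ _

lemma sJ_off (J : V → V → ℝ) (K D : Finset V) (σ : V → Bool) :
    sJ (rJ (off K) J) D σ = sJ J (D \ K) σ := by
  rw [sJ_eq, sJ_eq]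
  refine Finset.sum_congr rfl fun u _ => Finset.sum_congr rfl fun v _ => ?_
  by_cases hu : u ∈ K <;> by_cases hv : v ∈ K <;> simp [rJ, off, hu, hv]

lemma sh_off (h : V → ℝ) (K D : Finset V) (σ : V → Bool) :
    ∑ v ∈ D, rh (off K) h v * sg (σ v) = ∑ v ∈ D \ K, h v * sg (σ v) := by
  rw [sum_mem_eq D, sum_mem_eq (D \ K)]
  refine Finset.sum_congr rfl fun u _ => ?_
  by_cases hu : u ∈ K <;> simp [rh, off, hu]

lemma wD_off (J : V → V → ℝ) (h : V → ℝ) (K D : Finset V) (σ : V → Bool) :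
    wD (rJ (off K) J) (rh (off K) h) D σ = Real.exp (2 * sJ J (D \ K) σ) *
      Real.exp (2 * sJ J (Dᶜ \ K) σ + 2 * ∑ v ∈ Dᶜ \ K, h v * sg (σ v)) := by
  unfold wD; rw [sJ_off, sJ_off, sh_off]

lemma sum_superset (K : Finset V) (f : Finset V → ℝ) (hf : ∀ D, f (D ∪ K) = f D) :
    ∑ D, f D = 2 ^ K.card * ∑ D, if K ⊆ D then f D else 0 := by
  have : ∑ q ∈ K.powerset ×ˢ (Finset.univ.filter fun D : Finset V => K ⊆ D), f q.2 = ∑ D, f D := by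
    refine Finset.sum_nbij' (fun q => q.2 \ K ∪ q.1) (fun D => (D ∩ K, D ∪ K)) ?_ ?_ ?_ ?_ ?_
    · intro q _; simp
    · intro D _; simp [Finset.inter_subset_right, Finset.subset_union_right]
    · intro q hq
      simp only [Finset.mem_product, Finset.mem_powerset, Finset.mem_filter] at hq
      apply Prod.ext
      · ext v; have := @hq.1 v; simp; tauto
      · ext v; have := @hq.1 v; have := @hq.2.2 v; simp; tauto
    · intro D _; ext v; simp; tauto
    · intro q hq
      simp only [Finset.mem_product, Finset.mem_powerset, Finset.mem_filter] at hq
      rw [← hf (q.2 \ K ∪ q.1)]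
      congr 1
      ext v; have := @hq.1 v; have := @hq.2.2 v; simp; tauto
  rw [← this, Finset.sum_product]
  simp only
  rw [Finset.sum_const, Finset.card_powerset, nsmul_eq_mul, Finset.sum_filter]
  push_cast; rfl

/-- The square of the partition function without `K`, through disagreement sets `D ⊇ K`: the free spins in `K`
give the power of two. -/
lemma ZK_sq (J : V → V → ℝ) (h : V → ℝ) (K : Finset V) : ZK J h K ^ 2 = 2 ^ K.card *
    ∑ D : Finset V, if K ⊆ D then ∑ σ, Real.exp (2 * sJ J (D \ K) σ) *
      Real.exp (2 * sJ J Dᶜ σ + 2 * ∑ v ∈ Dᶜ, h v * sg (σ v)) else 0 := by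
  unfold ZK
  rw [Zf_sq, sum_superset K]
  · congr 1
    refine Finset.sum_congr rfl fun D _ => ?_
    split_ifs with hD
    · refine Finset.sum_congr rfl fun σ _ => ?_
      have : Dᶜ \ K = Dᶜ := by
        ext v; have := @hD v; simp; tauto
      rw [wD_off, this]
    · rfl
  · intro D
    refine Finset.sum_congr rfl fun σ _ => ?_
    have e1 : (D ∪ K) \ K = D \ K := by ext v; simp; tauto
    have e2 : (D ∪ K)ᶜ \ K = Dᶜ \ K := by ext v; simp
    rw [wD_off, wD_off, e1, e2]

lemma Dep_sum' {ι : Type*} {W : Set V} (s : Finset ι) {f : ι → (V → Bool) → ℝ}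
    (hf : ∀ i ∈ s, Dep W (f i)) : Dep W fun σ => ∑ i ∈ s, f i σ :=
  fun σ τ h => Finset.sum_congr rfl fun i hi => hf i hi σ τ h

lemma Dep_sJ (J : V → V → ℝ) {S : Finset V} {W : Set V} (hS : ∀ v ∈ S, v ∈ W) : Dep W (sJ J S) :=
  fun σ τ h => by
    unfold sJ
    exact Finset.sum_congr rfl fun u hu => Finset.sum_congr rfl fun v hv => by
      rw [h u (hS u hu), h v (hS v hv)]

lemma Dep_cK (J : V → V → ℝ) (x : V) (K : Finset V) : Dep (off K)ᶜ (cK J x K) := by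
  refine Dep_sum' _ fun F hF σ τ h => Finset.prod_congr rfl fun p hp => ?_
  have hF := Finset.mem_powerset.1 (Finset.mem_filter.1 hF).1
  have := Finset.mem_product.1 (hF hp)
  unfold gE
  rw [h p.1 (by simp [off, this.1]), h p.2 (by simp [off, this.2])]

lemma sJ_flip (J : V → V → ℝ) {S D : Finset V} (hS : S ⊆ D) (σ : V → Bool) :
    sJ J S (flipD D σ) = sJ J S σ := by
  unfold sJ
  exact Finset.sum_congr rfl fun u hu => Finset.sum_congr rfl fun v hv => by
    rw [sg_flipD, sg_flipD, if_pos (hS hu), if_pos (hS hv)]; ring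

/-- Coefficient of the expansion. -/
def AK (J : V → V → ℝ) (x y : V) (K : Finset V) : ℝ :=
  if y ∈ K then 2 * (∑ σ, sg (σ x) * sg (σ y) * cK J x K σ) /
    (Fintype.card (V → Bool) * 2 ^ K.card) else 0

lemma AK_nonneg {J : V → V → ℝ} (hJ : ∀ u v, 0 ≤ J u v) (x y : V) (K : Finset V) :
    0 ≤ AK J x y K := by
  unfold AK
  split_ifs
  · exact div_nonneg (mul_nonneg zero_le_two (CS_sum_nonneg
      (cone_mul (S := fun _ : V => Bool) (CS_sg2 x y) (cK_mem hJ x K)))) (by positivity)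
  · exact le_rfl

lemma AK_ne_zero {J : V → V → ℝ} {x y : V} {K : Finset V} (h : AK J x y K ≠ 0) :
    x ∈ K ∧ y ∈ K ∧ ∀ v ∈ K, Relation.ReflTransGen
      (fun u v => u ∈ K ∧ v ∈ K ∧ (J u v ≠ 0 ∨ J v u ≠ 0)) x v := by
  unfold AK at h
  split_ifs at h with hy
  · have : ∃ σ, cK J x K σ ≠ 0 := by
      by_contra hc
      push Not at hc
      simp [hc] at h
    obtain ⟨σ, hσ⟩ := this
    obtain ⟨h1, h2⟩ := cK_ne_zero hσ
    exact ⟨h1, hy, h2⟩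
  · exact absurd rfl h

/-- One term of the expansion. -/
lemma term_eq (J : V → V → ℝ) (h : V → ℝ) {x y : V} {K D : Finset V} (hx : x ∈ K) (hK : K ⊆ D)
    (hy : y ∈ D) :
    ∑ σ, sg (σ x) * sg (σ y) * (cK J x K σ * Real.exp (2 * sJ J (D \ K) σ) *
      Real.exp (2 * sJ J Dᶜ σ + 2 * ∑ v ∈ Dᶜ, h v * sg (σ v))) =
    if y ∈ K then (∑ σ, sg (σ x) * sg (σ y) * cK J x K σ) / Fintype.card (V → Bool) *
      ∑ σ, Real.exp (2 * sJ J (D \ K) σ) *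
      Real.exp (2 * sJ J Dᶜ σ + 2 * ∑ v ∈ Dᶜ, h v * sg (σ v)) else 0 := by
  have N : (0:ℝ) < Fintype.card (V → Bool) := by exact_mod_cast Fintype.card_pos
  split_ifs with hyK
  · have d1 : Dep (off K)ᶜ fun σ : V → Bool => sg (σ x) * sg (σ y) * cK J x K σ :=
      ((Dep.sg (by simpa [off] using hx)).mul (Dep.sg (by simpa [off] using hyK))).mul (Dep_cK J x K)
    have d2 : Dep (off K)ᶜᶜ fun σ : V → Bool => Real.exp (2 * sJ J (D \ K) σ) *
        Real.exp (2 * sJ J Dᶜ σ + 2 * ∑ v ∈ Dᶜ, h v * sg (σ v)) := by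
      rw [compl_compl]
      intro σ τ hστ
      have a1 := Dep_sJ J (S := D \ K) (W := off K) (fun v hv => (Finset.mem_sdiff.1 hv).2) σ τ hστ
      have hc : ∀ v ∈ Dᶜ, v ∈ off K := fun v hv hvK => (Finset.mem_compl.1 hv) (hK hvK)
      have a2 := Dep_sJ J (S := Dᶜ) (W := off K) hc σ τ hστ
      have a3 : ∑ v ∈ Dᶜ, h v * sg (σ v) = ∑ v ∈ Dᶜ, h v * sg (τ v) :=
        Finset.sum_congr rfl fun v hv => by rw [hστ v (hc v hv)]
      simp only [a1, a2, a3]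
    have := sum_mul_dep d1 d2
    rw [div_mul_eq_mul_div, this, mul_div_assoc, mul_comm, div_mul_cancel₀ _ N.ne']
    exact Finset.sum_congr rfl fun σ _ => by ring
  · have e := sum_flipD (D \ K) fun σ => sg (σ x) * sg (σ y) * (cK J x K σ *
      Real.exp (2 * sJ J (D \ K) σ) * Real.exp (2 * sJ J Dᶜ σ + 2 * ∑ v ∈ Dᶜ, h v * sg (σ v)))
    have e2 : ∀ σ, sg (flipD (D \ K) σ x) * sg (flipD (D \ K) σ y) * (cK J x K (flipD (D \ K) σ) *
      Real.exp (2 * sJ J (D \ K) (flipD (D \ K) σ)) * Real.exp (2 * sJ J Dᶜ (flipD (D \ K) σ) +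
        2 * ∑ v ∈ Dᶜ, h v * sg (flipD (D \ K) σ v))) = -(sg (σ x) * sg (σ y) * (cK J x K σ *
      Real.exp (2 * sJ J (D \ K) σ) *
        Real.exp (2 * sJ J Dᶜ σ + 2 * ∑ v ∈ Dᶜ, h v * sg (σ v)))) := by
      intro σ
      have same : ∀ v, v ∉ D \ K → flipD (D \ K) σ v = σ v := fun v hv => by simp only [flipD, if_neg hv]
      have b1 : cK J x K (flipD (D \ K) σ) = cK J x K σ := Dep_cK J x K _ _ fun v hv => same v (by
        have : v ∈ K := by simpa [off] using hv
        simp [this])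
      have hc : ∀ v ∈ Dᶜ, v ∉ D \ K := fun v hv hvK =>
        (Finset.mem_compl.1 hv) (Finset.mem_sdiff.1 hvK).1
      have b2 : sJ J Dᶜ (flipD (D \ K) σ) = sJ J Dᶜ σ :=
        Dep_sJ J (S := Dᶜ) (W := (D \ K : Finset V)ᶜ) (fun v hv => by simpa using hc v hv) _ _ fun v hv => same v (by simpa using hv)
      have b3 : ∑ v ∈ Dᶜ, h v * sg (flipD (D \ K) σ v) = ∑ v ∈ Dᶜ, h v * sg (σ v) :=
        Finset.sum_congr rfl fun v hv => by rw [same v (hc v hv)]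
      rw [b1, b2, b3, sJ_flip J subset_rfl, same x (by simp [hx]), sg_flipD, if_pos (by simp [hy, hyK])]
      ring
    rw [Finset.sum_congr rfl fun σ _ => e2 σ, Finset.sum_neg_distrib] at e
    linarith

/-- Expansion of the truncated two-point function over the connected component of `x` in the set
where two independent copies disagree. -/
theorem Uf_expand (J : V → V → ℝ) (h : V → ℝ) (x y : V) :
    Uf J h x y * Zf J h ^ 2 = ∑ K : Finset V, AK J x y K * ZK J h K ^ 2 := by
  rw [Uf_mul_sq]
  have e1 : ∀ D : Finset V, (if x ∈ D ∧ y ∈ D then ∑ σ, sg (σ x) * sg (σ y) * wD J h D σ else 0) =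
      ∑ K : Finset V, if x ∈ D ∧ y ∈ D ∧ K ⊆ D then
        ∑ σ, sg (σ x) * sg (σ y) * (cK J x K σ * Real.exp (2 * sJ J (D \ K) σ) *
          Real.exp (2 * sJ J Dᶜ σ + 2 * ∑ v ∈ Dᶜ, h v * sg (σ v))) else 0 := by
    intro D
    by_cases hx : x ∈ D <;> by_cases hy : y ∈ D <;> simp only [hx, hy, true_and, false_and, if_false, if_true, Finset.sum_const_zero]
    rw [← Finset.sum_filter, Finset.sum_comm]
    refine Finset.sum_congr rfl fun σ _ => ?_
    unfold wD
    rw [exp_sJ_split J hx, Finset.sum_mul, Finset.mul_sum]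
    refine Finset.sum_congr ?_ fun K _ => rfl
    ext K; simp
  rw [Finset.sum_congr rfl fun D _ => e1 D, Finset.sum_comm, Finset.mul_sum]
  refine Finset.sum_congr rfl fun K _ => ?_
  by_cases hxK : x ∈ K
  · unfold AK
    split_ifs with hyK
    · rw [ZK_sq, div_mul_eq_mul_div, mul_comm (Fintype.card _ : ℝ), ← mul_assoc,
        mul_comm _ ((2:ℝ) ^ K.card), mul_assoc, mul_div_mul_left _ _ (by positivity), mul_assoc 2,
        mul_div_assoc]
      congr 1
      rw [mul_div_right_comm, Finset.mul_sum]
      refine Finset.sum_congr rfl fun D _ => ?_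
      by_cases hD : K ⊆ D
      · rw [if_pos ⟨hD hxK, hD hyK, hD⟩, if_pos hD, term_eq J h hxK hD (hD hyK), if_pos hyK]
      · rw [if_neg fun h => hD h.2.2, if_neg hD, mul_zero]
    · rw [zero_mul, mul_eq_zero]
      right
      refine Finset.sum_eq_zero fun D _ => ?_
      split_ifs with hc
      · rw [term_eq J h hxK hc.2.2 hc.2.1, if_neg hyK]
      · rfl
  · have hc : ∀ σ, cK J x K σ = 0 := fun σ => by
      by_contra h0; exact hxK (cK_ne_zero h0).1
    simp [AK, hc]

/-- Comparison of truncated correlations through the expansion. -/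
theorem Uf_le_of_ZK {J : V → V → ℝ} (hJ : ∀ u v, 0 ≤ J u v) (h h₀ : V → ℝ) (x y : V) {q : ℝ}
    (H : ∀ K : Finset V, x ∈ K → y ∈ K → (∀ v ∈ K, Relation.ReflTransGen
      (fun u v => u ∈ K ∧ v ∈ K ∧ (J u v ≠ 0 ∨ J v u ≠ 0)) x v) →
      (ZK J h K * Zf J h₀) ^ 2 ≤ q * (ZK J h₀ K * Zf J h) ^ 2) :
    Uf J h x y ≤ q * Uf J h₀ x y := by
  have p1 := pow_pos (Zf_pos J h) 2
  have p2 := pow_pos (Zf_pos J h₀) 2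
  refine le_of_mul_le_mul_right ?_ (mul_pos p1 p2)
  have e1 : Uf J h x y * (Zf J h ^ 2 * Zf J h₀ ^ 2) =
      ∑ K, AK J x y K * (ZK J h K * Zf J h₀) ^ 2 := by
    rw [← mul_assoc, Uf_expand, Finset.sum_mul]
    exact Finset.sum_congr rfl fun K _ => by ring
  have e2 : q * Uf J h₀ x y * (Zf J h ^ 2 * Zf J h₀ ^ 2) =
      ∑ K, AK J x y K * (q * (ZK J h₀ K * Zf J h) ^ 2) := by
    rw [show q * Uf J h₀ x y * (Zf J h ^ 2 * Zf J h₀ ^ 2) =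
      (Uf J h₀ x y * Zf J h₀ ^ 2) * (q * Zf J h ^ 2) by ring, Uf_expand, Finset.sum_mul]
    exact Finset.sum_congr rfl fun K _ => by ring
  rw [e1, e2]
  refine Finset.sum_le_sum fun K _ => ?_
  by_cases hA : AK J x y K = 0
  · simp [hA]
  · obtain ⟨a, b, c⟩ := AK_ne_zero hA
    exact mul_le_mul_of_nonneg_left (H K a b c) (AK_nonneg hJ x y K)

end

/-! ### Reflection in a line of sites -/

section
variable {A L : Type} [Fintype A] [Fintype L]

/-- The monoids of site functions used for the reflection inequality: even and odd combinations of
a pair of mirror spins, and single spins on the mirror. -/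
def mmsM : (A ⊕ L) → Submonoid (Bool × Bool → ℝ)
  | Sum.inl _ => Submonoid.closure {gq, gt}
  | Sum.inr _ => Submonoid.closure {fun p => sg p.1}

/-- The cone generated by `mmsM`. -/
def CM (A L : Type) [Fintype A] [Fintype L] : Subsemiring ((A ⊕ L → Bool × Bool) → ℝ) :=
  Cone (S := fun _ : A ⊕ L => Bool × Bool) mmsM

lemma CM_q (a : A) : (fun ω : A ⊕ L → Bool × Bool => gq (ω (Sum.inl a))) ∈ CM A L :=
  cone_site (S := fun _ : A ⊕ L => Bool × Bool) (Sum.inl a)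
    (Submonoid.subset_closure (s := {gq, gt}) (by simp))

lemma CM_t (a : A) : (fun ω : A ⊕ L → Bool × Bool => gt (ω (Sum.inl a))) ∈ CM A L :=
  cone_site (S := fun _ : A ⊕ L => Bool × Bool) (Sum.inl a)
    (Submonoid.subset_closure (s := {gq, gt}) (by simp))

lemma CM_s (l : L) : (fun ω : A ⊕ L → Bool × Bool => sg (ω (Sum.inr l)).1) ∈ CM A L :=
  cone_site (S := fun _ : A ⊕ L => Bool × Bool) (M := mmsM) (g := fun p => sg p.1) (Sum.inr l)
    (Submonoid.subset_closure rfl)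

lemma CM_sum_nonneg {f : (A ⊕ L → Bool × Bool) → ℝ} (hf : f ∈ CM A L) : 0 ≤ ∑ ω, f ω := by
  have key := cone_sum_nonneg (S := fun _ : A ⊕ L => Bool × Bool) (M := mmsM) ?_ hf
  · convert key
  rintro (a | l) p hp
  · exact sum_qt_nonneg p hp
  · obtain ⟨n, rfl⟩ := Submonoid.mem_closure_singleton.1 hp
    simp only [Fintype.sum_prod_type, Fintype.sum_bool, Pi.pow_apply, sg_true, sg_false]
    rcases Nat.even_or_odd n with h | h <;> simp [h.neg_pow]

/-- Configuration of the reflected model determined by mirror pairs. -/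
def cfg (ω : A ⊕ L → Bool × Bool) : (A × Bool) ⊕ L → Bool
  | Sum.inl (a, true) => (ω (Sum.inl a)).1
  | Sum.inl (a, false) => (ω (Sum.inl a)).2
  | Sum.inr l => (ω (Sum.inr l)).1

/-- Sums over mirror pairs are multiples of sums over configurations: the unused copy of each spin on the
line is free. -/
lemma sum_cfg : ∃ c : ℝ, 0 < c ∧ ∀ g : ((A × Bool) ⊕ L → Bool) → ℝ,
    ∑ ω : A ⊕ L → Bool × Bool, g (cfg ω) = c * ∑ σ, g σ := by
  obtain ⟨c, hc, H⟩ := sum_comp_inj (V := (A × Bool) ⊕ L) (V' := (A ⊕ L) × Bool)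
    (ι := fun v => Sum.casesOn v (fun p => (Sum.inl p.1, p.2)) fun l => (Sum.inr l, true))
    (by rintro (⟨a, b⟩ | l) (⟨a', b'⟩ | l') h <;> simp_all)
  refine ⟨c, hc, fun g => ?_⟩
  have H' : ∑ τ : (A ⊕ L) × Bool → Bool, g (fun v => τ (Sum.casesOn v (fun p => (Sum.inl p.1, p.2))
      fun l => (Sum.inr l, true))) = c * ∑ σ, g σ := by
    convert H g
  refine Eq.trans ?_ H'
  refine Fintype.sum_bijective (fun ω p => if p.2 then (ω p.1).1 else (ω p.1).2)
    ⟨fun ω ω' h => ?_, fun τ => ⟨fun i => (τ (i, true), τ (i, false)), ?_⟩⟩ _ _ fun ω => ?_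
  · funext i
    have h1 := congrFun h (i, true)
    have h2 := congrFun h (i, false)
    exact Prod.ext (by simpa using h1) (by simpa using h2)
  · funext ⟨i, b⟩; cases b <;> rfl
  · congr 1
    funext v
    rcases v with ⟨a, b⟩ | l
    · cases b <;> rfl
    · rfl

/-- Reflection of the vertex set. -/
def thV : (A × Bool) ⊕ L → (A × Bool) ⊕ L
  | Sum.inl (a, b) => Sum.inl (a, !b)
  | Sum.inr l => Sum.inr l

lemma CM_en {J : (A × Bool) ⊕ L → (A × Bool) ⊕ L → ℝ} (hJ : ∀ u v, 0 ≤ J u v)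
    (hθ : ∀ u v, J (thV u) (thV v) = J u v)
    (h0 : ∀ a a' b, J (Sum.inl (a, b)) (Sum.inl (a', !b)) = 0) :
    (fun ω => en J (fun _ => 0) (cfg ω)) ∈ CM A L := by
  have e : (fun ω : A ⊕ L → Bool × Bool => en J (fun _ => 0) (cfg ω)) = fun ω =>
      (∑ a, ∑ a', J (Sum.inl (a, true)) (Sum.inl (a', true)) / 2 *
        (gq (ω (Sum.inl a)) * gq (ω (Sum.inl a')) + gt (ω (Sum.inl a)) * gt (ω (Sum.inl a')))) +
      (∑ a, ∑ l, (J (Sum.inl (a, true)) (Sum.inr l) + J (Sum.inr l) (Sum.inl (a, true))) *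
        (gq (ω (Sum.inl a)) * sg (ω (Sum.inr l)).1)) +
      ∑ l, ∑ l', J (Sum.inr l) (Sum.inr l') * (sg (ω (Sum.inr l)).1 * sg (ω (Sum.inr l')).1) := by
    funext ω
    have t1 : ∀ a a', J (Sum.inl (a, false)) (Sum.inl (a', false)) = J (Sum.inl (a, true)) (Sum.inl (a', true)) :=
      fun a a' => hθ (Sum.inl (a, true)) (Sum.inl (a', true))
    have t2 : ∀ a l, J (Sum.inl (a, false)) (Sum.inr l) = J (Sum.inl (a, true)) (Sum.inr l) :=
      fun a a' => hθ (Sum.inl (a, true)) (Sum.inr a')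
    have t3 : ∀ a l, J (Sum.inr l) (Sum.inl (a, false)) = J (Sum.inr l) (Sum.inl (a, true)) :=
      fun a a' => hθ (Sum.inr a') (Sum.inl (a, true))
    have t4 : ∀ a a', J (Sum.inl (a, false)) (Sum.inl (a', true)) = 0 := fun a a' => h0 a a' false
    have t5 : ∀ a a', J (Sum.inl (a, true)) (Sum.inl (a', false)) = 0 := fun a a' => h0 a a' true
    unfold en
    simp only [Fintype.sum_sum_type, Fintype.sum_prod_type, Fintype.sum_bool, cfg, t1, t2, t3, t4, t5,
      zero_mul, Finset.sum_const_zero, add_zero, zero_add, Finset.sum_add_distrib]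
    have c1 : ∀ f : L → A → ℝ, ∑ l, ∑ a, f l a = ∑ a, ∑ l, f l a := fun f => Finset.sum_comm
    rw [c1 fun l a => J (Sum.inr l) (Sum.inl (a, true)) * (sg (ω (Sum.inr l)).1 * sg (ω (Sum.inl a)).1),
     c1 fun l a => J (Sum.inr l) (Sum.inl (a, true)) * (sg (ω (Sum.inr l)).1 * sg (ω (Sum.inl a)).2)]
    have : ∀ x1 x2 x3 x4 x5 x6 x7 y1 y2 y3 : ℝ, x1 + x2 = y1 → x3 + x4 + (x5 + x6) = y2 → x7 = y3 →
      x1 + x3 + (x2 + x4) + (x5 + x6 + x7) = y1 + y2 + y3 := by intros; linarith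
    apply this
    · simp only [← Finset.sum_add_distrib]
      refine Finset.sum_congr rfl fun a _ => Finset.sum_congr rfl fun a' _ => ?_
      unfold gq gt; ring
    · simp only [← Finset.sum_add_distrib]
      refine Finset.sum_congr rfl fun a _ => Finset.sum_congr rfl fun a' _ => ?_
      unfold gq; ring
    · rfl
  rw [e]
  have S := fun _ : A ⊕ L => Bool × Bool
  refine cone_add (S := fun _ : A ⊕ L => Bool × Bool) (cone_add (S := fun _ : A ⊕ L => Bool × Bool) ?_ ?_) ?_
  · refine cone_sum (S := fun _ : A ⊕ L => Bool × Bool) _ fun a _ => cone_sum (S := fun _ : A ⊕ L => Bool × Bool) _ fun a' _ => ?_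
    refine cone_smul (S := fun _ : A ⊕ L => Bool × Bool) (by linarith [hJ (Sum.inl (a, true)) (Sum.inl (a', true))]) ?_
    exact cone_add (S := fun _ : A ⊕ L => Bool × Bool) (cone_mul (S := fun _ : A ⊕ L => Bool × Bool) (CM_q _) (CM_q _))
      (cone_mul (S := fun _ : A ⊕ L => Bool × Bool) (CM_t _) (CM_t _))
  · refine cone_sum (S := fun _ : A ⊕ L => Bool × Bool) _ fun a _ => cone_sum (S := fun _ : A ⊕ L => Bool × Bool) _ fun a' _ => ?_
    refine cone_smul (S := fun _ : A ⊕ L => Bool × Bool) (add_nonneg (hJ _ _) (hJ _ _)) ?_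
    exact cone_mul (S := fun _ : A ⊕ L => Bool × Bool) (CM_q _) (CM_s _)
  · refine cone_sum (S := fun _ : A ⊕ L => Bool × Bool) _ fun a _ => cone_sum (S := fun _ : A ⊕ L => Bool × Bool) _ fun a' _ => ?_
    refine cone_smul (S := fun _ : A ⊕ L => Bool × Bool) (hJ _ _) ?_
    exact cone_mul (S := fun _ : A ⊕ L => Bool × Bool) (CM_s _) (CM_s _)

/-- Messager–Miracle-Solé inequality: moving one point to its mirror image across a line of sites
decreases the two-point function. -/
theorem tw_reflect {J : (A × Bool) ⊕ L → (A × Bool) ⊕ L → ℝ} (hJ : ∀ u v, 0 ≤ J u v)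
    (hθ : ∀ u v, J (thV u) (thV v) = J u v)
    (h0 : ∀ a a' b, J (Sum.inl (a, b)) (Sum.inl (a', !b)) = 0) (u v : A) :
    tw J (fun _ => 0) (Sum.inl (u, true)) (Sum.inl (v, false)) ≤
      tw J (fun _ => 0) (Sum.inl (u, true)) (Sum.inl (v, true)) := by
  have hinj : Function.Injective (thV : (A × Bool) ⊕ L → (A × Bool) ⊕ L) := by
    refine Function.Involutive.injective (f := thV) ?_
    rintro (⟨a, b⟩ | l) <;> simp [thV]
  have sym : ∀ p q : (A × Bool) ⊕ L, tw J (fun _ => 0) p q ≤ tw J (fun _ => 0) (thV p) (thV q) :=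
    fun p q => tw_embed hinj hJ (fun _ => le_rfl) hJ (fun _ => le_rfl)
      (fun u v => (hθ u v).ge) (fun _ => le_rfl) p q
  have s1 := sym (Sum.inl (u, true)) (Sum.inl (v, false))
  have s2 := sym (Sum.inl (u, false)) (Sum.inl (v, false))
  simp only [thV, Bool.not_true, Bool.not_false] at s1 s2
  obtain ⟨c, hc, H⟩ := sum_cfg (A := A) (L := L)
  have hmem : (fun ω : A ⊕ L → Bool × Bool => gt (ω (Sum.inl u)) * gt (ω (Sum.inl v)) *
      wt J (fun _ => 0) (cfg ω)) ∈ CM A L :=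
    cone_mul (S := fun _ : A ⊕ L => Bool × Bool)
      (cone_mul (S := fun _ : A ⊕ L => Bool × Bool) (CM_t u) (CM_t v))
      (cone_exp (S := fun _ : A ⊕ L => Bool × Bool) (CM_en hJ hθ h0))
  have key := CM_sum_nonneg hmem
  have e := H fun σ => (sg (σ (Sum.inl (u, true))) - sg (σ (Sum.inl (u, false)))) *
    (sg (σ (Sum.inl (v, true))) - sg (σ (Sum.inl (v, false)))) * wt J (fun _ => 0) σ
  have e' : ∑ ω : A ⊕ L → Bool × Bool, gt (ω (Sum.inl u)) * gt (ω (Sum.inl v)) *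
      wt J (fun _ => 0) (cfg ω) = _ := e
  rw [e'] at key
  have key := (mul_nonneg_iff_of_pos_left hc).1 key
  have ex : ∑ σ : (A × Bool) ⊕ L → Bool, (sg (σ (Sum.inl (u, true))) - sg (σ (Sum.inl (u, false)))) *
    (sg (σ (Sum.inl (v, true))) - sg (σ (Sum.inl (v, false)))) * wt J (fun _ => 0) σ =
    (tw J (fun _ => 0) (Sum.inl (u, true)) (Sum.inl (v, true)) -
     tw J (fun _ => 0) (Sum.inl (u, true)) (Sum.inl (v, false)) -
     tw J (fun _ => 0) (Sum.inl (u, false)) (Sum.inl (v, true)) +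
     tw J (fun _ => 0) (Sum.inl (u, false)) (Sum.inl (v, false))) * Zf J (fun _ => 0) := by
    unfold tw
    rw [add_mul, sub_mul, sub_mul, ← Ex_eq_iff, ← Ex_eq_iff, ← Ex_eq_iff, ← Ex_eq_iff]
    simp only [← Finset.sum_add_distrib, ← Finset.sum_sub_distrib]
    exact Finset.sum_congr (by congr!) fun σ _ => by ring
  rw [ex] at key
  have := nonneg_of_mul_nonneg_left key (Zf_pos J _)
  linarith

end

/-! ### Wick's determinant formula -/

section
variable {R : Type} [Ring R] [Algebra ℝ R]

/-- Anticommuting `d` through a product whose anticommutators with `d` are scalars. -/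
lemma move_through (d : R) : ∀ (n : ℕ) (x : Fin (n + 1) → R) (κ : Fin (n + 1) → ℝ),
    (∀ j, d * x j + x j * d = algebraMap ℝ R (κ j)) →
    d * (List.ofFn x).prod = ∑ j : Fin (n + 1), ((-1 : ℝ) ^ (j : ℕ) * κ j) •
      (List.ofFn fun i : Fin n => x (j.succAbove i)).prod
      + ((-1 : ℝ) ^ (n + 1)) • ((List.ofFn x).prod * d) := by
  intro n
  induction n with
  | zero =>
    intro x κ h
    have := h 0
    simp only [List.ofFn_succ, List.ofFn_zero, List.prod_cons, List.prod_nil, mul_one,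
      Fin.sum_univ_succ, Fin.sum_univ_zero]
    rw [eq_sub_of_add_eq this, Algebra.algebraMap_eq_smul_one]
    simp [sub_eq_add_neg]
  | succ n ih =>
    intro x κ h
    have h0 := h 0
    have ih' := ih (fun i => x i.succ) (fun i => κ i.succ) (fun j => h j.succ)
    have e1 : d * x 0 = κ 0 • 1 - x 0 * d := by
      rw [← Algebra.algebraMap_eq_smul_one, ← h0]; abel
    rw [Fin.sum_univ_succ, List.ofFn_succ, List.prod_cons, ← mul_assoc, e1, sub_mul,
      mul_assoc (x 0) d, ih']
    have e2 : ∀ j : Fin (n + 1), (List.ofFn fun i : Fin (n + 1) => x ((Fin.succ j).succAbove i)).prod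
        = x 0 * (List.ofFn fun i : Fin n => x (j.succAbove i).succ).prod := by
      intro j
      rw [List.ofFn_succ, List.prod_cons]
      simp
    simp only [e2]
    rw [mul_add, Finset.mul_sum]
    simp only [Fin.val_succ, pow_succ, Fin.val_zero, pow_zero, one_mul, Fin.succAbove_zero,
      neg_mul, neg_smul, Finset.sum_neg_distrib, mul_smul_comm, smul_mul_assoc,
      mul_assoc, mul_neg, mul_one, neg_neg, smul_neg]
    abel

/-- Wick's formula: if every `y i` splits into a part annihilated by the state on the left and a part
annihilated on the right, expectations of `y`s times `x`s are determinants of contractions. -/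
theorem wick (ω : R →ₗ[ℝ] ℝ) : ∀ (m : ℕ) (y yp ym x : Fin m → R) (κ : Fin m → Fin m → ℝ),
    (∀ i, y i = yp i + ym i) → (∀ i A, ω (yp i * A) = 0) → (∀ i A, ω (A * ym i) = 0) →
    (∀ i j, i ≠ j → yp i * y j + y j * yp i = 0) →
    (∀ i j, ym i * x j + x j * ym i = algebraMap ℝ R (κ i j)) →
    ω ((List.ofFn y).reverse.prod * (List.ofFn x).prod) = Matrix.det (Matrix.of κ) * ω 1 := by
  intro m
  induction m with
  | zero => intros; simp
  | succ m ih =>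
    intro y yp ym x κ hy hp hm hpy hx
    rw [List.ofFn_succ, List.reverse_cons, List.prod_append, List.prod_singleton]
    set P := (List.ofFn fun i : Fin m => y i.succ).reverse.prod with hP
    -- the creation part of the innermost factor anticommutes to the far left
    have hl : ∀ l : List R, (∀ z ∈ l, yp 0 * z + z * yp 0 = 0) →
        ∃ s : ℝ, l.prod * yp 0 = s • (yp 0 * l.prod) := by
      intro l
      induction l with
      | nil => intro _; exact ⟨1, by simp⟩
      | cons z l ihl =>
        intro h
        obtain ⟨s, hs⟩ := ihl fun w hw => h w (List.mem_cons_of_mem _ hw)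
        refine ⟨-s, ?_⟩
        have hz := h z List.mem_cons_self
        rw [List.prod_cons, mul_assoc, hs, mul_smul_comm, ← mul_assoc, ← mul_assoc,
          eq_neg_of_add_eq_zero_right hz]
        simp
    obtain ⟨s, hs⟩ := hl (List.ofFn fun i : Fin m => y i.succ).reverse (by
      intro z hz
      rw [List.mem_reverse, List.mem_ofFn] at hz
      obtain ⟨i, rfl⟩ := hz
      exact hpy 0 i.succ (Fin.succ_ne_zero i).symm)
    rw [hy 0, mul_add, add_mul, map_add, hs, smul_mul_assoc, map_smul, mul_assoc, hp, smul_zero,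
      zero_add, mul_assoc, move_through (ym 0) m x (κ 0) (hx 0), mul_add, map_add, Finset.mul_sum,
      map_sum, mul_smul_comm, map_smul, ← mul_assoc, hm, smul_zero, add_zero,
      Matrix.det_succ_row_zero, Finset.sum_mul]
    refine Finset.sum_congr rfl fun j _ => ?_
    rw [mul_smul_comm, map_smul, ih (fun i => y i.succ) (fun i => yp i.succ) (fun i => ym i.succ)
      (fun i => x (j.succAbove i)) (fun i k => κ i.succ (j.succAbove k)) (fun i => hy _)
      (fun i => hp _) (fun i => hm _) (fun i k h => hpy _ _ (by simpa using h)) (fun i k => hx _ _)]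
    rw [smul_eq_mul, ← mul_assoc]
    rfl

end

/-! ### Cauchy determinants and their asymptotics -/

/-- The Cauchy determinant of size `m`. -/
def cauD (Y X : ℕ → ℝ) (m : ℕ) : ℝ := Matrix.det (Matrix.of fun i j : Fin m => 1 / (Y i - X j))

lemma cauD_zero (Y X : ℕ → ℝ) : cauD Y X 0 = 1 := by simp [cauD]

/-- One step of the Cauchy determinant evaluation, by elimination of the last row and column. -/
lemma cauD_succ {Y X : ℕ → ℝ} (h : ∀ i j, Y i ≠ X j) (m : ℕ) :
    cauD Y X (m + 1) = 1 / (Y m - X m) * (∏ i ∈ Finset.range m,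
      ((Y m - Y i) * (X i - X m) / ((Y i - X m) * (Y m - X i)))) * cauD Y X m := by
  have hs : ∀ i j, Y i - X j ≠ 0 := fun i j => sub_ne_zero.2 (h i j)
  unfold cauD
  rw [← Matrix.det_submatrix_equiv_self (finSumFinEquiv : Fin m ⊕ Fin 1 ≃ Fin (m + 1))]
  set A : Matrix (Fin m) (Fin m) ℝ := Matrix.of fun i j => 1 / (Y i - X j) with hA
  set B : Matrix (Fin m) (Fin 1) ℝ := Matrix.of fun i _ => 1 / (Y i - X m) with hB
  set C : Matrix (Fin 1) (Fin m) ℝ := Matrix.of fun _ j => 1 / (Y m - X j) with hC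
  set D : Matrix (Fin 1) (Fin 1) ℝ := Matrix.of fun _ _ => 1 / (Y m - X m) with hD
  have e : (Matrix.of fun i j : Fin (m + 1) => 1 / (Y i - X j)).submatrix finSumFinEquiv
      finSumFinEquiv = Matrix.fromBlocks A B C D := by
    ext i j
    rcases i with i | i <;> rcases j with j | j <;> simp [hA, hB, hC, hD]
  rw [e]
  have hDdet : D.det = 1 / (Y m - X m) := by rw [Matrix.det_fin_one]; rfl
  have hDu : IsUnit D.det := by
    rw [hDdet]; exact (one_div_ne_zero (hs m m)).isUnit
  have : Invertible D := Matrix.invertibleOfIsUnitDet D hDu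
  rw [Matrix.det_fromBlocks₂₂, hDdet, mul_assoc]
  congr 1
  have hDi : ⅟D = Matrix.of fun _ _ => Y m - X m := by
    apply invOf_eq_right_inv
    ext i j
    fin_cases i; fin_cases j
    simp [hD, Matrix.mul_apply, hs]
  have e2 : A - B * ⅟D * C = Matrix.of fun i j : Fin m => ((Y m - Y i) / (Y i - X m)) *
      (Matrix.of fun i j : Fin m => ((X j - X m) / (Y m - X j)) * A i j) i j := by
    rw [hDi]
    ext i j
    have h1 := hs i j
    have h2 := hs i m
    have h3 := hs m j
    simp only [Matrix.sub_apply, Matrix.mul_apply, hA, hB, hC, Matrix.of_apply]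
    simp only [Finset.univ_unique, Finset.sum_singleton]
    field_simp
    ring
  rw [e2, Matrix.det_mul_column, Matrix.det_mul_row, ← mul_assoc]
  congr 1
  rw [← Finset.prod_mul_distrib, Finset.prod_range]
  refine Finset.prod_congr rfl fun i _ => ?_
  rw [div_mul_div_comm]

open Real.Wallis in
/-- The corrected Wallis products, squeezing `π / 2` from both sides. -/
def uW (j : ℕ) : ℝ := W j * ((4 * j + 2) / (4 * j + 1))

lemma uW_succ (j : ℕ) : uW (j + 1) = uW j * (1 - 1 / (16 * (j : ℝ) ^ 3 + 36 * j ^ 2 + 24 * j + 5)) := by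
  unfold uW
  rw [Real.Wallis.W_succ]
  push_cast
  have : (0 : ℝ) ≤ j := Nat.cast_nonneg j
  have h1 : (16 * (j : ℝ) ^ 3 + 36 * j ^ 2 + 24 * j + 5) ≠ 0 := by positivity
  field_simp
  ring

lemma tendsto_uW : Tendsto uW atTop (nhds (Real.pi / 2)) := by
  have h1 := Real.tendsto_prod_pi_div_two
  have h2 := Real.Wallis.tendsto_W_nhds_pi_div_two
  have h3 : Tendsto (fun j : ℕ => (4 * (j : ℝ) + 2) / (4 * j + 1)) atTop (nhds 1) := by
    have : Tendsto (fun j : ℕ => 1 + (1 / 4 : ℝ) / ((j : ℝ) + 1 / 4)) atTop (nhds (1 + 0)) := by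
      refine tendsto_const_nhds.add (Tendsto.div_atTop tendsto_const_nhds ?_)
      exact tendsto_atTop_add_const_right _ _ tendsto_natCast_atTop_atTop
    rw [add_zero] at this
    refine this.congr fun j => ?_
    have : (0 : ℝ) ≤ j := Nat.cast_nonneg j
    field_simp; ring
  have h4 := h2.mul h3
  rw [mul_one] at h4
  exact h4

lemma uW_pos (j : ℕ) : 0 < uW j := mul_pos (Real.Wallis.W_pos j) (by positivity)

lemma le_uW (j : ℕ) : Real.pi / 2 ≤ uW j := by
  have : Antitone uW := antitone_nat_of_succ_le fun j => by
    rw [uW_succ]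
    have := uW_pos j
    have h1 : (0 : ℝ) ≤ 1 / (16 * (j : ℝ) ^ 3 + 36 * j ^ 2 + 24 * j + 5) := by positivity
    nlinarith
  exact this.le_of_tendsto tendsto_uW j

lemma uW_le (j : ℕ) (hj : 1 ≤ j) : uW j * (1 - 1 / (16 * (j : ℝ) * (j + 1))) ≤ Real.pi / 2 := by
  have hm : Monotone fun i : ℕ => uW (i + 1) * (1 - 1 / (16 * ((i : ℝ) + 1) * (i + 2))) := by
    refine monotone_nat_of_le_succ fun i => ?_
    rw [uW_succ (i + 1), mul_assoc (uW (i + 1))]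
    refine mul_le_mul_of_nonneg_left ?_ (uW_pos _).le
    push_cast
    have hi : (0 : ℝ) ≤ i := Nat.cast_nonneg i
    rw [← sub_nonneg]
    have h1 : (16 * ((i : ℝ) + 1) ^ 3 + 36 * (i + 1) ^ 2 + 24 * (i + 1) + 5) ≠ 0 := by positivity
    have : (1 - 1 / (16 * ((i : ℝ) + 1) ^ 3 + 36 * (i + 1) ^ 2 + 24 * (i + 1) + 5)) *
        (1 - 1 / (16 * ((i : ℝ) + 1 + 1) * (i + 1 + 2))) - (1 - 1 / (16 * ((i : ℝ) + 1) * (i + 2)))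
        = (16 * (2 * (16 * ((i : ℝ) + 1) ^ 3 + 36 * (i + 1) ^ 2 + 24 * (i + 1) + 5)
            - 16 * (i + 1) * (i + 2) * (i + 3) + (i + 1))) /
          (16 * ((i : ℝ) + 1) * 16 * (i + 2) * (i + 3) *
          (16 * ((i : ℝ) + 1) ^ 3 + 36 * (i + 1) ^ 2 + 24 * (i + 1) + 5)) := by
      field_simp
      ring
    rw [this]
    apply div_nonneg _ (by positivity)
    ring_nf; positivity
  have ht : Tendsto (fun i : ℕ => uW (i + 1) * (1 - 1 / (16 * ((i : ℝ) + 1) * (i + 2)))) atTop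
      (nhds (Real.pi / 2 * (1 - 0))) := by
    refine ((tendsto_add_atTop_iff_nat 1).2 tendsto_uW).mul (tendsto_const_nhds.sub ?_)
    refine Tendsto.div_atTop tendsto_const_nhds ?_
    refine tendsto_atTop_mono (f := fun i : ℕ => (i : ℝ)) (fun i => ?_) tendsto_natCast_atTop_atTop
    have hi : (0 : ℝ) ≤ i := Nat.cast_nonneg i
    nlinarith
  obtain ⟨i, rfl⟩ := Nat.exists_eq_add_of_le' hj
  have := hm.ge_of_tendsto ht i
  simp only [sub_zero, mul_one] at this
  push_cast at this ⊢
  have e : (i : ℝ) + 1 + 1 = i + 2 := by ring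
  rwa [e]

open Real.Wallis

/-- Limiting contraction for the magnetization. -/
def kapH (i k : ℕ) : ℝ := (if k = 0 then 1 / √2 else 1) * (4 / Real.pi) * (2 * i + 1) /
  ((2 * i + 1) ^ 2 - (2 * k) ^ 2)

/-- Magnetization at depth `2 j - 1` in the critical half plane with plus wall. -/
def mH (j : ℕ) : ℝ := Matrix.det (Matrix.of fun i k : Fin j => kapH i k)

lemma neYX (i j : ℕ) : (2 * (i : ℝ) + 1) ^ 2 ≠ (2 * (j : ℝ)) ^ 2 := by
  have h : (2 * i + 1) ^ 2 ≠ (2 * j) ^ 2 := by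
    intro h
    have := congrArg (· % 2) h
    simp [Nat.pow_mod, Nat.add_mod] at this
  exact_mod_cast h

lemma mH_eq (j : ℕ) : mH j = (∏ k ∈ Finset.range j, (if k = 0 then 1 / √2 else 1) *
    ((4 / Real.pi) * (2 * (k : ℝ) + 1))) * cauD (fun i => (2 * (i : ℝ) + 1) ^ 2) (fun i => (2 * (i : ℝ)) ^ 2) j := by
  rw [Finset.prod_mul_distrib, mul_assoc, cauD, Finset.prod_range, Finset.prod_range,
    ← Matrix.det_mul_column, ← Matrix.det_mul_row, mH]
  congr 1
  ext i k
  simp only [Matrix.of_apply, kapH]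
  ring

/-- The ratio of consecutive half-plane magnetizations involves the Wallis products `W j`. -/
lemma mH_succ (j : ℕ) (hj : 1 ≤ j) : mH (j + 1) = mH j * ((4 / Real.pi) * ((2 * j + 1) / (4 * j + 1)) * W j *
    ∏ i ∈ Finset.range j, ((2 * j + 2 * i) * (2 * j + 2 * i + 2) / (2 * j + 2 * i + 1) ^ 2 : ℝ)) := by
  rw [mH_eq, mH_eq, Finset.prod_range_succ, cauD_succ neYX, if_neg (by omega)]
  have e : ∏ i ∈ Finset.range j, (((2 * (j : ℝ) + 1) ^ 2 - (2 * (i : ℝ) + 1) ^ 2) * ((2 * (i : ℝ)) ^ 2 - (2 * (j : ℝ)) ^ 2) /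
      (((2 * (i : ℝ) + 1) ^ 2 - (2 * (j : ℝ)) ^ 2) * ((2 * (j : ℝ) + 1) ^ 2 - (2 * (i : ℝ)) ^ 2))) =
      W j * ∏ i ∈ Finset.range j, ((2 * j + 2 * i) * (2 * j + 2 * i + 2) / (2 * j + 2 * i + 1) ^ 2 : ℝ) := by
    rw [W, ← Finset.prod_range_reflect (fun i : ℕ => (2 * (i : ℝ) + 2) / (2 * i + 1) * ((2 * i + 2) / (2 * i + 3))), ← Finset.prod_mul_distrib]
    refine Finset.prod_congr rfl fun i hi => ?_
    have hi := Finset.mem_range.1 hi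
    obtain ⟨k, rfl⟩ := Nat.exists_eq_add_of_lt hi
    rw [show i + k + 1 - 1 - i = k by omega]
    have h1 := sub_ne_zero.2 (neYX i (i + k + 1))
    have h2 := sub_ne_zero.2 (neYX (i + k + 1) i)
    push_cast at *
    have h3 : 2 * ((i : ℝ) + k + 1) + 2 * i + 1 ≠ 0 := by positivity
    have h4 : 2 * (k : ℝ) + 1 ≠ 0 := by positivity
    have h5 : 2 * (k : ℝ) + 3 ≠ 0 := by positivity
    have h1' : (2 * (i : ℝ) + 1) ^ 2 - (2 * (i + k + 1)) ^ 2 = -((2 * k + 1) * (2 * ((i : ℝ) + k + 1) + 2 * i + 1)) := by ring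
    have h2' : (2 * ((i : ℝ) + k + 1) + 1) ^ 2 - (2 * (i : ℝ)) ^ 2 = ((2 * k + 3) * (2 * ((i : ℝ) + k + 1) + 2 * i + 1)) := by ring
    rw [h1', h2']
    field_simp
    ring
  rw [e]
  have hp : (2 * (j : ℝ) + 1) ^ 2 - (2 * j) ^ 2 = 4 * j + 1 := by ring
  rw [hp]
  ring

lemma prod_exp_le (j : ℕ) (hj : 1 ≤ j) :
    ∏ i ∈ Finset.range j, ((2 * j + 2 * i) * (2 * j + 2 * i + 2) / (2 * j + 2 * i + 1) ^ 2 : ℝ) ≤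
      Real.exp (-(1 / (8 * j)) + 1 / (8 * j ^ 2)) := by
  have hj' : (1 : ℝ) ≤ j := by exact_mod_cast hj
  have h1 : ∀ n : ℕ, ∏ i ∈ Finset.range n, ((2 * j + 2 * i) * (2 * j + 2 * i + 2) / (2 * j + 2 * i + 1) ^ 2 : ℝ) ≤
      Real.exp (-(1 / 2 * (1 / (2 * j + 1) - 1 / (2 * j + 2 * n + 1)))) := by
    intro n
    induction n with
    | zero => simp
    | succ n ih =>
      rw [Finset.prod_range_succ]
      have hn : (0 : ℝ) ≤ n := Nat.cast_nonneg n
      have : ((2 * j + 2 * n) * (2 * j + 2 * n + 2) / (2 * j + 2 * n + 1) ^ 2 : ℝ) ≤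
          Real.exp (-(1 / 2 * (1 / (2 * j + 2 * n + 1) - 1 / (2 * j + 2 * n + 3)))) := by
        refine le_trans ?_ (Real.add_one_le_exp _)
        rw [← sub_nonneg]
        have : -(1 / 2 * (1 / (2 * (j : ℝ) + 2 * n + 1) - 1 / (2 * j + 2 * n + 3))) + 1 - ((2 * j + 2 * n) * (2 * j + 2 * n + 2) / (2 * j + 2 * n + 1) ^ 2)
          = 2 / ((2 * j + 2 * n + 1) ^ 2 * (2 * j + 2 * n + 3)) := by
          field_simp; ring
        rw [this]; positivity
      refine (mul_le_mul ih this (by positivity) (by positivity)).trans ?_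
      rw [← Real.exp_add]
      apply Real.exp_le_exp.2
      push_cast
      apply le_of_eq
      ring
  refine (h1 j).trans (Real.exp_le_exp.2 ?_)
  rw [← sub_nonneg]
  have : -(1 / (8 * (j : ℝ))) + 1 / (8 * j ^ 2) - -(1 / 2 * (1 / (2 * (j : ℝ) + 1) - 1 / (2 * j + 2 * j + 1)))
    = (2 * j ^ 2 + 5 * j + 1) / (8 * j ^ 2 * (2 * j + 1) * (4 * j + 1)) := by
    field_simp; ring
  rw [this]; positivity

lemma mH_one : mH 1 = 1 / √2 * (4 / Real.pi) := by
  rw [mH_eq, cauD_succ neYX, cauD_zero]; simp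

/-- The exponent `1 / 8`: the ratio `mH (j + 1) / mH j` is at most `1 - 1 / (8 j)` up to summable errors. -/
theorem mH_bound : ∃ C : ℝ, 0 < C ∧ ∀ j : ℕ, 1 ≤ j → mH j ≤ C * (j : ℝ) ^ (-(1 / 8) : ℝ) := by
  have key : ∀ j : ℕ, 1 ≤ j → 0 < mH j ∧ mH j ≤ mH 1 * Real.exp (1 / 2 * (1 - 1 / j)) *
      (j : ℝ) ^ (-(1 / 8) : ℝ) := by
    intro j hj
    induction j, hj using Nat.le_induction with
    | base => simp [mH_one]; positivity
    | succ j hj ih =>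
      have hj' : (1 : ℝ) ≤ j := by exact_mod_cast hj
      have hW := W_pos j
      have hpos : 0 < mH (j + 1) := by
        rw [mH_succ j hj]
        refine mul_pos ih.1 (mul_pos (by positivity) (Finset.prod_pos fun i _ => by positivity))
      refine ⟨hpos, ?_⟩
      have h1 : (4 / Real.pi) * ((2 * j + 1) / (4 * j + 1)) * W j ≤ Real.exp (1 / (8 * j ^ 2)) := by
        have e : (4 / Real.pi) * ((2 * j + 1) / (4 * j + 1)) * W j = (2 / Real.pi) * uW j := by
          unfold uW; field_simp; ring
        rw [e]
        have hx : 1 / (16 * (j : ℝ) * (j + 1)) ≤ 1 / 32 := by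
          apply one_div_le_one_div_of_le (by norm_num); nlinarith
        have h2 : (2 / Real.pi) * uW j * (1 - 1 / (16 * (j : ℝ) * (j + 1))) ≤ 1 := by
          have := mul_le_mul_of_nonneg_left (uW_le j hj) (by positivity : 0 ≤ 2 / Real.pi)
          rw [mul_assoc]; refine this.trans (le_of_eq ?_); field_simp
        have h3 : 1 ≤ (1 - 1 / (16 * (j : ℝ) * (j + 1))) * Real.exp (1 / (8 * j ^ 2)) := by
          have h4 : 1 + 2 * (1 / (16 * (j : ℝ) * (j + 1))) ≤ Real.exp (1 / (8 * j ^ 2)) := by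
            refine le_trans ?_ (Real.add_one_le_exp _)
            have : 2 * (1 / (16 * (j : ℝ) * (j + 1))) ≤ 1 / (8 * j ^ 2) := by
              rw [mul_one_div, div_le_div_iff₀ (by positivity) (by positivity)]; nlinarith
            linarith
          have h5 : 0 < 1 / (16 * (j : ℝ) * (j + 1)) := by positivity
          nlinarith
        have hpos2 : 0 < (2 / Real.pi) * uW j := mul_pos (by positivity) (uW_pos j)
        have h6 := Real.exp_pos (1 / (8 * (j : ℝ) ^ 2))
        nlinarith
      have h2 : mH (j + 1) ≤ mH j * Real.exp (1 / 2 * (1 / j - 1 / (j + 1)) - 1 / (8 * j)) := by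
        rw [mH_succ j hj]
        refine mul_le_mul_of_nonneg_left ?_ ih.1.le
        refine (mul_le_mul h1 (prod_exp_le j hj) (Finset.prod_nonneg fun i _ => by positivity) (Real.exp_pos _).le).trans ?_
        rw [← Real.exp_add]
        apply Real.exp_le_exp.2
        have : 1 / (8 * (j : ℝ) ^ 2) + 1 / (8 * j ^ 2) ≤ 1 / 2 * (1 / j - 1 / (j + 1)) := by
          have e : 1 / 2 * (1 / (j : ℝ) - 1 / (j + 1)) = 1 / (2 * (j * (j + 1))) := by field_simp; ring
          rw [e, ← two_mul, mul_one_div, div_le_div_iff₀ (by positivity) (by positivity)]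
          nlinarith
        linarith
      have h3 : (j : ℝ) ^ (-(1 / 8) : ℝ) * Real.exp (- (1 / (8 * j))) ≤ ((j : ℝ) + 1) ^ (-(1 / 8) : ℝ) := by
        rw [Real.rpow_def_of_pos (by positivity), Real.rpow_def_of_pos (by positivity), ← Real.exp_add]
        apply Real.exp_le_exp.2
        have : Real.log (j + 1) - Real.log j ≤ 1 / j := by
          rw [← Real.log_div (by positivity) (by positivity)]
          refine (Real.log_le_sub_one_of_pos (by positivity)).trans (le_of_eq ?_)
          field_simp; ring
        have e : 1 / (8 * (j : ℝ)) = 1 / 8 * (1 / j) := by ring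
        rw [e]; linarith
      have hm1 : 0 < mH 1 := by rw [mH_one]; positivity
      calc mH (j + 1) ≤ (mH 1 * Real.exp (1 / 2 * (1 - 1 / j)) * (j : ℝ) ^ (-(1 / 8) : ℝ)) *
            Real.exp (1 / 2 * (1 / j - 1 / (j + 1)) - 1 / (8 * j)) :=
            h2.trans (mul_le_mul_of_nonneg_right ih.2 (Real.exp_pos _).le)
        _ = mH 1 * Real.exp (1 / 2 * (1 - 1 / (j + 1))) * ((j : ℝ) ^ (-(1 / 8) : ℝ) * Real.exp (- (1 / (8 * j)))) := by
            have : Real.exp (1 / 2 * (1 - 1 / (j : ℝ))) * Real.exp (1 / 2 * (1 / j - 1 / (j + 1)) - 1 / (8 * j))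
              = Real.exp (1 / 2 * (1 - 1 / (j + 1))) * Real.exp (- (1 / (8 * j))) := by
              rw [← Real.exp_add, ← Real.exp_add]; congr 1; ring
            linear_combination (mH 1 * (j : ℝ) ^ (-(1 / 8) : ℝ)) * this
        _ ≤ _ := by
            push_cast
            exact mul_le_mul_of_nonneg_left h3 (by positivity)
  have hm1 : 0 < mH 1 := by rw [mH_one]; positivity
  refine ⟨mH 1 * Real.exp (1 / 2), by positivity, fun j hj => (key j hj).2.trans ?_⟩
  refine mul_le_mul_of_nonneg_right ?_ (by positivity)
  refine mul_le_mul_of_nonneg_left (Real.exp_le_exp.2 ?_) hm1.le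
  have : (0 : ℝ) ≤ 1 / j := by positivity
  linarith

/-- Row correlation `m` diagonal steps apart in the critical plane. -/
def dT (m : ℕ) : ℝ := Matrix.det (Matrix.of fun i k : Fin m => 1 / (Real.pi * ((i : ℝ) - k + 1 / 2)))

lemma neYX' (i j : ℕ) : (i : ℝ) + 1 / 2 ≠ j := by
  intro h
  have : (2 * i + 1 : ℝ) = (2 * j : ℝ) := by linarith
  have : 2 * i + 1 = 2 * j := by exact_mod_cast this
  omega

lemma dT_eq (m : ℕ) : dT m = (1 / Real.pi) ^ m * cauD (fun i => (i : ℝ) + 1 / 2) (fun i => i) m := by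
  have : (1 / Real.pi) ^ m = ∏ i : Fin m, (fun _ => 1 / Real.pi) i := by simp
  rw [this, cauD, ← Matrix.det_mul_column, dT]
  congr 1
  ext i k
  simp only [Matrix.of_apply]
  rw [one_div_mul_one_div]
  ring_nf

lemma dT_succ (m : ℕ) : dT (m + 1) = dT m * (2 / Real.pi * W m) := by
  rw [dT_eq, dT_eq, cauD_succ neYX', W, pow_succ]
  have e : ∏ i ∈ Finset.range m, (((m : ℝ) + 1 / 2 - ((i : ℝ) + 1 / 2)) * ((i : ℝ) - m) /
      (((i : ℝ) + 1 / 2 - m) * ((m : ℝ) + 1 / 2 - i))) = W m := by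
    rw [W, ← Finset.prod_range_reflect (fun i : ℕ => (2 * (i : ℝ) + 2) / (2 * i + 1) * ((2 * i + 2) / (2 * i + 3)))]
    refine Finset.prod_congr rfl fun i hi => ?_
    have hi := Finset.mem_range.1 hi
    obtain ⟨k, rfl⟩ := Nat.exists_eq_add_of_lt hi
    rw [show i + k + 1 - 1 - i = k by omega]
    push_cast
    have h4 : 2 * (k : ℝ) + 1 ≠ 0 := by positivity
    have h5 : 2 * (k : ℝ) + 3 ≠ 0 := by positivity
    have h1' : (i : ℝ) + 1 / 2 - (i + k + 1) = -((2 * k + 1) / 2) := by ring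
    have h2' : (i : ℝ) + k + 1 + 1 / 2 - i = (2 * k + 3) / 2 := by ring
    rw [h1', h2']
    field_simp
    ring
  rw [e, W]
  ring

/-- The exponent `1 / 4`, in the same way from `dT (m + 1) / dT m = 2 / π * W m`. -/
theorem dT_bound : ∃ c : ℝ, 0 < c ∧ ∀ m : ℕ, 1 ≤ m → c * (m : ℝ) ^ (-(1 / 4) : ℝ) ≤ dT m := by
  have key : ∀ m : ℕ, 1 ≤ m → dT 1 * (1 / 2 : ℝ) ^ (1 / 4 : ℝ) ≤ dT m * ((m : ℝ) - 1 / 2) ^ (1 / 4 : ℝ) ∧ 0 < dT m := by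
    intro m hm
    induction m, hm using Nat.le_induction with
    | base =>
      have h1 : (0 : ℝ) < dT 1 := by simp [dT]; positivity
      norm_num [h1]
    | succ m hm ih =>
      have hm' : (1 : ℝ) ≤ m := by exact_mod_cast hm
      have hW := W_pos m
      refine ⟨ih.1.trans ?_, by rw [dT_succ]; exact mul_pos ih.2 (by positivity)⟩
      rw [dT_succ, mul_assoc]
      refine mul_le_mul_of_nonneg_left ?_ ih.2.le
      push_cast
      have h1 : (4 * (m : ℝ) + 1) / (4 * m + 2) ≤ 2 / Real.pi * W m := by
        have := le_uW m
        unfold uW at this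
        rw [div_le_iff₀ (by positivity)]
        have h2 := mul_le_mul_of_nonneg_left this (by positivity : 0 ≤ 2 / Real.pi * (4 * m + 1))
        have e1 : 2 / Real.pi * (4 * m + 1) * (Real.pi / 2) = 4 * m + 1 := by field_simp
        have e2 : 2 / Real.pi * (4 * m + 1) * (W m * ((4 * m + 2) / (4 * m + 1))) = 2 / Real.pi * W m * (4 * m + 2) := by
          field_simp
        linarith
      refine le_trans ?_ (mul_le_mul_of_nonneg_right h1 (by apply Real.rpow_nonneg; linarith))
      have h2 : ((4 * (m : ℝ) + 1) / (4 * m + 2)) = (((4 * (m : ℝ) + 1) / (4 * m + 2)) ^ (4 : ℕ)) ^ (1 / 4 : ℝ) := by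
        rw [← Real.rpow_natCast, ← Real.rpow_mul (by positivity)]; norm_num
      rw [h2, ← Real.mul_rpow (by positivity) (by linarith)]
      refine Real.rpow_le_rpow (by linarith) ?_ (by norm_num)
      have hx : ((4 * (m : ℝ) + 1) / (4 * m + 2)) = 1 + (-(1 / (4 * m + 2))) := by field_simp; ring
      have hb := one_add_mul_le_pow (a := -(1 / (4 * (m : ℝ) + 2))) (by
        have : 1 / (4 * (m : ℝ) + 2) ≤ 1 := by rw [div_le_one (by positivity)]; linarith
        linarith) 4
      rw [← hx] at hb
      refine le_trans ?_ (mul_le_mul_of_nonneg_right hb (by linarith))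
      apply le_of_eq
      push_cast
      field_simp
      ring
  have h1 : (0 : ℝ) < dT 1 := (key 1 le_rfl).2
  refine ⟨dT 1 * (1 / 2 : ℝ) ^ (1 / 4 : ℝ), by positivity, fun m hm => ?_⟩
  have hm' : (1 : ℝ) ≤ m := by exact_mod_cast hm
  have h2 := (key m hm).1.trans (mul_le_mul_of_nonneg_left
    (Real.rpow_le_rpow (by linarith) (by linarith : (m : ℝ) - 1 / 2 ≤ m) (by norm_num)) (key m hm).2.le)
  rw [Real.rpow_neg (by positivity), ← div_eq_mul_inv, div_le_iff₀ (by positivity)]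
  exact h2

/-! ### Diagonal transfer matrix and fermions -/

/-- The critical inverse temperature. -/
def bC : ℝ := Real.log (1 + √2) / 2

/-- Criticality enters only here: `exp (2 β_c s) = √2 + s` for `s = ± 1`. -/
lemma exp_bC {s : ℝ} (hs : s ^ 2 = 1) : Real.exp (2 * bC * s) = √2 + s := by
  have h2 : √2 ^ 2 = 2 := Real.sq_sqrt (by norm_num)
  have hp : 0 < √2 := by positivity
  have e : 2 * bC = Real.log (1 + √2) := by unfold bC; ring
  rw [e]
  rcases mul_self_eq_one_iff.1 ((sq s).symm.trans hs) with h | h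
  · rw [h, mul_one, Real.exp_log (by positivity)]; ring
  · rw [h, mul_neg, mul_one, Real.exp_neg, Real.exp_log (by positivity)]
    refine inv_eq_of_mul_eq_one_left ?_
    linear_combination h2

section
variable {M : ℕ}

/-- Flip all spins with index at least `p`. -/
def flp (p : ℕ) (σ : Fin M → Bool) : Fin M → Bool := fun b => if p ≤ b then !σ b else σ b

/-- Spin factor of the `x`-th fermion; also the value of the spin in column `x`. -/
def zz (x : ℕ) (σ : Fin M → Bool) : ℝ :=
  if x = 0 then 1 else if h : (x - 1) / 2 < M then sg (σ ⟨(x - 1) / 2, h⟩) else 1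

lemma zz_sq (x : ℕ) (σ : Fin M → Bool) : zz x σ * zz x σ = 1 := by
  unfold zz; split_ifs <;> simp

lemma flp_flp (p : ℕ) (σ : Fin M → Bool) : flp p (flp p σ) = σ := by
  funext b; unfold flp; split_ifs <;> simp

lemma flp_comm (p q : ℕ) (σ : Fin M → Bool) : flp p (flp q σ) = flp q (flp p σ) := by
  funext b; unfold flp; split_ifs <;> simp

lemma zz_flp {x : ℕ} (hx : x ≤ 2 * M) (p : ℕ) (σ : Fin M → Bool) :
    zz x (flp p σ) = if 2 * p + 1 ≤ x then - zz x σ else zz x σ := by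
  unfold zz flp
  by_cases h0 : x = 0
  · subst h0; simp
  have h : (x - 1) / 2 < M := by omega
  simp only [h0, h, if_false, dif_pos]
  by_cases h1 : 2 * p + 1 ≤ x
  · have : p ≤ (x - 1) / 2 := by omega
    simp [h1, this]
  · have : ¬ p ≤ (x - 1) / 2 := by omega
    simp [h1, this]

/-- Flipping as a permutation of configurations. -/
def flpE (p : ℕ) : (Fin M → Bool) ≃ (Fin M → Bool) := ⟨flp p, flp p, flp_flp p, flp_flp p⟩

/-- The fermion operators. -/
def cc (x : ℕ) : Module.End ℝ ((Fin M → Bool) → ℝ) where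
  toFun f := fun σ => zz x σ * f (flp (x / 2) σ)
  map_add' f g := by funext σ; simp [mul_add]
  map_smul' c f := by funext σ; simp; ring

lemma cc_apply (x : ℕ) (f : (Fin M → Bool) → ℝ) (σ) : cc x f σ = zz x σ * f (flp (x / 2) σ) := rfl

lemma cc_sq {x : ℕ} (hx : x ≤ 2 * M) : (cc x * cc x : Module.End ℝ ((Fin M → Bool) → ℝ)) = ((-1 : ℝ) ^ x) • 1 := by
  refine LinearMap.ext fun f => funext fun σ => ?_
  simp only [Module.End.mul_apply, cc_apply, flp_flp, zz_flp hx, LinearMap.smul_apply, Pi.smul_apply,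
    Module.End.one_apply, smul_eq_mul]
  rcases Nat.even_or_odd x with h | h
  · rw [if_neg (by obtain ⟨k, rfl⟩ := h; omega), ← mul_assoc, zz_sq, h.neg_one_pow]
  · rw [if_pos (by obtain ⟨k, rfl⟩ := h; omega), ← mul_assoc, mul_neg, zz_sq, h.neg_one_pow]

lemma cc_anti_lt {x y : ℕ} (hy : y ≤ 2 * M) (hxy : x < y) :
    (cc x * cc y + cc y * cc x : Module.End ℝ ((Fin M → Bool) → ℝ)) = 0 := by
  refine LinearMap.ext fun f => funext fun σ => ?_
  simp only [Module.End.mul_apply, cc_apply, LinearMap.add_apply, Pi.add_apply, LinearMap.zero_apply,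
    Pi.zero_apply, zz_flp hy, zz_flp (hxy.le.trans hy)]
  rw [if_pos (by omega), if_neg (by omega), flp_comm]
  ring

/-- The canonical anticommutation relations (with `cc_sq`). -/
lemma cc_anti {x y : ℕ} (hx : x ≤ 2 * M) (hy : y ≤ 2 * M) :
    (cc x * cc y + cc y * cc x : Module.End ℝ ((Fin M → Bool) → ℝ)) =
      algebraMap ℝ _ (if x = y then 2 * (-1 : ℝ) ^ x else 0) := by
  rcases lt_trichotomy x y with h | h | h
  · rw [cc_anti_lt hy h, if_neg h.ne, map_zero]
  · subst h
    rw [cc_sq hx, if_pos rfl, Algebra.algebraMap_eq_smul_one, ← add_smul]; congr 1; ring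
  · rw [add_comm, cc_anti_lt hx h, if_neg h.ne', map_zero]

/-- The product of two spins of a row is a string of fermions. -/
lemma cc_string (p : ℕ) (m : ℕ) (h : p + m ≤ M) (f : (Fin M → Bool) → ℝ) (σ) :
    ((List.ofFn fun i : Fin m => (cc (2 * (p + i) + 1) : Module.End ℝ ((Fin M → Bool) → ℝ))).reverse.prod *
      (List.ofFn fun i : Fin m => cc (2 * (p + i))).prod : Module.End ℝ ((Fin M → Bool) → ℝ)) f σ =
      zz (2 * p) σ * zz (2 * (p + m)) σ * f σ := by
  induction m generalizing f σ with
  | zero => simp [zz_sq]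
  | succ m ih =>
    rw [List.ofFn_succ', List.ofFn_succ', List.concat_eq_append, List.reverse_append,
      List.prod_append, List.concat_eq_append, List.prod_append]
    simp only [List.reverse_singleton, List.prod_singleton, Fin.val_last, Fin.val_castSucc]
    have ih' := fun f σ => ih (by omega) f σ
    simp only [Module.End.mul_apply] at ih' ⊢
    rw [cc_apply, ih', cc_apply, zz_flp (by omega), if_neg (by omega), zz_flp (by omega),
      if_neg (by omega), show 2 * (p + m) / 2 = (2 * (p + m) + 1) / 2 by omega, flp_flp]
    have e : zz (2 * (p + m) + 1) σ = zz (2 * (p + (m + 1))) σ := by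
      unfold zz
      have : (2 * (p + m) + 1 - 1) / 2 = (2 * (p + (m + 1)) - 1) / 2 := by omega
      simp only [this]
      rw [if_neg (by omega), if_neg (by omega)]
    rw [e]
    linear_combination (zz (2 * (p + (m + 1))) σ * zz (2 * p) σ * f σ) * zz_sq (2 * (p + m)) σ

/-- Spin in column `e` of a pair of adjacent rows. -/
def sp (τ σ : Fin M → Bool) (e : ℕ) : ℝ := if e % 2 = 1 then zz e σ else zz e τ

/-- Bond energy along the zigzag. -/
def bd (τ σ : Fin M → Bool) (e : ℕ) : ℝ := sp τ σ e * sp τ σ (e + 1)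

/-- Row-to-row transfer weight. -/
def TT (τ σ : Fin M → Bool) : ℝ := Real.exp (bC * ∑ e ∈ Finset.range (2 * M), bd τ σ e)

/-- Transfer weight with the bonds after position `i` reversed. -/
def KK (τ σ : Fin M → Bool) (i : ℕ) : ℝ :=
  Real.exp (bC * ∑ e ∈ Finset.range (2 * M), if e < i then bd τ σ e else - bd τ σ e)

lemma sp_sq (τ σ : Fin M → Bool) (e) : sp τ σ e * sp τ σ e = 1 := by
  unfold sp; split_ifs <;> exact zz_sq _ _

lemma KK_succ (τ σ : Fin M → Bool) {i : ℕ} (hi : i < 2 * M) : KK τ σ (i + 1) = KK τ σ i * (√2 + bd τ σ i) := by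
  have hb : bd τ σ i ^ 2 = 1 := by
    unfold bd
    linear_combination (sp τ σ (i + 1) * sp τ σ (i + 1)) * sp_sq τ σ i + sp_sq τ σ (i + 1)
  rw [← exp_bC hb]
  unfold KK
  rw [← Real.exp_add]
  congr 1
  have : ∑ e ∈ Finset.range (2 * M), (if e < i + 1 then bd τ σ e else - bd τ σ e) =
      ∑ e ∈ Finset.range (2 * M), ((if e < i then bd τ σ e else - bd τ σ e) + if e = i then 2 * bd τ σ i else 0) := by
    refine Finset.sum_congr rfl fun e _ => ?_
    rcases lt_trichotomy e i with h | h | h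
    · rw [if_pos (by omega), if_pos h, if_neg h.ne, add_zero]
    · subst h; simp; ring
    · rw [if_neg (by omega), if_neg (by omega), if_neg h.ne', add_zero]
  rw [this, Finset.sum_add_distrib, Finset.sum_ite_eq' , if_pos (Finset.mem_range.2 hi)]
  ring

lemma sp_flp_right (τ σ : Fin M → Bool) (p : ℕ) {e : ℕ} (he : e ≤ 2 * M) :
    sp τ (flp p σ) e = if e % 2 = 1 ∧ 2 * p + 1 ≤ e then - sp τ σ e else sp τ σ e := by
  unfold sp
  rw [zz_flp he]
  by_cases h : e % 2 = 1 <;> simp [h]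

lemma sp_flp_left (τ σ : Fin M → Bool) (p : ℕ) {e : ℕ} (he : e ≤ 2 * M) :
    sp (flp p τ) σ e = if e % 2 = 0 ∧ 2 * p + 1 ≤ e then - sp τ σ e else sp τ σ e := by
  unfold sp
  rw [zz_flp he]
  rcases Nat.mod_two_eq_zero_or_one e with h | h <;> simp [h]

lemma TT_flp_right (τ σ : Fin M → Bool) (p : ℕ) : TT τ (flp p σ) = KK τ σ (2 * p) := by
  unfold TT KK
  congr 2
  refine Finset.sum_congr rfl fun e he => ?_
  have he := Finset.mem_range.1 he
  unfold bd
  rw [sp_flp_right _ _ _ (by omega), sp_flp_right _ _ _ (by omega)]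
  split_ifs <;> first | omega | ring

lemma TT_flp_left (τ σ : Fin M → Bool) (p : ℕ) : TT (flp p τ) σ = KK τ σ (2 * p + 1) := by
  unfold TT KK
  congr 2
  refine Finset.sum_congr rfl fun e he => ?_
  have he := Finset.mem_range.1 he
  unfold bd
  rw [sp_flp_left _ _ _ (by omega), sp_flp_left _ _ _ (by omega)]
  split_ifs <;> first | omega | ring

/-- Common building blocks of the two families of kernels. -/
def hK (τ σ : Fin M → Bool) (i : ℕ) : ℝ := sp τ σ i * KK τ σ i

/-- Kernel of the transfer matrix composed with a fermion on the right. -/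
def kR (x : ℕ) (τ σ : Fin M → Bool) : ℝ := TT τ (flp (x / 2) σ) * zz x (flp (x / 2) σ)

/-- Kernel of the transfer matrix composed with a fermion on the left. -/
def kL (x : ℕ) (τ σ : Fin M → Bool) : ℝ := zz x τ * TT (flp (x / 2) τ) σ

lemma zz_sp_even (τ σ : Fin M → Bool) (a : ℕ) : zz (2 * a) τ = sp τ σ (2 * a) := by
  unfold sp; rw [if_neg (by omega)]

lemma zz_pair (a : ℕ) (τ : Fin M → Bool) : zz (2 * a + 2) τ = zz (2 * a + 1) τ := by
  unfold zz
  have : (2 * a + 2 - 1) / 2 = (2 * a + 1 - 1) / 2 := by omega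
  simp only [this]
  rw [if_neg (by omega), if_neg (by omega)]

lemma sqrt2_mul : √2 * √2 = (2 : ℝ) := Real.mul_self_sqrt (by norm_num)

lemma kR_zero (τ σ : Fin M → Bool) : kR 0 τ σ = hK τ σ 0 := by
  unfold kR hK
  rw [TT_flp_right]
  simp [zz, sp]

/-- At criticality the right kernels are combinations of two neighbouring building blocks; `kL_lt` is the
analogue on the left. -/
lemma kR_succ (τ σ : Fin M → Bool) {x : ℕ} (hx : x < 2 * M) :
    √2 * kR (x + 1) τ σ = hK τ σ x - (-1) ^ x * hK τ σ (x + 1) := by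
  have hs := sp_sq τ σ (x + 1)
  unfold kR hK
  rw [TT_flp_right, zz_flp (by omega), KK_succ τ σ hx]
  rcases Nat.even_or_odd x with h | h
  · rw [h.neg_one_pow]
    obtain ⟨a, rfl⟩ := h.two_dvd
    rw [if_pos (by omega), show 2 * ((2 * a + 1) / 2) = 2 * a by omega]
    have : zz (2 * a + 1) σ = sp τ σ (2 * a + 1) := by unfold sp; rw [if_pos (by omega)]
    rw [this]
    unfold bd
    linear_combination (sp τ σ (2 * a) * KK τ σ (2 * a)) * hs
  · rw [h.neg_one_pow]
    obtain ⟨a, rfl⟩ := h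
    rw [if_neg (by omega), show 2 * ((2 * a + 1 + 1) / 2) = 2 * a + 1 + 1 by omega, KK_succ τ σ hx]
    have : zz (2 * a + 1 + 1) σ = sp τ σ (2 * a + 1) := by
      rw [show 2 * a + 1 + 1 = 2 * a + 2 by omega, zz_pair]; unfold sp; rw [if_pos (by omega)]
    rw [this]
    unfold bd
    linear_combination (sp τ σ (2 * a + 1) * KK τ σ (2 * a + 1)) * sqrt2_mul
      - (sp τ σ (2 * a + 1) * KK τ σ (2 * a + 1)) * hs + √2 * sp τ σ (2 * a + 1 + 1) * KK τ σ (2 * a + 1) * sp_sq τ σ (2 * a + 1)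

lemma kL_last (τ σ : Fin M → Bool) : kL (2 * M) τ σ = hK τ σ (2 * M) := by
  unfold kL hK
  rw [TT_flp_left, zz_sp_even τ σ]
  congr 1
  unfold KK
  congr 2
  refine Finset.sum_congr rfl fun e he => ?_
  have he := Finset.mem_range.1 he
  rw [if_pos (by omega), if_pos (by omega)]

lemma kL_lt (τ σ : Fin M → Bool) {x : ℕ} (hx : x < 2 * M) :
    √2 * kL x τ σ = hK τ σ (x + 1) + (-1) ^ x * hK τ σ x := by
  unfold kL hK
  have hs := sp_sq τ σ x
  have hs1 := sp_sq τ σ (x + 1)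
  rw [TT_flp_left, KK_succ τ σ hx]
  rcases Nat.even_or_odd x with h | h
  · rw [h.neg_one_pow]
    obtain ⟨a, rfl⟩ := h.two_dvd
    rw [show 2 * (2 * a / 2) + 1 = 2 * a + 1 by omega, zz_sp_even τ σ, KK_succ τ σ hx]
    unfold bd
    linear_combination (sp τ σ (2 * a) * KK τ σ (2 * a)) * sqrt2_mul + (√2 * sp τ σ (2 * a + 1) * KK τ σ (2 * a)) * hs - (sp τ σ (2 * a) * KK τ σ (2 * a)) * hs1
  · rw [h.neg_one_pow]
    obtain ⟨a, rfl⟩ := h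
    rw [show 2 * ((2 * a + 1) / 2) + 1 = 2 * a + 1 by omega, ← zz_pair, show 2 * a + 2 = 2 * (a + 1) by ring, zz_sp_even τ σ]
    unfold bd
    rw [show 2 * a + 1 + 1 = 2 * (a + 1) by ring] at *
    linear_combination (-sp τ σ (2 * a + 1) * KK τ σ (2 * a + 1)) * hs1

end

/-! ### Normal modes of the transfer matrix -/

/-- The sign sequence `1, -1, -1, 1, 1, …` of the normal modes. -/
def gs : ℕ → ℝ
  | 0 => 1
  | x + 1 => - (-1) ^ x * gs x

lemma neg_one_sq_pow (x : ℕ) : ((-1 : ℝ) ^ x) * (-1) ^ x = 1 := by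
  rw [← mul_pow]; simp

lemma gs_sq (x : ℕ) : gs x * gs x = 1 := by
  induction x with
  | zero => simp [gs]
  | succ x ih =>
    simp only [gs]
    linear_combination (gs x * gs x) * neg_one_sq_pow x + ih

lemma gs_two (i : ℕ) : gs (2 * i) = (-1) ^ i := by
  induction i with
  | zero => simp [gs]
  | succ i ih =>
    rw [show 2 * (i + 1) = 2 * i + 1 + 1 by ring]
    simp only [gs, ih]
    rw [pow_succ, pow_mul, pow_succ (-1 : ℝ) i]; norm_num

lemma gs_two_one (i : ℕ) : gs (2 * i + 1) = -(-1) ^ i := by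
  simp only [gs, gs_two]
  rw [pow_mul]; norm_num

lemma sum_R1 (c h : ℕ → ℝ) (n : ℕ) :
    ∑ x ∈ Finset.range n, gs (x + 1) * c (x + 1) * (h x - (-1) ^ x * h (x + 1)) + c 0 * h 0 =
      ∑ x ∈ Finset.range n, (-1) ^ x * gs x * (c x - c (x + 1)) * h x + (-1) ^ n * gs n * c n * h n := by
  induction n with
  | zero => simp [gs]
  | succ n ih =>
    rw [Finset.sum_range_succ, Finset.sum_range_succ, add_right_comm, ih]
    simp only [gs, pow_succ]
    linear_combination 0 * ih

lemma sum_R2 (c h : ℕ → ℝ) (n : ℕ) :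
    ∑ x ∈ Finset.range n, (-1) ^ (x + 1) * gs (x + 1) * c (x + 1) * (h x - (-1) ^ x * h (x + 1)) + c 0 * h 0 =
      ∑ x ∈ Finset.range n, gs x * (c x + c (x + 1)) * h x + gs n * c n * h n := by
  induction n with
  | zero => simp [gs]
  | succ n ih =>
    rw [Finset.sum_range_succ, Finset.sum_range_succ, add_right_comm, ih]
    simp only [gs, pow_succ]
    linear_combination (gs n * c (n + 1) * h n - (-1) ^ n * gs n * c (n + 1) * h (n + 1)) * neg_one_sq_pow n

lemma sum_L1 (c h : ℕ → ℝ) (hc : c 0 = 0) (n : ℕ) :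
    ∑ x ∈ Finset.range n, gs x * c (x + 1) * (h (x + 1) + (-1) ^ x * h x) =
      ∑ x ∈ Finset.range n, (-1) ^ x * gs x * (c (x + 1) + c x) * h x + (-1) ^ n * gs n * c n * h n := by
  induction n with
  | zero => simp [hc]
  | succ n ih =>
    rw [Finset.sum_range_succ, Finset.sum_range_succ, ih]
    simp only [gs, pow_succ]
    linear_combination (- gs n * c (n + 1) * h (n + 1)) * neg_one_sq_pow n

lemma sum_L2 (c h : ℕ → ℝ) (hc : c 0 = 0) (n : ℕ) :
    ∑ x ∈ Finset.range n, (-1) ^ x * gs x * c (x + 1) * (h (x + 1) + (-1) ^ x * h x) =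
      ∑ x ∈ Finset.range n, gs x * (c (x + 1) - c x) * h x - gs n * c n * h n := by
  induction n with
  | zero => simp [hc]
  | succ n ih =>
    rw [Finset.sum_range_succ, Finset.sum_range_succ, ih]
    simp only [gs]
    linear_combination (gs n * c (n + 1) * h n) * neg_one_sq_pow n

/-- Coefficients of the normal modes. -/
def uR (θ : ℝ) (x : ℕ) : ℝ := (if x = 0 then 1 / √2 else 1) * gs x * Real.cos (θ * x)

/-- Coefficients of the intermediate normal modes. -/
def uL (M : ℕ) (θ : ℝ) (x : ℕ) : ℝ :=
  (if x = 2 * M then 1 / √2 else 1) * gs x * Real.sin (θ * (x + 1))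

section
variable {M : ℕ} {θ : ℝ}

lemma sqrt2_div : √2 * (1 / √2) = 1 := by
  have : √2 ≠ 0 := by positivity
  field_simp

lemma uR_kR (hθ : Real.cos (θ * (2 * M + 1)) = 0) (τ σ : Fin M → Bool) :
    √2 * ∑ x ∈ Finset.range (2 * M + 1), uR θ x * kR x τ σ =
    ∑ x ∈ Finset.range (2 * M + 1), (-1) ^ x * gs x * (Real.cos (θ * x) - Real.cos (θ * (x + 1))) * hK τ σ x := by
  have := sum_R1 (fun x => Real.cos (θ * x)) (hK τ σ) (2 * M)
  push_cast at this
  rw [Finset.sum_range_succ', mul_add, Finset.mul_sum]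
  rw [Finset.sum_range_succ _ (2 * M)]
  push_cast
  rw [hθ, sub_zero, ← this]
  congr 1
  · refine Finset.sum_congr rfl fun x hx => ?_
    rw [← kR_succ τ σ (Finset.mem_range.1 hx)]
    simp [uR]; ring
  · rw [kR_zero]; simp only [uR, gs, if_true, Nat.cast_zero]; linear_combination (Real.cos (θ * 0) * hK τ σ 0) * sqrt2_div

lemma uR_kR' (hθ : Real.cos (θ * (2 * M + 1)) = 0) (τ σ : Fin M → Bool) :
    √2 * ∑ x ∈ Finset.range (2 * M + 1), (-1) ^ x * uR θ x * kR x τ σ =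
    ∑ x ∈ Finset.range (2 * M + 1), gs x * (Real.cos (θ * x) + Real.cos (θ * (x + 1))) * hK τ σ x := by
  have := sum_R2 (fun x => Real.cos (θ * x)) (hK τ σ) (2 * M)
  push_cast at this
  rw [Finset.sum_range_succ', mul_add, Finset.mul_sum]
  rw [Finset.sum_range_succ _ (2 * M)]
  push_cast
  rw [hθ, add_zero, ← this]
  congr 1
  · refine Finset.sum_congr rfl fun x hx => ?_
    rw [← kR_succ τ σ (Finset.mem_range.1 hx)]
    simp [uR]; ring
  · rw [kR_zero]; simp only [uR, gs, if_true, Nat.cast_zero]; linear_combination (Real.cos (θ * 0) * hK τ σ 0) * sqrt2_div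

lemma uL_kL (τ σ : Fin M → Bool) :
    √2 * ∑ x ∈ Finset.range (2 * M + 1), uL M θ x * kL x τ σ =
    ∑ x ∈ Finset.range (2 * M + 1), (-1) ^ x * gs x * (Real.sin (θ * (x + 1)) + Real.sin (θ * x)) * hK τ σ x := by
  have := sum_L1 (fun x => Real.sin (θ * x)) (hK τ σ) (by simp) (2 * M)
  push_cast at this
  rw [Finset.sum_range_succ _ (2 * M), Finset.sum_range_succ _ (2 * M), mul_add, Finset.mul_sum]
  push_cast
  have e : ∑ x ∈ Finset.range (2 * M), √2 * (uL M θ x * kL x τ σ) =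
      ∑ x ∈ Finset.range (2 * M), gs x * Real.sin (θ * (x + 1)) * (hK τ σ (x + 1) + (-1) ^ x * hK τ σ x) := by
    refine Finset.sum_congr rfl fun x hx => ?_
    have hx := Finset.mem_range.1 hx
    rw [← kL_lt τ σ hx]
    simp [uL, hx.ne]; ring
  rw [e, this, kL_last]
  simp only [uL, if_true]
  rw [Even.neg_one_pow (even_two_mul M)]
  push_cast
  linear_combination (gs (2 * M) * Real.sin (θ * (2 * M + 1)) * hK τ σ (2 * M)) * sqrt2_div

lemma uL_kL' (τ σ : Fin M → Bool) :
    √2 * ∑ x ∈ Finset.range (2 * M + 1), (-1) ^ x * uL M θ x * kL x τ σ =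
    ∑ x ∈ Finset.range (2 * M + 1), gs x * (Real.sin (θ * (x + 1)) - Real.sin (θ * x)) * hK τ σ x := by
  have := sum_L2 (fun x => Real.sin (θ * x)) (hK τ σ) (by simp) (2 * M)
  push_cast at this
  rw [Finset.sum_range_succ _ (2 * M), Finset.sum_range_succ _ (2 * M), mul_add, Finset.mul_sum]
  push_cast
  have e : ∑ x ∈ Finset.range (2 * M), √2 * ((-1) ^ x * uL M θ x * kL x τ σ) =
      ∑ x ∈ Finset.range (2 * M), (-1) ^ x * gs x * Real.sin (θ * (x + 1)) * (hK τ σ (x + 1) + (-1) ^ x * hK τ σ x) := by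
    refine Finset.sum_congr rfl fun x hx => ?_
    have hx := Finset.mem_range.1 hx
    rw [← kL_lt τ σ hx]
    simp [uL, hx.ne]; ring
  rw [e, this, kL_last]
  simp only [uL, if_true]
  rw [Even.neg_one_pow (even_two_mul M)]
  push_cast
  linear_combination (gs (2 * M) * Real.sin (θ * (2 * M + 1)) * hK τ σ (2 * M)) * sqrt2_div

/-- The transfer matrix intertwines the modes `uR` on the right with `uL` on the left; `I2` is the version for the
transposed modes. -/
lemma I1 (hθ : Real.cos (θ * (2 * M + 1)) = 0) (τ σ : Fin M → Bool) :
    Real.cos (θ / 2) * ∑ x ∈ Finset.range (2 * M + 1), uR θ x * kR x τ σ =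
      Real.sin (θ / 2) * ∑ x ∈ Finset.range (2 * M + 1), uL M θ x * kL x τ σ := by
  have h2 : √2 ≠ 0 := by positivity
  apply mul_left_cancel₀ h2
  rw [mul_left_comm, uR_kR hθ, mul_left_comm, uL_kL, Finset.mul_sum, Finset.mul_sum]
  refine Finset.sum_congr rfl fun x _ => ?_
  obtain ⟨w, hw⟩ : ∃ w, w = θ * x + θ / 2 := ⟨_, rfl⟩
  have e1 : θ * x = w - θ / 2 := by rw [hw]; ring
  have e2 : θ * (x + 1) = w + θ / 2 := by rw [hw]; ring
  rw [e2, e1, Real.sin_add, Real.cos_add, Real.sin_sub, Real.cos_sub]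
  ring

lemma I2 (hθ : Real.cos (θ * (2 * M + 1)) = 0) (τ σ : Fin M → Bool) :
    Real.cos (θ / 2) * ∑ x ∈ Finset.range (2 * M + 1), (-1) ^ x * uL M θ x * kL x τ σ =
      Real.sin (θ / 2) * ∑ x ∈ Finset.range (2 * M + 1), (-1) ^ x * uR θ x * kR x τ σ := by
  have h2 : √2 ≠ 0 := by positivity
  apply mul_left_cancel₀ h2
  rw [mul_left_comm, uL_kL', mul_left_comm, uR_kR' hθ, Finset.mul_sum, Finset.mul_sum]
  refine Finset.sum_congr rfl fun x _ => ?_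
  obtain ⟨w, hw⟩ : ∃ w, w = θ * x + θ / 2 := ⟨_, rfl⟩
  have e1 : θ * x = w - θ / 2 := by rw [hw]; ring
  have e2 : θ * (x + 1) = w + θ / 2 := by rw [hw]; ring
  rw [e2, e1, Real.sin_add, Real.cos_add, Real.sin_sub, Real.cos_sub]
  ring

/-- Transfer operator of the diagonal lattice. -/
def Tm : Module.End ℝ ((Fin M → Bool) → ℝ) where
  toFun f := fun τ => ∑ σ, TT τ σ * f σ
  map_add' f g := by funext σ; simp [mul_add, Finset.sum_add_distrib]
  map_smul' c f := by funext σ; simp [Finset.mul_sum, mul_left_comm]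

/-- Transpose of `Tm`. -/
def Tt : Module.End ℝ ((Fin M → Bool) → ℝ) where
  toFun f := fun σ => ∑ τ, TT τ σ * f τ
  map_add' f g := by funext σ; simp [mul_add, Finset.sum_add_distrib]
  map_smul' c f := by funext σ; simp [Finset.mul_sum, mul_left_comm]

lemma Tm_apply (f : (Fin M → Bool) → ℝ) (τ) : Tm f τ = ∑ σ, TT τ σ * f σ := rfl
lemma Tt_apply (f : (Fin M → Bool) → ℝ) (σ) : Tt f σ = ∑ τ, TT τ σ * f τ := rfl

lemma sum_flp (p : ℕ) (F : (Fin M → Bool) → ℝ) : ∑ σ, F (flp p σ) = ∑ σ, F σ :=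
  Equiv.sum_comp (flpE p) F

lemma Tm_cc (x : ℕ) (f : (Fin M → Bool) → ℝ) (τ) : Tm (cc x f) τ = ∑ σ, kR x τ σ * f σ := by
  rw [Tm_apply, ← sum_flp (x / 2)]
  refine Finset.sum_congr rfl fun σ _ => ?_
  rw [cc_apply, flp_flp, kR]; ring

lemma cc_Tm (x : ℕ) (f : (Fin M → Bool) → ℝ) (τ) : cc x (Tm f) τ = ∑ σ, kL x τ σ * f σ := by
  rw [cc_apply, Tm_apply, Finset.mul_sum]
  refine Finset.sum_congr rfl fun σ _ => ?_
  rw [kL]; ring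

lemma zz_flp_self {x : ℕ} (hx : x ≤ 2 * M) (σ : Fin M → Bool) : zz x (flp (x / 2) σ) = (-1) ^ x * zz x σ := by
  rw [zz_flp hx]
  rcases Nat.even_or_odd x with h | h
  · rw [if_neg (by obtain ⟨k, rfl⟩ := h; omega), h.neg_one_pow, one_mul]
  · rw [if_pos (by obtain ⟨k, rfl⟩ := h; omega), h.neg_one_pow]; ring

lemma Tt_cc {x : ℕ} (hx : x ≤ 2 * M) (f : (Fin M → Bool) → ℝ) (σ) :
    Tt (cc x f) σ = ∑ τ, (-1) ^ x * kL x τ σ * f τ := by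
  rw [Tt_apply, ← sum_flp (x / 2)]
  refine Finset.sum_congr rfl fun τ _ => ?_
  rw [cc_apply, flp_flp, kL, zz_flp_self hx]; ring

lemma cc_Tt {x : ℕ} (hx : x ≤ 2 * M) (f : (Fin M → Bool) → ℝ) (σ) :
    cc x (Tt f) σ = ∑ τ, (-1) ^ x * kR x τ σ * f τ := by
  rw [cc_apply, Tt_apply, Finset.mul_sum]
  refine Finset.sum_congr rfl fun τ _ => ?_
  rw [kR, zz_flp_self hx]
  linear_combination (-zz x σ * TT τ (flp (x / 2) σ) * f τ) * neg_one_sq_pow x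

/-- A linear combination of fermion operators. -/
def lc (M : ℕ) (u : ℕ → ℝ) : Module.End ℝ ((Fin M → Bool) → ℝ) := ∑ x ∈ Finset.range (2 * M + 1), u x • cc x

lemma lc_apply (u : ℕ → ℝ) (f : (Fin M → Bool) → ℝ) (σ) :
    lc M u f σ = ∑ x ∈ Finset.range (2 * M + 1), u x * cc x f σ := by
  simp [lc, LinearMap.sum_apply]

lemma Tm_lc (u : ℕ → ℝ) (f : (Fin M → Bool) → ℝ) (τ) :
    Tm (lc M u f) τ = ∑ σ, (∑ x ∈ Finset.range (2 * M + 1), u x * kR x τ σ) * f σ := by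
  have : Tm (lc M u f) τ = ∑ x ∈ Finset.range (2 * M + 1), u x * Tm (cc x f) τ := by
    simp [lc, LinearMap.sum_apply]
  rw [this]
  simp_rw [Tm_cc, Finset.sum_mul, Finset.mul_sum]
  rw [Finset.sum_comm]
  simp_rw [mul_assoc]

lemma lc_Tm (u : ℕ → ℝ) (f : (Fin M → Bool) → ℝ) (τ) :
    lc M u (Tm f) τ = ∑ σ, (∑ x ∈ Finset.range (2 * M + 1), u x * kL x τ σ) * f σ := by
  rw [lc_apply]
  simp_rw [cc_Tm, Finset.sum_mul, Finset.mul_sum]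
  rw [Finset.sum_comm]
  simp_rw [mul_assoc]

lemma Tt_lc (u : ℕ → ℝ) (f : (Fin M → Bool) → ℝ) (σ) :
    Tt (lc M u f) σ = ∑ τ, (∑ x ∈ Finset.range (2 * M + 1), (-1) ^ x * u x * kL x τ σ) * f τ := by
  have : Tt (lc M u f) σ = ∑ x ∈ Finset.range (2 * M + 1), u x * Tt (cc x f) σ := by
    simp [lc, LinearMap.sum_apply]
  rw [this]
  simp_rw [Finset.sum_mul]
  rw [Finset.sum_comm]
  refine Finset.sum_congr rfl fun x hx => ?_
  rw [Tt_cc (by have := Finset.mem_range.1 hx; omega), Finset.mul_sum]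
  refine Finset.sum_congr rfl fun τ _ => by ring

lemma lc_Tt (u : ℕ → ℝ) (f : (Fin M → Bool) → ℝ) (σ) :
    lc M u (Tt f) σ = ∑ τ, (∑ x ∈ Finset.range (2 * M + 1), (-1) ^ x * u x * kR x τ σ) * f τ := by
  rw [lc_apply]
  simp_rw [Finset.sum_mul]
  rw [Finset.sum_comm]
  refine Finset.sum_congr rfl fun x hx => ?_
  rw [cc_Tt (by have := Finset.mem_range.1 hx; omega), Finset.mul_sum]
  refine Finset.sum_congr rfl fun τ _ => by ring

/-- Two-row transfer operator. -/
def VV (f : (Fin M → Bool) → ℝ) : (Fin M → Bool) → ℝ := Tt (Tm f)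

/-- The modes `uR θ` commute with the two-row operator up to the factor `tan (θ / 2) ^ 2`. -/
lemma V_gam (hθ : Real.cos (θ * (2 * M + 1)) = 0) (f : (Fin M → Bool) → ℝ) :
    Real.cos (θ / 2) ^ 2 • VV (lc M (uR θ) f) = Real.sin (θ / 2) ^ 2 • lc M (uR θ) (VV f) := by
  have h1 : Real.cos (θ / 2) • Tm (lc M (uR θ) f) = Real.sin (θ / 2) • lc M (uL M θ) (Tm f) := by
    funext τ
    simp only [Pi.smul_apply, smul_eq_mul, Tm_lc, lc_Tm]
    rw [Finset.mul_sum, Finset.mul_sum]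
    refine Finset.sum_congr rfl fun σ _ => ?_
    rw [← mul_assoc, ← mul_assoc, I1 hθ]
  have h2 : ∀ F, Real.cos (θ / 2) • Tt (lc M (uL M θ) F) = Real.sin (θ / 2) • lc M (uR θ) (Tt F) := by
    intro F
    funext σ
    simp only [Pi.smul_apply, smul_eq_mul, Tt_lc, lc_Tt]
    rw [Finset.mul_sum, Finset.mul_sum]
    refine Finset.sum_congr rfl fun τ _ => ?_
    rw [← mul_assoc, ← mul_assoc, I2 hθ]
  unfold VV
  rw [sq, mul_smul, ← map_smul, h1, map_smul, smul_comm, h2, smul_smul, sq]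

/-- The transposed modes, with the inverse factor. -/
lemma gamT_V (hθ : Real.cos (θ * (2 * M + 1)) = 0) (f : (Fin M → Bool) → ℝ) :
    Real.sin (θ / 2) ^ 2 • VV (lc M (fun x => (-1) ^ x * uR θ x) f) =
      Real.cos (θ / 2) ^ 2 • lc M (fun x => (-1) ^ x * uR θ x) (VV f) := by
  have h1 : Real.sin (θ / 2) • Tm (lc M (fun x => (-1) ^ x * uR θ x) f) =
      Real.cos (θ / 2) • lc M (fun x => (-1) ^ x * uL M θ x) (Tm f) := by
    funext τ
    simp only [Pi.smul_apply, smul_eq_mul, Tm_lc, lc_Tm]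
    rw [Finset.mul_sum, Finset.mul_sum]
    refine Finset.sum_congr rfl fun σ _ => ?_
    rw [← mul_assoc, ← mul_assoc, I2 hθ]
  have h2 : ∀ F, Real.sin (θ / 2) • Tt (lc M (fun x => (-1) ^ x * uL M θ x) F) =
      Real.cos (θ / 2) • lc M (fun x => (-1) ^ x * uR θ x) (Tt F) := by
    intro F
    funext σ
    simp only [Pi.smul_apply, smul_eq_mul, Tt_lc, lc_Tt]
    rw [Finset.mul_sum, Finset.mul_sum]
    refine Finset.sum_congr rfl fun τ _ => ?_
    rw [← mul_assoc, ← mul_assoc]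
    simp only [← mul_assoc ((-1 : ℝ) ^ _), neg_one_sq_pow, one_mul]
    rw [I1 hθ]
  unfold VV
  rw [sq, mul_smul, ← map_smul, h1, map_smul, smul_comm, h2, smul_smul, sq]

end

/-! ### The dominant vector and contractions at finite width -/

section
variable {M : ℕ}

lemma TT_pos (τ σ : Fin M → Bool) : 0 < TT τ σ := Real.exp_pos _

lemma VV_mono {f g : (Fin M → Bool) → ℝ} (h : ∀ σ, f σ ≤ g σ) (σ) : VV f σ ≤ VV g σ := by
  simp only [VV, Tt_apply, Tm_apply]
  refine Finset.sum_le_sum fun τ _ => mul_le_mul_of_nonneg_left ?_ (TT_pos _ _).le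
  exact Finset.sum_le_sum fun σ' _ => mul_le_mul_of_nonneg_left (h σ') (TT_pos _ _).le

lemma VV_smul (c : ℝ) (f : (Fin M → Bool) → ℝ) : VV (c • f) = c • VV f := by simp [VV]

lemma VV_iter_smul (c : ℝ) (f : (Fin M → Bool) → ℝ) (T : ℕ) : VV^[T] (c • f) = c • VV^[T] f := by
  induction T generalizing f with
  | zero => rfl
  | succ T ih => rw [Function.iterate_succ_apply, Function.iterate_succ_apply, VV_smul, ih]

lemma VV_iter_mono {f g : (Fin M → Bool) → ℝ} (h : ∀ σ, f σ ≤ g σ) (T : ℕ) (σ) : VV^[T] f σ ≤ VV^[T] g σ := by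
  induction T generalizing f g with
  | zero => exact h σ
  | succ T ih => rw [Function.iterate_succ_apply, Function.iterate_succ_apply]; exact ih (VV_mono h)

/-- Iterates of the two-row transfer operator on the constant function. -/
def phi (M T : ℕ) : (Fin M → Bool) → ℝ := VV^[T] (fun _ => 1)

lemma phi_pos (T : ℕ) (σ : Fin M → Bool) : 0 < phi M T σ := by
  unfold phi
  induction T generalizing σ with
  | zero => simp
  | succ T ih =>
    rw [Function.iterate_succ_apply']
    simp only [VV, Tt_apply, Tm_apply]
    exact Finset.sum_pos (fun τ _ => mul_pos (TT_pos _ _) (Finset.sum_pos (fun σ' _ => mul_pos (TT_pos _ _) (ih σ'))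
      Finset.univ_nonempty)) Finset.univ_nonempty

lemma VV_iter_abs (f : (Fin M → Bool) → ℝ) (T : ℕ) (σ) : |VV^[T] f σ| ≤ (∑ τ, |f τ|) * phi M T σ := by
  have hB : ∀ τ, |f τ| ≤ ∑ τ, |f τ| := fun τ =>
    Finset.single_le_sum (f := fun τ => |f τ|) (fun _ _ => abs_nonneg _) (Finset.mem_univ τ)
  set B := ∑ τ, |f τ|
  have h1 := VV_iter_mono (f := f) (g := B • fun _ => 1) (fun τ => by simpa using (le_abs_self _).trans (hB τ)) T σ
  have h2 := VV_iter_mono (f := (-B) • fun _ => 1) (g := f) (fun τ => by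
    have := neg_abs_le (f τ); have := hB τ; simp only [Pi.smul_apply, smul_eq_mul]; linarith) T σ
  rw [VV_iter_smul] at h1 h2
  rw [abs_le]
  constructor
  · simpa [phi] using h2
  · simpa [phi] using h1

/-- A dominant vector `ψ` exists as a subsequential limit of normalized iterates. An operator that
lowers the growth rate (`A V = q V A` with `0 ≤ q < 1`) annihilates it. -/
lemma ground_exists (M : ℕ) : ∃ (ψ : (Fin M → Bool) → ℝ) (s : ℕ → ℕ), StrictMono s ∧
    (∀ σ, Tendsto (fun j => phi M (s j) σ ^ 2 / ∑ τ, phi M (s j) τ ^ 2) atTop (nhds (ψ σ ^ 2))) ∧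
    ∑ σ, ψ σ ^ 2 = 1 ∧
    ∀ (A : Module.End ℝ ((Fin M → Bool) → ℝ)) (q : ℝ), 0 ≤ q → q < 1 → (∀ f, A (VV f) = q • VV (A f)) → A ψ = 0 := by
  set n : ℕ → ℝ := fun T => √(∑ τ, phi M T τ ^ 2) with hn
  have hS : ∀ T, 0 < ∑ τ, phi M T τ ^ 2 := fun T =>
    Finset.sum_pos (fun τ _ => pow_pos (phi_pos T τ) 2) Finset.univ_nonempty
  have hnp : ∀ T, 0 < n T := fun T => Real.sqrt_pos.2 (hS T)
  have hn2 : ∀ T, n T ^ 2 = ∑ τ, phi M T τ ^ 2 := fun T => Real.sq_sqrt (hS T).le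
  set u : ℕ → (Fin M → Bool) → ℝ := fun T => (n T)⁻¹ • phi M T with hu
  have hu0 : ∀ T σ, 0 ≤ u T σ := fun T σ => mul_nonneg (inv_nonneg.2 (hnp T).le) (phi_pos T σ).le
  have husq : ∀ T σ, u T σ ^ 2 = phi M T σ ^ 2 / ∑ τ, phi M T τ ^ 2 := fun T σ => by
    simp only [hu, Pi.smul_apply, smul_eq_mul]
    rw [mul_pow, inv_pow, hn2]; ring
  have hsum : ∀ T, ∑ σ, u T σ ^ 2 = 1 := fun T => by
    simp_rw [husq]; rw [← Finset.sum_div, div_self (hS T).ne']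
  have hu1 : ∀ T σ, u T σ ≤ 1 := fun T σ => by
    have := Finset.single_le_sum (f := fun σ => u T σ ^ 2) (fun _ _ => sq_nonneg _) (Finset.mem_univ σ)
    simp only [hsum] at this
    nlinarith [hu0 T σ]
  have hK : IsCompact (Set.pi Set.univ fun _ : Fin M → Bool => Set.Icc (0 : ℝ) 1) :=
    isCompact_univ_pi fun _ => isCompact_Icc
  obtain ⟨ψ, -, s, hs, hlim⟩ := hK.tendsto_subseq (x := u) (fun T σ _ => ⟨hu0 T σ, hu1 T σ⟩)
  have hl : ∀ σ, Tendsto (fun j => u (s j) σ) atTop (nhds (ψ σ)) := fun σ => (tendsto_pi_nhds.1 hlim) σ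
  refine ⟨ψ, s, hs, fun σ => ?_, ?_, ?_⟩
  · simp_rw [← husq]; exact (hl σ).pow 2
  · have h1 : Tendsto (fun j => ∑ σ, u (s j) σ ^ 2) atTop (nhds (∑ σ, ψ σ ^ 2)) :=
      tendsto_finsetSum _ fun σ _ => (hl σ).pow 2
    simp_rw [hsum] at h1
    exact (tendsto_nhds_unique h1 tendsto_const_nhds)
  · intro A q hq0 hq1 hA
    have hAT : ∀ T f, A (VV^[T] f) = q ^ T • VV^[T] (A f) := by
      intro T
      induction T with
      | zero => intro f; simp
      | succ T ih =>
        intro f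
        rw [Function.iterate_succ_apply', hA, ih, VV_smul, smul_smul, Function.iterate_succ_apply', pow_succ']
    funext σ
    have hc : Continuous fun f : (Fin M → Bool) → ℝ => A f σ := by
      have := LinearMap.continuous_of_finiteDimensional A
      exact (continuous_apply σ).comp this
    have h1 : Tendsto (fun j => A (u (s j)) σ) atTop (nhds (A ψ σ)) := (hc.tendsto ψ).comp hlim
    have h2 : Tendsto (fun j => A (u (s j)) σ) atTop (nhds 0) := by
      set B := ∑ τ, |A (fun _ => 1) τ|
      have hB : 0 ≤ B := Finset.sum_nonneg fun _ _ => abs_nonneg _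
      have hb : ∀ T, |A (u T) σ| ≤ q ^ T * B := by
        intro T
        have e : A (u T) σ = q ^ T * ((n T)⁻¹ * VV^[T] (A fun _ => 1) σ) := by
          simp only [hu, map_smul, phi, hAT, Pi.smul_apply, smul_eq_mul]; ring
        rw [e, abs_mul, abs_of_nonneg (pow_nonneg hq0 T), abs_mul, abs_of_pos (inv_pos.2 (hnp T))]
        refine mul_le_mul_of_nonneg_left ?_ (pow_nonneg hq0 T)
        calc _ ≤ (n T)⁻¹ * (B * phi M T σ) := mul_le_mul_of_nonneg_left (VV_iter_abs _ T σ) (inv_pos.2 (hnp T)).le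
          _ = B * u T σ := by simp [hu]; ring
          _ ≤ B * 1 := mul_le_mul_of_nonneg_left (hu1 T σ) hB
          _ = B := mul_one B
      have h0 : Tendsto (fun j => q ^ (s j) * B) atTop (nhds 0) := by
        have := ((tendsto_pow_atTop_nhds_zero_of_lt_one hq0 hq1).comp hs.tendsto_atTop).mul_const B
        simpa using this
      exact squeeze_zero_norm (fun j => by simpa using hb (s j)) h0
    exact tendsto_nhds_unique h1 h2

/-- Momenta of the normal modes. -/
def th (M k : ℕ) : ℝ := ((k : ℝ) + 1 / 2) * Real.pi / (2 * M + 1)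

lemma th_cos (k : ℕ) : Real.cos (th M k * (2 * M + 1)) = 0 := by
  have : (2 * (M : ℝ) + 1) ≠ 0 := by positivity
  rw [th, div_mul_cancel₀ _ this, Real.cos_eq_zero_iff]
  exact ⟨k, by push_cast; ring⟩

lemma cos_sum (φ : ℝ) (n : ℕ) : 2 * Real.sin (φ / 2) * ∑ k ∈ Finset.range n, Real.cos (((k : ℝ) + 1 / 2) * φ) =
    Real.sin (n * φ) := by
  induction n with
  | zero => simp
  | succ n ih =>
    rw [Finset.sum_range_succ, mul_add, ih]
    have e1 : (n : ℝ) * φ = ((n : ℝ) + 1 / 2) * φ - φ / 2 := by ring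
    have e2 : ((n + 1 : ℕ) : ℝ) * φ = ((n : ℝ) + 1 / 2) * φ + φ / 2 := by push_cast; ring
    rw [e1, e2, Real.sin_sub, Real.sin_add]; ring

lemma sin_half_ne {m : ℕ} (h1 : 1 ≤ m) (h2 : m < 2 * (2 * M + 1)) :
    0 < Real.sin (m * Real.pi / (2 * M + 1) / 2) := by
  have hN : (0 : ℝ) < 2 * M + 1 := by positivity
  have hm : (0 : ℝ) < m := by exact_mod_cast h1
  have hm2 : (m : ℝ) < 2 * (2 * M + 1) := by exact_mod_cast h2
  apply Real.sin_pos_of_pos_of_lt_pi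
  · positivity
  · rw [div_div, div_lt_iff₀ (by positivity)]
    nlinarith [Real.pi_pos]

lemma th_mul (k m : ℕ) : th M k * m = ((k : ℝ) + 1 / 2) * (m * Real.pi / (2 * M + 1)) := by unfold th; ring

lemma cos_sum_full {m : ℕ} (h1 : 1 ≤ m) (h2 : m < 2 * (2 * M + 1)) :
    ∑ k ∈ Finset.range (2 * M + 1), Real.cos (th M k * m) = 0 := by
  have h := cos_sum (m * Real.pi / (2 * M + 1)) (2 * M + 1)
  have hN : (2 * (M : ℝ) + 1) ≠ 0 := by positivity
  have e : ((2 * M + 1 : ℕ) : ℝ) * (m * Real.pi / (2 * M + 1)) = m * Real.pi := by push_cast; field_simp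
  rw [e, Real.sin_nat_mul_pi] at h
  simp_rw [← th_mul] at h
  have hs := sin_half_ne h1 h2
  rcases mul_eq_zero.1 h with h' | h'
  · exfalso; linarith
  · exact h'

lemma cos_cos (k x y : ℕ) (hxy : x ≤ y) : Real.cos (th M k * x) * Real.cos (th M k * y) =
    (Real.cos (th M k * (x + y : ℕ)) + Real.cos (th M k * (y - x : ℕ))) / 2 := by
  push_cast [Nat.cast_sub hxy]
  rw [mul_add, mul_sub, Real.cos_add, Real.cos_sub]; ring

lemma cos_orth_lt {x y : ℕ} (hy : y ≤ 2 * M) (h : x < y) :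
    ∑ k ∈ Finset.range (2 * M + 1), Real.cos (th M k * x) * Real.cos (th M k * y) = 0 := by
  simp_rw [fun k => cos_cos (M := M) k x y h.le]
  rw [← Finset.sum_div, Finset.sum_add_distrib, cos_sum_full (by omega) (by omega), cos_sum_full (by omega) (by omega)]
  simp

lemma cos_orth {x y : ℕ} (hx : x ≤ 2 * M) (hy : y ≤ 2 * M) (hy1 : 1 ≤ y) :
    ∑ k ∈ Finset.range (2 * M + 1), Real.cos (th M k * x) * Real.cos (th M k * y) =
      if x = y then (2 * (M : ℝ) + 1) / 2 else 0 := by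
  rcases lt_trichotomy x y with h | h | h
  · rw [cos_orth_lt hy h, if_neg h.ne]
  · subst h
    rw [if_pos rfl]
    simp_rw [fun k => cos_cos (M := M) k x x le_rfl]
    rw [← Finset.sum_div, Finset.sum_add_distrib, cos_sum_full (by omega) (by omega)]
    simp
  · rw [if_neg h.ne']
    exact (Finset.sum_congr rfl fun k _ => mul_comm _ _).trans (cos_orth_lt hx h)

lemma th_mid {y : ℕ} (hy : y % 2 = 1) : Real.cos (th M M * y) = 0 := by
  have hN : (2 * (M : ℝ) + 1) ≠ 0 := by positivity
  rw [Real.cos_eq_zero_iff]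
  obtain ⟨i, rfl⟩ : ∃ i, y = 2 * i + 1 := ⟨y / 2, by omega⟩
  refine ⟨i, ?_⟩
  unfold th; push_cast; field_simp

lemma sum_split {x y : ℕ} (hy : y % 2 = 1) :
    ∑ k ∈ Finset.range (2 * M + 1), Real.cos (th M k * x) * Real.cos (th M k * y) =
      ∑ k ∈ Finset.range M, Real.cos (th M k * x) * Real.cos (th M k * y) +
      ∑ k ∈ Finset.range M, Real.cos (th M (M + 1 + k) * x) * Real.cos (th M (M + 1 + k) * y) := by
  rw [show 2 * M + 1 = M + 1 + M by ring, Finset.sum_range_add, Finset.sum_range_succ, th_mid hy]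
  ring

lemma sum_reflect {x y : ℕ} (hx : x % 2 = 1) (hy : y % 2 = 1) :
    ∑ k ∈ Finset.range M, Real.cos (th M (M + 1 + k) * x) * Real.cos (th M (M + 1 + k) * y) =
      ∑ k ∈ Finset.range M, Real.cos (th M k * x) * Real.cos (th M k * y) := by
  rw [← Finset.sum_range_reflect]
  refine Finset.sum_congr rfl fun k hk => ?_
  have hk := Finset.mem_range.1 hk
  have hN : (2 * (M : ℝ) + 1) ≠ 0 := by positivity
  have e : th M (M + 1 + (M - 1 - k)) = Real.pi - th M k := by
    have : M + 1 + (M - 1 - k) = 2 * M - k := by omega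
    rw [this]; unfold th; push_cast [Nat.cast_sub (show k ≤ 2 * M by omega)]; field_simp; ring
  have hc : ∀ z : ℕ, z % 2 = 1 → Real.cos ((Real.pi - th M k) * z) = - Real.cos (th M k * z) := by
    intro z hz
    rw [sub_mul, mul_comm Real.pi, Real.cos_nat_mul_pi_sub, Odd.neg_one_pow (Nat.odd_iff.2 hz)]; ring
  rw [e, hc x hx, hc y hy]; ring

/-- Coefficients of the part of the odd fermion `y` carried by the modes `o, …, o + M - 1`. -/
def uy (M o y x : ℕ) : ℝ :=
  ∑ k ∈ Finset.range M, 2 / (2 * (M : ℝ) + 1) * gs y * Real.cos (th M (o + k) * y) * uR (th M (o + k)) x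

lemma uy_eq (o y x : ℕ) : uy M o y x = 2 / (2 * (M : ℝ) + 1) * gs y * ((if x = 0 then 1 / √2 else 1) * gs x) *
    ∑ k ∈ Finset.range M, Real.cos (th M (o + k) * x) * Real.cos (th M (o + k) * y) := by
  unfold uy uR
  rw [Finset.mul_sum]
  exact Finset.sum_congr rfl fun k _ => by ring

lemma lc_add (u v : ℕ → ℝ) : lc M u + lc M v = lc M (fun x => u x + v x) := by
  simp [lc, add_smul, Finset.sum_add_distrib]

lemma lc_congr {u v : ℕ → ℝ} (h : ∀ x ≤ 2 * M, u x = v x) : lc M u = lc M v := by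
  unfold lc
  exact Finset.sum_congr rfl fun x hx => by rw [h x (by have := Finset.mem_range.1 hx; omega)]

lemma lc_single {y : ℕ} (hy : y ≤ 2 * M) : lc M (fun x => if x = y then 1 else 0) = cc y := by
  unfold lc
  simp [Finset.sum_ite_eq', ite_smul]
  omega

/-- An odd fermion is a sum over the modes on the two sides of the middle momentum `th M M`, where the odd
coefficients vanish. -/
lemma cc_split {y : ℕ} (hy : y ≤ 2 * M) (h1 : y % 2 = 1) : cc y = lc M (uy M 0 y) + lc M (uy M (M + 1) y) := by
  rw [lc_add, ← lc_single hy]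
  refine lc_congr fun x hx => ?_
  have hN : (2 * (M : ℝ) + 1) ≠ 0 := by positivity
  rw [uy_eq, uy_eq, ← mul_add]
  simp only [zero_add]
  rw [← sum_split h1, cos_orth hx hy (by omega)]
  by_cases h : x = y
  · subst h
    rw [if_pos rfl, if_pos rfl, if_neg (by omega)]
    field_simp
    linear_combination -gs_sq x
  · simp [h]

lemma lc_cc (u : ℕ → ℝ) {x : ℕ} (hx : x ≤ 2 * M) :
    lc M u * cc x + cc x * lc M u = algebraMap ℝ _ (2 * (-1) ^ x * u x) := by
  have : lc M u * cc x + cc x * lc M u = ∑ z ∈ Finset.range (2 * M + 1), u z • (cc z * cc x + cc x * cc z) := by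
    simp [lc, Finset.sum_mul, Finset.mul_sum, Finset.sum_add_distrib]
  rw [this, Finset.sum_eq_single x]
  · rw [cc_anti hx hx, if_pos rfl, Algebra.smul_def, ← map_mul]; congr 1; ring
  · intro z hz hzx
    rw [cc_anti (by have := Finset.mem_range.1 hz; omega) hx, if_neg hzx, map_zero, smul_zero]
  · intro h; exact absurd (Finset.mem_range.2 (by omega)) h

/-- The contraction matrix of the fermions at finite width. -/
def kapM (M i k : ℕ) : ℝ := 2 * uy M (M + 1) (2 * i + 1) (2 * k)

/-- The bilinear pairing with `ψ` as a functional on operators. -/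
def om (ψ : (Fin M → Bool) → ℝ) : Module.End ℝ ((Fin M → Bool) → ℝ) →ₗ[ℝ] ℝ where
  toFun A := ∑ σ, ψ σ * A ψ σ
  map_add' A B := by simp [mul_add, Finset.sum_add_distrib]
  map_smul' c A := by simp [Finset.mul_sum, mul_left_comm]

lemma cc_transpose {x : ℕ} (hx : x ≤ 2 * M) (f g : (Fin M → Bool) → ℝ) :
    ∑ σ, f σ * cc x g σ = ∑ σ, ((-1) ^ x * cc x f σ) * g σ := by
  rw [← sum_flp (x / 2)]
  refine Finset.sum_congr rfl fun σ _ => ?_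
  rw [cc_apply, cc_apply, flp_flp, zz_flp_self hx]; ring

lemma lc_transpose (u : ℕ → ℝ) (f g : (Fin M → Bool) → ℝ) :
    ∑ σ, f σ * lc M u g σ = ∑ σ, lc M (fun x => (-1) ^ x * u x) f σ * g σ := by
  simp_rw [lc_apply, Finset.mul_sum, Finset.sum_mul]
  rw [Finset.sum_comm, Finset.sum_comm (s := Finset.univ)]
  refine Finset.sum_congr rfl fun x hx => ?_
  have := cc_transpose (M := M) (x := x) (by have := Finset.mem_range.1 hx; omega) f g
  calc _ = u x * ∑ σ, f σ * cc x g σ := by rw [Finset.mul_sum]; exact Finset.sum_congr rfl fun _ _ => by ring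
    _ = _ := by rw [this, Finset.mul_sum]; exact Finset.sum_congr rfl fun _ _ => by ring

lemma lc_uy_apply (o y : ℕ) (e : ℕ → ℝ) (f : (Fin M → Bool) → ℝ) :
    lc M (fun x => e x * uy M o y x) f = ∑ k ∈ Finset.range M, (2 / (2 * (M : ℝ) + 1) * gs y * Real.cos (th M (o + k) * y)) •
      lc M (fun x => e x * uR (th M (o + k)) x) f := by
  funext σ
  simp only [lc_apply, Finset.sum_apply, Pi.smul_apply, smul_eq_mul, uy, Finset.mul_sum, Finset.sum_mul]
  rw [Finset.sum_comm]
  exact Finset.sum_congr rfl fun k _ => Finset.sum_congr rfl fun x _ => by ring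

/-- Modes above the middle momentum, and transposed modes below it, annihilate the dominant vector. -/
lemma ground_kill {ψ : (Fin M → Bool) → ℝ}
    (hψ : ∀ (A : Module.End ℝ ((Fin M → Bool) → ℝ)) (q : ℝ), 0 ≤ q → q < 1 → (∀ f, A (VV f) = q • VV (A f)) → A ψ = 0)
    {k : ℕ} (hk : k < M) :
    lc M (uR (th M (M + 1 + k))) ψ = 0 ∧ lc M (fun x => (-1) ^ x * uR (th M k) x) ψ = 0 := by
  have hN : (0 : ℝ) < 2 * M + 1 := by positivity
  have hkM : (k : ℝ) + 1 ≤ M := by exact_mod_cast hk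
  have hpi := Real.pi_pos
  have key : ∀ (A : Module.End ℝ ((Fin M → Bool) → ℝ)) (a b : ℝ), a ^ 2 < b ^ 2 →
      (∀ f, a ^ 2 • VV (A f) = b ^ 2 • A (VV f)) → A ψ = 0 := by
    intro A a b hab h
    have hb : 0 < b ^ 2 := lt_of_le_of_lt (sq_nonneg a) hab
    refine hψ A (a ^ 2 / b ^ 2) (by positivity) ((div_lt_one hb).2 hab) fun f => ?_
    rw [div_eq_inv_mul, mul_smul, h, smul_smul, inv_mul_cancel₀ hb.ne', one_smul]
  constructor
  · refine key _ (Real.cos (th M (M + 1 + k) / 2)) (Real.sin (th M (M + 1 + k) / 2)) ?_ (fun f => V_gam (th_cos _) f)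
    have e : Real.cos (th M (M + 1 + k)) < 0 := by
      apply Real.cos_neg_of_pi_div_two_lt_of_lt
      · unfold th; push_cast; rw [lt_div_iff₀ hN]; nlinarith [(Nat.cast_nonneg k : (0 : ℝ) ≤ k)]
      · unfold th; push_cast; rw [div_lt_iff₀ hN]; nlinarith [(Nat.cast_nonneg k : (0 : ℝ) ≤ k)]
    have e2 : th M (M + 1 + k) = 2 * (th M (M + 1 + k) / 2) := by ring
    rw [e2, Real.cos_two_mul'] at e
    linarith
  · refine key _ (Real.sin (th M k / 2)) (Real.cos (th M k / 2)) ?_ (fun f => gamT_V (th_cos _) f)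
    have e : 0 < Real.cos (th M k) := by
      apply Real.cos_pos_of_mem_Ioo
      constructor
      · have : 0 < th M k := by unfold th; positivity
        linarith
      · unfold th; rw [div_lt_iff₀ hN]; nlinarith [(Nat.cast_nonneg k : (0 : ℝ) ≤ k)]
    have e2 : th M k = 2 * (th M k / 2) := by ring
    rw [e2, Real.cos_two_mul'] at e
    linarith

/-- Spin correlations in the dominant vector are determinants, by Wick's formula. -/
lemma ground_det {ψ : (Fin M → Bool) → ℝ} (h1 : ∑ σ, ψ σ ^ 2 = 1)
    (hψ : ∀ (A : Module.End ℝ ((Fin M → Bool) → ℝ)) (q : ℝ), 0 ≤ q → q < 1 → (∀ f, A (VV f) = q • VV (A f)) → A ψ = 0)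
    {p m : ℕ} (hpm : p + m ≤ M) :
    ∑ σ, ψ σ ^ 2 * (zz (2 * p) σ * zz (2 * (p + m)) σ) =
      Matrix.det (Matrix.of fun i k : Fin m => kapM M (p + i) (p + k)) := by
  have hm : ∀ y, lc M (uy M (M + 1) y) ψ = 0 := fun y => by
    have := lc_uy_apply (M := M) (M + 1) y (fun _ => 1) ψ
    simp only [one_mul] at this
    rw [this]
    refine Finset.sum_eq_zero fun k hk => ?_
    rw [(ground_kill hψ (Finset.mem_range.1 hk)).1, smul_zero]
  have hp : ∀ y, lc M (fun x => (-1) ^ x * uy M 0 y x) ψ = 0 := fun y => by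
    rw [lc_uy_apply (M := M) 0 y (fun x => (-1) ^ x) ψ]
    refine Finset.sum_eq_zero fun k hk => ?_
    rw [zero_add, (ground_kill hψ (Finset.mem_range.1 hk)).2, smul_zero]
  have W := wick (om ψ) m (fun i : Fin m => cc (2 * (p + i) + 1)) (fun i => lc M (uy M 0 (2 * (p + i) + 1)))
    (fun i => lc M (uy M (M + 1) (2 * (p + i) + 1))) (fun i => cc (2 * (p + i))) (fun i k => kapM M (p + i) (p + k))
    (fun i => cc_split (by omega) (by omega))
    (fun i A => by
      show ∑ σ, ψ σ * lc M _ (A ψ) σ = 0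
      rw [lc_transpose, hp]; simp)
    (fun i A => by
      show ∑ σ, ψ σ * A (lc M _ ψ) σ = 0
      rw [hm]; simp)
    (fun i j hij => by
      have hij' : 2 * (p + (j : ℕ)) + 1 ≠ 2 * (p + (i : ℕ)) + 1 := fun h => hij (Fin.ext (by omega))
      have h := sum_split (M := M) (x := 2 * (p + (j : ℕ)) + 1) (y := 2 * (p + (i : ℕ)) + 1) (by omega)
      rw [sum_reflect (by omega) (by omega), cos_orth (by omega) (by omega) (by omega), if_neg hij'] at h
      rw [lc_cc _ (by omega), uy_eq]
      simp only [zero_add]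
      rw [show ∑ k ∈ Finset.range M, Real.cos (th M k * (2 * (p + (j : ℕ)) + 1 : ℕ)) *
        Real.cos (th M k * (2 * (p + (i : ℕ)) + 1 : ℕ)) = 0 by linarith]
      simp)
    (fun i j => by
      rw [lc_cc _ (by omega)]
      congr 1
      unfold kapM
      rw [pow_mul]; norm_num)
  have e1 : om ψ 1 = 1 := by
    show ∑ σ, ψ σ * ψ σ = 1
    rw [← h1]; exact Finset.sum_congr rfl fun _ _ => by ring
  rw [e1, mul_one] at W
  rw [← W]
  refine Finset.sum_congr rfl fun σ _ => ?_
  rw [cc_string p m hpm]; ring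

end

/-! ### Limits of wide strips -/

lemma tendsto_N : Tendsto (fun M : ℕ => (2 * (M : ℝ) + 1)) atTop atTop :=
  tendsto_atTop_add_const_right _ _ ((tendsto_natCast_atTop_atTop).const_mul_atTop (by norm_num))

lemma half_sum_lim (m : ℝ) (hm : m ≠ 0) (hs : Real.sin (m * Real.pi) = 0) :
    Tendsto (fun M : ℕ => 2 / (2 * (M : ℝ) + 1) * ∑ j ∈ Finset.range M, Real.cos (th M (M + 1 + j) * m)) atTop
      (nhds (-(2 / (Real.pi * m) * Real.sin (m * Real.pi / 2)))) := by
  have hN := tendsto_N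
  have hc : m * Real.pi / 2 ≠ 0 := by positivity
  -- `N sin (c / N) → c`
  have h1 : Tendsto (fun M : ℕ => (2 * (M : ℝ) + 1) * Real.sin (m * Real.pi / 2 / (2 * (M : ℝ) + 1))) atTop
      (nhds (m * Real.pi / 2)) := by
    have e : Tendsto (fun M : ℕ => m * Real.pi / 2 * Real.sinc (m * Real.pi / 2 / (2 * (M : ℝ) + 1))) atTop
        (nhds (m * Real.pi / 2 * Real.sinc 0)) :=
      (Real.continuous_sinc.continuousAt.tendsto.comp (hN.const_div_atTop _)).const_mul _
    rw [Real.sinc_zero, mul_one] at e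
    refine e.congr fun M => ?_
    have : (2 * (M : ℝ) + 1) ≠ 0 := by positivity
    rw [Real.sinc_of_ne_zero (by positivity)]
    field_simp
  have h2 : Tendsto (fun M : ℕ => Real.sin (((M + 1 : ℕ) : ℝ) * (m * Real.pi / (2 * (M : ℝ) + 1)))) atTop
      (nhds (Real.sin (m * Real.pi / 2))) := by
    refine Real.continuous_sin.continuousAt.tendsto.comp ?_
    have e : Tendsto (fun M : ℕ => m * Real.pi / 2 + m * Real.pi / 2 / (2 * (M : ℝ) + 1)) atTop
      (nhds (m * Real.pi / 2 + 0)) := (hN.const_div_atTop _).const_add _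
    rw [add_zero] at e
    refine e.congr fun M => ?_
    have : (2 * (M : ℝ) + 1) ≠ 0 := by positivity
    push_cast
    field_simp
    ring
  have h3 := (h2.div h1 hc).neg
  have e3 : -(Real.sin (m * Real.pi / 2) / (m * Real.pi / 2)) = -(2 / (Real.pi * m) * Real.sin (m * Real.pi / 2)) := by
    field_simp
  rw [e3] at h3
  refine h3.congr' ?_
  filter_upwards [h1.eventually_ne hc] with M hM
  have hN' : (2 * (M : ℝ) + 1) ≠ 0 := by positivity
  have hs0 : Real.sin (m * Real.pi / 2 / (2 * (M : ℝ) + 1)) ≠ 0 := fun h => hM (by rw [h, mul_zero])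
  have A := cos_sum (m * Real.pi / (2 * (M : ℝ) + 1)) (M + 1 + M)
  rw [Finset.sum_range_add, mul_add, cos_sum] at A
  have e1 : ((M + 1 + M : ℕ) : ℝ) * (m * Real.pi / (2 * (M : ℝ) + 1)) = m * Real.pi := by
    push_cast; field_simp; ring
  rw [e1, hs] at A
  have e2 : m * Real.pi / (2 * (M : ℝ) + 1) / 2 = m * Real.pi / 2 / (2 * (M : ℝ) + 1) := by ring
  rw [e2] at A
  have e4 : ∑ j ∈ Finset.range M, Real.cos (th M (M + 1 + j) * m) =
      ∑ x ∈ Finset.range M, Real.cos ((((M + 1 + x : ℕ) : ℝ) + 1 / 2) * (m * Real.pi / (2 * (M : ℝ) + 1))) :=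
    Finset.sum_congr rfl fun j _ => by congr 1; unfold th; ring
  simp only [Pi.div_apply]
  rw [e4]
  generalize (∑ x ∈ Finset.range M, Real.cos ((((M + 1 + x : ℕ) : ℝ) + 1 / 2) * (m * Real.pi / (2 * (M : ℝ) + 1)))) = S at A ⊢
  rw [show Real.sin (((M + 1 : ℕ) : ℝ) * (m * Real.pi / (2 * (M : ℝ) + 1))) =
    -(2 * Real.sin (m * Real.pi / 2 / (2 * (M : ℝ) + 1)) * S) by linarith]
  generalize Real.sin (m * Real.pi / 2 / (2 * (M : ℝ) + 1)) = R at hs0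
  field_simp

/-- As the width grows, the contraction sum is a Riemann sum evaluated in closed form. -/
lemma kapM_lim (i k : ℕ) : Tendsto (fun M => kapM M i k) atTop (nhds (kapH i k)) := by
  have hs : ∀ n : ℕ, Real.sin (n * Real.pi) = 0 := Real.sin_nat_mul_pi
  have n1 : (2 * (i : ℝ) + 1 + 2 * k) ≠ 0 := by positivity
  have n2 : (2 * (i : ℝ) + 1 - 2 * k) ≠ 0 := fun h => by
    have : 2 * (i : ℝ) + 1 = 2 * k := by linarith
    have : 2 * i + 1 = 2 * k := by exact_mod_cast this
    omega
  have s1 : Real.sin ((2 * (i : ℝ) + 1 + 2 * k) * Real.pi) = 0 := by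
    have := hs (2 * i + 1 + 2 * k); push_cast at this; exact this
  have s2 : Real.sin ((2 * (i : ℝ) + 1 - 2 * k) * Real.pi) = 0 := by
    have a := hs (2 * i + 1); have b := hs (2 * k); push_cast at a b
    rw [sub_mul, Real.sin_sub, a, b]; ring
  have t1 : Real.sin ((2 * (i : ℝ) + 1 + 2 * k) * Real.pi / 2) = (-1) ^ i * (-1) ^ k := by
    rw [show (2 * (i : ℝ) + 1 + 2 * k) * Real.pi / 2 = ((i + k : ℕ) : ℝ) * Real.pi + Real.pi / 2 by push_cast; ring,
      Real.sin_add_pi_div_two, Real.cos_nat_mul_pi, pow_add]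
  have t2 : Real.sin ((2 * (i : ℝ) + 1 - 2 * k) * Real.pi / 2) = (-1) ^ i * (-1) ^ k := by
    rw [show (2 * (i : ℝ) + 1 - 2 * k) * Real.pi / 2 = ((i : ℝ) * Real.pi - k * Real.pi) + Real.pi / 2 by ring,
      Real.sin_add_pi_div_two, Real.cos_sub, Real.cos_nat_mul_pi, Real.cos_nat_mul_pi, hs, hs]; ring
  have A := (((half_sum_lim _ n1 s1).add (half_sum_lim _ n2 s2)).const_mul
    (gs (2 * i + 1) * ((if 2 * k = 0 then 1 / √2 else 1) * gs (2 * k))))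
  have q : ((-1 : ℝ) ^ i) * (-1) ^ i = 1 := by rw [← mul_pow]; norm_num
  have q' : ((-1 : ℝ) ^ k) * (-1) ^ k = 1 := by rw [← mul_pow]; norm_num
  have eL : gs (2 * i + 1) * ((if 2 * k = 0 then 1 / √2 else 1) * gs (2 * k)) *
    (-(2 / (Real.pi * (2 * (i : ℝ) + 1 + 2 * k)) * Real.sin ((2 * (i : ℝ) + 1 + 2 * k) * Real.pi / 2)) +
      -(2 / (Real.pi * (2 * (i : ℝ) + 1 - 2 * k)) * Real.sin ((2 * (i : ℝ) + 1 - 2 * k) * Real.pi / 2))) = kapH i k := by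
    rw [t1, t2, gs_two, gs_two_one]
    unfold kapH
    have e1 : (if 2 * k = 0 then 1 / √2 else (1 : ℝ)) = (if k = 0 then 1 / √2 else 1) := by simp
    rw [e1, show (2 * (i : ℝ) + 1) ^ 2 - (2 * (k : ℝ)) ^ 2 = (2 * (i : ℝ) + 1 + 2 * k) * (2 * (i : ℝ) + 1 - 2 * k) by ring]
    generalize (if k = 0 then 1 / √2 else (1 : ℝ)) = w
    have hp := Real.pi_ne_zero
    generalize hX : 2 * (i : ℝ) + 1 + 2 * k = X at *
    generalize hY : 2 * (i : ℝ) + 1 - 2 * k = Y at *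
    rw [show 2 * (i : ℝ) + 1 = (X + Y) / 2 by rw [← hX, ← hY]; ring]
    calc _ = (((-1 : ℝ) ^ i) * (-1) ^ i) * ((-1 : ℝ) ^ k * (-1) ^ k) * (w * (2 / (Real.pi * X) + 2 / (Real.pi * Y))) := by ring
      _ = _ := by rw [q, q']; field_simp; ring
  rw [eL] at A
  refine A.congr fun M => ?_
  unfold kapM
  rw [uy_eq]
  have e : ∑ j ∈ Finset.range M, Real.cos (th M (M + 1 + j) * (2 * k : ℕ)) * Real.cos (th M (M + 1 + j) * (2 * i + 1 : ℕ))
      = 1 / 2 * (∑ j ∈ Finset.range M, Real.cos (th M (M + 1 + j) * (2 * (i : ℝ) + 1 + 2 * k)) +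
        ∑ j ∈ Finset.range M, Real.cos (th M (M + 1 + j) * (2 * (i : ℝ) + 1 - 2 * k))) := by
    rw [← Finset.sum_add_distrib, Finset.mul_sum]
    refine Finset.sum_congr rfl fun j _ => ?_
    push_cast
    generalize th M (M + 1 + j) = t
    rw [show t * (2 * (i : ℝ) + 1 + 2 * k) = t * (2 * k) + t * (2 * i + 1) by ring,
      show t * (2 * (i : ℝ) + 1 - 2 * k) = t * (2 * i + 1) - t * (2 * k) by ring, Real.cos_add, Real.cos_sub]; ring
  rw [e]; ring

lemma det_lim {m : ℕ} {f : ℕ → ℕ → ℕ → ℝ} {g : ℕ → ℕ → ℝ} (h : ∀ i k, Tendsto (fun n => f n i k) atTop (nhds (g i k))) :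
    Tendsto (fun n => Matrix.det (Matrix.of fun i k : Fin m => f n i k)) atTop
      (nhds (Matrix.det (Matrix.of fun i k : Fin m => g i k))) := by
  have hc : Continuous fun A : Matrix (Fin m) (Fin m) ℝ => A.det := continuous_id.matrix_det
  refine hc.continuousAt.tendsto.comp ?_
  refine tendsto_pi_nhds.2 fun i => tendsto_pi_nhds.2 fun k => ?_
  exact h i k

/-- Far from the wall the contractions become those of the full plane. -/
lemma kapH_lim (i k : ℕ) : Tendsto (fun p => kapH (p + i) (p + k)) atTop (nhds (1 / (Real.pi * ((i : ℝ) - k + 1 / 2)))) := by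
  have n2 : ((i : ℝ) - k + 1 / 2) ≠ 0 := fun h => by
    have : 2 * (i : ℝ) + 1 = 2 * k := by linarith
    have : 2 * i + 1 = 2 * k := by exact_mod_cast this
    omega
  have h1 : Tendsto (fun p : ℕ => ((p : ℝ) + (2 * i + 1) / 2) / ((p : ℝ) + (2 * i + 2 * k + 1) / 4)) atTop (nhds 1) := by
    have e : Tendsto (fun p : ℕ => 1 + ((2 * i + 1) / 2 - (2 * (i : ℝ) + 2 * k + 1) / 4) / ((p : ℝ) + (2 * i + 2 * k + 1) / 4))
        atTop (nhds (1 + 0)) :=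
      ((tendsto_atTop_add_const_right _ _ tendsto_natCast_atTop_atTop).const_div_atTop _).const_add _
    rw [add_zero] at e
    refine e.congr fun p => ?_
    have : (p : ℝ) + (2 * i + 2 * k + 1) / 4 ≠ 0 := by positivity
    field_simp; ring
  have h2 := h1.const_mul (1 / (Real.pi * ((i : ℝ) - k + 1 / 2)))
  rw [mul_one] at h2
  refine h2.congr' ?_
  filter_upwards [eventually_gt_atTop 0] with p hp
  unfold kapH
  rw [if_neg (by omega)]
  push_cast
  have : (p : ℝ) + (2 * i + 2 * k + 1) / 4 ≠ 0 := by positivity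
  have e1 : (2 * ((p : ℝ) + i) + 1) ^ 2 - (2 * (p + k)) ^ 2 = 8 * ((i : ℝ) - k + 1 / 2) * ((p : ℝ) + (2 * i + 2 * k + 1) / 4) := by ring
  rw [e1]
  generalize (i : ℝ) - k + 1 / 2 = D at *
  generalize (p : ℝ) + (2 * i + 2 * k + 1) / 4 = E at *
  have hpi := Real.pi_ne_zero
  field_simp
  ring

lemma detM_lim (p m : ℕ) : Tendsto (fun M => Matrix.det (Matrix.of fun i k : Fin m => kapM M (p + i) (p + k))) atTop
    (nhds (Matrix.det (Matrix.of fun i k : Fin m => kapH (p + i) (p + k)))) :=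
  det_lim (f := fun M i k => kapM M (p + i) (p + k)) (g := fun i k => kapH (p + i) (p + k)) fun _ _ => kapM_lim _ _

/-- Limit of infinite width at the wall. -/
lemma mH_lim (m : ℕ) : Tendsto (fun M => Matrix.det (Matrix.of fun i k : Fin m => kapM M (0 + i) (0 + k))) atTop
    (nhds (mH m)) := by
  have := detM_lim 0 m
  simpa [mH] using this

/-- Limit far from the wall. -/
lemma dT_lim (m : ℕ) : Tendsto (fun p => Matrix.det (Matrix.of fun i k : Fin m => kapH (p + i) (p + k))) atTop
    (nhds (dT m)) :=
  det_lim (f := fun p i k => kapH (p + i) (p + k)) (g := fun i k => 1 / (Real.pi * ((i : ℝ) - k + 1 / 2))) kapH_lim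

/-! ### Path sums and the strip model -/

section paths
variable {X : Type} [Fintype X]

/-- Total weight of all paths of `l` steps from `x`, with step weights `w`. -/
def pR : ℕ → (ℕ → X → X → ℝ) → X → ℝ
  | 0, _, _ => 1
  | l + 1, w, x => ∑ y, w 0 x y * pR l (fun r => w (r + 1)) y

/-- Total weight of all paths of `k` steps ending at a given point, with initial weight `g`. -/
def pL : ℕ → (ℕ → X → X → ℝ) → (X → ℝ) → X → ℝ
  | 0, _, g => g
  | k + 1, w, g => pL k (fun r => w (r + 1)) (fun y => ∑ x, g x * w 0 x y)

lemma sum_cons (n : ℕ) (F : (Fin (n + 1) → X) → ℝ) : ∑ s, F s = ∑ x, ∑ s : Fin n → X, F (Fin.cons x s) := by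
  rw [← Fintype.sum_prod_type', ← (Fin.consEquiv (fun _ : Fin (n + 1) => X)).sum_comp]
  rfl

lemma path_right (l : ℕ) : ∀ (w : ℕ → X → X → ℝ) (f : X → ℝ),
    ∑ s : Fin (l + 1) → X, f (s 0) * ∏ r : Fin l, w r (s r.castSucc) (s r.succ) = ∑ x, f x * pR l w x := by
  induction l with
  | zero => intro w f; rw [sum_cons]; simp [pR]
  | succ l ih =>
    intro w f
    rw [sum_cons]
    refine Finset.sum_congr rfl fun x _ => ?_
    have := ih (fun r => w (r + 1)) (fun y => w 0 x y)
    rw [pR, ← this, Finset.mul_sum]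
    refine Finset.sum_congr rfl fun s _ => ?_
    rw [Fin.prod_univ_succ]
    simp

/-- A path sum with an observable at step `k` factors into its past and its future. -/
lemma path_mid (l : ℕ) (k : ℕ) : ∀ (n : ℕ) (hn : n = k + l) (w : ℕ → X → X → ℝ) (g f : X → ℝ),
    ∑ s : Fin (n + 1) → X, g (s 0) * f (s ⟨k, by omega⟩) * ∏ r : Fin n, w r (s r.castSucc) (s r.succ) =
      ∑ x, pL k w g x * f x * pR l (fun r => w (r + k)) x := by
  induction k with
  | zero =>
    intro n hn w g f
    obtain rfl : n = l := by omega
    exact path_right n w (fun x => g x * f x)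
  | succ k ih =>
    intro n hn w g f
    obtain ⟨n, rfl⟩ : ∃ m, n = m + 1 := ⟨k + l, by omega⟩
    have := ih n (by omega) (fun r => w (r + 1)) (fun y => ∑ x, g x * w 0 x y) f
    rw [sum_cons, pL]
    have e : (fun r => w (r + (k + 1))) = fun r => w (r + k + 1) := by funext r; congr 1
    rw [e, ← this, Finset.sum_comm]
    refine Finset.sum_congr rfl fun s _ => ?_
    rw [Finset.sum_mul, Finset.sum_mul]
    refine Finset.sum_congr rfl fun x _ => ?_
    rw [Fin.prod_univ_succ]
    simp only [Fin.cons_zero, Fin.castSucc_zero, Fin.cons_succ, Fin.val_zero, Fin.val_succ]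
    have e2 : (Fin.cons x s : Fin (n + 1 + 1) → X) ⟨k + 1, by omega⟩ = s ⟨k, by omega⟩ := by
      rw [show (⟨k + 1, by omega⟩ : Fin (n + 1 + 1)) = Fin.succ ⟨k, by omega⟩ from rfl, Fin.cons_succ]
    rw [e2]
    have e3 : ∀ i : Fin n, (Fin.cons x s : Fin (n + 1 + 1) → X) i.succ.castSucc = s i.castSucc := fun i => by
      rw [← Fin.succ_castSucc, Fin.cons_succ]
    simp only [e3]
    ring
end paths

section strip
variable {M : ℕ}

/-- Weight of the step from row `r` to row `r + 1` of the strip. -/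
def wrow (r : ℕ) (s s' : Fin M → Bool) : ℝ := if r % 2 = 0 then TT s' s else TT s s'

lemma wrow_shift (T : ℕ) : (fun r => wrow (M := M) (r + 2 * T)) = wrow := by
  funext r s s'; simp [wrow]

lemma wrow_shift2 : (fun r => wrow (M := M) (r + 1 + 1)) = wrow := wrow_shift 1

lemma pR_strip (T : ℕ) : pR (2 * T) (wrow (M := M)) = phi M T := by
  induction T with
  | zero => rfl
  | succ T ih =>
    funext x
    show pR (2 * T + 1 + 1) wrow x = _
    simp only [pR]
    rw [wrow_shift2, ih]
    unfold phi
    rw [Function.iterate_succ_apply']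
    simp only [VV, Tt_apply, Tm_apply]
    rfl

lemma pL_strip (T : ℕ) : ∀ g, pL (2 * T) (wrow (M := M)) g = VV^[T] g := by
  induction T with
  | zero => intro g; rfl
  | succ T ih =>
    intro g
    show pL (2 * T + 1 + 1) wrow g = _
    simp only [pL]
    rw [wrow_shift2, ih, Function.iterate_succ_apply]
    congr 1
    funext y
    simp only [VV, Tt_apply, Tm_apply, wrow]
    simp only [if_true, zero_add, Nat.one_mod, one_ne_zero, if_false]
    refine Finset.sum_congr rfl fun x _ => ?_
    rw [Finset.sum_mul, Finset.mul_sum]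
    exact Finset.sum_congr rfl fun _ _ => by ring

lemma strip_path (T n : ℕ) (hn : n = 2 * T + 2 * T) (f : (Fin M → Bool) → ℝ) :
    ∑ s : Fin (n + 1) → Fin M → Bool, f (s ⟨2 * T, by omega⟩) * ∏ r : Fin n, wrow r (s r.castSucc) (s r.succ) =
      ∑ σ, phi M T σ ^ 2 * f σ := by
  have := path_mid (2 * T) (2 * T) n hn (wrow (M := M)) (fun _ => 1) f
  rw [wrow_shift, pR_strip, pL_strip] at this
  simp only [one_mul] at this
  rw [this]
  refine Finset.sum_congr rfl fun σ _ => ?_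
  unfold phi; ring

/-- Adjacency between column `a` of row `q` and column `b` of row `q + 1`. -/
def srel (q : ℕ) (a b : ℕ) : Prop := if q % 2 = 0 then b = a ∨ b + 1 = a else a = b ∨ a + 1 = b

lemma zz_even_succ (a : ℕ) (h : a < M) (σ : Fin M → Bool) : zz (2 * (a + 1)) σ = sg (σ ⟨a, h⟩) := by
  unfold zz
  have e : (2 * (a + 1) - 1) / 2 = a := by omega
  rw [if_neg (by omega), dif_pos (by omega)]
  congr 2; ext; exact e

lemma zz_odd (a : ℕ) (h : a < M) (σ : Fin M → Bool) : zz (2 * a + 1) σ = sg (σ ⟨a, h⟩) := by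
  unfold zz
  have e : (2 * a + 1 - 1) / 2 = a := by omega
  rw [if_neg (by omega), dif_pos (by omega)]
  congr 2; ext; exact e

lemma bd_sum (τ σ : Fin M → Bool) : ∑ e ∈ Finset.range (2 * M), bd τ σ e =
    (∑ a : Fin M, ∑ b : Fin M, if (b : ℕ) = a ∨ (b : ℕ) + 1 = a then sg (σ a) * sg (τ b) else 0) +
      ∑ a : Fin M, if (a : ℕ) = 0 then sg (σ a) else 0 := by
  have h1 : ∀ n, ∑ e ∈ Finset.range (2 * n), bd τ σ e =
      ∑ a ∈ Finset.range n, (bd τ σ (2 * a) + bd τ σ (2 * a + 1)) := by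
    intro n
    induction n with
    | zero => simp
    | succ n ih => rw [show 2 * (n + 1) = 2 * n + 1 + 1 by ring, Finset.sum_range_succ, Finset.sum_range_succ, ih,
        Finset.sum_range_succ]; ring
  rw [h1, ← Finset.sum_add_distrib, Finset.sum_range]
  refine Finset.sum_congr rfl fun a _ => ?_
  have e1 : bd τ σ (2 * a + 1) = sg (σ a) * sg (τ a) := by
    unfold bd sp
    rw [if_pos (by omega), if_neg (by omega), zz_odd a a.2, show 2 * (a : ℕ) + 1 + 1 = 2 * (a + 1) by ring,
      zz_even_succ a a.2]
  have e2 : bd τ σ (2 * a) = zz (2 * a) τ * sg (σ a) := by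
    unfold bd sp
    rw [if_neg (by omega), if_pos (by omega), zz_odd a a.2]
  rw [e1, e2]
  have e3 : ∀ b : Fin M, (if (b : ℕ) = a ∨ (b : ℕ) + 1 = a then sg (σ a) * sg (τ b) else 0) =
      (if b = a then sg (σ a) * sg (τ b) else 0) + (if (b : ℕ) + 1 = a then sg (σ a) * sg (τ b) else 0) := by
    intro b
    by_cases hb : b = a
    · subst hb; simp
    · have : (b : ℕ) ≠ a := fun h => hb (Fin.ext h)
      simp [hb, this]
  simp only [e3, Finset.sum_add_distrib, Finset.sum_ite_eq', Finset.mem_univ, if_true]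
  by_cases ha : (a : ℕ) = 0
  · have : ∀ b : Fin M, ¬ ((b : ℕ) + 1 = a) := fun b => by omega
    simp only [ha, if_true, mul_zero]
    simp [zz]; ring
  · have : ∀ b : Fin M, (b : ℕ) + 1 = a ↔ b = ⟨a - 1, by omega⟩ := fun b => by
      rw [Fin.ext_iff]; simp only; omega
    simp only [this, Finset.sum_ite_eq', Finset.mem_univ, if_true, ha, if_false]
    have := zz_even_succ (M := M) (a - 1) (by omega) τ
    rw [show a - 1 + 1 = (a : ℕ) by omega] at this
    rw [this]; ring

/-- Oriented strip couplings: bonds from row `q` to row `q + 1`. -/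
def Ast (M n : ℕ) (u v : Fin (n + 1) × Fin M) : ℝ :=
  ∑ q : Fin n, if u.1 = q.castSucc ∧ v.1 = q.succ then (if srel q u.2 v.2 then bC else 0) else 0

/-- Strip couplings (each bond split between its two orientations). -/
def Jst (M n : ℕ) (u v : Fin (n + 1) × Fin M) : ℝ := (Ast M n u v + Ast M n v u) / 2

/-- Strip field: the plus wall acting on the first column of the even rows. -/
def hst (M n : ℕ) (u : Fin (n + 1) × Fin M) : ℝ :=
  ∑ q : Fin n, (if q.castSucc = u.1 then (if (q : ℕ) % 2 = 0 ∧ (u.2 : ℕ) = 0 then bC else 0) else 0) +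
  ∑ q : Fin n, (if q.succ = u.1 then (if ¬ (q : ℕ) % 2 = 0 ∧ (u.2 : ℕ) = 0 then bC else 0) else 0)

/-- The Boltzmann weight of the strip is a product of transfer weights. -/
lemma wt_strip (n : ℕ) (σ : Fin (n + 1) × Fin M → Bool) :
    wt (Jst M n) (hst M n) σ = ∏ r : Fin n, wrow r (fun a => σ (r.castSucc, a)) (fun a => σ (r.succ, a)) := by
  have hw : ∀ r : Fin n, wrow r (fun a => σ (r.castSucc, a)) (fun a => σ (r.succ, a)) =
      Real.exp (bC * ((∑ a : Fin M, ∑ b : Fin M, if srel r a b then sg (σ (r.castSucc, a)) * sg (σ (r.succ, b)) else 0) +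
        ((∑ a : Fin M, if (r : ℕ) % 2 = 0 ∧ (a : ℕ) = 0 then sg (σ (r.castSucc, a)) else 0) +
        ∑ a : Fin M, if ¬ (r : ℕ) % 2 = 0 ∧ (a : ℕ) = 0 then sg (σ (r.succ, a)) else 0))) := by
    intro r
    unfold wrow TT
    split_ifs with h
    · rw [bd_sum]; simp [srel, h]
    · rw [bd_sum, Finset.sum_comm]; simp only [srel, h, if_false]; simp [mul_comm]
  simp only [hw]
  rw [← Real.exp_sum]
  unfold wt en
  congr 1
  have eJ : ∑ u, ∑ v, Jst M n u v * (sg (σ u) * sg (σ v)) = ∑ u, ∑ v, Ast M n u v * (sg (σ u) * sg (σ v)) := by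
    have e : ∀ u v, Jst M n u v * (sg (σ u) * sg (σ v)) = 1 / 2 * (Ast M n u v * (sg (σ u) * sg (σ v))) +
        1 / 2 * (Ast M n v u * (sg (σ v) * sg (σ u))) := fun u v => by unfold Jst; ring
    simp only [e, Finset.sum_add_distrib, ← Finset.mul_sum]
    rw [Finset.sum_comm (f := fun u v => Ast M n v u * (sg (σ v) * sg (σ u)))]
    ring
  rw [eJ]
  have eA : ∑ u, ∑ v, Ast M n u v * (sg (σ u) * sg (σ v)) =
      ∑ q : Fin n, bC * ∑ a : Fin M, ∑ b : Fin M, if srel q a b then sg (σ (q.castSucc, a)) * sg (σ (q.succ, b)) else 0 := by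
    simp only [Ast, Finset.sum_mul]
    rw [Finset.sum_congr rfl fun u _ => Finset.sum_comm, Finset.sum_comm]
    refine Finset.sum_congr rfl fun q _ => ?_
    simp only [Fintype.sum_prod_type, ite_and, ite_mul, zero_mul, Finset.sum_ite_irrel, Finset.sum_const_zero]
    simp only [Finset.sum_ite_eq', Finset.mem_univ, if_true]
    simp [Finset.mul_sum]
  have eh : ∑ u, hst M n u * sg (σ u) = ∑ q : Fin n,
      bC * ((∑ a : Fin M, if (q : ℕ) % 2 = 0 ∧ (a : ℕ) = 0 then sg (σ (q.castSucc, a)) else 0) +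
        ∑ a : Fin M, if ¬ (q : ℕ) % 2 = 0 ∧ (a : ℕ) = 0 then sg (σ (q.succ, a)) else 0) := by
    simp only [hst, add_mul, Finset.sum_add_distrib, mul_add]
    congr 1
    · simp only [Finset.sum_mul]
      rw [Finset.sum_comm]
      refine Finset.sum_congr rfl fun q _ => ?_
      simp only [Fintype.sum_prod_type, ite_mul, zero_mul, Finset.sum_ite_irrel, Finset.sum_const_zero,
        Finset.sum_ite_eq, Finset.mem_univ, if_true, Finset.mul_sum, mul_ite, mul_zero]
    · simp only [Finset.sum_mul]
      rw [Finset.sum_comm]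
      refine Finset.sum_congr rfl fun q _ => ?_
      simp only [Fintype.sum_prod_type, ite_mul, zero_mul, Finset.sum_ite_irrel, Finset.sum_const_zero,
        Finset.sum_ite_eq, Finset.mem_univ, if_true, Finset.mul_sum, mul_ite, mul_zero]
  rw [eA, eh, ← Finset.sum_add_distrib]
  exact Finset.sum_congr rfl fun q _ => by ring

/-- Observables of the middle row of a strip of `4 T + 1` rows. -/
lemma Ex_strip (T n : ℕ) (hn : n = 2 * T + 2 * T) (f : (Fin M → Bool) → ℝ) :
    Ex (Jst M n) (hst M n) (fun σ => f (fun a => σ (⟨2 * T, by omega⟩, a))) =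
      ∑ σ, phi M T σ ^ 2 / (∑ τ, phi M T τ ^ 2) * f σ := by
  have key : ∀ f : (Fin M → Bool) → ℝ, ∑ σ : Fin (n + 1) × Fin M → Bool,
      f (fun a => σ (⟨2 * T, by omega⟩, a)) * wt (Jst M n) (hst M n) σ = ∑ σ, phi M T σ ^ 2 * f σ := by
    intro f
    rw [← strip_path T n hn f, ← (Equiv.curry (Fin (n + 1)) (Fin M) Bool).sum_comp]
    refine Finset.sum_congr (by congr!) fun σ _ => ?_
    rw [wt_strip]; rfl
  have k1 := key (fun _ => 1)
  simp only [one_mul, mul_one] at k1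
  have k2 := key f
  unfold Ex Zf
  refine (congrArg₂ (· / ·) ((Finset.sum_congr (by congr!) fun _ _ => rfl).trans k2)
    ((Finset.sum_congr (by congr!) fun _ _ => rfl).trans k1)).trans ?_
  rw [Finset.sum_div]
  exact Finset.sum_congr rfl fun σ _ => by ring
end strip

/-! ### Restriction to a set of sites -/

section restrict
variable {V : Type} [Fintype V]

/-- Sites outside `W` decouple, so the restricted model can be read on the subtype. -/
lemma Ex_restrict (W : Set V) (J : V → V → ℝ) (h : V → ℝ) (f : ({v // v ∈ W} → Bool) → ℝ) :
    Ex (rJ W J) (rh W h) (fun σ => f fun v => σ v) =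
      Ex (fun u v : {v // v ∈ W} => J u v) (fun v : {v // v ∈ W} => h v) f := by
  have key : ∀ σ : V → Bool, wt (rJ W J) (rh W h) σ =
      wt (fun u v : {v // v ∈ W} => J u v) (fun v : {v // v ∈ W} => h v) (fun v => σ v) := by
    intro σ
    unfold wt en
    have e1 : ∀ F : V → ℝ, (∀ u, u ∉ W → F u = 0) → ∑ u, F u = ∑ u : {v // v ∈ W}, F u := by
      intro F hF
      rw [← Fintype.sum_of_injective (Subtype.val : {v // v ∈ W} → V) Subtype.val_injective (fun u => F u) F
        (fun u hu => hF u fun h => hu ⟨⟨u, h⟩, rfl⟩) (fun _ => rfl)]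
    congr 2
    · rw [e1 _ fun u hu => Finset.sum_eq_zero fun v _ => by simp [rJ, hu]]
      refine Finset.sum_congr rfl fun u _ => ?_
      rw [e1 _ fun v hv => by simp [rJ, hv]]
      refine Finset.sum_congr rfl fun v _ => ?_
      simp [rJ, u.2, v.2]
    · rw [e1 _ fun u hu => by simp [rh, hu]]
      refine Finset.sum_congr rfl fun v _ => ?_
      simp [rh, v.2]
  obtain ⟨c, hc, hsum⟩ := sum_comp_inj (V := {v // v ∈ W}) (V' := V) (ι := Subtype.val) Subtype.val_injective
  unfold Ex Zf
  simp only [key]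
  rw [hsum fun σ => f σ * wt _ _ σ, hsum fun σ => wt _ _ σ, mul_div_mul_left _ _ hc.ne']

/-- Pinning to `+` all spins outside `W` increases the magnetization; `tw_pin` is the analogue for two spins. -/
lemma mg_pin {J : V → V → ℝ} {h : V → ℝ} (hJ : ∀ u v, 0 ≤ J u v) (hh : ∀ v, 0 ≤ h v)
    (W : Set V) (u : {v // v ∈ W}) :
    mg J h u ≤ mg (fun u v : {v // v ∈ W} => J u v) (fun v : {v // v ∈ W} => h v + kap W J v) u := by
  have := Ex_pin hJ hh W (CS_sg u.1) (fun σ τ H => by simp [H u u.2])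
  refine this.trans (le_of_eq ?_)
  exact Ex_restrict W J (fun v => h v + kap W J v) (fun σ => sg (σ u))

lemma tw_pin {J : V → V → ℝ} {h : V → ℝ} (hJ : ∀ u v, 0 ≤ J u v) (hh : ∀ v, 0 ≤ h v)
    (W : Set V) (u v : {v // v ∈ W}) :
    tw J h u v ≤ tw (fun u v : {v // v ∈ W} => J u v) (fun v : {v // v ∈ W} => h v + kap W J v) u v := by
  have := Ex_pin hJ hh W (CS_sg2 u.1 v.1) (fun σ τ H => by simp [H u u.2, H v v.2])
  refine this.trans (le_of_eq ?_)
  exact Ex_restrict W J (fun v => h v + kap W J v) (fun σ => sg (σ u) * sg (σ v))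
end restrict

lemma bC_pos : 0 < bC := by
  unfold bC
  have : 0 < √(2 : ℝ) := by positivity
  have := Real.log_pos (x := 1 + √2) (by linarith)
  positivity

section strip
variable {M n : ℕ}

lemma Ast_nonneg (u v : Fin (n + 1) × Fin M) : 0 ≤ Ast M n u v :=
  Finset.sum_nonneg fun q _ => by split_ifs <;> first | exact bC_pos.le | exact le_rfl

lemma Ast_ge (u v : Fin (n + 1) × Fin M) (h1 : (v.1 : ℕ) = u.1 + 1) (h2 : srel u.1 u.2 v.2) : bC ≤ Ast M n u v := by
  have hq : (u.1 : ℕ) < n := by have := v.1.2; omega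
  refine le_trans (le_of_eq ?_) (Finset.single_le_sum (f := fun q : Fin n =>
    if u.1 = q.castSucc ∧ v.1 = q.succ then (if srel q u.2 v.2 then bC else 0) else 0) (fun q _ => by
      split_ifs <;> first | exact bC_pos.le | exact le_rfl) (Finset.mem_univ ⟨u.1, hq⟩))
  rw [if_pos ⟨Fin.ext rfl, Fin.ext h1⟩, if_pos h2]

lemma Jst_nonneg (u v : Fin (n + 1) × Fin M) : 0 ≤ Jst M n u v :=
  div_nonneg (add_nonneg (Ast_nonneg _ _) (Ast_nonneg _ _)) (by norm_num)

lemma Jst_ge (u v : Fin (n + 1) × Fin M) (h : ((v.1 : ℕ) = u.1 + 1 ∧ srel u.1 u.2 v.2) ∨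
    ((u.1 : ℕ) = v.1 + 1 ∧ srel v.1 v.2 u.2)) : bC / 2 ≤ Jst M n u v := by
  unfold Jst
  have a := Ast_nonneg u v
  have b := Ast_nonneg v u
  rcases h with ⟨h1, h2⟩ | ⟨h1, h2⟩
  · have := Ast_ge u v h1 h2; linarith
  · have := Ast_ge v u h1 h2; linarith

lemma Jst_le (u v : Fin (n + 1) × Fin M) : Jst M n u v ≤ if ((v.1 : ℕ) = u.1 + 1 ∧ srel u.1 u.2 v.2) ∨
    ((u.1 : ℕ) = v.1 + 1 ∧ srel v.1 v.2 u.2) then bC / 2 else 0 := by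
  have key : ∀ u v : Fin (n + 1) × Fin M, Ast M n u v ≤ if (v.1 : ℕ) = u.1 + 1 ∧ srel u.1 u.2 v.2 then bC else 0 := by
    intro u v
    have : ∀ q : Fin n, (if u.1 = q.castSucc ∧ v.1 = q.succ then (if srel q u.2 v.2 then bC else 0) else 0) ≤
        if (q : ℕ) = u.1 then (if (v.1 : ℕ) = u.1 + 1 ∧ srel u.1 u.2 v.2 then bC else 0) else 0 := by
      intro q
      by_cases hq : u.1 = q.castSucc ∧ v.1 = q.succ
      · obtain ⟨h1, h2⟩ := hq
        rw [if_pos ⟨h1, h2⟩, h1, h2]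
        simp
      · rw [if_neg hq]; split_ifs <;> first | exact bC_pos.le | exact le_rfl
    refine (Finset.sum_le_sum fun q _ => this q).trans ?_
    by_cases hu : (u.1 : ℕ) < n
    · have e : ∀ q : Fin n, (q : ℕ) = u.1 ↔ q = ⟨u.1, hu⟩ := fun q => by rw [Fin.ext_iff]
      simp only [e, Finset.sum_ite_eq', Finset.mem_univ, if_true]; exact le_rfl
    · rw [Finset.sum_eq_zero fun q _ => if_neg (by have := q.2; omega)]
      split_ifs <;> first | exact bC_pos.le | exact le_rfl
  unfold Jst
  have a := key u v
  have b := key v u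
  have hb := bC_pos
  by_cases h1 : (v.1 : ℕ) = u.1 + 1 ∧ srel u.1 u.2 v.2
  · have h2 : ¬ ((u.1 : ℕ) = v.1 + 1 ∧ srel v.1 v.2 u.2) := by omega
    rw [if_pos (Or.inl h1)]; rw [if_pos h1] at a; rw [if_neg h2] at b; linarith
  · rw [if_neg h1] at a
    by_cases h2 : ((u.1 : ℕ) = v.1 + 1 ∧ srel v.1 v.2 u.2)
    · rw [if_pos h2] at b; rw [if_pos (Or.inr h2)]; linarith
    · rw [if_neg h2] at b; rw [if_neg (by tauto)]; linarith

lemma hst_nonneg (u : Fin (n + 1) × Fin M) : 0 ≤ hst M n u :=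
  add_nonneg (Finset.sum_nonneg fun q _ => by split_ifs <;> first | exact bC_pos.le | exact le_rfl)
    (Finset.sum_nonneg fun q _ => by split_ifs <;> first | exact bC_pos.le | exact le_rfl)

lemma hst_ge (u : Fin (n + 1) × Fin M) (h1 : 1 ≤ (u.1 : ℕ)) (h2 : (u.1 : ℕ) < n) (h3 : (u.1 : ℕ) % 2 = 0)
    (h4 : (u.2 : ℕ) = 0) : 2 * bC ≤ hst M n u := by
  have a := Finset.single_le_sum (f := fun q : Fin n =>
    if q.castSucc = u.1 then (if (q : ℕ) % 2 = 0 ∧ (u.2 : ℕ) = 0 then bC else 0) else 0) (fun q _ => by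
      split_ifs <;> first | exact bC_pos.le | exact le_rfl) (Finset.mem_univ ⟨u.1, h2⟩)
  have b := Finset.single_le_sum (f := fun q : Fin n =>
    if q.succ = u.1 then (if ¬ (q : ℕ) % 2 = 0 ∧ (u.2 : ℕ) = 0 then bC else 0) else 0) (fun q _ => by
      split_ifs <;> first | exact bC_pos.le | exact le_rfl) (Finset.mem_univ ⟨u.1 - 1, by omega⟩)
  simp only at a b
  have q1 : (⟨u.1, h2⟩ : Fin n).castSucc = u.1 := Fin.ext rfl
  have q2 : (⟨u.1 - 1, by omega⟩ : Fin n).succ = u.1 := Fin.ext (by show (u.1 : ℕ) - 1 + 1 = u.1; omega)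
  rw [if_pos q1, if_pos ⟨h3, h4⟩] at a
  rw [if_pos q2, if_pos ⟨by omega, h4⟩] at b
  unfold hst
  linarith

/-- Limits along heights of two-point functions of the strip (with the wall counted as position `0`). -/
lemma strip_lim (M : ℕ) : ∃ s : ℕ → ℕ, StrictMono s ∧ ∀ p m, p + m ≤ M →
    Tendsto (fun j => Ex (Jst M (2 * s j + 2 * s j)) (hst M _)
      (fun σ => zz (2 * p) (fun a => σ (⟨2 * s j, by omega⟩, a)) * zz (2 * (p + m)) (fun a => σ (⟨2 * s j, by omega⟩, a))))
      atTop (nhds (Matrix.det (Matrix.of fun i k : Fin m => kapM M (p + i) (p + k)))) := by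
  obtain ⟨ψ, s, hs, h1, h2, h3⟩ := ground_exists M
  refine ⟨s, hs, fun p m hpm => ?_⟩
  have := tendsto_finsetSum (Finset.univ : Finset (Fin M → Bool)) fun σ _ =>
    (h1 σ).mul_const (zz (2 * p) σ * zz (2 * (p + m)) σ)
  rw [ground_det h2 h3 hpm] at this
  refine this.congr fun j => ?_
  exact (Ex_strip (s j) _ rfl (fun σ => zz (2 * p) σ * zz (2 * (p + m)) σ)).symm
end strip

/-! ### The exact solution in general domains -/

section hp
variable {V : Type} [Fintype V]

/-- `kk` is the distance to the wall and `rr` the position along it. The domain embeds into a high and wide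
strip, whose magnetization converges to `mH`. -/
lemma hp_odd {kk rr : V → ℤ} (hk : ∀ v, 1 ≤ kk v) (hinj : ∀ u v, kk u = kk v → rr u = rr v → u = v)
    (hpar : ∀ u v, (kk u + rr u) % 2 = (kk v + rr v) % 2) {J : V → V → ℝ} {h : V → ℝ}
    (hJ : ∀ u v, 0 ≤ J u v) (hh : ∀ v, 0 ≤ h v)
    (hJl : ∀ u v, J u v ≤ if |kk u - kk v| = 1 ∧ |rr u - rr v| = 1 then bC / 2 else 0)
    (hhl : ∀ v, h v ≤ if kk v = 1 then 2 * bC else 0) (v₀ : V) {a : ℕ} (ha : kk v₀ = 2 * a + 1) :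
    mg J h v₀ ≤ mH (a + 1) := by
  obtain ⟨B, hB⟩ : ∃ B : ℕ, ∀ v, kk v ≤ B ∧ |rr v - rr v₀| ≤ B := by
    refine ⟨∑ v, ((kk v).toNat + (|rr v - rr v₀|).toNat), fun v => ?_⟩
    have := Finset.single_le_sum (f := fun v => ((kk v).toNat + (|rr v - rr v₀|).toNat)) (fun _ _ => Nat.zero_le _)
      (Finset.mem_univ v)
    constructor <;> omega
  have key : ∀ M, B < M → a + 1 ≤ M → mg J h v₀ ≤ Matrix.det (Matrix.of fun i k : Fin (a + 1) => kapM M (0 + i) (0 + k)) := by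
    intro M hM haM
    obtain ⟨s, hs, hl⟩ := strip_lim M
    suffices main : ∀ T, B < T → mg J h v₀ ≤ Ex (Jst M (2 * T + 2 * T)) (hst M _)
        (fun σ => zz (2 * 0) (fun a => σ (⟨2 * T, by omega⟩, a)) *
          zz (2 * (0 + (a + 1))) (fun a => σ (⟨2 * T, by omega⟩, a))) by
      refine ge_of_tendsto (hl 0 (a + 1) (by omega)) ?_
      filter_upwards [eventually_gt_atTop B] with j hj
      exact main _ (lt_of_lt_of_le hj (hs.id_le j))
    intro T hj'
    have hr : ∀ v, ∃ ρ : ℕ, (ρ : ℤ) = rr v - rr v₀ + 2 * T ∧ 1 ≤ ρ ∧ ρ < 2 * T + 2 * T := fun v => by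
      have := abs_le.1 (hB v).2
      exact ⟨(rr v - rr v₀ + 2 * T).toNat, by omega, by omega, by omega⟩
    choose ρ hρ1 hρ2 hρ3 using hr
    have hc : ∀ v, ∃ c : ℕ, c < M ∧ kk v = 2 * c + 1 + (ρ v % 2 : ℕ) := fun v => by
      have h1 := hpar v v₀
      have h2 := hρ1 v
      have h3 := hk v
      have h4 := (hB v).1
      refine ⟨((kk v - 1) / 2).toNat, by omega, by omega⟩
    choose c hc1 hc2 using hc
    let ι : V → Fin (2 * T + 2 * T + 1) × Fin M := fun v => (⟨ρ v, by have := hρ3 v; omega⟩, ⟨c v, hc1 v⟩)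
    have hι : Function.Injective ι := by
      intro u v huv
      have e1 : ρ u = ρ v := congrArg (fun p => (p.1 : ℕ)) huv
      have e2 : c u = c v := congrArg (fun p => (p.2 : ℕ)) huv
      refine hinj u v ?_ ?_
      · rw [hc2, hc2, e1, e2]
      · have := hρ1 u; have := hρ1 v; omega
    have E := mg_embed hι hJ hh (J' := Jst M (2 * T + 2 * T)) (h' := hst M _) Jst_nonneg hst_nonneg
      (fun u v => by
        refine (hJl u v).trans ?_
        split_ifs with huv
        · apply Jst_ge
          show (ρ v = ρ u + 1 ∧ srel (ρ u) (c u) (c v)) ∨ (ρ u = ρ v + 1 ∧ srel (ρ v) (c v) (c u))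
          obtain ⟨a1, a2⟩ := huv
          have u1 := hρ1 u; have u2 := hρ1 v
          have u3 := hc2 u; have u4 := hc2 v
          unfold srel
          rcases abs_eq (zero_le_one) |>.1 a2 with h2 | h2
          · right
            refine ⟨by omega, ?_⟩
            rcases abs_eq (zero_le_one) |>.1 a1 with h1 | h1 <;> split_ifs <;> omega
          · left
            refine ⟨by omega, ?_⟩
            rcases abs_eq (zero_le_one) |>.1 a1 with h1 | h1 <;> split_ifs <;> omega
        · exact Jst_nonneg _ _)
      (fun v => by
        refine (hhl v).trans ?_
        split_ifs with hv
        · have := hc2 v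
          exact hst_ge (ι v) (hρ2 v) (hρ3 v) (by show ρ v % 2 = 0; omega) (by show c v = 0; omega)
        · exact hst_nonneg _) v₀
    refine E.trans (le_of_eq ?_)
    have ec : c v₀ = a := by have := hc2 v₀; have := hρ1 v₀; omega
    have er : ρ v₀ = 2 * T := by have := hρ1 v₀; omega
    unfold mg
    congr 1
    funext σ
    have : a < M := by omega
    rw [show zz (2 * 0) (fun b : Fin M => σ (⟨2 * T, by omega⟩, b)) = 1 by simp [zz], one_mul, zero_add,
      zz_even_succ a this]
    simp only [ι]
    congr 2
    ext <;> simp [ec, er]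
  refine ge_of_tendsto (mH_lim (a + 1)) ?_
  filter_upwards [eventually_gt_atTop B, eventually_ge_atTop (a + 1)] with M h1 h2
  exact key M h1 h2

lemma card_two {kk rr : V → ℤ} (hinj : ∀ u v, kk u = kk v → rr u = rr v → u = v) (k r : ℤ) :
    (Finset.univ.filter fun s => kk s = k ∧ |r - rr s| = 1).card ≤ 2 := by
  have : (Finset.univ.filter fun s => kk s = k ∧ |r - rr s| = 1).card ≤ ({r - 1, r + 1} : Finset ℤ).card := by
    refine Finset.card_le_card_of_injOn rr ?_ ?_
    · intro s hs
      have := (Finset.mem_filter.1 (Finset.mem_coe.1 hs)).2.2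
      simp only [Finset.coe_insert, Finset.coe_singleton, Set.mem_insert_iff, Set.mem_singleton_iff]
      rcases (abs_eq zero_le_one).1 this with h | h <;> omega
    · intro s hs t ht hst
      have h1 := (Finset.mem_filter.1 (Finset.mem_coe.1 hs)).2.1
      have h2 := (Finset.mem_filter.1 (Finset.mem_coe.1 ht)).2.1
      exact hinj s t (h1.trans h2.symm) hst
  exact this.trans (Finset.card_le_two)

end hp

/-- Decay of the magnetization with the distance to the wall in any subgraph of the diagonal half
plane with a plus wall. -/
theorem hp_bound : ∃ C : ℝ, 0 < C ∧ ∀ (V : Type) [Fintype V] (kk rr : V → ℤ) (J : V → V → ℝ) (h : V → ℝ),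
    (∀ v, 1 ≤ kk v) → (∀ u v, kk u = kk v → rr u = rr v → u = v) →
    (∀ u v, (kk u + rr u) % 2 = (kk v + rr v) % 2) → (∀ u v, 0 ≤ J u v) → (∀ v, 0 ≤ h v) →
    (∀ u v, J u v ≤ if |kk u - kk v| = 1 ∧ |rr u - rr v| = 1 then bC / 2 else 0) →
    (∀ v, h v ≤ if kk v = 1 then 2 * bC else 0) → ∀ v, mg J h v ≤ C * (kk v : ℝ) ^ (-(1 / 8) : ℝ) := by
  obtain ⟨C, hC, hb⟩ := mH_bound
  have odd : ∀ (V : Type) [Fintype V] (kk rr : V → ℤ) (J : V → V → ℝ) (h : V → ℝ),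
    (∀ v, 1 ≤ kk v) → (∀ u v, kk u = kk v → rr u = rr v → u = v) →
    (∀ u v, (kk u + rr u) % 2 = (kk v + rr v) % 2) → (∀ u v, 0 ≤ J u v) → (∀ v, 0 ≤ h v) →
    (∀ u v, J u v ≤ if |kk u - kk v| = 1 ∧ |rr u - rr v| = 1 then bC / 2 else 0) →
    (∀ v, h v ≤ if kk v = 1 then 2 * bC else 0) → ∀ v, kk v % 2 = 1 →
      mg J h v ≤ C * (2 : ℝ) ^ (1 / 8 : ℝ) * ((kk v : ℝ) + 1) ^ (-(1 / 8) : ℝ) := by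
    intro V _ kk rr J h h1 h2 h3 h4 h5 h6 h7 v hv
    obtain ⟨a, ha⟩ : ∃ a : ℕ, kk v = 2 * a + 1 := ⟨((kk v - 1) / 2).toNat, by have := h1 v; omega⟩
    refine (hp_odd h1 h2 h3 h4 h5 h6 h7 v ha).trans ((hb _ (by omega)).trans (le_of_eq ?_))
    rw [ha, mul_assoc]
    congr 1
    push_cast
    rw [show (2 * (a : ℝ) + 1 + 1) = 2 * ((a : ℝ) + 1) by ring, Real.mul_rpow (by norm_num) (by positivity),
      ← mul_assoc, ← Real.rpow_add (by norm_num)]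
    norm_num
  refine ⟨C * (2 : ℝ) ^ (1 / 8 : ℝ), by positivity, ?_⟩
  intro V _ kk rr J h h1 h2 h3 h4 h5 h6 h7 v
  have hkv : (1 : ℝ) ≤ kk v := by exact_mod_cast h1 v
  by_cases hv : kk v % 2 = 1
  · refine (odd V kk rr J h h1 h2 h3 h4 h5 h6 h7 v hv).trans ?_
    refine mul_le_mul_of_nonneg_left ?_ (by positivity)
    exact Real.rpow_le_rpow_of_nonpos (by linarith) (by linarith) (by norm_num)
  · obtain ⟨W, hW⟩ : ∃ W : Set V, ∀ v, v ∈ W ↔ 2 ≤ kk v := ⟨{v | 2 ≤ kk v}, fun v => Iff.rfl⟩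
    have hvW : v ∈ W := by rw [hW]; have := h1 v; omega
    refine (mg_pin h4 h5 W ⟨v, hvW⟩).trans ?_
    have c1 : ∀ v : {v // v ∈ W}, 1 ≤ kk v - 1 := fun v => by have := (hW v).1 v.2; omega
    have c2 : ∀ u v : {v // v ∈ W}, kk u - 1 = kk v - 1 → rr u = rr v → u = v :=
      fun u v a b => Subtype.ext (h2 u v (by omega) b)
    have c3 : ∀ u v : {v // v ∈ W}, (kk u - 1 + rr u) % 2 = (kk v - 1 + rr v) % 2 :=
      fun u v => by have := h3 u v; omega
    have c6 : ∀ u v : {v // v ∈ W}, J u v ≤ if |kk u - 1 - (kk v - 1)| = 1 ∧ |rr u - rr v| = 1 then bC / 2 else 0 :=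
      fun u v => by
        have := h6 u v
        rwa [show kk u - kk v = kk u - 1 - (kk v - 1) by ring] at this
    have c7 : ∀ v : {v // v ∈ W}, h v + kap W J v ≤ if kk v - 1 = 1 then 2 * bC else 0 := by
      rintro ⟨w, hw⟩
      have hw := (hW w).1 hw
      simp only
      have hz : h w ≤ 0 := by have := h7 w; rwa [if_neg (by omega)] at this
      have hb := bC_pos
      have hk : ∀ s, (if s ∈ W then 0 else J w s + J s w) ≤
          if kk s = 1 ∧ |rr w - rr s| = 1 then (if kk w = 2 then bC else 0) else 0 := by
        intro s
        by_cases hs : s ∈ W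
        · rw [if_pos hs]; split_ifs <;> first | exact hb.le | exact le_rfl
        · rw [if_neg hs]
          have hs1 : kk s = 1 := by have := h1 s; rw [hW] at hs; omega
          have a := h6 w s
          have b := h6 s w
          rw [abs_sub_comm (kk s), abs_sub_comm (rr s)] at b
          by_cases hr : |rr w - rr s| = 1
          · rw [if_pos ⟨hs1, hr⟩]
            by_cases c1 : kk w = 2
            · rw [if_pos c1]; split_ifs at a b <;> linarith
            · rw [if_neg c1]
              have : ¬ |kk w - kk s| = 1 := fun h => by
                rcases (abs_eq zero_le_one).1 h with h | h <;> omega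
              rw [if_neg (fun h => this h.1)] at a b
              linarith
          · rw [if_neg (fun h => hr h.2)] at a b
            rw [if_neg (fun h => hr h.2)]; linarith
      have : kap W J w ≤ if kk w = 2 then 2 * bC else 0 := by
        unfold kap
        refine (Finset.sum_le_sum fun s _ => hk s).trans ?_
        rw [← Finset.sum_filter, Finset.sum_const, nsmul_eq_mul]
        have := card_two h2 1 (rr w)
        have : (((Finset.univ.filter fun s => kk s = 1 ∧ |rr w - rr s| = 1).card : ℕ) : ℝ) ≤ 2 := by exact_mod_cast this
        split_ifs <;> nlinarith
      simp only [show kk w - 1 = 1 ↔ kk w = 2 by omega]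
      linarith
    refine (odd {v // v ∈ W} (fun v => kk v - 1) (fun v => rr v) (fun u v => J u v) (fun v => h v + kap W J v)
      c1 c2 c3 (fun u v => h4 u v) (fun v => add_nonneg (h5 v) (kap_nonneg h4 _)) c6 c7 ⟨v, hvW⟩
      (by show (kk v - 1) % 2 = 1; omega)).trans ?_
    push_cast
    rw [sub_add_cancel]

/-- The exact diagonal correlations, seen in a finite strip with free boundary. -/
theorem strip_lower (m : ℕ) (hm : 1 ≤ m) : ∃ p M T : ℕ, ∃ hp : p + m < M,
    dT m / 2 ≤ tw (Jst M (2 * T + 2 * T)) (fun _ => 0) (⟨2 * T, by omega⟩, ⟨p, by omega⟩)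
      (⟨2 * T, by omega⟩, ⟨p + m, hp⟩) := by
  obtain ⟨c, hc, hd⟩ := dT_bound
  have hdm : 0 < dT m := lt_of_lt_of_le (by positivity) (hd m hm)
  obtain ⟨C, hC, hb⟩ := mH_bound
  have l1 : Tendsto (fun p : ℕ => Matrix.det (Matrix.of fun i k : Fin m => kapH (p + 1 + i) (p + 1 + k)) -
      C * ((p + 1 : ℕ) : ℝ) ^ (-(1 / 8) : ℝ)) atTop (nhds (dT m - C * 0)) := by
    refine ((dT_lim m).comp (tendsto_add_atTop_nat 1)).sub (Tendsto.const_mul _ ?_)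
    exact ((tendsto_rpow_neg_atTop (y := 1 / 8) (by norm_num)).comp tendsto_natCast_atTop_atTop).comp
      (tendsto_add_atTop_nat 1)
  obtain ⟨p, hp⟩ := (l1.eventually_const_lt (show dT m / 2 < dT m - C * 0 by linarith)).exists
  have l2 := (detM_lim (p + 1) m).sub (mH_lim (p + 1))
  obtain ⟨M, hM, hM2⟩ := ((l2.eventually_const_lt (show dT m / 2 < _ by
    have := hb (p + 1) (by omega)
    exact lt_of_lt_of_le hp (by linarith))).and (eventually_gt_atTop (p + m + 1))).exists
  obtain ⟨s, hs, hl⟩ := strip_lim M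
  have l3 := (hl (p + 1) m (by omega)).sub (hl 0 (p + 1) (by omega))
  obtain ⟨j, hj⟩ := (l3.eventually_const_lt hM).exists
  suffices main : ∀ T, dT m / 2 < Ex (Jst M (2 * T + 2 * T)) (hst M _)
        (fun σ => zz (2 * (p + 1)) (fun a => σ (⟨2 * T, by omega⟩, a)) *
          zz (2 * (p + 1 + m)) (fun a => σ (⟨2 * T, by omega⟩, a))) - Ex (Jst M (2 * T + 2 * T)) (hst M _)
        (fun σ => zz (2 * 0) (fun a => σ (⟨2 * T, by omega⟩, a)) *
          zz (2 * (0 + (p + 1))) (fun a => σ (⟨2 * T, by omega⟩, a))) →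
      dT m / 2 ≤ tw (Jst M (2 * T + 2 * T)) (fun _ => 0) (⟨2 * T, by omega⟩, ⟨p, by omega⟩)
      (⟨2 * T, by omega⟩, ⟨p + m, by omega⟩) from ⟨p, M, s j, by omega, main _ hj⟩
  intro T hj
  set u : Fin (2 * T + 2 * T + 1) × Fin M := (⟨2 * T, by omega⟩, ⟨p, by omega⟩) with hu
  set v : Fin (2 * T + 2 * T + 1) × Fin M := (⟨2 * T, by omega⟩, ⟨p + m, by omega⟩) with hv
  have U := Uf_le_tw (J := Jst M (2 * T + 2 * T)) (h := hst M _) Jst_nonneg hst_nonneg u v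
  unfold Uf at U
  have e1 : mg (Jst M (2 * T + 2 * T)) (hst M _) v ≤ 1 := mg_le_one _ _ _
  have e2 : 0 ≤ mg (Jst M (2 * T + 2 * T)) (hst M _) u := mg_nonneg Jst_nonneg hst_nonneg u
  have e3 : Ex (Jst M (2 * T + 2 * T)) (hst M _) (fun σ => zz (2 * (p + 1)) (fun a => σ (⟨2 * T, by omega⟩, a)) *
      zz (2 * (p + 1 + m)) (fun a => σ (⟨2 * T, by omega⟩, a))) = tw (Jst M (2 * T + 2 * T)) (hst M _) u v := by
    unfold tw
    congr 1
    funext σ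
    rw [zz_even_succ p (by omega), show p + 1 + m = p + m + 1 by ring, zz_even_succ (p + m) (by omega)]
  have e4 : Ex (Jst M (2 * T + 2 * T)) (hst M _) (fun σ => zz (2 * 0) (fun a => σ (⟨2 * T, by omega⟩, a)) *
      zz (2 * (0 + (p + 1))) (fun a => σ (⟨2 * T, by omega⟩, a))) = mg (Jst M (2 * T + 2 * T)) (hst M _) u := by
    unfold mg
    congr 1
    funext σ
    rw [zero_add, zz_even_succ p (by omega), show zz (2 * 0) (fun b : Fin M => σ (⟨2 * T, by omega⟩, b)) = 1 by simp [zz],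
      one_mul]
  rw [e3, e4] at hj
  nlinarith

/-! ### Upper bound for critical correlations -/

section latt
variable {V : Type} [Fintype V]

/-- Without field, spins in disconnected parts are uncorrelated. -/
lemma tw_zero_of_sep {J : V → V → ℝ} (A : Set V) (hA : ∀ u v, u ∈ A → v ∉ A → J u v = 0)
    (hA' : ∀ u v, u ∈ A → v ∉ A → J v u = 0) {u v : V} (hu : u ∈ A) (hv : v ∉ A) :
    tw J (fun _ => 0) u v = 0 := by
  let e : (V → Bool) → (V → Bool) := fun σ w => if w ∈ A then !σ w else σ w
  have he : Function.Involutive e := fun σ => by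
    funext w; by_cases hw : w ∈ A <;> simp [e, hw]
  have hw : ∀ σ, wt J (fun _ => 0) (e σ) = wt J (fun _ => 0) σ := by
    intro σ
    unfold wt en
    congr 2
    · refine Finset.sum_congr rfl fun a _ => Finset.sum_congr rfl fun b _ => ?_
      by_cases ha : a ∈ A <;> by_cases hb : b ∈ A
      · simp [e, ha, hb]
      · simp [hA a b ha hb]
      · simp [hA' b a hb ha]
      · simp [e, ha, hb]
    · simp
  have : ∑ σ, sg (σ u) * sg (σ v) * wt J (fun _ => 0) σ = - ∑ σ, sg (σ u) * sg (σ v) * wt J (fun _ => 0) σ := by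
    conv_lhs => rw [← Equiv.sum_comp he.toPerm]
    rw [← Finset.sum_neg_distrib]
    refine Finset.sum_congr rfl fun σ _ => ?_
    show sg (e σ u) * sg (e σ v) * wt J (fun _ => 0) (e σ) = _
    rw [hw]
    simp [e, hu, hv]
  unfold tw Ex
  rw [show ∑ σ, sg (σ u) * sg (σ v) * wt J (fun _ => 0) σ = 0 by linarith, zero_div]

lemma mg_mono {J J' : V → V → ℝ} {h h' : V → ℝ} (hJ : ∀ u v, 0 ≤ J u v) (hh : ∀ v, 0 ≤ h v)
    (hJJ : ∀ u v, J u v ≤ J' u v) (hhh : ∀ v, h v ≤ h' v) (u : V) : mg J h u ≤ mg J' h' u :=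
  Ex_mono hJ hh hJJ hhh (CS_sg u)

/-- Spins in two sets without direct coupling: the correlation is at most the product of the magnetizations of the
two sets with plus boundary condition. -/
theorem tw_factor {J : V → V → ℝ} (hJ : ∀ u v, 0 ≤ J u v) {S S' : Set V} (hd : ∀ v, v ∈ S → v ∉ S')
    (h1 : ∀ u v, u ∈ S → v ∈ S' → J u v = 0) (h2 : ∀ u v, u ∈ S → v ∈ S' → J v u = 0)
    {u v : V} (hu : u ∈ S) (hv : v ∈ S') :
    tw J (fun _ => 0) u v ≤ mg (rJ S J) (rh S (kap S J)) u * mg (rJ S' J) (rh S' (kap S' J)) v := by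
  set W := S ∪ S' with hW
  set J' := rJ W J with hJ'
  set g := rh W (kap W J) with hg
  have n1 : ∀ a b, 0 ≤ J' a b := rJ_nonneg hJ
  have n2 : ∀ a, 0 ≤ g a := rh_nonneg fun a => kap_nonneg hJ a
  have s1 : tw J (fun _ => 0) u v ≤ tw J' g u v := by
    have := Ex_pin hJ (h := fun _ => 0) (fun _ => le_rfl) W (CS_sg2 u v)
      (fun σ τ H => by simp [H u (Or.inl hu), H v (Or.inr hv)])
    simp only [zero_add] at this
    exact this
  have s2 : tw J' (fun _ => 0) u v = 0 := by
    refine tw_zero_of_sep S (fun a b ha hb => ?_) (fun a b ha hb => ?_) hu (fun h => hd v h hv)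
    · simp only [hJ', rJ]
      split_ifs with h
      · exact h1 a b ha (h.2.resolve_left hb)
      · rfl
    · simp only [hJ', rJ]
      split_ifs with h
      · exact h2 a b ha (h.1.resolve_left hb)
      · rfl
  have s3 := Uf_le_tw n1 n2 u v
  have aux : ∀ (T T' : Set V) (hT : T ⊆ W) (hTT : ∀ a, a ∈ W → a ∉ T → a ∈ T')
      (k1 : ∀ u v, u ∈ T → v ∈ T' → J u v = 0) (k2 : ∀ u v, u ∈ T → v ∈ T' → J v u = 0) (w : V), w ∈ T →
      mg J' g w ≤ mg (rJ T J) (rh T (kap T J)) w := by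
    intro T T' hT hTT k1 k2 w hw
    have := Ex_pin n1 n2 T (CS_sg w) (fun σ τ H => by simp [H w hw])
    refine this.trans (mg_mono (rJ_nonneg n1) (rh_nonneg fun a => add_nonneg (n2 a) (kap_nonneg n1 a)) ?_ ?_ w)
    · intro a b
      unfold rJ
      split_ifs with h
      · exact rJ_le hJ a b
      · exact le_rfl
    · intro a
      unfold rh
      split_ifs with h
      · show g a + kap T J' a ≤ _
        rw [show g a = kap W J a from if_pos (hT h)]
        unfold kap
        rw [← Finset.sum_add_distrib]
        refine Finset.sum_le_sum fun s _ => ?_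
        by_cases sW : s ∈ W
        · by_cases sT : s ∈ T
          · simp [sW, sT]
          · simp [sW, sT, J', rJ, hT h, k1 a s h (hTT s sW sT), k2 a s h (hTT s sW sT)]
        · have sT : s ∉ T := fun h => sW (hT h)
          simp [sW, sT, J', rJ]
      · exact le_rfl
  have a1 := aux S S' (fun a ha => Or.inl ha) (fun a ha hb => ha.resolve_left hb) h1 h2 u hu
  have a2 := aux S' S (fun a ha => Or.inr ha) (fun a ha hb => ha.resolve_right hb)
    (fun a b ha hb => h2 b a hb ha) (fun a b ha hb => h1 b a hb ha) v hv
  unfold Uf at s3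
  have := mul_le_mul a1 a2 (mg_nonneg n1 n2 v) ((mg_nonneg n1 n2 u).trans a1)
  linarith

/-- Nearest neighbours in `ℤ²`. -/
def nnp (p q : ℤ × ℤ) : Prop := |p.1 - q.1| + |p.2 - q.2| = 1

/-- The `ℓ¹` distance in `ℤ²`. -/
def d1 (p q : ℤ × ℤ) : ℤ := |p.1 - q.1| + |p.2 - q.2|

/-- Critical nearest neighbour couplings of sites placed at `pos`; every edge is counted in both directions. -/
def Jn (pos : V → ℤ × ℤ) (u v : V) : ℝ := if nnp (pos u) (pos v) then bC / 2 else 0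

lemma Jn_nonneg (pos : V → ℤ × ℤ) (u v : V) : 0 ≤ Jn pos u v := by
  unfold Jn; have := bC_pos; split_ifs <;> linarith

/-- A diagonal coordinate, `±p₁ ± p₂ + c`. -/
def DiagC (f : ℤ × ℤ → ℤ) : Prop := ∃ s t c : ℤ, (s = 1 ∨ s = -1) ∧ (t = 1 ∨ t = -1) ∧ ∀ p, f p = s * p.1 + t * p.2 + c

lemma DiagC.sub {f : ℤ × ℤ → ℤ} (hf : DiagC f) (m : ℤ) : DiagC fun p => f p - m := by
  obtain ⟨s, t, c, h1, h2, h3⟩ := hf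
  exact ⟨s, t, c - m, h1, h2, fun p => by simp only [h3]; ring⟩

lemma DiagC.neg {f : ℤ × ℤ → ℤ} (hf : DiagC f) (m : ℤ) : DiagC fun p => m - f p := by
  obtain ⟨s, t, c, h1, h2, h3⟩ := hf
  exact ⟨-s, -t, m - c, by omega, by omega, fun p => by simp only [h3]; ring⟩

lemma DiagC.nn {f : ℤ × ℤ → ℤ} (hf : DiagC f) {p q : ℤ × ℤ} (h : nnp p q) : |f p - f q| = 1 := by
  obtain ⟨s, t, c, h1, h2, h3⟩ := hf
  rw [h3, h3]
  unfold nnp at h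
  rcases h1 with rfl | rfl <;> rcases h2 with rfl | rfl <;>
    · rw [abs_eq (by norm_num)]
      rcases abs_cases (p.1 - q.1) with ⟨a, _⟩ | ⟨a, _⟩ <;> rcases abs_cases (p.2 - q.2) with ⟨b, _⟩ | ⟨b, _⟩ <;> omega

/-- Magnetization of a half plane cut along a diagonal with plus boundary condition. -/
theorem hp_lat : ∃ C : ℝ, 0 < C ∧ ∀ (V : Type) [Fintype V] (pos : V → ℤ × ℤ) (J : V → V → ℝ) (f : ℤ × ℤ → ℤ),
    Function.Injective pos → (∀ u v, 0 ≤ J u v) → (∀ u v, J u v ≤ Jn pos u v) → DiagC f →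
    ∀ v, 1 ≤ f (pos v) →
      mg (rJ {w | 1 ≤ f (pos w)} J) (rh {w | 1 ≤ f (pos w)} (kap {w | 1 ≤ f (pos w)} J)) v ≤
        C * (f (pos v) : ℝ) ^ (-(1 / 8) : ℝ) := by
  obtain ⟨C, hC, hb⟩ := hp_bound
  refine ⟨C, hC, ?_⟩
  intro V _ pos J f hinj hJ hJl hf v hv
  obtain ⟨W, hW⟩ : ∃ W : Set V, W = {w | 1 ≤ f (pos w)} := ⟨_, rfl⟩
  have hW' : ∀ w, w ∈ W ↔ 1 ≤ f (pos w) := fun w => by rw [hW]; rfl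
  rw [← hW]
  obtain ⟨g, hg, hfg, hpar, hgc⟩ : ∃ g : ℤ × ℤ → ℤ, DiagC g ∧ (∀ p q, f p = f q → g p = g q → p = q) ∧
      (∀ p q, (f p + g p) % 2 = (f q + g q) % 2) ∧ True := by
    obtain ⟨s, t, c, h1, h2, h3⟩ := hf
    refine ⟨fun p => s * p.1 - t * p.2, ⟨s, -t, 0, h1, by omega, fun p => by ring⟩, ?_, ?_, trivial⟩
    · intro p q e1 e2
      simp only [h3] at e1 e2
      rcases h1 with rfl | rfl <;> rcases h2 with rfl | rfl <;> ext <;> omega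
    · intro p q
      simp only [h3]
      rcases h1 with rfl | rfl <;> rcases h2 with rfl | rfl <;> omega
  have hvW : v ∈ W := (hW' v).2 hv
  have E := Ex_restrict W J (kap W J) (fun σ => sg (σ ⟨v, hvW⟩))
  refine (le_of_eq E).trans ?_
  have hJl' : ∀ u v, J u v ≤ if |f (pos u) - f (pos v)| = 1 ∧ |g (pos u) - g (pos v)| = 1 then bC / 2 else 0 := by
    intro a b
    refine (hJl a b).trans ?_
    unfold Jn
    by_cases h : nnp (pos a) (pos b)
    · rw [if_pos h, if_pos ⟨hf.nn h, hg.nn h⟩]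
    · rw [if_neg h]; split_ifs
      · exact (half_pos bC_pos).le
      · exact le_rfl
  refine hb {w // w ∈ W} (fun w => f (pos w)) (fun w => g (pos w)) (fun u v => J u v) (fun v => kap W J v)
    (fun w => (hW' _).1 w.2) (fun a b e1 e2 => Subtype.ext (hinj (hfg _ _ e1 e2))) (fun a b => hpar _ _)
    (fun a b => hJ _ _) (fun a => kap_nonneg hJ _) (fun a b => hJl' _ _) ?_ ⟨v, hvW⟩
  rintro ⟨w, hw⟩
  have hw1 := (hW' w).1 hw
  have hbc := bC_pos
  have hk : ∀ s, (if s ∈ W then 0 else J w s + J s w) ≤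
      if f (pos s) = 0 ∧ |g (pos w) - g (pos s)| = 1 then (if f (pos w) = 1 then bC else 0) else 0 := by
    intro s
    by_cases hs : s ∈ W
    · rw [if_pos hs]; split_ifs <;> first | exact hbc.le | exact le_rfl
    · rw [if_neg hs]
      rw [hW'] at hs
      have a := hJl' w s
      have b := hJl' s w
      rw [abs_sub_comm (f (pos s)), abs_sub_comm (g (pos s))] at b
      by_cases c1 : |f (pos w) - f (pos s)| = 1 ∧ |g (pos w) - g (pos s)| = 1
      · rw [if_pos c1] at a b
        have c2 := (abs_eq zero_le_one).1 c1.1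
        rw [if_pos ⟨by omega, c1.2⟩, if_pos (by omega)]
        linarith
      · rw [if_neg c1] at a b
        have : (0 : ℝ) ≤ if f (pos s) = 0 ∧ |g (pos w) - g (pos s)| = 1 then (if f (pos w) = 1 then bC else 0) else 0 := by
          split_ifs <;> linarith
        linarith
  show kap W J w ≤ _
  unfold kap
  refine (Finset.sum_le_sum fun s _ => hk s).trans ?_
  rw [← Finset.sum_filter, Finset.sum_const, nsmul_eq_mul]
  have c2 := card_two (kk := fun v => f (pos v)) (rr := fun v => g (pos v)) (fun a b e1 e2 => hinj (hfg _ _ e1 e2)) 0 (g (pos w))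
  have : (((Finset.univ.filter fun s => f (pos s) = 0 ∧ |g (pos w) - g (pos s)| = 1).card : ℕ) : ℝ) ≤ 2 := by exact_mod_cast c2
  simp only
  split_ifs <;> nlinarith

/-- Upper bound for the critical two-point function. -/
theorem tw_upper : ∃ C : ℝ, 1 ≤ C ∧ ∀ (V : Type) [Fintype V] (pos : V → ℤ × ℤ) (J : V → V → ℝ),
    Function.Injective pos → (∀ u v, 0 ≤ J u v) → (∀ u v, J u v ≤ Jn pos u v) → ∀ u v, u ≠ v →
      tw J (fun _ => 0) u v ≤ C * (d1 (pos u) (pos v) : ℝ) ^ (-(1 / 4) : ℝ) := by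
  obtain ⟨C, hC, hb⟩ := hp_lat
  refine ⟨1 + C ^ 2 * 2, by nlinarith [sq_nonneg C], ?_⟩
  intro V _ pos J hinj hJ hJl u v huv
  obtain ⟨f, hf, hu, hv⟩ : ∃ f, DiagC f ∧ f (pos u) = 0 ∧ f (pos v) = d1 (pos u) (pos v) := by
    unfold d1
    rcases abs_cases ((pos u).1 - (pos v).1) with ⟨a, _⟩ | ⟨a, _⟩ <;>
      rcases abs_cases ((pos u).2 - (pos v).2) with ⟨b, _⟩ | ⟨b, _⟩
    · exact ⟨fun p => -1 * p.1 + -1 * p.2 + ((pos u).1 + (pos u).2), ⟨_, _, _, Or.inr rfl, Or.inr rfl, fun p => rfl⟩,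
        by ring, by rw [a, b]; ring⟩
    · exact ⟨fun p => -1 * p.1 + 1 * p.2 + ((pos u).1 - (pos u).2), ⟨_, _, _, Or.inr rfl, Or.inl rfl, fun p => rfl⟩,
        by ring, by rw [a, b]; ring⟩
    · exact ⟨fun p => 1 * p.1 + -1 * p.2 + (-(pos u).1 + (pos u).2), ⟨_, _, _, Or.inl rfl, Or.inr rfl, fun p => rfl⟩,
        by ring, by rw [a, b]; ring⟩
    · exact ⟨fun p => 1 * p.1 + 1 * p.2 + (-(pos u).1 - (pos u).2), ⟨_, _, _, Or.inl rfl, Or.inl rfl, fun p => rfl⟩,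
        by ring, by rw [a, b]; ring⟩
  set d := d1 (pos u) (pos v) with hd
  have hd1 : 1 ≤ d := by
    by_contra h
    apply huv
    apply hinj
    unfold d1 at hd
    have := abs_nonneg ((pos u).1 - (pos v).1)
    have := abs_nonneg ((pos u).2 - (pos v).2)
    ext
    · have : |(pos u).1 - (pos v).1| = 0 := by omega
      rw [abs_eq_zero] at this; omega
    · have : |(pos u).2 - (pos v).2| = 0 := by omega
      rw [abs_eq_zero] at this; omega
  by_cases h1 : d = 1
  · rw [h1]
    have := tw_le_one J (fun _ => 0) u v
    norm_num
    nlinarith [sq_nonneg C]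
  obtain ⟨e, he1, he2, he3⟩ : ∃ e : ℤ, 1 ≤ e ∧ d ≤ 3 * e ∧ d ≤ 2 * (d - e) := ⟨d / 2, by omega, by omega, by omega⟩
  have F := tw_factor (u := u) (v := v) hJ (S := {w | 1 ≤ (fun p => e - f p) (pos w)}) (S' := {w | 1 ≤ (fun p => f p - e) (pos w)})
    (fun w h h' => by simp only [Set.mem_ofPred_eq] at h h'; omega)
    (fun a b h h' => by
      simp only [Set.mem_ofPred_eq] at h h'
      refine le_antisymm ((hJl a b).trans (le_of_eq ?_)) (hJ a b)
      unfold Jn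
      rw [if_neg]
      intro hn
      have := (abs_eq zero_le_one).1 (hf.nn hn); omega)
    (fun a b h h' => by
      simp only [Set.mem_ofPred_eq] at h h'
      refine le_antisymm ((hJl b a).trans (le_of_eq ?_)) (hJ b a)
      unfold Jn
      rw [if_neg]
      intro hn
      have := (abs_eq zero_le_one).1 (hf.nn hn); omega)
    (by simp only [Set.mem_ofPred_eq]; omega) (by simp only [Set.mem_ofPred_eq]; omega)
  have b1 := hb V pos J (fun p => e - f p) hinj hJ hJl (hf.neg e) u (by omega)
  have b2 := hb V pos J (fun p => f p - e) hinj hJ hJl (hf.sub e) v (by omega)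
  have dpos : (0 : ℝ) < d := by exact_mod_cast (by omega : 0 < d)
  have g1 : ((e - f (pos u) : ℤ) : ℝ) ^ (-(1 / 8) : ℝ) ≤ ((d : ℝ) / 3) ^ (-(1 / 8) : ℝ) := by
    refine Real.rpow_le_rpow_of_nonpos (by positivity) ?_ (by norm_num)
    rw [hu]; push_cast
    have : (d : ℝ) ≤ 3 * e := by exact_mod_cast he2
    linarith
  have g2 : ((f (pos v) - e : ℤ) : ℝ) ^ (-(1 / 8) : ℝ) ≤ ((d : ℝ) / 3) ^ (-(1 / 8) : ℝ) := by
    refine Real.rpow_le_rpow_of_nonpos (by positivity) ?_ (by norm_num)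
    rw [hv]; push_cast
    have : (d : ℝ) ≤ 2 * (d - e) := by exact_mod_cast he3
    linarith
  have n2 : 0 ≤ mg (rJ {w | 1 ≤ (fun p => f p - e) (pos w)} J) (rh {w | 1 ≤ (fun p => f p - e) (pos w)}
      (kap {w | 1 ≤ (fun p => f p - e) (pos w)} J)) v := mg_nonneg (rJ_nonneg hJ) (rh_nonneg fun a => kap_nonneg hJ a) v
  refine F.trans ((mul_le_mul (b1.trans (mul_le_mul_of_nonneg_left g1 hC.le))
    (b2.trans (mul_le_mul_of_nonneg_left g2 hC.le)) n2 (by positivity)).trans ?_)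
  rw [show C * ((d : ℝ) / 3) ^ (-(1 / 8) : ℝ) * (C * ((d : ℝ) / 3) ^ (-(1 / 8) : ℝ)) =
    C ^ 2 * (((d : ℝ) / 3) ^ (-(1 / 8) : ℝ) * ((d : ℝ) / 3) ^ (-(1 / 8) : ℝ)) by ring,
    ← Real.rpow_add (by positivity), show (-(1 / 8) + -(1 / 8) : ℝ) = -(1 / 4) by norm_num,
    Real.div_rpow dpos.le (by norm_num), Real.rpow_neg (by norm_num : (0 : ℝ) ≤ 3), div_inv_eq_mul]
  have : (3 : ℝ) ^ (1 / 4 : ℝ) ≤ 2 := by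
    calc (3 : ℝ) ^ (1 / 4 : ℝ) ≤ (16 : ℝ) ^ (1 / 4 : ℝ) := Real.rpow_le_rpow (by norm_num) (by norm_num) (by norm_num)
      _ = 2 := by rw [show (16 : ℝ) = 2 ^ (4 : ℝ) by norm_num, ← Real.rpow_mul (by norm_num)]; norm_num
  have p : 0 < (d : ℝ) ^ (-(1 / 4) : ℝ) := by positivity
  have : C ^ 2 * ((d : ℝ) ^ (-(1 / 4) : ℝ) * (3 : ℝ) ^ (1 / 4 : ℝ)) ≤ C ^ 2 * ((d : ℝ) ^ (-(1 / 4) : ℝ) * 2) := by gcongr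
  nlinarith
end latt

/-! ### Magnetization in diamonds -/

section diam
variable {V : Type} [Fintype V]

lemma d1_comm (p q : ℤ × ℤ) : d1 p q = d1 q p := by
  unfold d1; rw [abs_sub_comm, abs_sub_comm p.2]

lemma d1_nonneg (p q : ℤ × ℤ) : 0 ≤ d1 p q := by unfold d1; positivity

lemma d1_pos {p q : ℤ × ℤ} (h : p ≠ q) : 1 ≤ d1 p q := by
  have h0 := d1_nonneg p q
  rcases eq_or_lt_of_le h0 with h1 | h1
  · exfalso
    apply h
    unfold d1 at h1
    have := abs_nonneg (p.1 - q.1)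
    have := abs_nonneg (p.2 - q.2)
    ext
    · have : |p.1 - q.1| = 0 := by omega
      rw [abs_eq_zero] at this; omega
    · have : |p.2 - q.2| = 0 := by omega
      rw [abs_eq_zero] at this; omega
  · exact h1

lemma sphere_card {pos : V → ℤ × ℤ} (hinj : Function.Injective pos) (p : ℤ × ℤ) {n : ℕ} (hn : 1 ≤ n) :
    (Finset.univ.filter fun w => d1 (pos w) p = n).card ≤ 6 * n := by
  have : (Finset.univ.filter fun w => d1 (pos w) p = n).card ≤ ((Finset.Icc (-(n : ℤ)) n) ×ˢ (Finset.univ : Finset Bool)).card := by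
    refine Finset.card_le_card_of_injOn (fun w => ((pos w).1 - p.1, decide ((pos w).2 ≤ p.2))) ?_ ?_
    · intro w hw
      have hw : d1 (pos w) p = n := (Finset.mem_filter.1 (Finset.mem_coe.1 hw)).2
      unfold d1 at hw
      simp only [Finset.coe_product, Set.mem_prod, Finset.coe_Icc, Set.mem_Icc, Finset.coe_univ, Set.mem_univ, and_true]
      have := abs_nonneg ((pos w).2 - p.2)
      exact abs_le.1 (by omega)
    · intro a ha b hb hab
      have ha : d1 (pos a) p = n := (Finset.mem_filter.1 (Finset.mem_coe.1 ha)).2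
      have hb : d1 (pos b) p = n := (Finset.mem_filter.1 (Finset.mem_coe.1 hb)).2
      unfold d1 at ha hb
      simp only [Prod.mk.injEq, decide_eq_decide] at hab
      obtain ⟨h1, h2⟩ := hab
      rw [h1] at ha
      apply hinj
      ext
      · omega
      · by_cases c : (pos a).2 ≤ p.2
        · have c' := h2.1 c
          rw [abs_of_nonpos (by omega : (pos a).2 - p.2 ≤ 0)] at ha
          rw [abs_of_nonpos (by omega : (pos b).2 - p.2 ≤ 0)] at hb
          omega
        · have c' : ¬ (pos b).2 ≤ p.2 := fun h => c (h2.2 h)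
          rw [abs_of_nonneg (by omega : 0 ≤ (pos a).2 - p.2)] at ha
          rw [abs_of_nonneg (by omega : 0 ≤ (pos b).2 - p.2)] at hb
          omega
  refine this.trans ?_
  rw [Finset.card_product, Int.card_Icc, Finset.card_univ, Fintype.card_bool]
  omega

/-- The open `ℓ¹` ball in index space. -/
def dia (pos : V → ℤ × ℤ) (p : ℤ × ℤ) (r : ℕ) : Set V := {w | d1 (pos w) p < r}

/-- A function decaying like `d ^ (-1/4)` sums to order `r ^ (7/4)` over the ball of radius `r`. -/
lemma dia_sum {pos : V → ℤ × ℤ} (hinj : Function.Injective pos) (u : V) {r : ℕ} (hr : 1 ≤ r) (T : V → ℝ) {C : ℝ}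
    (hC : 1 ≤ C) (hT1 : T u ≤ 1) (hT : ∀ w, w ≠ u → T w ≤ C * (d1 (pos w) (pos u) : ℝ) ^ (-(1 / 4) : ℝ)) :
    ∑ w, (if w ∈ dia pos (pos u) r then T w else 0) ≤ 7 * C * (r : ℝ) ^ (7 / 4 : ℝ) := by
  rw [← Finset.sum_filter]
  have hmap : ∀ w ∈ Finset.univ.filter (fun w => w ∈ dia pos (pos u) r), (d1 (pos w) (pos u)).toNat ∈ Finset.range r := by
    intro w hw
    simp only [Finset.mem_filter, Finset.mem_univ, true_and] at hw
    have hw : d1 (pos w) (pos u) < r := hw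
    rw [Finset.mem_range]
    have := d1_nonneg (pos w) (pos u)
    omega
  rw [← Finset.sum_fiberwise_of_maps_to hmap]
  have hr1 : (1 : ℝ) ≤ r := by exact_mod_cast hr
  have term : ∀ n ∈ Finset.range r, ∑ w ∈ (Finset.univ.filter (fun w => w ∈ dia pos (pos u) r)).filter
      (fun w => (d1 (pos w) (pos u)).toNat = n), T w ≤ (if n = 0 then C else 0) + 6 * C * (r : ℝ) ^ (3 / 4 : ℝ) := by
    intro n hn
    rw [Finset.mem_range] at hn
    rcases Nat.eq_zero_or_pos n with rfl | hn0
    · have hs : (Finset.univ.filter (fun w => w ∈ dia pos (pos u) r)).filter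
          (fun w => (d1 (pos w) (pos u)).toNat = 0) ⊆ {u} := by
        intro w hw
        simp only [Finset.mem_filter] at hw
        rw [Finset.mem_singleton]
        by_contra hne
        have := d1_pos (fun h => hne (hinj h))
        omega
      rw [if_pos rfl]
      have p1 : 0 ≤ 6 * C * (r : ℝ) ^ (3 / 4 : ℝ) := by positivity
      rcases Finset.subset_singleton_iff.1 hs with h | h
      · rw [h, Finset.sum_empty]; linarith
      · rw [h, Finset.sum_singleton]; linarith
    · rw [if_neg (by omega), zero_add]
      have hn1 : (0 : ℝ) < n := by exact_mod_cast hn0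
      calc _ ≤ ∑ w ∈ (Finset.univ.filter (fun w => w ∈ dia pos (pos u) r)).filter
            (fun w => (d1 (pos w) (pos u)).toNat = n), C * (n : ℝ) ^ (-(1 / 4) : ℝ) := by
              refine Finset.sum_le_sum fun w hw => ?_
              simp only [Finset.mem_filter] at hw
              have e : d1 (pos w) (pos u) = n := by have := d1_nonneg (pos w) (pos u); omega
              refine (hT w ?_).trans (by rw [e]; simp)
              rintro rfl
              simp [d1] at e; omega
        _ ≤ (6 * n : ℕ) * (C * (n : ℝ) ^ (-(1 / 4) : ℝ)) := by
              rw [Finset.sum_const, nsmul_eq_mul]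
              refine mul_le_mul_of_nonneg_right ?_ (by positivity)
              have : ((Finset.univ.filter (fun w => w ∈ dia pos (pos u) r)).filter
                (fun w => (d1 (pos w) (pos u)).toNat = n)).card ≤ 6 * n := by
                refine le_trans (Finset.card_le_card ?_) (sphere_card hinj (pos u) hn0)
                intro w hw
                simp only [Finset.mem_filter, Finset.mem_univ, true_and] at hw ⊢
                have := d1_nonneg (pos w) (pos u); omega
              exact_mod_cast this
        _ = 6 * C * (n : ℝ) ^ (3 / 4 : ℝ) := by
              push_cast
              rw [show (3 / 4 : ℝ) = 1 + -(1 / 4) by norm_num, Real.rpow_add hn1, Real.rpow_one]; ring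
        _ ≤ _ := by
              have : (n : ℝ) ≤ r := by exact_mod_cast hn.le
              gcongr
  refine (Finset.sum_le_sum term).trans ?_
  rw [Finset.sum_add_distrib, Finset.sum_ite_eq', if_pos (Finset.mem_range.2 (by omega)), Finset.sum_const,
    Finset.card_range, nsmul_eq_mul]
  have e : (r : ℝ) ^ (7 / 4 : ℝ) = r * (r : ℝ) ^ (3 / 4 : ℝ) := by
    rw [show (7 / 4 : ℝ) = 1 + 3 / 4 by norm_num, Real.rpow_add (by positivity), Real.rpow_one]
  have e1 : 1 ≤ (r : ℝ) ^ (7 / 4 : ℝ) := Real.one_le_rpow hr1 (by norm_num)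
  rw [e] at e1 ⊢
  nlinarith

lemma mg_sub2 {J : V → V → ℝ} {h h' : V → ℝ} (hJ : ∀ u v, 0 ≤ J u v) (hh : ∀ v, 0 ≤ h v)
    (hh' : ∀ v, 0 ≤ h' v) (x : V) : mg J (fun v => h v + h' v) x ≤ mg J h x + mg J h' x := by
  have := mg_subadd hJ hh hh' x
  rw [mg_zero] at this
  linarith

/-- Magnetization at the centre of an `ℓ¹` ball with plus boundary condition and a small field. -/
theorem mg_dia : ∃ C : ℝ, 1 ≤ C ∧ ∀ (V : Type) [Fintype V] (pos : V → ℤ × ℤ) (J : V → V → ℝ),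
    Function.Injective pos → (∀ u v, 0 ≤ J u v) → (∀ u v, J u v ≤ Jn pos u v) → ∀ (u : V) (r : ℕ), 1 ≤ r →
    ∀ (g : V → ℝ) (H : ℝ), (∀ v, 0 ≤ g v) → (∀ v, g v ≤ H) →
      mg (rJ (dia pos (pos u) r) J) (rh (dia pos (pos u) r) fun v => g v + kap (dia pos (pos u) r) J v) u ≤
        C * (r : ℝ) ^ (-(1 / 8) : ℝ) + C * H * (r : ℝ) ^ (7 / 4 : ℝ) := by
  obtain ⟨C, hC, hb⟩ := hp_lat
  obtain ⟨C', hC', hb'⟩ := tw_upper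
  refine ⟨4 * C + 14 * C', by linarith, ?_⟩
  intro V _ pos J hinj hJ hJl u r hr g H hg hgH
  set D := dia pos (pos u) r with hD
  have hH : 0 ≤ H := (hg u).trans (hgH u)
  let S : ℤ → ℤ → Set V := fun s t => {w | 1 ≤ (fun p : ℤ × ℤ => s * p.1 + t * p.2 + (r - s * (pos u).1 - t * (pos u).2)) (pos w)}
  have hS : ∀ s t w, w ∈ S s t ↔ 1 ≤ s * (pos w).1 + t * (pos w).2 + (r - s * (pos u).1 - t * (pos u).2) := fun s t w => Iff.rfl
  have hDm : ∀ w, w ∈ D ↔ |(pos w).1 - (pos u).1| + |(pos w).2 - (pos u).2| < r := fun w => Iff.rfl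
  have hDS : ∀ s t, (s = 1 ∨ s = -1) → (t = 1 ∨ t = -1) → ∀ w, w ∈ D → w ∈ S s t := by
    intro s t hs ht w hw
    rw [hDm] at hw; rw [hS]
    have := abs_lt.1 (lt_of_le_of_lt (le_add_of_nonneg_right (abs_nonneg _)) hw)
    have a1 := le_abs_self ((pos w).1 - (pos u).1)
    have a2 := neg_abs_le ((pos w).1 - (pos u).1)
    have b1 := le_abs_self ((pos w).2 - (pos u).2)
    have b2 := neg_abs_le ((pos w).2 - (pos u).2)
    rcases hs with rfl | rfl <;> rcases ht with rfl | rfl <;> omega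
  have hnS : ∀ w, w ∉ D → w ∉ S 1 1 ∨ w ∉ S 1 (-1) ∨ w ∉ S (-1) 1 ∨ w ∉ S (-1) (-1) := by
    intro w hw
    rw [hDm] at hw
    simp only [hS]
    rcases abs_cases ((pos w).1 - (pos u).1) with ⟨a, _⟩ | ⟨a, _⟩ <;>
      rcases abs_cases ((pos w).2 - (pos u).2) with ⟨b, _⟩ | ⟨b, _⟩ <;> omega
  set k : ℤ → ℤ → V → ℝ := fun s t => rh D (kap (S s t) J) with hk
  have k0 : ∀ s t v, 0 ≤ k s t v := fun s t => rh_nonneg fun v => kap_nonneg hJ v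
  have rg0 : ∀ v, 0 ≤ rh D g v := rh_nonneg hg
  have J0 := rJ_nonneg (W := D) hJ
  -- the half planes cover the complement of the ball
  have hkap : ∀ v, kap D J v ≤ kap (S 1 1) J v + kap (S 1 (-1)) J v + kap (S (-1) 1) J v + kap (S (-1) (-1)) J v := by
    intro v
    unfold kap
    rw [← Finset.sum_add_distrib, ← Finset.sum_add_distrib, ← Finset.sum_add_distrib]
    refine Finset.sum_le_sum fun s _ => ?_
    have p : 0 ≤ J v s + J s v := add_nonneg (hJ _ _) (hJ _ _)
    have q : ∀ W : Set V, 0 ≤ if s ∈ W then 0 else J v s + J s v := fun W => by split_ifs <;> linarith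
    have q1 := q (S 1 1); have q2 := q (S 1 (-1)); have q3 := q (S (-1) 1); have q4 := q (S (-1) (-1))
    by_cases hs : s ∈ D
    · rw [if_pos hs]; linarith
    · rw [if_neg hs]
      rcases hnS s hs with h | h | h | h <;> rw [if_neg h] at * <;> linarith
  have step1 : mg (rJ D J) (rh D fun v => g v + kap D J v) u ≤
      mg (rJ D J) (fun v => rh D g v + (k 1 1 v + (k 1 (-1) v + (k (-1) 1 v + k (-1) (-1) v)))) u := by
    refine mg_mono J0 (rh_nonneg fun v => add_nonneg (hg v) (kap_nonneg hJ v)) (fun _ _ => le_rfl) (fun v => ?_) u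
    simp only [hk]
    unfold rh
    split_ifs with h
    · have := hkap v; linarith
    · simp
  have h4 : ∀ s t, (s = 1 ∨ s = -1) → (t = 1 ∨ t = -1) → mg (rJ D J) (k s t) u ≤ C * (r : ℝ) ^ (-(1 / 8) : ℝ) := by
    intro s t hs ht
    have := hb V pos J (fun p : ℤ × ℤ => s * p.1 + t * p.2 + (r - s * (pos u).1 - t * (pos u).2)) hinj hJ hJl
      ⟨s, t, _, hs, ht, fun p => rfl⟩ u (by ring_nf; exact_mod_cast hr)
    refine le_trans ?_ (this.trans (le_of_eq ?_))
    · refine mg_mono J0 (k0 s t) (fun a b => ?_) (fun a => ?_) u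
      · unfold rJ
        by_cases hab : a ∈ D ∧ b ∈ D
        · rw [if_pos hab, if_pos ⟨hDS s t hs ht a hab.1, hDS s t hs ht b hab.2⟩]
        · rw [if_neg hab]; split_ifs
          · exact hJ a b
          · exact le_rfl
      · simp only [hk]; unfold rh
        by_cases ha : a ∈ D
        · rw [if_pos ha, if_pos (hDS s t hs ht a ha)]
        · rw [if_neg ha]; split_ifs
          · exact kap_nonneg hJ a
          · exact le_rfl
    · congr 2
      push_cast; ring
  have hf : mg (rJ D J) (rh D g) u ≤ 14 * C' * H * (r : ℝ) ^ (7 / 4 : ℝ) := by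
    refine (mg_le_sum J0 rg0 u).trans ?_
    have hTn : ∀ w, 0 ≤ tw (rJ D J) (fun _ => 0) u w := fun w => tw_nonneg J0 (fun _ => le_rfl) u w
    have := dia_sum hinj u hr (fun w => tw (rJ D J) (fun _ => 0) u w) hC' (tw_le_one _ _ _ _) (fun w hw => by
      have := hb' V pos (rJ D J) hinj J0 (fun a b => (rJ_le hJ a b).trans (hJl a b)) u w hw.symm
      rwa [d1_comm] at this)
    calc _ ≤ ∑ w, 2 * H * (if w ∈ D then tw (rJ D J) (fun _ => 0) u w else 0) := by
          refine Finset.sum_le_sum fun w _ => ?_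
          unfold rh
          split_ifs
          · exact mul_le_mul_of_nonneg_right (by linarith [hgH w]) (hTn w)
          · simp
      _ ≤ 2 * H * (7 * C' * (r : ℝ) ^ (7 / 4 : ℝ)) := by
          rw [← Finset.mul_sum]; exact mul_le_mul_of_nonneg_left this (by positivity)
      _ = _ := by ring
  have a1 := mg_sub2 J0 rg0 (fun v => add_nonneg (k0 1 1 v) (add_nonneg (k0 1 (-1) v) (add_nonneg (k0 (-1) 1 v) (k0 (-1) (-1) v)))) u
  have a2 := mg_sub2 J0 (k0 1 1) (fun v => add_nonneg (k0 1 (-1) v) (add_nonneg (k0 (-1) 1 v) (k0 (-1) (-1) v))) u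
  have a3 := mg_sub2 J0 (k0 1 (-1)) (fun v => add_nonneg (k0 (-1) 1 v) (k0 (-1) (-1) v)) u
  have a4 := mg_sub2 J0 (k0 (-1) 1) (k0 (-1) (-1)) u
  have b1 := h4 1 1 (by simp) (by simp)
  have b2 := h4 1 (-1) (by simp) (by simp)
  have b3 := h4 (-1) 1 (by simp) (by simp)
  have b4 := h4 (-1) (-1) (by simp) (by simp)
  have p1 : 0 ≤ (r : ℝ) ^ (-(1 / 8) : ℝ) := by positivity
  have p2 : 0 ≤ H * (r : ℝ) ^ (7 / 4 : ℝ) := by positivity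
  have : 0 ≤ C' * (r : ℝ) ^ (-(1 / 8) : ℝ) := by positivity
  have : 0 ≤ C * (H * (r : ℝ) ^ (7 / 4 : ℝ)) := by positivity
  linarith

/-- Magnetization in a weak field `H`, bounded at any scale `r` by pinning outside the ball. -/
theorem mg_small : ∃ C : ℝ, 1 ≤ C ∧ ∀ (V : Type) [Fintype V] (pos : V → ℤ × ℤ) (J : V → V → ℝ),
    Function.Injective pos → (∀ u v, 0 ≤ J u v) → (∀ u v, J u v ≤ Jn pos u v) → ∀ (u : V) (r : ℕ), 1 ≤ r →
    ∀ (g : V → ℝ) (H : ℝ), (∀ v, 0 ≤ g v) → (∀ v, g v ≤ H) →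
      mg J g u ≤ C * (r : ℝ) ^ (-(1 / 8) : ℝ) + C * H * (r : ℝ) ^ (7 / 4 : ℝ) := by
  obtain ⟨C, hC, hb⟩ := mg_dia
  refine ⟨C, hC, fun V _ pos J hinj hJ hJl u r hr g H hg hgH => ?_⟩
  refine le_trans ?_ (hb V pos J hinj hJ hJl u r hr g H hg hgH)
  refine Ex_pin hJ hg (dia pos (pos u) r) (CS_sg u) (fun σ τ H => ?_)
  rw [H u]
  show d1 _ _ < _
  simp [d1]; omega

end diam

/-! ### Lower bound for critical correlations -/

section lower

/-- The range of `pos` contains a square of radius `R` around `p`. -/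
def Full {V : Type} (pos : V → ℤ × ℤ) (p : ℤ × ℤ) (R : ℕ) : Prop :=
  ∀ q : ℤ × ℤ, |q.1 - p.1| ≤ R → |q.2 - p.2| ≤ R → ∃ w, pos w = q

/-- The critical correlation at displacement `(p, q)` is at least `c` in all large domains. -/
def LB (p q : ℤ) (c : ℝ) : Prop := ∃ R : ℕ, ∀ (V : Type) [Fintype V] (pos : V → ℤ × ℤ), Function.Injective pos →
  ∀ u v, pos v = ((pos u).1 + p, (pos u).2 + q) → Full pos (pos u) R → c ≤ tw (Jn pos) (fun _ => 0) u v

/-- Correlations increase under embedding of a lattice domain, shifted by `z`, into a larger one. -/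
lemma tw_latt {V₀ V : Type} [Fintype V₀] [Fintype V] {pos₀ : V₀ → ℤ × ℤ} {pos : V → ℤ × ℤ}
    (h₀ : Function.Injective pos₀) (h : Function.Injective pos) {J₀ : V₀ → V₀ → ℝ} (hJ : ∀ u v, 0 ≤ J₀ u v)
    (hJl : ∀ u v, J₀ u v ≤ Jn pos₀ u v) (z : ℤ × ℤ) (hz : ∀ s, ∃ w, pos w = ((pos₀ s).1 + z.1, (pos₀ s).2 + z.2))
    {u₀ v₀ : V₀} {u v : V} (hu : pos u = ((pos₀ u₀).1 + z.1, (pos₀ u₀).2 + z.2))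
    (hv : pos v = ((pos₀ v₀).1 + z.1, (pos₀ v₀).2 + z.2)) :
    tw J₀ (fun _ => 0) u₀ v₀ ≤ tw (Jn pos) (fun _ => 0) u v := by
  choose ι hι using hz
  have hu' : u = ι u₀ := h (by rw [hu, hι])
  have hv' : v = ι v₀ := h (by rw [hv, hι])
  rw [hu', hv']
  refine tw_embed (fun a b hab => ?_) hJ (fun _ => le_rfl) (Jn_nonneg pos) (fun _ => le_rfl) (fun a b => ?_) (fun _ => le_rfl) _ _
  · have := hι a
    rw [hab, hι b] at this
    simp only [Prod.mk.injEq, add_left_inj] at this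
    exact h₀ (Prod.ext this.1.symm this.2.symm)
  · refine (hJl a b).trans (le_of_eq ?_)
    unfold Jn nnp
    rw [hι a, hι b]
    simp only [add_sub_add_right_eq_sub]
    congr!

lemma LB.swap {p q : ℤ} {c : ℝ} (h : LB p q c) : LB q p c := by
  obtain ⟨R, hR⟩ := h
  refine ⟨R, fun V _ pos hinj u v huv hf => ?_⟩
  have := hR V (fun w => ((pos w).2, (pos w).1)) (fun a b hab => hinj (by
    simp only [Prod.mk.injEq] at hab; exact Prod.ext hab.2 hab.1)) u v (by simp [huv])
    (fun s h1 h2 => by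
      obtain ⟨w, hw⟩ := hf (s.2, s.1) h2 h1
      exact ⟨w, by simp [hw]⟩)
  refine this.trans (le_of_eq ?_)
  congr 1
  funext a b
  unfold Jn nnp
  simp only [add_comm]
  congr!

lemma LB.neg {p q : ℤ} {c : ℝ} (h : LB p q c) : LB (-p) q c := by
  obtain ⟨R, hR⟩ := h
  refine ⟨R, fun V _ pos hinj u v huv hf => ?_⟩
  have := hR V (fun w => (-(pos w).1, (pos w).2)) (fun a b hab => hinj (by
    simp only [Prod.mk.injEq, neg_inj] at hab; exact Prod.ext hab.1 hab.2)) u v (by simp [huv]; ring)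
    (fun s h1 h2 => by
      obtain ⟨w, hw⟩ := hf (-s.1, s.2) (by rw [← abs_neg]; convert h1 using 2; simp only; ring) h2
      exact ⟨w, by simp [hw]⟩)
  refine this.trans (le_of_eq ?_)
  congr 1
  funext a b
  unfold Jn nnp
  simp only
  rw [show -(pos a).1 - -(pos b).1 = -((pos a).1 - (pos b).1) by ring, abs_neg]

/-- Diagonal correlations, from the exact solution. -/
lemma LB_diag (m : ℕ) (hm : 1 ≤ m) : LB m (-m) (dT m / 2) := by
  obtain ⟨p, M, T, hp, hd⟩ := strip_lower m hm
  refine ⟨M + 4 * T + 5, fun V _ pos hinj u v huv hf => hd.trans ?_⟩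
  let pos₀ : Fin (2 * T + 2 * T + 1) × Fin M → ℤ × ℤ := fun s =>
    ((s.2 : ℕ) - p - T + ((s.1 + 1) / 2 : ℕ), ((s.1 / 2 : ℕ) : ℤ) - T - (s.2 : ℕ) + p)
  have e : ∀ s, pos₀ s = (((s.2 : ℕ) : ℤ) - p - T + ((s.1 + 1) / 2 : ℕ), ((s.1 / 2 : ℕ) : ℤ) - T - (s.2 : ℕ) + p) := fun _ => rfl
  refine tw_latt (pos₀ := pos₀) (fun a b hab => ?_) hinj Jst_nonneg (fun a b => ?_) (pos u) (fun s => ?_) ?_ ?_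
  · rw [e, e] at hab
    simp only [Prod.mk.injEq] at hab
    obtain ⟨h1, h2⟩ := hab
    have : (a.1 : ℕ) = b.1 ∧ (a.2 : ℕ) = b.2 := by omega
    exact Prod.ext (Fin.ext this.1) (Fin.ext this.2)
  · refine (Jst_le a b).trans ?_
    split_ifs with h
    · refine le_of_eq ?_
      unfold Jn nnp
      rw [if_pos]
      rw [e, e]
      simp only
      obtain ⟨i, a⟩ := a; obtain ⟨k, b⟩ := b
      simp only at h ⊢
      unfold srel at h
      obtain ⟨X, hX⟩ : ∃ X : ℤ, X = ((a : ℕ) : ℤ) - p - T + (((i : ℕ) + 1) / 2 : ℕ) -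
          (((b : ℕ) : ℤ) - p - T + (((k : ℕ) + 1) / 2 : ℕ)) := ⟨_, rfl⟩
      obtain ⟨Y, hY⟩ : ∃ Y : ℤ, Y = (((i : ℕ) / 2 : ℕ) : ℤ) - T - (a : ℕ) + p -
          ((((k : ℕ) / 2 : ℕ) : ℤ) - T - (b : ℕ) + p) := ⟨_, rfl⟩
      rw [← hX, ← hY]
      have key : (X = 0 ∧ (Y = 1 ∨ Y = -1)) ∨ (Y = 0 ∧ (X = 1 ∨ X = -1)) := by
        rcases h with ⟨h1, h2⟩ | ⟨h1, h2⟩ <;> split_ifs at h2 <;> omega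
      rcases key with ⟨h1, h2 | h2⟩ | ⟨h1, h2 | h2⟩ <;> rw [h1, h2] <;> norm_num
    · exact Jn_nonneg _ _ _
  · have h1 := s.1.2; have h2 := s.2.2
    refine hf _ ?_ ?_ <;>
    · rw [e]; simp only [add_sub_cancel_right]
      rw [abs_le]; constructor <;> push_cast <;> omega
  · rw [e]; ext
    · simp only; omega
    · simp only; omega
  · rw [huv, e]; ext
    · simp only; push_cast; omega
    · simp only; push_cast; omega

/-- Reflection in a column of sites: moving the second spin closer in the horizontal direction increases the
correlation. -/
lemma LB.reflect {p q D : ℤ} {c : ℝ} (h : LB D q c) (h1 : -D < p) (h2 : p < D) (hpar : (D - p) % 2 = 0) : LB p q c := by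
  obtain ⟨R, hR⟩ := h
  obtain ⟨l, hl⟩ : ∃ l : ℕ, p + D = 2 * l := ⟨((p + D) / 2).toNat, by omega⟩
  obtain ⟨N, hN1, hN2⟩ : ∃ N : ℕ, N = R + l + D.toNat + q.natAbs + 5 ∧ True := ⟨_, rfl, trivial⟩
  let A := Fin N × Fin (2 * N + 1)
  let X : (A × Bool) ⊕ Fin (2 * N + 1) → ℤ × ℤ := fun s => match s with
    | Sum.inl ((t, j), true) => ((l : ℤ) - 1 - (t : ℕ), ((j : ℕ) : ℤ) - N)
    | Sum.inl ((t, j), false) => ((l : ℤ) + 1 + (t : ℕ), ((j : ℕ) : ℤ) - N)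
    | Sum.inr j => (l, ((j : ℕ) : ℤ) - N)
  have Xt : ∀ t j, X (Sum.inl ((t, j), true)) = ((l : ℤ) - 1 - (t : ℕ), ((j : ℕ) : ℤ) - N) := fun _ _ => rfl
  have Xf : ∀ t j, X (Sum.inl ((t, j), false)) = ((l : ℤ) + 1 + (t : ℕ), ((j : ℕ) : ℤ) - N) := fun _ _ => rfl
  have Xr : ∀ j, X (Sum.inr j) = ((l : ℤ), ((j : ℕ) : ℤ) - N) := fun _ => rfl
  have Xinj : Function.Injective X := by
    rintro (⟨⟨t, j⟩, _ | _⟩ | j) (⟨⟨t', j'⟩, _ | _⟩ | j') hab <;>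
      simp only [Xt, Xf, Xr, Prod.mk.injEq] at hab
    · have : (t : ℕ) = t' ∧ (j : ℕ) = j' := by omega
      rw [Fin.ext this.1, Fin.ext this.2]
    · omega
    · omega
    · omega
    · have : (t : ℕ) = t' ∧ (j : ℕ) = j' := by omega
      rw [Fin.ext this.1, Fin.ext this.2]
    · omega
    · omega
    · omega
    · have : (j : ℕ) = j' := by omega
      rw [Fin.ext this]
  have Xth : ∀ s, X (thV s) = (2 * l - (X s).1, (X s).2) := by
    rintro (⟨⟨t, j⟩, _ | _⟩ | j)
    · show X (Sum.inl ((t, j), true)) = _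
      rw [Xt, Xf]; ext <;> simp only <;> ring
    · show X (Sum.inl ((t, j), false)) = _
      rw [Xt, Xf]; ext <;> simp only <;> ring
    · show X (Sum.inr j) = _
      rw [Xr]; ext <;> simp only <;> ring
  obtain ⟨u₀, hu₀⟩ : ∃ u₀ : A, X (Sum.inl (u₀, true)) = (0, 0) :=
    ⟨(⟨l - 1, by omega⟩, ⟨N, by omega⟩), by rw [Xt]; ext <;> simp only <;> omega⟩
  obtain ⟨v₀, hv₀⟩ : ∃ v₀ : A, X (Sum.inl (v₀, true)) = (p, q) :=
    ⟨(⟨(l - 1 - p : ℤ).toNat, by omega⟩, ⟨(N + q : ℤ).toNat, by omega⟩), by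
      rw [Xt]; ext <;> simp only <;> omega⟩
  have hv₁ : X (Sum.inl (v₀, false)) = (D, q) := by
    have := Xth (Sum.inl (v₀, true))
    rw [hv₀] at this
    refine this.trans ?_
    ext <;> simp only; omega
  refine ⟨2 * N + l + 5, fun V _ pos hinj u v huv hf => ?_⟩
  have b1 := hR _ X Xinj (Sum.inl (u₀, true)) (Sum.inl (v₀, false)) (by rw [hu₀, hv₁]; simp) (by
    rw [hu₀]
    intro s hs1 hs2
    simp only [sub_zero] at hs1 hs2
    rw [abs_le] at hs1 hs2
    rcases lt_trichotomy s.1 l with h | h | h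
    · exact ⟨Sum.inl ((⟨(l - 1 - s.1).toNat, by omega⟩, ⟨(s.2 + N).toNat, by omega⟩), true), by
        rw [Xt]; ext <;> simp only <;> omega⟩
    · exact ⟨Sum.inr ⟨(s.2 + N).toNat, by omega⟩, by rw [Xr]; ext <;> simp only <;> omega⟩
    · exact ⟨Sum.inl ((⟨(s.1 - l - 1).toNat, by omega⟩, ⟨(s.2 + N).toNat, by omega⟩), false), by
        rw [Xf]; ext <;> simp only <;> omega⟩)
  have b2 := tw_reflect (J := Jn X) (Jn_nonneg X) (fun a b => by
      unfold Jn nnp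
      rw [Xth, Xth]
      simp only
      rw [show 2 * (l : ℤ) - (X a).1 - (2 * l - (X b).1) = -((X a).1 - (X b).1) by ring, abs_neg])
    (fun a a' b => by
      obtain ⟨t, j⟩ := a; obtain ⟨t', j'⟩ := a'
      unfold Jn
      rw [if_neg]
      unfold nnp
      cases b
      · rw [Bool.not_false, Xt, Xf]
        simp only
        intro hh
        have := abs_nonneg (((j : ℕ) : ℤ) - N - (((j' : ℕ) : ℤ) - N))
        have := le_abs_self ((l : ℤ) + 1 + (t : ℕ) - (l - 1 - (t' : ℕ)))
        omega
      · rw [Bool.not_true, Xt, Xf]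
        simp only
        intro hh
        have := abs_nonneg (((j : ℕ) : ℤ) - N - (((j' : ℕ) : ℤ) - N))
        have := neg_abs_le ((l : ℤ) - 1 - (t : ℕ) - (l + 1 + (t' : ℕ)))
        omega) u₀ v₀
  refine (b1.trans b2).trans ?_
  refine tw_latt Xinj hinj (Jn_nonneg X) (fun _ _ => le_rfl) (pos u) (fun s => ?_) (by rw [hu₀]; simp) (by
    rw [hv₀, huv]; simp [add_comm])
  refine hf _ ?_ ?_ <;> simp only [add_sub_cancel_right] <;> rw [abs_le]
  · rcases s with ⟨⟨t, j⟩, _ | _⟩ | j <;> simp only [Xt, Xf, Xr] <;> omega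
  · rcases s with ⟨⟨t, j⟩, _ | _⟩ | j <;> simp only [Xt, Xf, Xr] <;> omega

lemma LB.neg' {p q : ℤ} {c : ℝ} (h : LB p q c) : LB p (-q) c := h.swap.neg.swap

/-- Displacements with even coordinate difference. -/
lemma LB_even (m : ℕ) (hm : 1 ≤ m) {p q : ℤ} (hp : |p| < m) (hq : |q| < m) (h1 : (m - p) % 2 = 0) (h2 : (m - q) % 2 = 0) :
    LB p q (dT m / 2) := by
  rw [abs_lt] at hp hq
  have a := LB_diag m hm
  have b : LB m m (dT m / 2) := by simpa using a.neg'
  have c : LB p m (dT m / 2) := b.reflect hp.1 hp.2 h1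
  exact (c.swap.reflect hq.1 hq.2 h2).swap

/-- Nearest neighbours have a positive correlation. -/
lemma tw_nn : ∃ t : ℝ, 0 < t ∧ t ≤ 1 ∧ ∀ (V : Type) [Fintype V] (pos : V → ℤ × ℤ), Function.Injective pos → ∀ u v,
    nnp (pos u) (pos v) → t ≤ tw (Jn pos) (fun _ => 0) u v := by
  let J₀ : Fin 2 → Fin 2 → ℝ := fun a b => if a = b then 0 else bC / 2
  have hb := bC_pos
  refine ⟨tw J₀ (fun _ => 0) 0 1, ?_, tw_le_one _ _ _ _, ?_⟩
  · unfold tw Ex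
    refine div_pos ?_ (Zf_pos _ _)
    have : ∀ F : (Fin 2 → Bool) → ℝ, ∑ σ, F σ = ∑ p : Bool × Bool, F ![p.1, p.2] := fun F =>
      Fintype.sum_equiv (finTwoArrowEquiv Bool) _ _ (fun σ => by
        congr 1; funext i; fin_cases i <;> rfl)
    refine lt_of_lt_of_eq ?_ (Eq.trans (this _).symm (Finset.sum_congr (by congr!) fun _ _ => rfl))
    rw [Fintype.sum_prod_type]
    simp only [Fintype.sum_bool, Matrix.cons_val_zero, Matrix.cons_val_one, wt, en, Fin.sum_univ_two, J₀, if_true,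
      sg_true, sg_false]
    norm_num
    have : Real.exp (-(bC / 2) + -(bC / 2)) < Real.exp bC := Real.exp_lt_exp.2 (by linarith)
    linarith
  · intro V _ pos hinj u v huv
    have hne : u ≠ v := by rintro rfl; simp [nnp] at huv
    have hi : Function.Injective (fun i : Fin 2 => if i = 0 then u else v) := by
      intro a b hab
      fin_cases a <;> fin_cases b <;> simp [hne, hne.symm] at hab ⊢
    have := tw_embed hi (J := J₀) (h := fun _ => 0) (J' := Jn pos) (h' := fun _ => 0)
      (fun a b => by simp only [J₀]; split_ifs <;> linarith) (fun _ => le_rfl) (Jn_nonneg pos) (fun _ => le_rfl)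
      (fun a b => by
        have h1 : Jn pos u v = bC / 2 := if_pos huv
        have h2 : Jn pos v u = bC / 2 := if_pos (by unfold nnp at *; rwa [abs_sub_comm, abs_sub_comm (pos v).2])
        have := Jn_nonneg pos u u
        have := Jn_nonneg pos v v
        fin_cases a <;> fin_cases b <;> simp [J₀, h1, h2, this] <;> assumption) (fun _ => le_rfl) 0 1
    simpa using this

/-- Lower bound for the critical two-point function in a large domain. -/
theorem tw_lower : ∃ c : ℝ, 0 < c ∧ ∀ d : ℕ, 1 ≤ d → ∃ R : ℕ, ∀ (V : Type) [Fintype V] (pos : V → ℤ × ℤ),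
    Function.Injective pos → ∀ u v, |(pos u).1 - (pos v).1| ≤ d → |(pos u).2 - (pos v).2| ≤ d → u ≠ v →
    Full pos (pos u) R → c * (d : ℝ) ^ (-(1 / 4) : ℝ) ≤ tw (Jn pos) (fun _ => 0) u v := by
  obtain ⟨c₀, hc₀, hd₀⟩ := dT_bound
  obtain ⟨t, ht, ht1, htn⟩ := tw_nn
  obtain ⟨c₁, hc₁⟩ : ∃ c₁ : ℝ, c₁ = c₀ / 2 * (4 : ℝ) ^ (-(1 / 4) : ℝ) := ⟨_, rfl⟩
  have hc₁p : 0 < c₁ := by rw [hc₁]; positivity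
  have hdT : ∀ m d : ℕ, 1 ≤ m → 1 ≤ d → m ≤ 4 * d → c₁ * (d : ℝ) ^ (-(1 / 4) : ℝ) ≤ dT m / 2 := by
    intro m d hm hd hmd
    have := hd₀ m hm
    have e : ((4 * d : ℝ)) ^ (-(1 / 4) : ℝ) ≤ (m : ℝ) ^ (-(1 / 4) : ℝ) :=
      Real.rpow_le_rpow_of_nonpos (by exact_mod_cast hm) (by exact_mod_cast hmd) (by norm_num)
    rw [Real.mul_rpow (by norm_num) (by positivity)] at e
    rw [hc₁]
    nlinarith
  refine ⟨min t (t * c₁), by positivity, fun d hd => ?_⟩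
  have hd1 : (1 : ℝ) ≤ d := by exact_mod_cast hd
  have hdp : (d : ℝ) ^ (-(1 / 4) : ℝ) ≤ 1 := Real.rpow_le_one_of_one_le_of_nonpos hd1 (by norm_num)
  have hd0 : 0 < (d : ℝ) ^ (-(1 / 4) : ℝ) := by positivity
  have main : ∀ p q : ℤ, |p| ≤ d → |q| ≤ d → (p ≠ 0 ∨ q ≠ 0) → LB p q (min t (t * c₁) * (d : ℝ) ^ (-(1 / 4) : ℝ)) := by
    intro p q hp hq hpq
    rw [abs_le] at hp hq
    by_cases hpar : (p + q) % 2 = 0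
    · obtain ⟨m, hm1, hm2, hm3⟩ : ∃ m : ℕ, d < m ∧ m ≤ d + 2 ∧ ((m : ℤ) - p) % 2 = 0 := by
        by_cases h : ((d : ℤ) - p) % 2 = 0
        · exact ⟨d + 2, by omega, by omega, by push_cast; omega⟩
        · exact ⟨d + 1, by omega, by omega, by push_cast; omega⟩
      obtain ⟨R, hR⟩ := LB_even m (by omega) (p := p) (q := q) (by rw [abs_lt]; omega) (by rw [abs_lt]; omega) hm3 (by omega)
      refine ⟨R, fun V _ pos hinj u v huv hf => le_trans ?_ (hR V pos hinj u v huv hf)⟩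
      refine le_trans ?_ (hdT m d (by omega) hd (by omega))
      refine mul_le_mul_of_nonneg_right ((min_le_right _ _).trans ?_) hd0.le
      nlinarith
    · obtain ⟨m, hm1, hm2, hm3⟩ : ∃ m : ℕ, d + 1 < m ∧ m ≤ d + 3 ∧ ((m : ℤ) - q) % 2 = 0 := by
        by_cases h : ((d : ℤ) - q) % 2 = 0
        · exact ⟨d + 2, by omega, by omega, by push_cast; omega⟩
        · exact ⟨d + 3, by omega, by omega, by push_cast; omega⟩
      obtain ⟨R, hR⟩ := LB_even m (by omega) (p := p + 1) (q := q) (by rw [abs_lt]; omega) (by rw [abs_lt]; omega) (by omega) hm3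
      refine ⟨R + d + 1, fun V _ pos hinj u v huv hf => ?_⟩
      obtain ⟨w, hw⟩ := hf ((pos u).1 + (p + 1), (pos u).2 + q) (by rw [abs_le]; push_cast; constructor <;> omega)
        (by rw [abs_le]; push_cast; constructor <;> omega)
      have n1 : t ≤ tw (Jn pos) (fun _ => 0) w v := htn V pos hinj w v (by
        unfold nnp; rw [hw, huv]; simp)
      by_cases hwu : w = u
      · rw [hwu] at n1
        refine le_trans ?_ n1
        have := min_le_left t (t * c₁)
        have : 0 < min t (t * c₁) := by positivity
        nlinarith
      · have n2 := (hdT m d (by omega) hd (by omega)).trans (hR V pos hinj u w hw (fun s h1 h2 =>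
          hf s (h1.trans (by push_cast; omega)) (h2.trans (by push_cast; omega))))
        have G := Ex_mul_ge (J := Jn pos) (h := fun _ => 0) (Jn_nonneg pos) (fun _ => le_rfl) (CS_sg2 u w) (CS_sg2 w v)
        have G' : tw (Jn pos) (fun _ => 0) u w * tw (Jn pos) (fun _ => 0) w v ≤ tw (Jn pos) (fun _ => 0) u v := by
          refine G.trans (le_of_eq ?_)
          unfold tw
          congr 1
          funext σ
          rw [show sg (σ u) * sg (σ w) * (sg (σ w) * sg (σ v)) = sg (σ u) * sg (σ v) * (sg (σ w) * sg (σ w)) by ring,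
            sg_mul_self, mul_one]
        refine le_trans ?_ G'
        calc _ ≤ (t * c₁) * (d : ℝ) ^ (-(1 / 4) : ℝ) := mul_le_mul_of_nonneg_right (min_le_right _ _) hd0.le
          _ = (c₁ * (d : ℝ) ^ (-(1 / 4) : ℝ)) * t := by ring
          _ ≤ _ := mul_le_mul n2 n1 ht.le ((by positivity : (0:ℝ) ≤ c₁ * (d : ℝ) ^ (-(1 / 4) : ℝ)).trans n2)
  have : ∀ s : ℤ × ℤ, ∃ R : ℕ, |s.1| ≤ d → |s.2| ≤ d → (s.1 ≠ 0 ∨ s.2 ≠ 0) → ∀ (V : Type) [Fintype V] (pos : V → ℤ × ℤ), Function.Injective pos →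
      ∀ u v, pos v = ((pos u).1 + s.1, (pos u).2 + s.2) → Full pos (pos u) R →
      min t (t * c₁) * (d : ℝ) ^ (-(1 / 4) : ℝ) ≤ tw (Jn pos) (fun _ => 0) u v := by
    intro s
    by_cases h : |s.1| ≤ d ∧ |s.2| ≤ d ∧ (s.1 ≠ 0 ∨ s.2 ≠ 0)
    · obtain ⟨R, hR⟩ := main s.1 s.2 h.1 h.2.1 h.2.2
      exact ⟨R, fun _ _ _ => hR⟩
    · exact ⟨0, fun h1 h2 h3 => absurd ⟨h1, h2, h3⟩ h⟩
  choose R hR using this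
  refine ⟨∑ s ∈ Finset.Icc (-(d : ℤ)) d ×ˢ Finset.Icc (-(d : ℤ)) d, R s, fun V _ pos hinj u v h1 h2 hne hf => ?_⟩
  rw [abs_sub_comm] at h1 h2
  refine hR ((pos v).1 - (pos u).1, (pos v).2 - (pos u).2) h1 h2 ?_ V pos hinj u v (by ext <;> simp) ?_
  · by_contra hc
    push Not at hc
    exact hne (hinj (Prod.ext (by have := hc.1; simp only at this; omega) (by have := hc.2; simp only at this; omega)))
  · have hle : R ((pos v).1 - (pos u).1, (pos v).2 - (pos u).2) ≤ ∑ s ∈ Finset.Icc (-(d : ℤ)) d ×ˢ Finset.Icc (-(d : ℤ)) d, R s :=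
      Finset.single_le_sum (f := R) (fun _ _ => Nat.zero_le _) (by
        rw [Finset.mem_product, Finset.mem_Icc, Finset.mem_Icc]; exact ⟨abs_le.1 h1, abs_le.1 h2⟩)
    exact fun s a b => hf s (a.trans (by exact_mod_cast hle)) (b.trans (by exact_mod_cast hle))

end lower

/-! ### Lattice paths and loops around a point -/

section planar

/-- A lattice path inside `S`. -/
def Pth (S : Set (ℤ × ℤ)) : ℤ × ℤ → ℤ × ℤ → Prop :=
  Relation.ReflTransGen fun a b => nnp a b ∧ a ∈ S ∧ b ∈ S

lemma Pth.mono {S T : Set (ℤ × ℤ)} (h : ∀ v ∈ S, v ∈ T) {a b} (p : Pth S a b) : Pth T a b := by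
  induction p with
  | refl => exact .refl
  | tail _ q ih => exact ih.tail ⟨q.1, h _ q.2.1, h _ q.2.2⟩

lemma Pth.symm {S : Set (ℤ × ℤ)} {a b} (p : Pth S a b) : Pth S b a := by
  induction p with
  | refl => exact .refl
  | @tail b c _ q ih =>
    refine Relation.ReflTransGen.head ⟨?_, q.2.2, q.2.1⟩ ih
    have := q.1
    unfold nnp at *
    rwa [abs_sub_comm, abs_sub_comm c.2]

/-- For a path from `s` to `t` in `S`: the signed number of horizontal steps from column `v.1` to
column `v.1 + 1` strictly above `v`, with its variation in `v`. -/
lemma index_exists {S : Set (ℤ × ℤ)} {s t : ℤ × ℤ} (hp : Pth S s t) : ∃ I : ℤ × ℤ → ℤ,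
    (∀ x y, (x, y + 1) ∉ S → I (x, y + 1) = I (x, y)) ∧
    (∀ x y, (x + 1, y) ∉ S → I (x, y) - I (x + 1, y) =
      (if t.1 = x + 1 ∧ y < t.2 then 1 else 0) - (if s.1 = x + 1 ∧ y < s.2 then 1 else 0)) ∧
    (∀ x y, (∀ w ∈ S, w.1 = x → w.2 ≤ y) → I (x, y) = 0) ∧
    (∀ x y, (∀ w ∈ S, w.1 = x → y < w.2) →
      I (x, y) = (if s.1 ≤ x then 1 else 0) - (if t.1 ≤ x then 1 else 0)) := by
  induction hp with
  | refl => exact ⟨fun _ => 0, fun _ _ _ => rfl, fun _ _ _ => by simp, fun _ _ _ => rfl, fun _ _ _ => by simp⟩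
  | @tail b c _ hbc ih =>
    obtain ⟨I, i1, i2, i3, i4⟩ := ih
    obtain ⟨b1, b2⟩ := b
    obtain ⟨c1, c2⟩ := c
    obtain ⟨hn, hb, hc⟩ := hbc
    have hn' : (b1 = c1 ∧ (b2 = c2 + 1 ∨ c2 = b2 + 1)) ∨ (b2 = c2 ∧ (b1 = c1 + 1 ∨ c1 = b1 + 1)) := by
      unfold nnp at hn; simp only at hn
      rcases abs_cases (b1 - c1) with h | h <;> rcases abs_cases (b2 - c2) with h' | h' <;> omega
    refine ⟨fun v => I v + (if b2 = c2 ∧ v.2 < b2 then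
      (if b1 = v.1 ∧ c1 = v.1 + 1 then 1 else if c1 = v.1 ∧ b1 = v.1 + 1 then -1 else 0) else 0), ?_, ?_, ?_, ?_⟩
    · intro x y h
      have h1 : ¬ (b1 = x ∧ b2 = y + 1) := by rintro ⟨rfl, rfl⟩; exact h hb
      have h2 : ¬ (c1 = x ∧ c2 = y + 1) := by rintro ⟨rfl, rfl⟩; exact h hc
      have := i1 x y h
      simp only
      split_ifs <;> omega
    · intro x y h
      have h1 : ¬ (b1 = x + 1 ∧ b2 = y) := by rintro ⟨rfl, rfl⟩; exact h hb
      have h2 : ¬ (c1 = x + 1 ∧ c2 = y) := by rintro ⟨rfl, rfl⟩; exact h hc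
      have := i2 x y h
      simp only at this ⊢
      split_ifs at this ⊢ <;> omega
    · intro x y h
      have h1 := h _ hb
      have h2 := h _ hc
      have := i3 x y h
      simp only at h1 h2 ⊢
      split_ifs <;> omega
    · intro x y h
      have h1 := h _ hb
      have h2 := h _ hc
      have := i4 x y h
      simp only at h1 h2 this ⊢
      split_ifs at this ⊢ <;> omega

/-- A connected set `K` containing `x` and `y` meets every loop around `x` inside a square that
does not contain `y`. The loop is given as a path `S` above `x` and a path `T` below. -/
lemma no_loop {K S T : Set (ℤ × ℤ)} {x y s t : ℤ × ℤ} (hK : Pth K x y) (hSK : ∀ v ∈ S, v ∉ K) (hTK : ∀ v ∈ T, v ∉ K)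
    (hS : Pth S s t) (hT : Pth T t s) (R : ℤ) (hs : s.1 ≤ x.1) (ht : x.1 < t.1)
    (hSx : ∀ w ∈ S, w.1 = x.1 → x.2 < w.2) (hTx : ∀ w ∈ T, w.1 = x.1 → w.2 ≤ x.2)
    (hSR : ∀ w ∈ S, |w.1 - x.1| ≤ R ∧ |w.2 - x.2| ≤ R) (hTR : ∀ w ∈ T, |w.1 - x.1| ≤ R ∧ |w.2 - x.2| ≤ R)
    (hy : R < |y.1 - x.1| ∨ R < |y.2 - x.2|) : False := by
  obtain ⟨I, i1, i2, i3, i4⟩ := index_exists hS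
  obtain ⟨I', j1, j2, j3, j4⟩ := index_exists hT
  have Kc : ∀ v ∈ K, v ∉ S ∧ v ∉ T := fun v hv => ⟨fun h => hSK v h hv, fun h => hTK v h hv⟩
  have step : ∀ a b, nnp a b → a ∈ K → b ∈ K → I a + I' a = I b + I' b := by
    rintro ⟨a1, a2⟩ ⟨b1, b2⟩ hn ha hb
    have hn' : (b1 = a1 ∧ (a2 = b2 + 1 ∨ b2 = a2 + 1)) ∨ (b2 = a2 ∧ (a1 = b1 + 1 ∨ b1 = a1 + 1)) := by
      unfold nnp at hn; simp only at hn
      rcases abs_cases (a1 - b1) with h | h <;> rcases abs_cases (a2 - b2) with h' | h' <;> omega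
    rcases hn' with ⟨rfl, rfl | rfl⟩ | ⟨rfl, rfl | rfl⟩
    · have := i1 _ _ (Kc _ ha).1; have := j1 _ _ (Kc _ ha).2; omega
    · have := i1 _ _ (Kc _ hb).1; have := j1 _ _ (Kc _ hb).2; omega
    · have := i2 _ _ (Kc _ ha).1; have := j2 _ _ (Kc _ ha).2; omega
    · have := i2 _ _ (Kc _ hb).1; have := j2 _ _ (Kc _ hb).2; omega
  have hc : ∀ z, Pth K x z → I x + I' x = I z + I' z := by
    intro z hz
    induction hz with
    | refl => rfl
    | tail _ h ih => exact ih.trans (step _ _ h.1 h.2.1 h.2.2)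
  replace hc := hc y hK
  have hx1 := i4 x.1 x.2 hSx
  have hx2 := j3 x.1 x.2 hTx
  rw [if_pos hs, if_neg (by omega)] at hx1
  have hy0 : I y + I' y = 0 := by
    by_cases h : ∀ w, w ∈ S ∨ w ∈ T → w.1 = y.1 → w.2 ≤ y.2
    · have := i3 y.1 y.2 (fun w hw => h w (Or.inl hw))
      have := j3 y.1 y.2 (fun w hw => h w (Or.inr hw))
      simp only [Prod.mk.eta] at *
      omega
    · have hb : ∀ w, w ∈ S ∨ w ∈ T → w.1 = y.1 → y.2 < w.2 := by
        push Not at h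
        obtain ⟨w, hw, e1, e2⟩ := h
        have hw' : |w.1 - x.1| ≤ R ∧ |w.2 - x.2| ≤ R := hw.elim (hSR w) (hTR w)
        intro w' hw1 e3
        have hw1' : |w'.1 - x.1| ≤ R ∧ |w'.2 - x.2| ≤ R := hw1.elim (hSR w') (hTR w')
        rw [abs_le, abs_le] at hw' hw1'
        rw [lt_abs, lt_abs] at hy
        omega
      have a1 := i4 y.1 y.2 (fun w hw => hb w (Or.inl hw))
      have a2 := j4 y.1 y.2 (fun w hw => hb w (Or.inr hw))
      simp only [Prod.mk.eta] at a1 a2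
      omega
  simp only [Prod.mk.eta] at hx1 hx2
  omega

end planar

/-! ### Rings of blocks -/

section ring

/-- The square of radius `2 * r` around `p`. -/
def Bx (p : ℤ × ℤ) (r : ℕ) : Set (ℤ × ℤ) := {v | |v.1 - p.1| ≤ 2 * r ∧ |v.2 - p.2| ≤ 2 * r}

/-- The `d × d` block with lower left corner `p`. -/
def Qb (p : ℤ × ℤ) (d : ℕ) : Finset (ℤ × ℤ) := Finset.Ico p.1 (p.1 + d) ×ˢ Finset.Ico p.2 (p.2 + d)

/-- Sites of the square around `p` outside `K`. -/
def BK (K : Set (ℤ × ℤ)) (p : ℤ × ℤ) (r : ℕ) : Set (ℤ × ℤ) := {v | v ∈ Bx p r ∧ v ∉ K}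

/-- The part of the block `Qb p d` joined to `v` inside the square around `p` and outside `K`. -/
def Qc (K : Set (ℤ × ℤ)) (p : ℤ × ℤ) (r d : ℕ) (v : ℤ × ℤ) : Finset (ℤ × ℤ) :=
  (Qb p d).filter fun w => Pth (BK K p r) v w

lemma mem_Qb {p v : ℤ × ℤ} {d : ℕ} : v ∈ Qb p d ↔ (p.1 ≤ v.1 ∧ v.1 < p.1 + d) ∧ (p.2 ≤ v.2 ∧ v.2 < p.2 + d) := by
  unfold Qb
  rw [Finset.mem_product, Finset.mem_Ico, Finset.mem_Ico]

/-- Two neighbouring blocks with dominating classes: the classes intersect. -/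
lemma Qc_link {K : Set (ℤ × ℤ)} {p p' v v' : ℤ × ℤ} {r d : ℕ} (hd : 2 ≤ d) (hpp : |p.1 - p'.1| + |p.2 - p'.2| ≤ 1)
    (h : 7 * d ^ 2 < 8 * (Qc K p r d v).card) (h' : 7 * d ^ 2 < 8 * (Qc K p' r d v').card) :
    ∃ w, Pth (BK K p r) v w ∧ Pth (BK K p' r) v' w := by
  obtain ⟨A, hA⟩ : ∃ A : Finset (ℤ × ℤ), A = Finset.Ico (min p.1 p'.1) (max p.1 p'.1 + d) ×ˢ
    Finset.Ico (min p.2 p'.2) (max p.2 p'.2 + d) := ⟨_, rfl⟩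
  have sub : Qc K p r d v ⊆ A := fun w hw => by
    have := mem_Qb.1 (Finset.mem_filter.1 hw).1
    rw [hA, Finset.mem_product, Finset.mem_Ico, Finset.mem_Ico]; omega
  have sub' : Qc K p' r d v' ⊆ A := fun w hw => by
    have := mem_Qb.1 (Finset.mem_filter.1 hw).1
    rw [hA, Finset.mem_product, Finset.mem_Ico, Finset.mem_Ico]; omega
  have hc : A.card ≤ d * (d + 1) := by
    rw [hA, Finset.card_product, Int.card_Ico, Int.card_Ico]
    have : ((max p.1 p'.1 + d - min p.1 p'.1).toNat = d ∧ (max p.2 p'.2 + d - min p.2 p'.2).toNat ≤ d + 1) ∨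
        ((max p.1 p'.1 + d - min p.1 p'.1).toNat ≤ d + 1 ∧ (max p.2 p'.2 + d - min p.2 p'.2).toNat = d) := by
      rcases abs_cases (p.1 - p'.1) with h1 | h1 <;> rcases abs_cases (p.2 - p'.2) with h2 | h2 <;> omega
    rcases this with ⟨h1, h2⟩ | ⟨h1, h2⟩
    · rw [h1]; exact Nat.mul_le_mul_left _ h2
    · rw [h2, mul_comm d]; exact Nat.mul_le_mul_right _ h1
  obtain ⟨w, hw⟩ := Finset.inter_nonempty_of_card_lt_card_add_card sub sub' (by nlinarith)
  rw [Finset.mem_inter] at hw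
  exact ⟨w, (Finset.mem_filter.1 hw.1).2, (Finset.mem_filter.1 hw.2).2⟩

lemma Pth.trans {S : Set (ℤ × ℤ)} {a b c} (p : Pth S a b) (q : Pth S b c) : Pth S a c := Relation.ReflTransGen.trans p q

/-- On each square ring around `x` separating it from `y` there is a block without dominating class: otherwise the
dominating classes of consecutive blocks link up to a loop avoiding `K`. -/
theorem ring_block {K : Set (ℤ × ℤ)} {x y : ℤ × ℤ} (hK : Pth K x y) {R d r : ℕ} (hd : 2 ≤ d) (hdr : d ≤ r)
    (hR : 2 * r + 1 < R) (hy : ((R + 2 * r : ℕ) : ℤ) < |y.1 - x.1| ∨ ((R + 2 * r : ℕ) : ℤ) < |y.2 - x.2|) :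
    ∃ p : ℤ × ℤ, (|p.1 - x.1| ≤ R ∧ |p.2 - x.2| ≤ R) ∧ (|p.1 - x.1| = R ∨ |p.2 - x.2| = R) ∧
      ∀ v ∈ Qb p d, 8 * (Qc K p r d v).card ≤ 7 * d ^ 2 := by
  by_contra hcon
  push Not at hcon
  have h2 : ∀ p : ℤ × ℤ, ∃ v, (|p.1 - x.1| ≤ R ∧ |p.2 - x.2| ≤ R) → (|p.1 - x.1| = R ∨ |p.2 - x.2| = R) →
      v ∈ Qb p d ∧ 7 * d ^ 2 < 8 * (Qc K p r d v).card := by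
    intro p
    by_cases h : (|p.1 - x.1| ≤ R ∧ |p.2 - x.2| ≤ R) ∧ (|p.1 - x.1| = R ∨ |p.2 - x.2| = R)
    · obtain ⟨v, hv⟩ := hcon p h.1 h.2; exact ⟨v, fun _ _ => hv⟩
    · exact ⟨0, fun a b => absurd ⟨a, b⟩ h⟩
  choose v hv using h2
  -- the path along one half of the ring
  have half : ∀ s : ℤ, s = 1 ∨ s = -1 → ∃ S : Set (ℤ × ℤ), (∀ w ∈ S, w ∉ K) ∧
      Pth S (v (x.1 - R, x.2)) (v (x.1 + R, x.2)) ∧ (∀ w ∈ S, w.1 = x.1 → 0 < s * (w.2 - x.2)) ∧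
      (∀ w ∈ S, |w.1 - x.1| ≤ ((R + 2 * r : ℕ) : ℤ) ∧ |w.2 - x.2| ≤ ((R + 2 * r : ℕ) : ℤ)) := by
    intro s hs
    obtain ⟨f, hf⟩ : ∃ f : ℕ → ℤ × ℤ, ∀ i, f i = (x.1 + max (-(R : ℤ)) (min R (i - 2 * R)), x.2 + s * min (min (i : ℤ) R) (4 * R - i)) :=
      ⟨_, fun _ => rfl⟩
    have f1 : ∀ i, i ≤ 4 * R → (|(f i).1 - x.1| ≤ R ∧ |(f i).2 - x.2| ≤ R) := by
      intro i hi; rw [hf]; simp only; rw [abs_le, abs_le]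
      rcases hs with rfl | rfl <;> omega
    have f2 : ∀ i, i ≤ 4 * R → (|(f i).1 - x.1| = R ∨ |(f i).2 - x.2| = R) := by
      intro i hi; rw [hf]; simp only
      rcases hs with rfl | rfl
      · rcases abs_cases (x.1 + max (-(R:ℤ)) (min R (i - 2 * R)) - x.1) with h | h <;>
          rcases abs_cases (x.2 + 1 * min (min (i : ℤ) R) (4 * R - i) - x.2) with h' | h' <;> omega
      · rcases abs_cases (x.1 + max (-(R:ℤ)) (min R (i - 2 * R)) - x.1) with h | h <;>
          rcases abs_cases (x.2 + -1 * min (min (i : ℤ) R) (4 * R - i) - x.2) with h' | h' <;> omega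
    have f3 : ∀ i, i + 1 ≤ 4 * R → |(f i).1 - (f (i + 1)).1| + |(f i).2 - (f (i + 1)).2| ≤ 1 := by
      intro i hi; rw [hf, hf]; simp only; push_cast
      obtain ⟨X, hX⟩ : ∃ X : ℤ, X = x.1 + max (-(R : ℤ)) (min R (i - 2 * R)) - (x.1 + max (-(R : ℤ)) (min R (i + 1 - 2 * R))) := ⟨_, rfl⟩
      obtain ⟨Y, hY⟩ : ∃ Y : ℤ, Y = x.2 + s * min (min (i : ℤ) R) (4 * R - i) - (x.2 + s * min (min ((i : ℤ) + 1) R) (4 * R - (i + 1))) := ⟨_, rfl⟩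
      rw [← hX, ← hY]
      have : (X = 0 ∧ (Y = 0 ∨ Y = 1 ∨ Y = -1)) ∨ (Y = 0 ∧ (X = 0 ∨ X = 1 ∨ X = -1)) := by
        rcases hs with rfl | rfl <;> omega
      rcases this with ⟨h, h' | h' | h'⟩ | ⟨h, h' | h' | h'⟩ <;> rw [h, h'] <;> norm_num
    refine ⟨{w | ∃ i, i ≤ 4 * R ∧ w ∈ BK K (f i) r}, ?_, ?_, ?_, ?_⟩
    · rintro w ⟨i, _, h⟩; exact h.2
    · have : ∀ n, n ≤ 4 * R → Pth {w | ∃ i, i ≤ 4 * R ∧ w ∈ BK K (f i) r} (v (f 0)) (v (f n)) := by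
        intro n
        induction n with
        | zero => intro _; exact .refl
        | succ n ih =>
          intro hn
          obtain ⟨w, w1, w2⟩ := Qc_link hd (f3 n hn) (hv _ (f1 n (by omega)) (f2 n (by omega))).2
            (hv _ (f1 _ hn) (f2 _ hn)).2
          have g1 : Pth {w | ∃ i, i ≤ 4 * R ∧ w ∈ BK K (f i) r} (v (f n)) w :=
            w1.mono fun z hz => by exact ⟨n, by omega, hz⟩
          have g2 : Pth {w | ∃ i, i ≤ 4 * R ∧ w ∈ BK K (f i) r} (v (f (n + 1))) w :=
            w2.mono fun z hz => by exact ⟨n + 1, hn, hz⟩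
          exact (ih (by omega)).trans (g1.trans g2.symm)
      have h := this (4 * R) le_rfl
      rw [hf, hf] at h
      convert h using 3
      · push_cast; omega
      · push_cast; rcases hs with rfl | rfl <;> omega
      · push_cast; omega
      · push_cast; rcases hs with rfl | rfl <;> omega
    · rintro w ⟨i, hi, ⟨h, h'⟩, _⟩ hx
      rw [hf] at h h'
      rw [abs_le] at h h'
      simp only at h h'
      rcases hs with rfl | rfl <;> omega
    · rintro w ⟨i, hi, ⟨h, h'⟩, _⟩
      have := f1 i hi
      rw [abs_le, abs_le] at *
      push_cast
      omega
  obtain ⟨S, S1, S2, S3, S4⟩ := half 1 (Or.inl rfl)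
  obtain ⟨T, T1, T2, T3, T4⟩ := half (-1) (Or.inr rfl)
  have e1 := mem_Qb.1 (hv (x.1 - R, x.2) (by simp) (by simp)).1
  have e2 := mem_Qb.1 (hv (x.1 + R, x.2) (by simp) (by simp)).1
  simp only at e1 e2
  exact no_loop hK S1 T1 S2 T2.symm (R + 2 * r : ℕ) (by omega) (by omega) (fun w hw h => by have := S3 w hw h; omega)
    (fun w hw h => by have := T3 w hw h; omega) S4 T4 hy

end ring

/-! ### Mixed second differences -/

section mixed

/-- If no class of an equivalence relation dominates `Q`, then `Q` has two large parts which are unions of classes. -/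
lemma split_classes {α : Type*} (Q : Finset α) (rel : α → α → Prop) (hr : ∀ a, rel a a) (hs : ∀ a b, rel a b → rel b a)
    (ht : ∀ a b c, rel a b → rel b c → rel a c) (hQ : 0 < Q.card)
    (hc : ∀ v ∈ Q, 8 * (Q.filter fun w => rel v w).card ≤ 7 * Q.card) :
    ∃ X Y : Finset α, X ⊆ Q ∧ Y ⊆ Q ∧ Q.card ≤ 16 * X.card ∧ Q.card ≤ 16 * Y.card ∧ Disjoint X Y ∧
      ∀ u ∈ X, ∀ v ∈ Y, ¬ rel u v := by
  obtain ⟨P, hP⟩ : ∃ P : Finset α → Prop, ∀ X, P X ↔ (∀ u ∈ X, ∀ v ∈ Q, rel u v → v ∈ X) ∧ Q.card ≤ 16 * X.card :=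
    ⟨_, fun _ => Iff.rfl⟩
  have hne : (Q.powerset.filter fun X => P X).Nonempty :=
    ⟨Q, by rw [Finset.mem_filter, Finset.mem_powerset, hP]; exact ⟨subset_rfl, fun u _ v hv _ => hv, by omega⟩⟩
  obtain ⟨X, hX, hmin⟩ := Finset.exists_min_image _ Finset.card hne
  rw [Finset.mem_filter, Finset.mem_powerset, hP] at hX
  obtain ⟨hXQ, hsat, hXc⟩ := hX
  refine ⟨X, Q \ X, hXQ, Finset.sdiff_subset, hXc, ?_, Finset.disjoint_sdiff, fun u hu v hv h => ?_⟩
  · have : 0 < X.card := by omega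
    obtain ⟨v, hv⟩ := Finset.card_pos.1 this
    have h1 := hc v (hXQ hv)
    have h2 : 16 * (X \ (Q.filter fun w => rel v w)).card < Q.card := by
      by_contra hcon
      have := hmin (X \ (Q.filter fun w => rel v w)) (by
        rw [Finset.mem_filter, Finset.mem_powerset, hP]
        refine ⟨Finset.sdiff_subset.trans hXQ, fun a ha b hb hab => ?_, by omega⟩
        rw [Finset.mem_sdiff, Finset.mem_filter] at ha ⊢
        refine ⟨hsat a ha.1 b hb hab, fun h => ha.2 ⟨hXQ ha.1, ht _ _ _ h.2 (hs _ _ hab)⟩⟩)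
      have hlt : (X \ (Q.filter fun w => rel v w)).card < X.card :=
        Finset.card_lt_card ⟨Finset.sdiff_subset, fun h => by
          have := h hv
          rw [Finset.mem_sdiff, Finset.mem_filter] at this
          exact this.2 ⟨hXQ hv, hr v⟩⟩
      omega
    have h3 := Finset.le_card_sdiff (Q.filter fun w => rel v w) X
    have h4 := Finset.le_card_sdiff X Q
    omega
  · rw [Finset.mem_sdiff] at hv
    exact hv.2 (hsat u hu v hv.1 h)

/-- Summation of mixed second differences of a set function. -/
lemma mixed_sum {α : Type*} (F : Finset α → ℝ) {X Y : Finset α} (hXY : Disjoint X Y) {δ : ℝ}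
    (H : ∀ A ⊆ X ∪ Y, ∀ u ∈ X, ∀ v ∈ Y, u ∉ A → v ∉ A → δ ≤ F (insert u (insert v A)) - F (insert u A) - F (insert v A) + F A) :
    δ * (X.card * Y.card) ≤ F (X ∪ Y) - F X - F Y + F ∅ := by
  have row : ∀ u ∈ X, ∀ B ⊆ X, u ∉ B → ∀ Y' ⊆ Y,
      δ * Y'.card ≤ F (insert u (B ∪ Y')) - F (insert u B) - F (B ∪ Y') + F B := by
    intro u hu B hB huB Y'
    induction Y' using Finset.induction_on with
    | empty => intro _; simp
    | insert v Y' hv ih =>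
      intro hY
      have hvY := hY (Finset.mem_insert_self v Y')
      have hY' : Y' ⊆ Y := (Finset.subset_insert v Y').trans hY
      have h1 := ih hY'
      have h2 := H (B ∪ Y') (Finset.union_subset_union hB hY') u hu v hvY
        (fun h => (Finset.mem_union.1 h).elim huB fun h => Finset.disjoint_left.1 hXY hu (hY' h))
        (fun h => (Finset.mem_union.1 h).elim (fun h => Finset.disjoint_left.1 hXY (hB h) hvY) hv)
      rw [Finset.card_insert_of_notMem hv, Finset.union_insert]
      push_cast
      linarith
  have all : ∀ X' ⊆ X, δ * (X'.card * Y.card) ≤ F (X' ∪ Y) - F X' - F Y + F ∅ := by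
    intro X'
    induction X' using Finset.induction_on with
    | empty => intro _; simp
    | insert u X' hu ih =>
      intro hX
      have h1 := ih ((Finset.subset_insert u X').trans hX)
      have h2 := row u (hX (Finset.mem_insert_self u X')) X' ((Finset.subset_insert u X').trans hX) hu Y subset_rfl
      rw [Finset.card_insert_of_notMem hu, Finset.insert_union]
      push_cast
      linarith
  exact all X subset_rfl

variable {V : Type} [Fintype V]

/-- Change of the magnetization at `v` caused by a field at `u`. -/
lemma mg_bump_sub (J : V → V → ℝ) (h : V → ℝ) (u v : V) (c : ℝ) :
    (mg J (fun w => h w + bump u c w) v - mg J h v) * (Real.cosh c + Real.sinh c * mg J h u) = Real.sinh c * Uf J h u v := by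
  rw [sub_mul, mg_bump, Uf, tw_comm J h v u]
  ring

/-- The elementary estimate behind `mix_bounds`, comparing `D = log (a / b)` with `c ^ 2 * U`. -/
lemma mix_real {c s e a b m m' U D : ℝ} (hc : 0 ≤ c) (hs : c ≤ s) (hs3 : s ≤ 4 * c) (b0 : 1 ≤ e) (b1 : e ≤ 3) (a0 : 1 ≤ b)
    (a1 : 1 ≤ a) (a2 : a ≤ 3) (hab : a - b = s * (m' - m)) (hd : (m' - m) * e = s * U) (hU : 0 ≤ U)
    (hD' : D = Real.log (a / b)) : c ^ 2 * U ≤ 9 * D ∧ D ≤ 16 * c ^ 2 * U := by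
  have hs0 : 0 ≤ s := hc.trans hs
  have hsU : 0 ≤ s * U := mul_nonneg hs0 hU
  obtain ⟨x, hx⟩ : ∃ x, x = m' - m := ⟨_, rfl⟩
  rw [← hx] at hab hd
  have hmm : 0 ≤ x := by
    by_contra hcon; push Not at hcon
    have : x * e < 0 := mul_neg_of_neg_of_pos hcon (by linarith)
    linarith
  have h1 : x ≤ s * U := by nlinarith
  have h1' : s * U ≤ 3 * x := by nlinarith
  have hab' : a - b ≤ 16 * c ^ 2 * U := by
    rw [hab]
    calc s * x ≤ s * (s * U) := mul_le_mul_of_nonneg_left h1 hs0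
      _ = s ^ 2 * U := by ring
      _ ≤ (4 * c) ^ 2 * U := by gcongr
      _ = _ := by ring
  have hab0 : 0 ≤ a - b := by rw [hab]; exact mul_nonneg hs0 hmm
  constructor
  · have h2 : s * (s * U) ≤ 3 * (a - b) := by
      rw [hab]
      calc s * (s * U) ≤ s * (3 * x) := mul_le_mul_of_nonneg_left h1' hs0
        _ = _ := by ring
    have h3 : c ^ 2 * U ≤ s * (s * U) := by
      calc c ^ 2 * U ≤ s ^ 2 * U := by gcongr
        _ = _ := by ring
    have h4 := Real.one_sub_inv_le_log_of_pos (show 0 < a / b by positivity)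
    rw [← hD', inv_div] at h4
    have h5 : a - b ≤ 3 * D := by
      have : (1 - b / a) * a = a - b := by field_simp
      have : 0 ≤ 1 - b / a := by rw [sub_nonneg, div_le_one (by linarith)]; linarith
      nlinarith
    linarith
  · have h4 := Real.log_le_sub_one_of_pos (show 0 < a / b by positivity)
    rw [← hD'] at h4
    have : (a / b - 1) * b = a - b := by field_simp
    have h5 : 0 ≤ a / b - 1 := by
      rw [sub_nonneg, le_div_iff₀ (by linarith)]
      linarith
    nlinarith

/-- Mixed second difference of `log Z`. -/
lemma mix_bounds {J : V → V → ℝ} (hJ : ∀ u v, 0 ≤ J u v) {h : V → ℝ} (hh : ∀ v, 0 ≤ h v) (u v : V) {c : ℝ} (hc : 0 ≤ c) (hc1 : c ≤ 1)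
    {D : ℝ} (hD : D = Real.log (Zf J fun w => h w + bump u c w + bump v c w) - Real.log (Zf J fun w => h w + bump u c w) -
      Real.log (Zf J fun w => h w + bump v c w) + Real.log (Zf J h)) :
    c ^ 2 * Uf J h u v ≤ 9 * D ∧ D ≤ 16 * c ^ 2 * Uf J h u v := by
  obtain ⟨m, hm⟩ : ∃ m, m = mg J h v := ⟨_, rfl⟩
  obtain ⟨m', hm'⟩ : ∃ m', m' = mg J (fun w => h w + bump u c w) v := ⟨_, rfl⟩
  have z1 := Zf_bump J (fun w => h w + bump u c w) v c
  have z2 := Zf_bump J h v c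
  have hs := Real.self_le_sinh_iff.2 hc
  have hC := Real.one_le_cosh c
  have hhb : ∀ w, 0 ≤ h w + bump u c w := fun w => add_nonneg (hh w) (bump_nonneg hc w)
  have m0 : 0 ≤ m := hm ▸ mg_nonneg hJ hh v
  have m1 : 0 ≤ m' := hm' ▸ mg_nonneg hJ hhb v
  have m2 : m' ≤ 1 := hm' ▸ mg_le_one _ _ _
  have u0 := mg_nonneg hJ hh u
  have u1 := mg_le_one J h u
  have hU : 0 ≤ Uf J h u v := sub_nonneg.2 (Ex_mul_ge hJ hh (CS_sg u) (CS_sg v))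
  have hd := mg_bump_sub J h u v c
  rw [← hm, ← hm'] at hd
  rw [← hm'] at z1; rw [← hm] at z2
  have hE : Real.cosh c + Real.sinh c ≤ 3 := by
    rw [Real.cosh_add_sinh]
    exact (Real.exp_le_exp.2 hc1).trans Real.exp_one_lt_three.le
  have a0 : 1 ≤ Real.cosh c + Real.sinh c * m := by nlinarith
  have a1 : 1 ≤ Real.cosh c + Real.sinh c * m' := by nlinarith
  have a2 : Real.cosh c + Real.sinh c * m' ≤ 3 := by nlinarith
  have b0 : 1 ≤ Real.cosh c + Real.sinh c * mg J h u := by nlinarith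
  have b1 : Real.cosh c + Real.sinh c * mg J h u ≤ 3 := by nlinarith
  have hD' : D = Real.log ((Real.cosh c + Real.sinh c * m') / (Real.cosh c + Real.sinh c * m)) := by
    rw [hD, z1, z2, Real.log_mul (by positivity) (Zf_pos _ _).ne', Real.log_mul (by positivity) (Zf_pos _ _).ne',
      Real.log_div (by positivity) (by positivity)]
    ring
  obtain ⟨a, ha⟩ : ∃ a, a = Real.cosh c + Real.sinh c * m' := ⟨_, rfl⟩
  obtain ⟨b, hb⟩ : ∃ b, b = Real.cosh c + Real.sinh c * m := ⟨_, rfl⟩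
  have hab : a - b = Real.sinh c * (m' - m) := by rw [ha, hb]; ring
  obtain ⟨s, hs'⟩ : ∃ s, s = Real.sinh c := ⟨_, rfl⟩
  obtain ⟨e, he⟩ : ∃ e, e = Real.cosh c + Real.sinh c * mg J h u := ⟨_, rfl⟩
  obtain ⟨U, hU'⟩ : ∃ U, U = Uf J h u v := ⟨_, rfl⟩
  have hs3 : s ≤ 4 * c := by
    have e1 := sinh_le_mul_cosh hc
    have : Real.cosh c ≤ 2 := by
      rw [Real.cosh_eq]
      have e1 := (Real.exp_le_exp.2 hc1).trans Real.exp_one_lt_d9.le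
      have : Real.exp (-c) ≤ 1 := Real.exp_le_one_iff.2 (by linarith)
      linarith
    rw [hs']; nlinarith
  rw [← ha, ← hb] at hD'; rw [← he, ← hs', ← hU'] at hd; rw [← hs'] at hab hs; rw [← he] at b0 b1
  rw [← hU'] at hU ⊢; rw [← ha] at a1 a2; rw [← hb] at a0
  exact mix_real hc hs hs3 b0 b1 a0 a1 a2 hab hd hU hD'

end mixed

/-! ### Free energy cost of removing a set -/

section psi

variable {V : Type} [Fintype V]

/-- Free energy cost of removing the set `K`. -/
def Psi (J : V → V → ℝ) (h : V → ℝ) (K : Finset V) : ℝ := Real.log (Zf J h) - Real.log (ZK J h K)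

lemma wt_add (J : V → V → ℝ) (h δ : V → ℝ) (σ : V → Bool) :
    wt J (fun v => h v + δ v) σ = wt (fun _ _ => 0) δ σ * wt J h σ := by
  unfold wt en
  rw [← Real.exp_add]
  congr 1
  simp only [add_mul, Finset.sum_add_distrib, zero_mul, Finset.sum_const_zero]
  ring

/-- An additional field `δ` multiplies the partition function by an expectation. -/
lemma Zf_add (J : V → V → ℝ) (h δ : V → ℝ) :
    Zf J (fun v => h v + δ v) = Ex J h (wt (fun _ _ => 0) δ) * Zf J h := by
  unfold Ex
  rw [div_mul_cancel₀ _ (Zf_pos J h).ne', Zf]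
  exact Finset.sum_congr rfl fun σ _ => wt_add J h δ σ

lemma Zf_mono {J : V → V → ℝ} {h h' : V → ℝ} (hJ : ∀ u v, 0 ≤ J u v) (hh : ∀ v, 0 ≤ h v) (hhh : ∀ v, h v ≤ h' v) :
    Zf J h ≤ Zf J h' := by
  have e : Zf J h' = ∑ σ, Real.exp (∑ v, (h' v - h v) * sg (σ v)) * wt J h σ := by
    unfold Zf
    refine Finset.sum_congr rfl fun σ _ => ?_
    unfold wt en
    rw [← Real.exp_add]
    congr 1
    simp only [sub_mul, Finset.sum_sub_distrib]
    ring
  have h0 : 0 ≤ ∑ σ, (∑ v, (h' v - h v) * sg (σ v)) * wt J h σ := by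
    have : ∀ v, 0 ≤ ∑ σ, sg (σ v) * wt J h σ := fun v => by
      have := mul_nonneg (mg_nonneg hJ hh v) (Zf_pos J h).le
      unfold mg at this
      rwa [← Ex_eq_iff] at this
    calc 0 ≤ ∑ v, (h' v - h v) * ∑ σ, sg (σ v) * wt J h σ :=
          Finset.sum_nonneg fun v _ => mul_nonneg (sub_nonneg.2 (hhh v)) (this v)
      _ = _ := by
          simp only [Finset.mul_sum, Finset.sum_mul]
          rw [Finset.sum_comm]
          exact Finset.sum_congr rfl fun _ _ => Finset.sum_congr rfl fun _ _ => by ring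
  rw [e]
  calc Zf J h ≤ ∑ σ, (∑ v, (h' v - h v) * sg (σ v) + 1) * wt J h σ := by
        simp only [add_mul, one_mul, Finset.sum_add_distrib]
        unfold Zf
        linarith
    _ ≤ _ := Finset.sum_le_sum fun σ _ => mul_le_mul_of_nonneg_right (Real.add_one_le_exp _) (wt_pos J h σ).le

/-- The cost of removing `K` increases with the field (second Griffiths inequality). -/
lemma Psi_mono {J : V → V → ℝ} (hJ : ∀ u v, 0 ≤ J u v) {h h' : V → ℝ} (hh : ∀ v, 0 ≤ h v) (hhh : ∀ v, h v ≤ h' v)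
    (K : Finset V) : Psi J h K ≤ Psi J h' K := by
  obtain ⟨δ, hδ⟩ : ∃ δ : V → ℝ, δ = rh (off K) fun v => h' v - h v := ⟨_, rfl⟩
  have d0 : ∀ v, 0 ≤ δ v := hδ ▸ rh_nonneg fun v => sub_nonneg.2 (hhh v)
  have e1 : ZK J h' K = Ex (rJ (off K) J) (rh (off K) h) (wt (fun _ _ => 0) δ) * ZK J h K := by
    unfold ZK
    rw [← Zf_add]
    congr 1
    funext v
    rw [hδ]; unfold rh; split_ifs <;> ring
  have e2 : Ex J h (wt (fun _ _ => 0) δ) * Zf J h ≤ Zf J h' := by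
    rw [← Zf_add]
    refine Zf_mono hJ (fun v => add_nonneg (hh v) (d0 v)) fun v => ?_
    have : δ v ≤ h' v - h v := by rw [hδ]; exact rh_le (fun v => sub_nonneg.2 (hhh v)) v
    linarith
  have e3 : Ex (rJ (off K) J) (rh (off K) h) (wt (fun _ _ => 0) δ) ≤ Ex J h (wt (fun _ _ => 0) δ) :=
    Ex_mono (rJ_nonneg hJ) (rh_nonneg hh) (rJ_le hJ) (rh_le hh) (CS_wt (fun _ _ => le_rfl) d0)
  obtain ⟨a, ha⟩ : ∃ a, a = Ex (rJ (off K) J) (rh (off K) h) (wt (fun _ _ => 0) δ) := ⟨_, rfl⟩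
  obtain ⟨b, hb⟩ : ∃ b, b = Ex J h (wt (fun _ _ => 0) δ) := ⟨_, rfl⟩
  rw [← ha] at e1 e3; rw [← hb] at e2 e3
  have z1 := ZK_pos J h K
  have z2 := ZK_pos J h' K
  have a0 : 0 < a := pos_of_mul_pos_left (e1 ▸ z2) z1.le
  have b0 : 0 < b := a0.trans_le e3
  have l1 := Real.log_le_log (mul_pos b0 (Zf_pos J h)) e2
  rw [Real.log_mul b0.ne' (Zf_pos J h).ne'] at l1
  have l2 := Real.log_le_log a0 e3
  unfold Psi
  rw [e1, Real.log_mul a0.ne' z1.ne']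
  linarith

/-- The gain from a field on two sets that are well correlated in the full model and badly correlated without `K`. -/
lemma Psi_gain {J : V → V → ℝ} (hJ : ∀ u v, 0 ≤ J u v) {g : V → ℝ} (hg : ∀ v, 0 ≤ g v) {H : ℝ} (hH : 0 ≤ H) (hH1 : H ≤ 1)
    (hgH : ∀ v, g v ≤ H) (K : Finset V) {X Y : Finset V} (hXY : Disjoint X Y) (hX : ∀ v ∈ X, g v = 0) (hY : ∀ v ∈ Y, g v = 0)
    {a b : ℝ} (ha : ∀ k : V → ℝ, (∀ v, 0 ≤ k v) → (∀ v, k v ≤ H) → ∀ u ∈ X, ∀ v ∈ Y, a ≤ Uf J k u v)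
    (hb : ∀ u ∈ X, ∀ v ∈ Y, tw (rJ (off K) J) (fun _ => 0) u v ≤ b) :
    H ^ 2 * (a / 9 - 16 * b) * (X.card * Y.card) ≤
      Psi J (fun v => g v + if v ∈ X ∪ Y then H else 0) K - Psi J g K := by
  obtain ⟨F, hF⟩ : ∃ F : Finset V → ℝ, ∀ A, F A = Psi J (fun v => g v + if v ∈ A then H else 0) K := ⟨_, fun _ => rfl⟩
  have k0 : ∀ A : Finset V, ∀ v, 0 ≤ g v + if v ∈ A then H else 0 := fun A v => by
    have := hg v; split_ifs <;> linarith
  have mono : ∀ A, F ∅ ≤ F A := fun A => by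
    rw [hF, hF]
    refine Psi_mono hJ (k0 ∅) (fun v => ?_) K
    rw [if_neg (Finset.notMem_empty v)]
    split_ifs <;> linarith
  have F0 : F ∅ = Psi J g K := by rw [hF]; simp
  have main := mixed_sum F hXY (δ := H ^ 2 * (a / 9 - 16 * b)) (by
    intro A hA u hu v hv huA hvA
    have huv : u ≠ v := fun h => Finset.disjoint_left.1 hXY hu (h ▸ hv)
    obtain ⟨k, hk⟩ : ∃ k : V → ℝ, k = fun v => g v + if v ∈ A then H else 0 := ⟨_, rfl⟩
    have hk0 : ∀ v, 0 ≤ k v := hk ▸ k0 A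
    have hkH : ∀ v, k v ≤ H := fun v => by
      rw [hk]; simp only
      split_ifs with h
      · rcases Finset.mem_union.1 (hA h) with h' | h'
        · rw [hX v h']; linarith
        · rw [hY v h']; linarith
      · have := hgH v; linarith
    have c1 : (fun w => g w + if w ∈ insert u A then H else 0) = fun w => k w + bump u H w := by
      funext w; rw [hk]; unfold bump; simp only [Finset.mem_insert]
      by_cases h : w = u
      · subst h; simp [huA]
      · simp [h]
    have c2 : (fun w => g w + if w ∈ insert v A then H else 0) = fun w => k w + bump v H w := by
      funext w; rw [hk]; unfold bump; simp only [Finset.mem_insert]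
      by_cases h : w = v
      · subst h; simp [hvA]
      · simp [h]
    have c3 : (fun w => g w + if w ∈ insert u (insert v A) then H else 0) = fun w => k w + bump u H w + bump v H w := by
      funext w; rw [hk]; unfold bump; simp only [Finset.mem_insert]
      by_cases h : w = v
      · subst h; simp [hvA, huv.symm]
      · by_cases h' : w = u
        · subst h'; simp [huA, h]
        · simp [h, h']
    rw [hF, hF, hF, hF, c1, c2, c3, ← hk]
    have m1 := (mix_bounds hJ hk0 u v hH hH1 rfl).1
    have m2 := mul_le_mul_of_nonneg_left (ha k hk0 hkH u hu v hv) (sq_nonneg H)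
    have hb' := hb u hu v hv
    have hb0 : 0 ≤ b := (tw_nonneg (rJ_nonneg hJ) (fun _ => le_rfl) u v).trans hb'
    have m3 : Real.log (ZK J (fun w => k w + bump u H w + bump v H w) K) - Real.log (ZK J (fun w => k w + bump u H w) K) -
        Real.log (ZK J (fun w => k w + bump v H w) K) + Real.log (ZK J k K) ≤ 16 * H ^ 2 * b := by
      unfold ZK
      by_cases huK : u ∈ K
      · have e : ∀ f : V → ℝ, (rh (off K) fun w => f w + bump u H w) = rh (off K) f := fun f => by
          funext w; unfold rh bump
          by_cases h : w ∈ off K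
          · have h' : w ≠ u := by rintro rfl; exact h huK
            simp [h, h']
          · simp [h]
        have e' : (rh (off K) fun w => k w + bump u H w + bump v H w) = rh (off K) fun w => k w + bump v H w := by
          rw [← e (fun w => k w + bump v H w)]; congr 1; funext w; ring
        rw [e, e']
        have : 0 ≤ 16 * H ^ 2 * b := by positivity
        linarith
      by_cases hvK : v ∈ K
      · have e : ∀ f : V → ℝ, (rh (off K) fun w => f w + bump v H w) = rh (off K) f := fun f => by
          funext w; unfold rh bump
          by_cases h : w ∈ off K
          · have h' : w ≠ v := by rintro rfl; exact h hvK
            simp [h, h']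
          · simp [h]
        rw [e, e]
        have : 0 ≤ 16 * H ^ 2 * b := by positivity
        linarith
      · have e : ∀ (z : V), z ∉ K → ∀ f : V → ℝ, (rh (off K) fun w => f w + bump z H w) = fun w => rh (off K) f w + bump z H w :=
          fun z hz f => by
            funext w; unfold rh bump
            by_cases h : w ∈ off K
            · simp [h]
            · have h' : w ≠ z := by rintro rfl; exact h hz
              simp [h, h']
        rw [e v hvK, e u huK, e v hvK]
        refine (mix_bounds (rJ_nonneg hJ) (rh_nonneg hk0) u v hH hH1 rfl).2.trans ?_
        refine mul_le_mul_of_nonneg_left ((Uf_le_tw (rJ_nonneg hJ) (rh_nonneg hk0) u v).trans hb') (by positivity)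
    unfold Psi
    nlinarith)
  have := mono X
  have := mono Y
  rw [← hF, ← F0]
  linarith

end psi

/-! ### Correlations in a block -/

section ringbounds

variable {V : Type} [Fintype V]

/-- The sites closer than `r` to `u` and joined to `u` outside `K` in the square around `p`. -/
def cls (pos : V → ℤ × ℤ) (K : Finset V) (p : ℤ × ℤ) (r : ℕ) (u : V) : Set V :=
  {w | Pth (BK (pos '' (K : Set V)) p r) (pos u) (pos w) ∧ w ∈ dia pos (pos u) r}

lemma rJ_off_le (pos : V → ℤ × ℤ) (K : Finset V) (u v : V) : rJ (off K) (Jn pos) u v ≤ Jn pos u v :=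
  rJ_le (Jn_nonneg pos) u v

lemma dia_sub_Bx {pos : V → ℤ × ℤ} {p : ℤ × ℤ} {d r : ℕ} (hdr : d ≤ r) {u w : V} (hu : pos u ∈ Qb p d)
    (hw : w ∈ dia pos (pos u) r) : pos w ∈ Bx p r := by
  obtain ⟨h1, h2⟩ := mem_Qb.1 hu
  have h3 : d1 (pos w) (pos u) < r := hw
  unfold d1 at h3
  have a1 := abs_lt.1 (lt_of_le_of_lt (le_add_of_nonneg_right (abs_nonneg ((pos w).2 - (pos u).2))) h3)
  have a2 := abs_lt.1 (lt_of_le_of_lt (le_add_of_nonneg_left (abs_nonneg ((pos w).1 - (pos u).1))) h3)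
  exact ⟨abs_le.2 ⟨by omega, by omega⟩, abs_le.2 ⟨by omega, by omega⟩⟩

/-- Two coupled sites of the square around `p` are joined outside `K`. -/
lemma Pth_of_J {pos : V → ℤ × ℤ} (hinj : Function.Injective pos) {K : Finset V} {p : ℤ × ℤ} {r : ℕ} {v s : V}
    (h : rJ (off K) (Jn pos) v s ≠ 0 ∨ rJ (off K) (Jn pos) s v ≠ 0) (hv : pos v ∈ Bx p r) (hs : pos s ∈ Bx p r) :
    Pth (BK (pos '' (K : Set V)) p r) (pos v) (pos s) := by
  have key : (v ∉ K ∧ s ∉ K) ∧ nnp (pos v) (pos s) := by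
    rcases h with h | h
    · unfold rJ at h
      rw [ite_ne_right_iff] at h
      obtain ⟨h1, h2⟩ := h
      unfold Jn at h2
      rw [ite_ne_right_iff] at h2
      exact ⟨h1, h2.1⟩
    · unfold rJ at h
      rw [ite_ne_right_iff] at h
      obtain ⟨h1, h2⟩ := h
      unfold Jn at h2
      rw [ite_ne_right_iff] at h2
      refine ⟨⟨h1.2, h1.1⟩, ?_⟩
      have h3 := h2.1
      unfold nnp at h3 ⊢
      rw [abs_sub_comm, abs_sub_comm (pos v).2]; exact h3
  have nin : ∀ w, w ∉ K → pos w ∉ pos '' (K : Set V) := fun w hw ⟨z, hz, e⟩ => hw (hinj e ▸ hz)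
  exact .single ⟨key.2, ⟨hv, nin _ key.1.1⟩, ⟨hs, nin _ key.1.2⟩⟩

/-- The part `cls` of the piece of `u` is coupled, outside itself, only to sites at distance at least `r` from
`u`. Pinning those leaves at most the magnetization of a diamond with plus boundary. -/
lemma cls_side {pos : V → ℤ × ℤ} (hinj : Function.Injective pos) (K : Finset V) {p : ℤ × ℤ} {d r : ℕ} (hdr : d ≤ r)
    {u : V} (hu : pos u ∈ Qb p d) :
    mg (rJ (cls pos K p r u) (rJ (off K) (Jn pos))) (rh (cls pos K p r u) (kap (cls pos K p r u) (rJ (off K) (Jn pos)))) u ≤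
      mg (rJ (dia pos (pos u) r) (rJ (off K) (Jn pos)))
        (rh (dia pos (pos u) r) fun v => (fun _ => 0) v + kap (dia pos (pos u) r) (rJ (off K) (Jn pos)) v) u := by
  have hJ0 : ∀ u v, 0 ≤ rJ (off K) (Jn pos) u v := rJ_nonneg (Jn_nonneg pos)
  refine mg_mono (rJ_nonneg hJ0) (rh_nonneg fun v => kap_nonneg hJ0 v) (fun v s => ?_) (fun v => ?_) u
  · show (if v ∈ cls pos K p r u ∧ s ∈ cls pos K p r u then rJ (off K) (Jn pos) v s else 0) ≤
      if v ∈ dia pos (pos u) r ∧ s ∈ dia pos (pos u) r then rJ (off K) (Jn pos) v s else 0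
    by_cases h : v ∈ cls pos K p r u ∧ s ∈ cls pos K p r u
    · rw [if_pos h, if_pos ⟨h.1.2, h.2.2⟩]
    · rw [if_neg h]
      split_ifs
      · exact hJ0 _ _
      · exact le_rfl
  · unfold rh
    by_cases h : v ∈ cls pos K p r u
    · rw [if_pos h, if_pos h.2]
      show _ ≤ 0 + kap _ _ v
      rw [zero_add]
      refine Finset.sum_le_sum fun s _ => ?_
      by_cases hs : s ∈ cls pos K p r u
      · rw [if_pos hs]
        split_ifs
        · exact le_rfl
        · exact add_nonneg (hJ0 _ _) (hJ0 _ _)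
      · rw [if_neg hs]
        by_cases hsD : s ∈ dia pos (pos u) r
        · rw [if_pos hsD]
          by_contra hcon
          push Not at hcon
          refine hs ⟨h.1.trans (Pth_of_J hinj ?_ (dia_sub_Bx hdr hu h.2) (dia_sub_Bx hdr hu hsD)), hsD⟩
          by_contra h0
          push Not at h0
          rw [h0.1, h0.2] at hcon
          simp at hcon
        · rw [if_neg hsD]
    · rw [if_neg h]
      split_ifs
      · show 0 ≤ 0 + kap _ _ v
        rw [zero_add]; exact kap_nonneg hJ0 v
      · exact le_rfl

/-- Separated sites of a block are weakly correlated. -/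
theorem tw_sep : ∃ C : ℝ, 1 ≤ C ∧ ∀ (V : Type) [Fintype V] (pos : V → ℤ × ℤ), Function.Injective pos →
    ∀ (K : Finset V) (p : ℤ × ℤ) (d r : ℕ), 1 ≤ r → d ≤ r → ∀ u v, pos u ∈ Qb p d → pos v ∈ Qb p d →
      ¬ Pth (BK (pos '' (K : Set V)) p r) (pos u) (pos v) →
        tw (rJ (off K) (Jn pos)) (fun _ => 0) u v ≤ C * (r : ℝ) ^ (-(1 / 4) : ℝ) := by
  obtain ⟨C, hC, hb⟩ := mg_dia
  refine ⟨C ^ 2, by nlinarith, fun V _ pos hinj K p d r hr hdr u v hu hv hn => ?_⟩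
  have hJ0 : ∀ u v, 0 ≤ rJ (off K) (Jn pos) u v := rJ_nonneg (Jn_nonneg pos)
  have side : ∀ u, pos u ∈ Qb p d → mg (rJ (cls pos K p r u) (rJ (off K) (Jn pos)))
      (rh (cls pos K p r u) (kap (cls pos K p r u) (rJ (off K) (Jn pos)))) u ≤ C * (r : ℝ) ^ (-(1 / 8) : ℝ) := fun u hu => by
    refine (cls_side hinj K hdr hu).trans ((hb V pos _ hinj hJ0 (rJ_off_le pos K) u r hr (fun _ => 0) 0
      (fun _ => le_rfl) (fun _ => le_rfl)).trans (le_of_eq (by ring)))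
  have self : ∀ u, u ∈ cls pos K p r u := fun u => ⟨.refl, by
    show d1 _ _ < _
    unfold d1
    simp only [sub_self, abs_zero, add_zero]
    exact_mod_cast hr⟩
  have cross : ∀ a b, a ∈ cls pos K p r u → b ∈ cls pos K p r v →
      ¬ (rJ (off K) (Jn pos) a b ≠ 0 ∨ rJ (off K) (Jn pos) b a ≠ 0) := fun a b ha hb h =>
    hn ((ha.1.trans (Pth_of_J hinj h (dia_sub_Bx hdr hu ha.2) (dia_sub_Bx hdr hv hb.2))).trans hb.1.symm)
  have F := tw_factor hJ0 (S := cls pos K p r u) (S' := cls pos K p r v)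
    (fun w h h' => hn (h.1.trans h'.1.symm))
    (fun a b ha hb => by by_contra h; exact cross a b ha hb (Or.inl h))
    (fun a b ha hb => by by_contra h; exact cross a b ha hb (Or.inr h)) (self u) (self v)
  have hr0 : (0 : ℝ) < r := by exact_mod_cast hr
  have e : (r : ℝ) ^ (-(1 / 4) : ℝ) = (r : ℝ) ^ (-(1 / 8) : ℝ) * (r : ℝ) ^ (-(1 / 8) : ℝ) := by
    rw [← Real.rpow_add hr0]; norm_num
  refine F.trans ((mul_le_mul (side u hu) (side v hv) (mg_nonneg (rJ_nonneg hJ0)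
    (rh_nonneg fun w => kap_nonneg hJ0 w) v) (by positivity)).trans (le_of_eq ?_))
  rw [e]; ring

/-- In weak fields close sites are well correlated. -/
theorem Uf_lower : ∃ c C : ℝ, 0 < c ∧ 1 ≤ C ∧ ∀ d : ℕ, 1 ≤ d → ∃ R : ℕ, ∀ (V : Type) [Fintype V] (pos : V → ℤ × ℤ),
    Function.Injective pos → ∀ u v, |(pos u).1 - (pos v).1| ≤ d → |(pos u).2 - (pos v).2| ≤ d → u ≠ v →
    Full pos (pos u) R → ∀ r : ℕ, 1 ≤ r → ∀ k : V → ℝ, (∀ v, 0 ≤ k v) → (∀ v, k v ≤ (r : ℝ) ^ (-(15 / 8) : ℝ)) →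
      c * (d : ℝ) ^ (-(1 / 4) : ℝ) - C * (r : ℝ) ^ (-(1 / 4) : ℝ) ≤ Uf (Jn pos) k u v := by
  obtain ⟨c, hc, hl⟩ := tw_lower
  obtain ⟨C, hC, hm⟩ := mg_small
  refine ⟨c, 4 * C ^ 2, hc, by nlinarith, fun d hd => ?_⟩
  obtain ⟨R, hR⟩ := hl d hd
  refine ⟨R, fun V _ pos hinj u v h1 h2 huv hF r hr k hk0 hk => ?_⟩
  have t := hR V pos hinj u v h1 h2 huv hF
  have t' : tw (Jn pos) (fun _ => 0) u v ≤ tw (Jn pos) k u v :=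
    Ex_mono (Jn_nonneg pos) (fun _ => le_rfl) (fun _ _ => le_rfl) hk0 (CS_sg2 u v)
  have hr0 : (0 : ℝ) < r := by exact_mod_cast hr
  have mb : ∀ w, mg (Jn pos) k w ≤ 2 * C * (r : ℝ) ^ (-(1 / 8) : ℝ) := fun w => by
    refine (hm V pos _ hinj (Jn_nonneg pos) (fun _ _ => le_rfl) w r hr k _ hk0 hk).trans (le_of_eq ?_)
    have : (r : ℝ) ^ (-(15 / 8) : ℝ) * (r : ℝ) ^ (7 / 4 : ℝ) = (r : ℝ) ^ (-(1 / 8) : ℝ) := by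
      rw [← Real.rpow_add hr0]; norm_num
    rw [mul_assoc, this]; ring
  have e : (r : ℝ) ^ (-(1 / 4) : ℝ) = (r : ℝ) ^ (-(1 / 8) : ℝ) * (r : ℝ) ^ (-(1 / 8) : ℝ) := by
    rw [← Real.rpow_add hr0]; norm_num
  have mm := mul_le_mul (mb u) (mb v) (mg_nonneg (Jn_nonneg pos) hk0 v) (by positivity)
  unfold Uf
  rw [e]
  nlinarith

end ringbounds

/-! ### The gain of one ring -/

section iter

/-- Choice of the ratio `m = r / d`. -/
lemma exists_m {c : ℝ} (hc : 0 < c) (A : ℝ) : ∃ m : ℕ, 1 ≤ m ∧ A ≤ c * (m : ℝ) ^ (1 / 4 : ℝ) := by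
  obtain ⟨k, hk⟩ := exists_nat_ge (A / c)
  refine ⟨(k + 1) ^ 4, Nat.one_le_pow _ _ (by omega), ?_⟩
  have e : (((k + 1) ^ 4 : ℕ) : ℝ) ^ (1 / 4 : ℝ) = k + 1 := by
    push_cast
    rw [← Real.rpow_natCast, ← Real.rpow_mul (by positivity)]
    norm_num
  rw [e]
  rw [div_le_iff₀ hc] at hk
  nlinarith

/-- Powers of `d` and `r = m d` combine to a constant: `r ^ (-15/4) * r ^ (-1/4) * d ^ 4 = m ^ (-4)`. -/
lemma gain_real {c C₁ C₂ d r m X Y : ℝ} (hd : 0 < d) (hm : 0 < m) (hr : r = m * d)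
    (hmA : C₂ + 9 + 144 * C₁ ≤ c * m ^ (1 / 4 : ℝ)) (hX : d ^ 2 ≤ 16 * X) (hY : d ^ 2 ≤ 16 * Y) :
    1 / (256 * m ^ 4) ≤ (r ^ (-(15 / 8) : ℝ)) ^ 2 *
      ((c * d ^ (-(1 / 4) : ℝ) - C₂ * r ^ (-(1 / 4) : ℝ)) / 9 - 16 * (C₁ * r ^ (-(1 / 4) : ℝ))) * (X * Y) := by
  have hr0 : 0 < r := hr ▸ mul_pos hm hd
  have e1 : d ^ (-(1 / 4) : ℝ) = m ^ (1 / 4 : ℝ) * r ^ (-(1 / 4) : ℝ) := by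
    rw [hr, Real.mul_rpow hm.le hd.le, ← mul_assoc, ← Real.rpow_add hm]
    norm_num
  have e2 : (r ^ (-(15 / 8) : ℝ)) ^ 2 * r ^ (-(1 / 4) : ℝ) = (r ^ 4)⁻¹ := by
    rw [← Real.rpow_natCast, ← Real.rpow_mul hr0.le, ← Real.rpow_add hr0, ← Real.rpow_natCast, ← Real.rpow_neg hr0.le]
    norm_num
  have e3 : (r ^ (-(15 / 8) : ℝ)) ^ 2 *
      ((c * d ^ (-(1 / 4) : ℝ) - C₂ * r ^ (-(1 / 4) : ℝ)) / 9 - 16 * (C₁ * r ^ (-(1 / 4) : ℝ))) =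
      (r ^ 4)⁻¹ * ((c * m ^ (1 / 4 : ℝ) - C₂ - 144 * C₁) / 9) := by
    rw [← e2, e1]; ring
  rw [e3]
  have h1 : (1 : ℝ) ≤ (c * m ^ (1 / 4 : ℝ) - C₂ - 144 * C₁) / 9 := by linarith
  have h2 : d ^ 4 / 256 ≤ X * Y := by
    have := mul_le_mul hX hY (by positivity) (by nlinarith [sq_nonneg d])
    nlinarith
  have h3 : 1 / (256 * m ^ 4) = (r ^ 4)⁻¹ * 1 * (d ^ 4 / 256) := by
    rw [hr]; field_simp
  rw [h3]
  exact mul_le_mul (mul_le_mul_of_nonneg_left h1 (by positivity)) h2 (by positivity) (by positivity)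

/-- The gain of one ring: adding the field `r ^ (-15/8)`, with `r = m * d`, on a block without dominating class raises
the cost of removing `K` by a constant. The field `g` already present is weak and vanishes on the block. -/
theorem ring_gain : ∃ m : ℕ, 1 ≤ m ∧ ∀ d : ℕ, 2 ≤ d → ∃ R : ℕ, ∀ (V : Type) [Fintype V] (pos : V → ℤ × ℤ),
    Function.Injective pos → ∀ (K : Finset V) (p : ℤ × ℤ), (∀ q ∈ Qb p d, ∃ w, pos w = q) →
    (∀ u, pos u ∈ Qb p d → Full pos (pos u) R) →
    (∀ v ∈ Qb p d, 8 * (Qc (pos '' (K : Set V)) p (m * d) d v).card ≤ 7 * d ^ 2) →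
    ∀ g : V → ℝ, (∀ v, 0 ≤ g v) → (∀ v, g v ≤ ((m * d : ℕ) : ℝ) ^ (-(15 / 8) : ℝ)) → (∀ v, pos v ∈ Qb p d → g v = 0) →
      1 / (256 * (m : ℝ) ^ 4) ≤ Psi (Jn pos) (fun v => g v + if pos v ∈ Qb p d then ((m * d : ℕ) : ℝ) ^ (-(15 / 8) : ℝ) else 0) K -
        Psi (Jn pos) g K := by
  obtain ⟨C₁, hC₁, hsep⟩ := tw_sep
  obtain ⟨c, C₂, hc, hC₂, hlow⟩ := Uf_lower
  obtain ⟨m, hm, hmA⟩ := exists_m hc (C₂ + 9 + 144 * C₁)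
  refine ⟨m, hm, fun d hd => ?_⟩
  obtain ⟨R, hR⟩ := hlow d (by omega)
  refine ⟨R, fun V _ pos hinj K p hfull hF hcl g hg hgH hg0 => ?_⟩
  obtain ⟨r, hr⟩ : ∃ r : ℕ, r = m * d := ⟨_, rfl⟩
  rw [← hr] at hcl hgH ⊢
  have hr1 : 1 ≤ r := by rw [hr]; exact Nat.one_le_iff_ne_zero.2 (by positivity)
  have hdr : d ≤ r := by rw [hr]; exact Nat.le_mul_of_pos_left d hm
  obtain ⟨H, hH⟩ : ∃ H : ℝ, H = (r : ℝ) ^ (-(15 / 8) : ℝ) := ⟨_, rfl⟩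
  rw [← hH] at hgH ⊢
  have hr0 : (1 : ℝ) ≤ r := by exact_mod_cast hr1
  have hH0 : 0 ≤ H := by rw [hH]; positivity
  have hH1 : H ≤ 1 := by rw [hH]; exact Real.rpow_le_one_of_one_le_of_nonpos hr0 (by norm_num)
  have cQ : (Qb p d).card = d ^ 2 := by
    unfold Qb
    rw [Finset.card_product, Int.card_Ico, Int.card_Ico]
    rw [add_sub_cancel_left, add_sub_cancel_left, Int.toNat_natCast, sq]
  -- two large parts of the block, not joined outside `K`
  obtain ⟨X, Y, hXQ, hYQ, cX, cY, hdis, hrel⟩ := split_classes (Qb p d)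
    (fun v w => Pth (BK (pos '' (K : Set V)) p r) v w) (fun _ => .refl) (fun _ _ => Pth.symm) (fun _ _ _ => Pth.trans)
    (by rw [cQ]; positivity) (by
      intro v hv
      rw [cQ]
      convert hcl v hv using 2
      unfold Qc
      congr!)
  rw [cQ] at cX cY
  obtain ⟨pre, hpre⟩ : ∃ pre : Finset (ℤ × ℤ) → Finset V, ∀ A v, v ∈ pre A ↔ pos v ∈ A :=
    ⟨fun A => Finset.univ.filter fun v => pos v ∈ A, fun A v => by simp⟩
  have cpre : ∀ A, A ⊆ Qb p d → (pre A).card = A.card := fun A hA => by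
    rw [← Finset.card_image_of_injective (pre A) hinj]
    congr 1
    ext q
    simp only [Finset.mem_image, hpre]
    constructor
    · rintro ⟨v, hv, rfl⟩; exact hv
    · intro hq
      obtain ⟨w, hw⟩ := hfull q (hA hq)
      exact ⟨w, hw ▸ hq, hw⟩
  have G := Psi_gain (J := Jn pos) (Jn_nonneg pos) hg hH0 hH1 hgH K (X := pre X) (Y := pre Y)
    (Finset.disjoint_left.2 fun v h h' => Finset.disjoint_left.1 hdis ((hpre _ _).1 h) ((hpre _ _).1 h'))
    (fun v hv => hg0 v (hXQ ((hpre _ _).1 hv))) (fun v hv => hg0 v (hYQ ((hpre _ _).1 hv)))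
    (a := c * (d : ℝ) ^ (-(1 / 4) : ℝ) - C₂ * (r : ℝ) ^ (-(1 / 4) : ℝ)) (b := C₁ * (r : ℝ) ^ (-(1 / 4) : ℝ))
    (fun k hk0 hk u hu v hv => by
      have hu' := hXQ ((hpre _ _).1 hu)
      have hv' := hYQ ((hpre _ _).1 hv)
      have m1 := mem_Qb.1 hu'
      have m2 := mem_Qb.1 hv'
      refine hR V pos hinj u v (abs_le.2 ⟨by omega, by omega⟩) (abs_le.2 ⟨by omega, by omega⟩) (fun e => ?_) (hF u hu') r hr1 k
        hk0 (fun v => hH ▸ hk v)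
      exact hrel _ ((hpre _ _).1 hu) _ ((hpre _ _).1 hv) (e ▸ .refl))
    (fun u hu v hv => hsep V pos hinj K p d r hr1 hdr u v (hXQ ((hpre _ _).1 hu)) (hYQ ((hpre _ _).1 hv))
      (hrel _ ((hpre _ _).1 hu) _ ((hpre _ _).1 hv)))
  rw [cpre X hXQ, cpre Y hYQ] at G
  -- the field on the rest of the block only increases the cost
  have G2 : Psi (Jn pos) (fun v => g v + if v ∈ pre X ∪ pre Y then H else 0) K ≤
      Psi (Jn pos) (fun v => g v + if pos v ∈ Qb p d then H else 0) K := by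
    refine Psi_mono (Jn_nonneg pos) (fun v => ?_) (fun v => ?_) K
    · have := hg v; split_ifs <;> linarith
    · by_cases h : v ∈ pre X ∪ pre Y
      · have h' : pos v ∈ Qb p d := by
          rcases Finset.mem_union.1 h with h | h
          · exact hXQ ((hpre _ _).1 h)
          · exact hYQ ((hpre _ _).1 h)
        rw [if_pos h, if_pos h']
      · rw [if_neg h]; split_ifs <;> linarith
  have GR := gain_real (c := c) (C₁ := C₁) (C₂ := C₂) (d := d) (r := r) (m := m) (X := X.card) (Y := Y.card)
    (by exact_mod_cast (by omega : 0 < d)) (by exact_mod_cast hm) (by rw [hr]; push_cast; rfl) hmA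
    (by exact_mod_cast cX) (by exact_mod_cast cY)
  rw [← hH] at GR
  linarith

end iter

/-! ### Iteration over rings -/

section rings

/-- Blocks on rings of different radii are disjoint. -/
lemma Qb_disj {x p p' q : ℤ × ℤ} {d r : ℕ} (hdr : d ≤ r) {a b : ℕ} (hab : a + 10 * r ≤ b) (hr : 1 ≤ r)
    (h1 : |p.1 - x.1| ≤ a) (h2 : |p.2 - x.2| ≤ a) (h : |p'.1 - x.1| = b ∨ |p'.2 - x.2| = b)
    (hq : q ∈ Qb p d) (hq' : q ∈ Qb p' d) : False := by
  have m1 := mem_Qb.1 hq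
  have m2 := mem_Qb.1 hq'
  have b1 := abs_le.1 h1
  have b2 := abs_le.1 h2
  rcases h with h | h
  · rcases abs_choice (p'.1 - x.1) with e | e <;> omega
  · rcases abs_choice (p'.2 - x.2) with e | e <;> omega

/-- A difference of free energy costs, written as a ratio of partition functions. -/
lemma zk_real {Z Z₀ W W₀ N c : ℝ} (hZ : 0 < Z) (hZ₀ : 0 < Z₀) (hW : 0 < W) (hW₀ : 0 < W₀)
    (h : N * c ≤ (Real.log Z - Real.log W) - (Real.log Z₀ - Real.log W₀)) :
    (W * Z₀) ^ 2 ≤ Real.exp (-(2 * (N * c))) * (W₀ * Z) ^ 2 := by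
  have e1 : W * Z₀ = Real.exp (Real.log W + Real.log Z₀) := by
    rw [Real.exp_add, Real.exp_log hW, Real.exp_log hZ₀]
  have e2 : W₀ * Z = Real.exp (Real.log W₀ + Real.log Z) := by
    rw [Real.exp_add, Real.exp_log hW₀, Real.exp_log hZ]
  rw [e1, e2, ← Real.exp_nat_mul, ← Real.exp_nat_mul, ← Real.exp_add]
  refine Real.exp_le_exp.2 ?_
  push_cast
  linarith

/-- Truncated correlations in a field decay exponentially in the number of separating rings. -/
theorem Uf_rings : ∃ m : ℕ, 1 ≤ m ∧ ∀ d : ℕ, 2 ≤ d → ∃ R : ℕ, ∀ (V : Type) [Fintype V] (pos : V → ℤ × ℤ),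
    Function.Injective pos → ∀ (x y : V) (N : ℕ), Full pos (pos x) (10 * (m * d) * N + m * d + R) →
    (((10 * (m * d) * N + 2 * (m * d) : ℕ) : ℤ) < |(pos y).1 - (pos x).1| ∨
      ((10 * (m * d) * N + 2 * (m * d) : ℕ) : ℤ) < |(pos y).2 - (pos x).2|) →
    ∀ h : V → ℝ, (∀ v, ((m * d : ℕ) : ℝ) ^ (-(15 / 8) : ℝ) ≤ h v) →
      Uf (Jn pos) h x y ≤ Real.exp (-(2 * (N * (1 / (256 * (m : ℝ) ^ 4))))) * Uf (Jn pos) (fun _ => 0) x y := by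
  obtain ⟨m, hm, hg⟩ := ring_gain
  refine ⟨m, hm, fun d hd => ?_⟩
  obtain ⟨R, hR⟩ := hg d hd
  refine ⟨R, fun V _ pos hinj x y N hF hy h hh => ?_⟩
  obtain ⟨r, hr⟩ : ∃ r : ℕ, r = m * d := ⟨_, rfl⟩
  rw [← hr] at hF hy hh hR
  have hr1 : 1 ≤ r := by rw [hr]; exact Nat.one_le_iff_ne_zero.2 (by positivity)
  have hdr : d ≤ r := by rw [hr]; exact Nat.le_mul_of_pos_left d hm
  obtain ⟨H, hH⟩ : ∃ H : ℝ, H = (r : ℝ) ^ (-(15 / 8) : ℝ) := ⟨_, rfl⟩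
  rw [← hH] at hh hR
  have hH0 : 0 ≤ H := by rw [hH]; positivity
  refine Uf_le_of_ZK (Jn_nonneg pos) h (fun _ => 0) x y fun K hxK hyK hK => ?_
  have hP : Pth (pos '' (K : Set V)) (pos x) (pos y) := by
    refine Relation.ReflTransGen.lift pos (fun a b hab => ?_) _ _ (hK y hyK)
    refine ⟨?_, ⟨a, hab.1, rfl⟩, ⟨b, hab.2.1, rfl⟩⟩
    rcases hab.2.2 with e | e
    · unfold Jn at e
      rw [ite_ne_right_iff] at e
      exact e.1
    · unfold Jn at e
      rw [ite_ne_right_iff] at e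
      have h3 := e.1
      unfold nnp at h3 ⊢
      rw [abs_sub_comm, abs_sub_comm (pos a).2]; exact h3
  -- one block without dominating class on each of the rings of radius `10 r (i + 1)`
  have blocks : ∀ i, ∃ p : ℤ × ℤ, i < N → (|p.1 - (pos x).1| ≤ (10 * r * (i + 1) : ℕ) ∧ |p.2 - (pos x).2| ≤ (10 * r * (i + 1) : ℕ)) ∧
      (|p.1 - (pos x).1| = (10 * r * (i + 1) : ℕ) ∨ |p.2 - (pos x).2| = (10 * r * (i + 1) : ℕ)) ∧
      ∀ v ∈ Qb p d, 8 * (Qc (pos '' (K : Set V)) p r d v).card ≤ 7 * d ^ 2 := fun i => by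
    by_cases hi : i < N
    · have e1 : 10 * r * (i + 1) ≤ 10 * r * N := Nat.mul_le_mul_left _ hi
      have e2 : 10 * r * 1 ≤ 10 * r * (i + 1) := Nat.mul_le_mul_left _ (by omega)
      obtain ⟨p, hp⟩ := ring_block hP (R := 10 * r * (i + 1)) hd hdr (by omega)
        (hy.imp (fun h => lt_of_le_of_lt (by exact_mod_cast Nat.add_le_add_right e1 _) h)
          (fun h => lt_of_le_of_lt (by exact_mod_cast Nat.add_le_add_right e1 _) h))
      exact ⟨p, fun _ => hp⟩
    · exact ⟨0, fun h => absurd h hi⟩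
  choose p hp using blocks
  -- switch on the field block by block; the blocks are disjoint
  have step : ∀ n, n ≤ N → n * (1 / (256 * (m : ℝ) ^ 4)) ≤
      Psi (Jn pos) (fun v => if ∃ i < n, pos v ∈ Qb (p i) d then H else 0) K - Psi (Jn pos) (fun _ => 0) K := by
    intro n
    induction n with
    | zero => intro _; simp
    | succ n ih =>
      intro hn
      have ih := ih (by omega)
      obtain ⟨hp1, hp2, hp3⟩ := hp n (by omega)
      have e1 : 10 * r * (n + 1) ≤ 10 * r * N := Nat.mul_le_mul_left _ hn
      have near : ∀ q ∈ Qb (p n) d, |q.1 - (pos x).1| ≤ ((10 * r * N + r : ℕ) : ℤ) ∧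
          |q.2 - (pos x).2| ≤ ((10 * r * N + r : ℕ) : ℤ) := fun q hq => by
        have m1 := mem_Qb.1 hq
        have b1 := abs_le.1 hp1.1
        have b2 := abs_le.1 hp1.2
        constructor <;> refine abs_le.2 ⟨?_, ?_⟩ <;> omega
      have G := hR V pos hinj K (p n) (fun q hq => hF q ((near q hq).1.trans (by push_cast; omega))
        ((near q hq).2.trans (by push_cast; omega)))
        (fun u hu q h1 h2 => by
          have a1 := abs_le.1 (near _ hu).1
          have a2 := abs_le.1 (near _ hu).2
          have a3 := abs_le.1 h1
          have a4 := abs_le.1 h2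
          refine hF q (abs_le.2 ⟨?_, ?_⟩) (abs_le.2 ⟨?_, ?_⟩) <;> push_cast at * <;> omega)
        hp3 (fun v => if ∃ i < n, pos v ∈ Qb (p i) d then H else 0)
        (fun v => by split_ifs; exacts [hH0, le_rfl]) (fun v => by split_ifs; exacts [le_rfl, hH0])
        (fun v hv => if_neg fun ⟨i, hi, hiv⟩ => by
          obtain ⟨hq1, -, -⟩ := hp i (by omega)
          have : 10 * r * (i + 1) + 10 * r ≤ 10 * r * (n + 1) := by nlinarith
          exact Qb_disj hdr this hr1 hq1.1 hq1.2 hp2 hiv hv)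
      have e : (fun v => (fun v => if ∃ i < n, pos v ∈ Qb (p i) d then H else 0) v + if pos v ∈ Qb (p n) d then H else 0) =
          fun v => if ∃ i < n + 1, pos v ∈ Qb (p i) d then H else 0 := by
        funext v
        by_cases h1 : pos v ∈ Qb (p n) d
        · have h2 : ¬ ∃ i < n, pos v ∈ Qb (p i) d := fun ⟨i, hi, hiv⟩ => by
            obtain ⟨hq1, -, -⟩ := hp i (by omega)
            have : 10 * r * (i + 1) + 10 * r ≤ 10 * r * (n + 1) := by nlinarith
            exact Qb_disj hdr this hr1 hq1.1 hq1.2 hp2 hiv h1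
          have h3 : ∃ i < n + 1, pos v ∈ Qb (p i) d := ⟨n, by omega, h1⟩
          simp only [if_pos h1, if_neg h2, if_pos h3, zero_add]
        · by_cases h2 : ∃ i < n, pos v ∈ Qb (p i) d
          · have h3 : ∃ i < n + 1, pos v ∈ Qb (p i) d := by
              obtain ⟨i, hi, hiv⟩ := h2; exact ⟨i, by omega, hiv⟩
            simp only [if_neg h1, if_pos h2, if_pos h3, add_zero]
          · have h3 : ¬ ∃ i < n + 1, pos v ∈ Qb (p i) d := fun ⟨i, hi, hiv⟩ => by
              rcases Nat.lt_succ_iff_lt_or_eq.1 hi with h | h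
              · exact h2 ⟨i, h, hiv⟩
              · exact h1 (h ▸ hiv)
            simp only [if_neg h1, if_neg h2, if_neg h3, add_zero]
      rw [e] at G
      push_cast
      linarith
  have S := step N le_rfl
  -- sites outside the blocks have a nonnegative field, which only helps
  have M : Psi (Jn pos) (fun v => if ∃ i < N, pos v ∈ Qb (p i) d then H else 0) K ≤ Psi (Jn pos) h K :=
    Psi_mono (Jn_nonneg pos) (fun v => by split_ifs; exacts [hH0, le_rfl])
      (fun v => by split_ifs; exacts [hh v, hH0.trans (hh v)]) K
  refine zk_real (Zf_pos _ _) (Zf_pos _ _) (ZK_pos _ _ _) (ZK_pos _ _ _) (S.trans ?_)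
  unfold Psi at M ⊢
  linarith

end rings

/-! ### Choice of the scale -/

section scale

/-- The arithmetic of scales: `ρ` is the sup-norm lattice distance, `E` the `ℓ¹` lattice distance, `D` the
Euclidean distance and `N` the number of rings. -/
lemma final_real {c C D a r ρ N m E : ℝ} (hc : 0 < c) (hC : 1 ≤ C) (ha : 0 < a) (ha1 : a ≤ 1) (hm : 1 ≤ m) (hr : r * a ≤ 4 * m)
    (hr0 : 0 < r) (hD : D ≤ 2 * a * ρ) (hD3 : 3 < D) (hN : ρ ≤ (N + 2) * (10 * r)) (hE : ρ ≤ E) :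
    Real.exp (-(2 * (N * c))) * (C * E ^ (-(1 / 4) : ℝ)) ≤
      C * Real.exp (4 * c) * a ^ (1 / 4 : ℝ) * Real.exp (-(c / (40 * m)) * D) := by
  have hρ : 1 / a ≤ ρ := by
    rw [div_le_iff₀ ha]; nlinarith
  have h1 : E ^ (-(1 / 4) : ℝ) ≤ a ^ (1 / 4 : ℝ) := by
    refine (Real.rpow_le_rpow_of_nonpos (by positivity) (hρ.trans hE) (by norm_num)).trans (le_of_eq ?_)
    rw [one_div, Real.inv_rpow ha.le, Real.rpow_neg ha.le, inv_inv]
  have h2 : Real.exp (-(2 * (N * c))) ≤ Real.exp (4 * c) * Real.exp (-(c / (40 * m)) * D) := by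
    rw [← Real.exp_add]
    refine Real.exp_le_exp.2 ?_
    have h3 : D ≤ (N + 2) * (80 * m) := by
      have : ρ * a ≤ (N + 2) * (10 * (r * a)) := by nlinarith
      have hN2 : 0 ≤ N + 2 := by
        by_contra h
        push Not at h
        have : 0 < 1 / a := by positivity
        nlinarith
      nlinarith
    have h4 : c / (40 * m) * D ≤ 2 * c * (N + 2) := by
      rw [div_mul_eq_mul_div, div_le_iff₀ (by positivity)]
      nlinarith
    linarith
  have hE0 : 0 ≤ E := le_trans (by positivity) (hρ.trans hE)
  calc _ ≤ (Real.exp (4 * c) * Real.exp (-(c / (40 * m)) * D)) * (C * a ^ (1 / 4 : ℝ)) :=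
        mul_le_mul h2 (mul_le_mul_of_nonneg_left h1 (by linarith)) (by positivity) (by positivity)
    _ = _ := by ring

/-- The Euclidean distance is at most twice the sup-norm distance `a ρ`. -/
lemma edist_le {a : ℝ} (ha : 0 < a) (p q : ℤ × ℤ) (ρ : ℤ) (h1 : |q.1 - p.1| ≤ ρ) (h2 : |q.2 - p.2| ≤ ρ) :
    edistV a p q ≤ 2 * a * ρ := by
  have b1 : |(q.1 : ℝ) - p.1| ≤ ρ := by exact_mod_cast h1
  have b2 : |(q.2 : ℝ) - p.2| ≤ ρ := by exact_mod_cast h2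
  have hρ : (0 : ℝ) ≤ ρ := (abs_nonneg _).trans b1
  unfold edistV edistR posOf
  refine Real.sqrt_le_iff.2 ⟨by positivity, ?_⟩
  have s1 := sq_le_sq' (abs_le.1 b1).1 (abs_le.1 b1).2
  have s2 := sq_le_sq' (abs_le.1 b2).1 (abs_le.1 b2).2
  have := mul_le_mul_of_nonneg_left (add_le_add s1 s2) (sq_nonneg a)
  have := mul_nonneg (sq_nonneg a) (sq_nonneg (ρ : ℝ))
  show (a * (p.1 : ℝ) - a * q.1) ^ 2 + (a * (p.2 : ℝ) - a * q.2) ^ 2 ≤ _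
  nlinarith

/-- The bound in finite domains containing a large square around `x`, for any field of at least `a ^ (15/8)`. -/
theorem Uf_scale : ∃ C m₁ : ℝ, 0 < C ∧ 0 < m₁ ∧ ∀ a : ℝ, 0 < a → a ≤ 1 → ∀ p q : ℤ × ℤ, 3 < edistV a p q →
    ∃ R : ℕ, ∀ (V : Type) [Fintype V] (pos : V → ℤ × ℤ), Function.Injective pos → ∀ x y, pos x = p → pos y = q →
      Full pos p R → ∀ h : V → ℝ, (∀ v, a ^ (15 / 8 : ℝ) ≤ h v) →
        Uf (Jn pos) h x y ≤ C * a ^ (1 / 4 : ℝ) * Real.exp (-m₁ * edistV a p q) := by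
  obtain ⟨C, hC, hu⟩ := tw_upper
  obtain ⟨m, hm, hU⟩ := Uf_rings
  have hm1 : (1 : ℝ) ≤ m := by exact_mod_cast hm
  obtain ⟨c, hc⟩ : ∃ c : ℝ, c = 1 / (256 * (m : ℝ) ^ 4) := ⟨_, rfl⟩
  rw [← hc] at hU
  have hc0 : 0 < c := by rw [hc]; positivity
  refine ⟨C * Real.exp (4 * c), c / (40 * m), by positivity, by positivity, fun a ha ha1 p q hpq => ?_⟩
  -- blocks of side `2 n`, so that `r = 2 m n` is of order `1 / a` and `r ^ (-15/8) ≤ a ^ (15/8)`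
  obtain ⟨n, hn⟩ : ∃ n : ℕ, n = ⌈1 / a⌉₊ := ⟨_, rfl⟩
  have hn1 : 1 / a ≤ n := hn ▸ Nat.le_ceil _
  have hn2 : (n : ℝ) < 1 / a + 1 := hn ▸ Nat.ceil_lt_add_one (by positivity)
  have ha2 : 1 ≤ 1 / a := by rw [le_div_iff₀ ha]; linarith
  have hn0 : 1 ≤ n := by exact_mod_cast ha2.trans hn1
  obtain ⟨R, hR⟩ := hU (2 * n) (by omega)
  obtain ⟨r, hr⟩ : ∃ r : ℕ, r = m * (2 * n) := ⟨_, rfl⟩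
  rw [← hr] at hR
  have hr1 : 1 ≤ r := by rw [hr]; exact Nat.one_le_iff_ne_zero.2 (by positivity)
  have hr0 : (0 : ℝ) < r := by exact_mod_cast hr1
  have hrr : (r : ℝ) = m * (2 * n) := by rw [hr]; push_cast; rfl
  have hra : (r : ℝ) * a ≤ 4 * m := by
    have : (n : ℝ) * a ≤ 2 := by
      have := mul_le_mul_of_nonneg_right hn2.le ha.le
      rw [add_mul, div_mul_cancel₀ _ ha.ne'] at this
      linarith
    rw [hrr]; nlinarith
  have hra' : (r : ℝ) ^ (-(15 / 8) : ℝ) ≤ a ^ (15 / 8 : ℝ) := by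
    have : 1 / a ≤ r := by rw [hrr]; nlinarith
    refine (Real.rpow_le_rpow_of_nonpos (by positivity) this (by norm_num)).trans (le_of_eq ?_)
    rw [one_div, Real.inv_rpow ha.le, Real.rpow_neg ha.le, inv_inv]
  -- the lattice distance in the sup norm
  obtain ⟨ρ, hρ, hρ1, hρ2⟩ : ∃ ρ : ℕ, ((ρ : ℤ) = |q.1 - p.1| ∨ (ρ : ℤ) = |q.2 - p.2|) ∧ |q.1 - p.1| ≤ ρ ∧ |q.2 - p.2| ≤ ρ := by
    have n1 := abs_nonneg (q.1 - p.1)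
    have n2 := abs_nonneg (q.2 - p.2)
    rcases le_total |q.1 - p.1| |q.2 - p.2| with h | h
    · exact ⟨|q.2 - p.2|.toNat, by omega, by omega, by omega⟩
    · exact ⟨|q.1 - p.1|.toNat, by omega, by omega, by omega⟩
  have hD := edist_le ha p q ρ hρ1 hρ2
  have hpq' : p ≠ q := by
    rintro rfl
    unfold edistV edistR at hpq
    simp at hpq
    linarith
  have hE : (ρ : ℝ) ≤ (d1 p q : ℝ) := by
    have : (ρ : ℤ) ≤ d1 p q := by
      unfold d1
      rw [abs_sub_comm p.1, abs_sub_comm p.2]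
      have := abs_nonneg (q.1 - p.1)
      have := abs_nonneg (q.2 - p.2)
      omega
    exact_mod_cast this
  push_cast at hD
  by_cases hlt : 2 * r < ρ
  -- the number of rings that fit between the two points
  · obtain ⟨N, hN⟩ : ∃ N : ℕ, N = (ρ - 2 * r - 1) / (10 * r) := ⟨_, rfl⟩
    have hN1 : 10 * r * N + 2 * r < ρ := by
      have := Nat.mul_div_le (ρ - 2 * r - 1) (10 * r)
      rw [← hN] at this
      omega
    have hN2 : ρ ≤ (N + 2) * (10 * r) := by
      have := Nat.lt_mul_div_succ (ρ - 2 * r - 1) (by omega : 0 < 10 * r)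
      rw [← hN] at this
      have e1 : 10 * r * (N + 1) = 10 * (r * N) + 10 * r := by ring
      have e2 : (N + 2) * (10 * r) = 10 * (r * N) + 20 * r := by ring
      omega
    refine ⟨10 * r * N + r + R, fun V _ pos hinj x y hx hy hF h hh => ?_⟩
    have B := hR V pos hinj x y N (hx ▸ hF) (by
      rw [hx, hy]
      rcases hρ with e | e
      · left; rw [← e]; exact_mod_cast hN1
      · right; rw [← e]; exact_mod_cast hN1) h (fun v => hra'.trans (hh v))
    refine B.trans ((mul_le_mul_of_nonneg_left ((Uf_le_tw (Jn_nonneg pos) (fun _ => le_rfl) x y).trans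
      (hu V pos _ hinj (Jn_nonneg pos) (fun _ _ => le_rfl) x y (fun e => hpq' (by rw [← hx, ← hy, e])))) (by positivity)).trans ?_)
    rw [hx, hy]
    exact final_real hc0 hC ha ha1 hm1 hra hr0 hD hpq (by exact_mod_cast hN2) hE
  -- points too close for a ring: the critical bound suffices
  · refine ⟨0, fun V _ pos hinj x y hx hy hF h hh => ?_⟩
    refine ((Uf_le_tw (Jn_nonneg pos) (fun v => le_trans (by positivity) (hh v)) x y).trans
      (hu V pos _ hinj (Jn_nonneg pos) (fun _ _ => le_rfl) x y (fun e => hpq' (by rw [← hx, ← hy, e])))).trans ?_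
    rw [hx, hy]
    have F := final_real (N := 0) hc0 hC ha ha1 hm1 hra hr0 hD hpq (by
      have : (ρ : ℝ) ≤ 2 * r := by exact_mod_cast not_lt.1 hlt
      linarith) hE
    simpa using F

end scale

/-! ### The model on boxes and the infinite volume limit -/

section link

lemma spin_sg {Λ : Finset Vtx} (σ : {v // v ∈ Λ} → Bool) (v : {v // v ∈ Λ}) : spin Λ σ v = sg (σ v) := by
  unfold spin sg
  rw [dif_pos v.2]

/-- Each unordered nearest neighbour pair is one of the two orientations of a unit step. -/
lemma nnp_step (u v : Vtx) (x : ℝ) :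
    (if nnp u v then x else 0) = ∑ b : Bool, ((if u + estep b = v then x else 0) + if v + estep b = u then x else 0) := by
  rw [Fintype.sum_bool]
  unfold nnp
  have e : ∀ (b : Bool) (p q : Vtx), (p + estep b = q) ↔ (p.1 + (if b then 1 else 0) = q.1 ∧ p.2 + (if b then 0 else 1) = q.2) := by
    intro b p q
    rw [Prod.ext_iff]
    cases b <;> simp [estep]
  simp only [e]
  obtain ⟨u1, u2⟩ := u
  obtain ⟨v1, v2⟩ := v
  simp only [if_true, Bool.false_eq_true, if_false, add_zero]
  by_cases h : |u1 - v1| + |u2 - v2| = 1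
  · rw [if_pos h]
    have : (u1 + 1 = v1 ∧ u2 = v2) ∨ (v1 + 1 = u1 ∧ v2 = u2) ∨ (u1 = v1 ∧ u2 + 1 = v2) ∨ (v1 = u1 ∧ v2 + 1 = u2) := by
      rcases abs_cases (u1 - v1) with h1 | h1 <;> rcases abs_cases (u2 - v2) with h2 | h2 <;> omega
    rcases this with ⟨h1, h2⟩ | ⟨h1, h2⟩ | ⟨h1, h2⟩ | ⟨h1, h2⟩
    · subst h1 h2; simp; intro h; omega
    · subst h1 h2; simp; intro h; omega
    · subst h1 h2; simp; intro h; omega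
    · subst h1 h2; simp; intro h; omega
  · rw [if_neg h]
    rw [if_neg, if_neg, if_neg, if_neg]
    · simp
    all_goals
      rintro ⟨h1, h2⟩
      refine h ?_
      rcases abs_cases (u1 - v1) with h3 | h3 <;> rcases abs_cases (u2 - v2) with h4 | h4 <;> omega

lemma sum_attach' (Λ : Finset Vtx) (f : Vtx → ℝ) : ∑ v : {v // v ∈ Λ}, f v = ∑ v ∈ Λ, f v :=
  Finset.sum_coe_sort Λ f

/-- The energy of the finite-volume model is the energy `en` with half couplings on both orientations. -/
lemma en_link (a h : ℝ) (Λ : Finset Vtx) (σ : {v // v ∈ Λ} → Bool) :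
    isingWeight a h Λ σ = wt (Jn fun v : {v // v ∈ Λ} => (v : Vtx)) (fun _ => a ^ ((15 : ℝ) / 8) * h) σ := by
  unfold isingWeight wt en
  congr 1
  congr 1
  · have e1 : ∀ u v : {v // v ∈ Λ}, Jn (fun v : {v // v ∈ Λ} => (v : Vtx)) u v * (sg (σ u) * sg (σ v)) =
        (fun p q : Vtx => if nnp p q then betaC / 2 * (spin Λ σ p * spin Λ σ q) else 0) u v := fun u v => by
      unfold Jn
      simp only [spin_sg, ite_mul, zero_mul]
      rfl
    simp only [e1]
    have e2 : ∀ u : {v // v ∈ Λ}, ∑ v : {v // v ∈ Λ}, (fun p q : Vtx => if nnp p q then betaC / 2 * (spin Λ σ p * spin Λ σ q) else 0) u v =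
        ∑ v ∈ Λ, (fun p q : Vtx => if nnp p q then betaC / 2 * (spin Λ σ p * spin Λ σ q) else 0) u v := fun u =>
      sum_attach' Λ fun v => if nnp (u : Vtx) v then betaC / 2 * (spin Λ σ u * spin Λ σ v) else 0
    simp only [e2]
    rw [sum_attach' Λ fun u => ∑ v ∈ Λ, if nnp u v then betaC / 2 * (spin Λ σ u * spin Λ σ v) else 0]
    have e3 : ∑ u ∈ Λ, ∑ v ∈ Λ, (if nnp u v then betaC / 2 * (spin Λ σ u * spin Λ σ v) else 0) =
        ∑ u ∈ Λ, ∑ b : Bool, (if u + estep b ∈ Λ then betaC / 2 * (spin Λ σ u * spin Λ σ (u + estep b)) else 0) +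
        ∑ u ∈ Λ, ∑ b : Bool, (if u + estep b ∈ Λ then betaC / 2 * (spin Λ σ u * spin Λ σ (u + estep b)) else 0) := by
      have f1 : ∀ u, ∑ v ∈ Λ, ∑ b : Bool, (if u + estep b = v then betaC / 2 * (spin Λ σ u * spin Λ σ v) else 0) =
          ∑ b : Bool, (if u + estep b ∈ Λ then betaC / 2 * (spin Λ σ u * spin Λ σ (u + estep b)) else 0) := fun u => by
        rw [Finset.sum_comm]
        refine Finset.sum_congr rfl fun b _ => ?_
        rw [Finset.sum_ite_eq]
      have f2 : ∑ u ∈ Λ, ∑ v ∈ Λ, ∑ b : Bool, (if v + estep b = u then betaC / 2 * (spin Λ σ u * spin Λ σ v) else 0) =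
          ∑ u ∈ Λ, ∑ v ∈ Λ, ∑ b : Bool, (if u + estep b = v then betaC / 2 * (spin Λ σ u * spin Λ σ v) else 0) := by
        rw [Finset.sum_comm]
        refine Finset.sum_congr rfl fun u _ => Finset.sum_congr rfl fun v _ => Finset.sum_congr rfl fun b _ => ?_
        rw [mul_comm (spin Λ σ v)]
      simp only [nnp_step, Finset.sum_add_distrib] at f1 f2 ⊢
      rw [f2]
      simp only [f1]
    rw [e3, Finset.mul_sum, ← Finset.sum_add_distrib]
    refine Finset.sum_congr rfl fun u _ => ?_
    rw [Finset.mul_sum, ← Finset.sum_add_distrib]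
    refine Finset.sum_congr rfl fun b _ => ?_
    split_ifs <;> ring
  · rw [Finset.mul_sum, ← sum_attach' Λ fun v => a ^ ((15 : ℝ) / 8) * h * spin Λ σ v]
    exact Finset.sum_congr rfl fun v _ => by rw [spin_sg]

lemma exp_link (a h : ℝ) (Λ : Finset Vtx) (f : (Vtx → ℝ) → ℝ) :
    isingExpF a h Λ f = Ex (Jn fun v : {v // v ∈ Λ} => (v : Vtx)) (fun _ => a ^ ((15 : ℝ) / 8) * h) fun σ => f (spin Λ σ) := by
  unfold isingExpF Ex Zf
  simp only [en_link]
  congr!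

lemma mem_boxZ {n : ℕ} {v : Vtx} : v ∈ boxZ n ↔ |v.1| ≤ n ∧ |v.2| ≤ n := by
  unfold boxZ
  rw [Finset.mem_product, Finset.mem_Icc, Finset.mem_Icc, abs_le, abs_le]

lemma boxZ_mono {n m : ℕ} (h : n ≤ m) {v : Vtx} (hv : v ∈ boxZ n) : v ∈ boxZ m := by
  rw [mem_boxZ] at hv ⊢; omega

/-- The expectations in growing boxes of functions bounded and increasing in the box converge. -/
lemma tendsto_box (F : ℕ → ℝ) (n₀ : ℕ) (hm : ∀ n m, n₀ ≤ n → n ≤ m → F n ≤ F m) (h1 : ∀ n, n₀ ≤ n → F n ≤ 1) :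
    ∃ l, Tendsto F atTop (nhds l) := by
  refine ⟨_, (tendsto_add_atTop_iff_nat n₀).1 (tendsto_atTop_ciSup (f := fun n => F (n + n₀))
    (fun n m h => hm _ _ (by omega) (by omega)) ⟨1, ?_⟩)⟩
  rintro _ ⟨n, rfl⟩
  exact h1 _ (by omega)

lemma exp_mg {a h : ℝ} {Λ : Finset Vtx} {x : Vtx} (hx : x ∈ Λ) : isingExpF a h Λ (fun s => s x) =
    mg (Jn fun v : {v // v ∈ Λ} => (v : Vtx)) (fun _ => a ^ ((15 : ℝ) / 8) * h) ⟨x, hx⟩ := by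
  rw [exp_link]
  unfold mg
  congr 1
  funext σ
  exact spin_sg σ ⟨x, hx⟩

lemma exp_tw {a h : ℝ} {Λ : Finset Vtx} {x y : Vtx} (hx : x ∈ Λ) (hy : y ∈ Λ) :
    isingExpF a h Λ (fun s => s x * s y) =
      tw (Jn fun v : {v // v ∈ Λ} => (v : Vtx)) (fun _ => a ^ ((15 : ℝ) / 8) * h) ⟨x, hx⟩ ⟨y, hy⟩ := by
  rw [exp_link]
  unfold tw
  congr 1
  funext σ
  rw [← spin_sg σ ⟨x, hx⟩, ← spin_sg σ ⟨y, hy⟩]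

lemma incl_inj {Λ Λ' : Finset Vtx} (hΛ : ∀ v ∈ Λ, v ∈ Λ') :
    Function.Injective (fun v : {v // v ∈ Λ} => (⟨v, hΛ v v.2⟩ : {v // v ∈ Λ'})) :=
  fun u v e => Subtype.ext (congrArg (fun z : {v // v ∈ Λ'} => (z : Vtx)) e)

lemma Jn_incl {Λ Λ' : Finset Vtx} (hΛ : ∀ v ∈ Λ, v ∈ Λ') (u v : {v // v ∈ Λ}) :
    Jn (fun v : {v // v ∈ Λ} => (v : Vtx)) u v ≤
      Jn (fun v : {v // v ∈ Λ'} => (v : Vtx)) ⟨u, hΛ u u.2⟩ ⟨v, hΛ v v.2⟩ := by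
  unfold Jn
  exact le_rfl

/-- Magnetizations increase with the box, by the Griffiths inequality; likewise for two spins below. -/
lemma exp_mg_mono {a h : ℝ} (ha : 0 < a) (hh : 0 ≤ h) {Λ Λ' : Finset Vtx} (hΛ : ∀ v ∈ Λ, v ∈ Λ') {x : Vtx} (hx : x ∈ Λ) :
    isingExpF a h Λ (fun s => s x) ≤ isingExpF a h Λ' (fun s => s x) := by
  have hf : 0 ≤ a ^ ((15 : ℝ) / 8) * h := by positivity
  rw [exp_mg hx, exp_mg (hΛ x hx)]
  exact mg_embed (incl_inj hΛ) (Jn_nonneg _) (fun _ => hf) (Jn_nonneg _) (fun _ => hf) (Jn_incl hΛ) (fun _ => le_rfl) ⟨x, hx⟩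

lemma exp_tw_mono {a h : ℝ} (ha : 0 < a) (hh : 0 ≤ h) {Λ Λ' : Finset Vtx} (hΛ : ∀ v ∈ Λ, v ∈ Λ') {x y : Vtx} (hx : x ∈ Λ)
    (hy : y ∈ Λ) : isingExpF a h Λ (fun s => s x * s y) ≤ isingExpF a h Λ' (fun s => s x * s y) := by
  have hf : 0 ≤ a ^ ((15 : ℝ) / 8) * h := by positivity
  rw [exp_tw hx hy, exp_tw (hΛ x hx) (hΛ y hy)]
  exact tw_embed (incl_inj hΛ) (Jn_nonneg _) (fun _ => hf) (Jn_nonneg _) (fun _ => hf) (Jn_incl hΛ) (fun _ => le_rfl)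
    ⟨x, hx⟩ ⟨y, hy⟩

/-- A bound valid in all large boxes passes to the infinite volume limit. -/
lemma tpf_le {a h B : ℝ} (ha : 0 < a) (hh : 0 ≤ h) {x y : Vtx} {n₀ : ℕ} (hx : x ∈ boxZ n₀) (hy : y ∈ boxZ n₀)
    (H : ∀ n (hn : n₀ ≤ n), Uf (Jn fun v : {v // v ∈ boxZ n} => (v : Vtx)) (fun _ => a ^ ((15 : ℝ) / 8) * h)
      ⟨x, boxZ_mono hn hx⟩ ⟨y, boxZ_mono hn hy⟩ ≤ B) : tpf a h x y ≤ B := by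
  have mconv : ∀ z, z ∈ boxZ n₀ → ∃ l, Tendsto (fun n => isingExpF a h (boxZ n) fun s => s z) atTop (nhds l) := fun z hz => by
    refine tendsto_box _ n₀ (fun n m hn hm => exp_mg_mono ha hh (fun v => boxZ_mono hm) (boxZ_mono hn hz)) (fun n hn => ?_)
    rw [exp_mg (boxZ_mono hn hz)]; exact mg_le_one _ _ _
  have tconv : ∃ l, Tendsto (fun n => isingExpF a h (boxZ n) fun s => s x * s y) atTop (nhds l) := by
    refine tendsto_box _ n₀ (fun n m hn hm => exp_tw_mono ha hh (fun v => boxZ_mono hm) (boxZ_mono hn hx) (boxZ_mono hn hy))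
      (fun n hn => ?_)
    rw [exp_tw (boxZ_mono hn hx) (boxZ_mono hn hy)]; exact tw_le_one _ _ _ _
  -- the limits exist, so `limUnder` is not a junk value
  obtain ⟨l₁, h₁⟩ := mconv x hx
  obtain ⟨l₂, h₂⟩ := mconv y hy
  obtain ⟨l₃, h₃⟩ := tconv
  unfold tpf isingExp
  rw [h₁.limUnder_eq, h₂.limUnder_eq, h₃.limUnder_eq]
  refine le_of_tendsto (h₃.sub (h₁.mul h₂)) ((eventually_ge_atTop n₀).mono fun n hn => ?_)
  have := H n hn
  unfold Uf at this
  rw [exp_mg (boxZ_mono hn hx), exp_mg (boxZ_mono hn hy), exp_tw (boxZ_mono hn hx) (boxZ_mono hn hy)]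
  exact this

end link

end Isg

theorem stmt14 :
    ∃ h₀ ε₀ : ℝ, 0 < h₀ ∧ 0 < ε₀ ∧ ∃ C₀ m₁ : ℝ → ℝ,
      ∀ h : ℝ, h₀ < h → 0 < C₀ h ∧ 0 < m₁ h ∧
        ∀ a : ℝ, 0 < a → a ≤ ε₀ → ∀ x y : Vtx, 3 < edistV a x y →
          tpf a h x y ≤ C₀ h * a ^ ((1:ℝ)/4) *
            Real.exp (-(m₁ h) * edistV a x y) := by
  -- for `h > 1` the field `a ^ (15/8) * h` exceeds `a ^ (15/8)`, so the constants do not depend on `h`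
  obtain ⟨C, m₁, hC, hm, H⟩ := Isg.Uf_scale
  refine ⟨1, 1, one_pos, one_pos, fun _ => C, fun _ => m₁, fun h hh => ⟨hC, hm, fun a ha ha1 x y hxy => ?_⟩⟩
  obtain ⟨R, hR⟩ := H a ha ha1 x y hxy
  obtain ⟨n₀, hn₀⟩ : ∃ n₀ : ℕ, n₀ = |x.1|.toNat + |x.2|.toNat + |y.1|.toNat + |y.2|.toNat + R := ⟨_, rfl⟩
  refine Isg.tpf_le ha (by linarith) (n₀ := n₀) (Isg.mem_boxZ.2 ⟨by omega, by omega⟩) (Isg.mem_boxZ.2 ⟨by omega, by omega⟩)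
    fun n hn => ?_
  refine hR _ _ Subtype.val_injective _ _ rfl rfl (fun q h1 h2 => ?_) _ (fun _ => ?_)
  · refine ⟨⟨q, Isg.mem_boxZ.2 ?_⟩, rfl⟩
    have h3 := abs_le.1 h1
    have h4 := abs_le.1 h2
    have h5 := le_abs_self x.1
    have h6 := neg_abs_le x.1
    have h7 := le_abs_self x.2
    have h8 := neg_abs_le x.2
    exact ⟨abs_le.2 ⟨by omega, by omega⟩, abs_le.2 ⟨by omega, by omega⟩⟩
  · have : 0 < a ^ ((15 : ℝ) / 8) := by positivity
    nlinarith

end
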